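/- The sequence of functionals {𝓙_ε}_{ε>0} is equicoercive on (𝓐, d_𝓐) and Γ-converges, as ε→0, to 𝓙((b,μ)) = sup_{φ∈C_c^∞((0,T)×ℝ)} [ −⟨⟨b,φ_t⟩⟩ + ⟨⟨μ(f),φ⟩⟩ − (1/2)⟨⟨μ(σ)φ,φ⟩⟩ ]. -/

import Mathlib

/-!
The energy `J_ε` is a supremum over test functions, and only the viscous term depends on `ε`.
Elements of `𝓑` are handled through continuous representatives `β` (`Rep`, `HJ.exists_rep`), which
are `1`-Lipschitz in `x`; in these terms convergence in `𝓐` is locally uniform convergence of `β`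
together with weak* convergence of the Young measures (`AA.tendsto`, `AA.of_tendsto`).

*Equicoercivity* (`equicoercive_main`). Testing the energy against products of a time profile and a
bump in space shows that a bound on the energy gives a modulus of continuity of `β` in time,
uniform in `ε ≤ 1` (`slice_incr_le`, `exists_modulus`); the viscous term is controlled by
integrating by parts with a primitive of `D` (`wDx_pair`). Arzelà–Ascoli handles `b`
(`ascoli_seq`), Prokhorov's theorem and disintegration handle `μ` (`ym_compact`), and
`seqCompact_modCont` combines them.

*Liminf* (`gamma_liminf`). For fixed `φ` the viscous term is at most `ε / 2 * C * ∫ |φ_x|`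
(`calJeps_ge`), and the other terms pass to the limit.

*Limsup* (`gamma_limsup`). Let `(b, μ)` have finite limit cost `J`.
* Mollifying and contracting time into the interior, while mixing with the constant state `1 / 2`,
  gives a smooth potential with a continuous moment functional and nondegenerate mobility, whose
  cost is an explicit integral of `(b_t + μ(f))² / (2 μ(σ))`, at most `J` plus a small error: the
  bound is the dual form of the supremum together with Jensen's inequality (`IsKer.dual`,
  `mol_isReg`, `exists_reg_near`).
* Outside a bounded set the pair is replaced by an exact affine solution (`IsReg.to_cut`).
* The moment functional is replaced by the average of `2 ^ m` continuous atoms (`IsCut.to_MS`).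
* The number of atoms is halved repeatedly: a small, rapidly oscillating perturbation makes each
  slope alternate between paired atoms. Its time derivative is chosen so that both groups of atoms
  have the same optimal control `(b_t + μ(f)) / μ(σ)`, hence the cost hardly changes (`cell`,
  `osc_lemma`, `IsMS.split`, `IsMS.to_one`).
* With one atom left the Young measure is a Dirac mass, and at level `ε` the cost is a quadratic
  polynomial in `ε` whose constant term is the limit cost (`IsMS.realize`).

These steps give `near`; a countable family of product tests determines weak* convergence
(`exists_prod_tests`), and a diagonal sequence (`exists_diag`) completes the proof.
-/

open MeasureTheory Set Filter Topology
open scoped ENNReal Classical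

noncomputable section

namespace GammaSCL

/-! ### Spatial test functions and the metric on `U` -/

/-- Smooth compactly supported test functions on `ℝ`, supported in `(-N, N)`. -/
structure STest (N : ℝ) where
  toFun : ℝ → ℝ
  smooth : ContDiff ℝ (⊤ : ℕ∞) toFun
  cpt : HasCompactSupport toFun
  supp : Function.support toFun ⊆ Ioo (-N) N

/-- The negative Sobolev seminorm `‖w‖_{-1,N}`. -/
def negNorm (N : ℝ) (w : ℝ → ℝ) : ℝ :=
  sSup { r : ℝ | ∃ φ : STest N, (∫ x, deriv φ.toFun x ^ 2) = 1 ∧ r = ∫ x, w x * φ.toFun x }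

/-- The metric `d_U` on the space `U` of measurable `[0,1]`-valued functions. -/
def dU (u v : ℝ → ℝ) : ℝ :=
  ∑' n : ℕ, (2 : ℝ)⁻¹ ^ (n + 1) *
    (negNorm ((n : ℝ) + 1) (fun x => u x - v x) /
      (1 + negNorm ((n : ℝ) + 1) (fun x => u x - v x)))

/-- The space `𝒰 = C([0,T]; U)`. -/
structure cU (T : ℝ) where
  toFun : ℝ × ℝ → ℝ
  meas : Measurable toFun
  mem01 : ∀ p, toFun p ∈ Icc (0:ℝ) 1
  cont : ∀ t₀ ∈ Icc (0:ℝ) T, ∀ δ > 0, ∃ ζ > 0, ∀ t ∈ Icc (0:ℝ) T,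
    |t - t₀| < ζ → dU (fun x => toFun (t, x)) (fun x => toFun (t₀, x)) < δ

/-- The uniform metric `d_𝒰` on `𝒰`. -/
def dcU (T : ℝ) (u v : cU T) : ℝ :=
  sSup { r : ℝ | ∃ t ∈ Icc (0:ℝ) T,
    r = dU (fun x => u.toFun (t, x)) (fun x => v.toFun (t, x)) }

/-- The metric `d_𝒳` on `𝒳`. -/
def dX (T : ℝ) (u v : cU T) : ℝ :=
  (∑' n : ℕ, (2 : ℝ)⁻¹ ^ (n + 1) *
    ∫ p in Icc (0:ℝ) T ×ˢ Icc (-((n : ℝ) + 1)) ((n : ℝ) + 1), |u.toFun p - v.toFun p|) +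
  dcU T u v

/-! ### Space-time test functions -/

/-- Smooth test functions compactly supported in `(0,T) × ℝ`. -/
structure TTest (T : ℝ) where
  toFun : ℝ × ℝ → ℝ
  smooth : ContDiff ℝ (⊤ : ℕ∞) toFun
  cpt : HasCompactSupport toFun
  supp : Function.support toFun ⊆ Ioo (0 : ℝ) T ×ˢ (univ : Set ℝ)

/-- Smooth test functions compactly supported in `[0,T] × ℝ` (no vanishing at `t = 0, T`). -/
structure TTestC where
  toFun : ℝ × ℝ → ℝ
  smooth : ContDiff ℝ (⊤ : ℕ∞) toFun
  cpt : HasCompactSupport toFun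

/-- Partial derivative in `t`. -/
def ptF (ψ : ℝ × ℝ → ℝ) : ℝ × ℝ → ℝ := fun p => fderiv ℝ ψ p (1, 0)
/-- Partial derivative in `x`. -/
def pxF (ψ : ℝ × ℝ → ℝ) : ℝ × ℝ → ℝ := fun p => fderiv ℝ ψ p (0, 1)

/-- The `L²([0,T] × ℝ)` inner product `⟨⟨g, h⟩⟩`. -/
def pair (T : ℝ) (g h : ℝ × ℝ → ℝ) : ℝ :=
  ∫ p in Icc (0:ℝ) T ×ˢ (univ : Set ℝ), g p * h p

/-! ### Weak derivatives -/

/-- Locally square integrable on `[0,T] × ℝ`. -/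
def L2loc (T : ℝ) (w : ℝ × ℝ → ℝ) : Prop :=
  Measurable w ∧ ∀ R > 0, IntegrableOn (fun p => w p ^ 2) (Icc (0:ℝ) T ×ˢ Icc (-R) R)

/-- `w` is the weak `x`-derivative of `u`. -/
def HasWeakDx (T : ℝ) (u w : ℝ × ℝ → ℝ) : Prop :=
  ∀ φ : TTest T, pair T u (pxF φ.toFun) = - pair T w φ.toFun

/-- `u` admits a locally square integrable weak `x`-derivative. -/
def hasDx (T : ℝ) (u : ℝ × ℝ → ℝ) : Prop := ∃ w, L2loc T w ∧ HasWeakDx T u w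

/-- A choice of weak `x`-derivative. -/
def wDx (T : ℝ) (u : ℝ × ℝ → ℝ) : ℝ × ℝ → ℝ :=
  if h : hasDx T u then h.choose else 0

/-! ### The parabolic cost functional -/

/-- The expression inside the supremum defining `I_ε`. -/
def IexprW (f D σ : ℝ → ℝ) (T ε : ℝ) (u w : ℝ × ℝ → ℝ) (φ : TTest T) : ℝ :=
  - pair T u (ptF φ.toFun) - pair T (fun p => f (u p)) (pxF φ.toFun)
    + ε / 2 * pair T (fun p => D (u p) * w p) (pxF φ.toFun)
    - 1 / 2 * pair T (fun p => σ (u p) * pxF φ.toFun p) (pxF φ.toFun)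

/-- The cost functional `I_ε : 𝒰 → [0,+∞]`. -/
def Ieps (f D σ : ℝ → ℝ) (T ε : ℝ) (u : cU T) : ℝ≥0∞ :=
  if hasDx T u.toFun then
    ⨆ φ : TTest T, ENNReal.ofReal (IexprW f D σ T ε u.toFun (wDx T u.toFun) φ)
  else ⊤

/-- The rescaled cost functional `H_ε := ε⁻¹ I_ε`. -/
def Heps (f D σ : ℝ → ℝ) (T ε : ℝ) (u : cU T) : ℝ≥0∞ :=
  ENNReal.ofReal ε⁻¹ * Ieps f D σ T ε u

/-! ### Young measures -/

/-- The space `𝓜` of Young measures. -/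
structure YM (T : ℝ) where
  m : ℝ × ℝ → Measure ℝ
  prob : ∀ p, IsProbabilityMeasure (m p)
  supp01 : ∀ p, m p (Icc (0:ℝ) 1)ᶜ = 0
  meas : ∀ F : ℝ → ℝ, Continuous F → Measurable fun p => ∫ l, F l ∂ m p
  bar_mem : ∀ p, (∫ l, l ∂ m p) ∈ Icc (0:ℝ) 1
  bar_cont : ∀ t₀ ∈ Icc (0:ℝ) T, ∀ δ > 0, ∃ ζ > 0, ∀ t ∈ Icc (0:ℝ) T,
    |t - t₀| < ζ →
      dU (fun x => ∫ l, l ∂ m (t, x)) (fun x => ∫ l, l ∂ m (t₀, x)) < δ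

/-- The moment `μ(F)`. -/
def YM.mom {T : ℝ} (μ : YM T) (F : ℝ → ℝ) : ℝ × ℝ → ℝ := fun p => ∫ l, F l ∂ μ.m p

/-- The barycenter `μ(ι)` of a Young measure, as an element of `𝒰`. -/
def YM.bar {T : ℝ} (μ : YM T) : cU T :=
  ⟨fun p => ∫ l, l ∂ μ.m p, μ.meas (fun l => l) continuous_id', μ.bar_mem, μ.bar_cont⟩

/-- The metric `d_𝓜 = d_w + d_𝒰(μ(ι), ν(ι))`. -/
def dM (T : ℝ) (dw : YM T → YM T → ℝ) (μ ν : YM T) : ℝ :=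
  dw μ ν + dcU T μ.bar ν.bar

/-- `dw` is a distance generating the weak* topology on Young measures. -/
def GeneratesWeakStar (T : ℝ) (dw : YM T → YM T → ℝ) : Prop :=
  (∀ μ ν, dw μ ν = dw ν μ) ∧ (∀ μ ν, 0 ≤ dw μ ν) ∧
  ∀ (μ : ℕ → YM T) (ν : YM T),
    Tendsto (fun n => dw (μ n) ν) atTop (𝓝 0) ↔
      ∀ g : ℝ × (ℝ × ℝ) → ℝ, Continuous g → HasCompactSupport g →
        Tendsto
          (fun n => ∫ p in Icc (0:ℝ) T ×ˢ (univ : Set ℝ), ∫ l, g (l, p) ∂ (μ n).m p)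
          atTop
          (𝓝 (∫ p in Icc (0:ℝ) T ×ˢ (univ : Set ℝ), ∫ l, g (l, p) ∂ ν.m p))

/-- The lift `𝓘_ε` of `I_ε` to Young measures. -/
def calIeps (f D σ : ℝ → ℝ) (T ε : ℝ) (μ : YM T) : ℝ≥0∞ :=
  if h : ∃ u : cU T, ∀ p, μ.m p = Measure.dirac (u.toFun p) then
    Ieps f D σ T ε h.choose
  else ⊤

/-- The limiting functional `𝓘` on Young measures. -/
def calI (f σ : ℝ → ℝ) (T : ℝ) (μ : YM T) : ℝ≥0∞ :=
  ⨆ φ : TTest T, ENNReal.ofReal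
    (- pair T (μ.mom (fun l => l)) (ptF φ.toFun) - pair T (μ.mom f) (pxF φ.toFun)
      - 1 / 2 * pair T (fun p => μ.mom σ p * pxF φ.toFun p) (pxF φ.toFun))

/-! ### Γ-convergence via sequences -/

/-- Sequential compactness with respect to a distance function. -/
def SeqCompactIn {α : Type*} (d : α → α → ℝ) (K : Set α) : Prop :=
  ∀ x : ℕ → α, (∀ n, x n ∈ K) → ∃ y ∈ K, ∃ s : ℕ → ℕ, StrictMono s ∧
    Tendsto (fun n => d (x (s n)) y) atTop (𝓝 0)

/-- Equicoercivity of a family of functionals. -/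
def Equicoercive {α : Type*} (d : α → α → ℝ) (F : ℝ → α → ℝ≥0∞) : Prop :=
  ∀ M : ℝ, 0 < M → ∃ K : Set α, SeqCompactIn d K ∧
    ∀ ε ∈ Ioc (0:ℝ) 1, { x : α | F ε x ≤ ENNReal.ofReal M } ⊆ K

/-- The Γ-liminf inequality `Γ-liminf F_ε ≥ G`. -/
def GammaLiminfGE {α : Type*} (d : α → α → ℝ) (F : ℝ → α → ℝ≥0∞) (G : α → ℝ≥0∞) : Prop :=
  ∀ (x : α) (e : ℕ → ℝ) (xs : ℕ → α), (∀ n, 0 < e n) → Tendsto e atTop (𝓝 0) →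
    Tendsto (fun n => d (xs n) x) atTop (𝓝 0) →
    G x ≤ Filter.liminf (fun n => F (e n) (xs n)) atTop

/-- The Γ-limsup inequality `Γ-limsup F_ε ≤ G`. -/
def GammaLimsupLE {α : Type*} (d : α → α → ℝ) (F : ℝ → α → ℝ≥0∞) (G : α → ℝ≥0∞) : Prop :=
  ∀ (x : α) (e : ℕ → ℝ), (∀ n, 0 < e n) → Tendsto e atTop (𝓝 0) →
    ∃ xs : ℕ → α, Tendsto (fun n => d (xs n) x) atTop (𝓝 0) ∧
      Filter.limsup (fun n => F (e n) (xs n)) atTop ≤ G x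

/-- Γ-convergence of `F_ε` to `G`. -/
def GammaConvergesTo {α : Type*} (d : α → α → ℝ) (F : ℝ → α → ℝ≥0∞) (G : α → ℝ≥0∞) : Prop :=
  GammaLiminfGE d F G ∧ GammaLimsupLE d F G

/-! ### Entropies, entropy production, kinetic measures -/

/-- Weak solutions to `u_t + f(u)_x = 0`. -/
def IsWeakSolution (f : ℝ → ℝ) (T : ℝ) (u : ℝ × ℝ → ℝ) : Prop :=
  ∀ φ : TTest T, pair T u (ptF φ.toFun) + pair T (fun p => f (u p)) (pxF φ.toFun) = 0

/-- Derivative within `[0,1]`. -/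
def dIcc (g : ℝ → ℝ) : ℝ → ℝ := fun v => derivWithin g (Icc 0 1) v

/-- An entropy–entropy flux pair. -/
structure Entropy (f : ℝ → ℝ) where
  eta : ℝ → ℝ
  q : ℝ → ℝ
  smooth : ContDiffOn ℝ 2 eta (Icc 0 1)
  qcont : ContinuousOn q (Icc 0 1)
  flux : ∀ a ∈ Icc (0:ℝ) 1, ∀ b ∈ Icc (0:ℝ) 1,
    q b - q a = ∫ v in a..b, dIcc eta v * deriv f v

/-- The `η`-entropy production `℘_{η,u}(φ)`. -/
def entProd (f : ℝ → ℝ) (T : ℝ) (E : Entropy f) (u : ℝ × ℝ → ℝ) (φ : TTest T) : ℝ :=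
  - pair T (fun p => E.eta (u p)) (ptF φ.toFun) - pair T (fun p => E.q (u p)) (pxF φ.toFun)

/-- `‖℘_{η,u}‖_{TV,L}`. -/
def TVabs (f : ℝ → ℝ) (T : ℝ) (E : Entropy f) (L : ℝ) (u : ℝ × ℝ → ℝ) : ℝ≥0∞ :=
  ⨆ φ : { φ : TTest T // Function.support φ.toFun ⊆ Ioo (0:ℝ) T ×ˢ Ioo (-L) L ∧
          ∀ p, |φ.toFun p| ≤ 1 },
    ENNReal.ofReal (entProd f T E u φ.1)

/-- `‖℘⁺_{η,u}‖_{TV,L}`. -/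
def TVpos (f : ℝ → ℝ) (T : ℝ) (E : Entropy f) (L : ℝ) (u : ℝ × ℝ → ℝ) : ℝ≥0∞ :=
  ⨆ φ : { φ : TTest T // Function.support φ.toFun ⊆ Ioo (0:ℝ) T ×ˢ Ioo (-L) L ∧
          ∀ p, φ.toFun p ∈ Icc (0:ℝ) 1 },
    ENNReal.ofReal (entProd f T E u φ.1)

/-- Entropy-measure solutions: every entropy production extends to a Radon measure. -/
def EMsol (f : ℝ → ℝ) (T : ℝ) (u : cU T) : Prop :=
  IsWeakSolution f T u.toFun ∧ ∀ E : Entropy f, ∀ L > 0, TVabs f T E L u.toFun ≠ ⊤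

/-- `v`-derivative (within `[0,1]`) of a sampler. -/
def dv1 (θ : ℝ → ℝ × ℝ → ℝ) : ℝ → ℝ × ℝ → ℝ :=
  fun v p => derivWithin (fun w => θ w p) (Icc 0 1) v

/-- An entropy sampler together with a conjugated entropy flux sampler. -/
structure Sampler (f : ℝ → ℝ) (T : ℝ) where
  θ : ℝ → ℝ × ℝ → ℝ
  Q : ℝ → ℝ × ℝ → ℝ
  cpt : HasCompactSupport (Function.uncurry θ)
  supp : Function.support (Function.uncurry θ) ⊆
    Icc (0:ℝ) 1 ×ˢ (Ioo (0:ℝ) T ×ˢ (univ : Set ℝ))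
  smooth_p : ∀ v, ContDiff ℝ (⊤ : ℕ∞) (θ v)
  smooth_v : ∀ p, ContDiffOn ℝ 2 (fun v => θ v p) (Icc 0 1)
  cont0 : Continuous (Function.uncurry θ)
  cont1 : ContinuousOn (Function.uncurry (dv1 θ)) (Icc (0:ℝ) 1 ×ˢ (univ : Set (ℝ × ℝ)))
  cont2 : ContinuousOn (Function.uncurry (dv1 (dv1 θ))) (Icc (0:ℝ) 1 ×ˢ (univ : Set (ℝ × ℝ)))
  Qsmooth : ∀ v, ContDiff ℝ 1 (Q v)
  Qflux : ∀ (p : ℝ × ℝ), ∀ a ∈ Icc (0:ℝ) 1, ∀ b ∈ Icc (0:ℝ) 1,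
    Q b p - Q a p = ∫ v in a..b, dv1 θ v p * deriv f v

/-- The `ϑ`-sampled entropy production `P_{ϑ,u}`. -/
def Ptheta (f : ℝ → ℝ) (T : ℝ) (S : Sampler f T) (u : ℝ × ℝ → ℝ) : ℝ :=
  - ∫ p in Icc (0:ℝ) T ×ˢ (univ : Set ℝ),
      (fderiv ℝ (S.θ (u p)) p (1, 0) + fderiv ℝ (S.Q (u p)) p (0, 1))

/-- `(ρp, ρn)` is a decomposition of the kinetic measure `ϱ_u` of a weak solution `u`. -/
def IsKineticMeasure (f : ℝ → ℝ) (T : ℝ) (u : ℝ × ℝ → ℝ)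
    (ρp ρn : ℝ → Measure (ℝ × ℝ)) : Prop :=
  (∀ v, ρp v ((Ioo (0:ℝ) T ×ˢ (univ : Set ℝ))ᶜ) = 0 ∧
        ρn v ((Ioo (0:ℝ) T ×ˢ (univ : Set ℝ))ᶜ) = 0) ∧
  (∀ L > 0, ∃ C : ℝ≥0∞, C ≠ ⊤ ∧ ∀ v ∈ Icc (0:ℝ) 1,
      ρp v (Icc (0:ℝ) T ×ˢ Icc (-L) L) + ρn v (Icc (0:ℝ) T ×ˢ Icc (-L) L) ≤ C) ∧
  (∀ g : ℝ × ℝ → ℝ, Continuous g → HasCompactSupport g →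
      Measurable fun v => (∫ p, g p ∂ ρp v) - ∫ p, g p ∂ ρn v) ∧
  ∀ S : Sampler f T, Ptheta f T S u =
    ∫ v in Icc (0:ℝ) 1,
      ((∫ p, dv1 (dv1 S.θ) v p ∂ ρp v) - ∫ p, dv1 (dv1 S.θ) v p ∂ ρn v)

/-- The Γ-entropy cost functional `H`. -/
def Hfun (f D σ : ℝ → ℝ) (T : ℝ) (u : cU T) : ℝ≥0∞ :=
  if IsWeakSolution f T u.toFun then
    ⨅ ρ : { ρ : (ℝ → Measure (ℝ × ℝ)) × (ℝ → Measure (ℝ × ℝ)) //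
            IsKineticMeasure f T u.toFun ρ.1 ρ.2 },
      ∫⁻ v in Icc (0:ℝ) 1, ENNReal.ofReal (D v / σ v) * ρ.1.1 v univ
  else ⊤

/-- Entropic solutions. -/
def EntropicSol (f : ℝ → ℝ) (T : ℝ) (u : cU T) : Prop :=
  IsWeakSolution f T u.toFun ∧
  ∀ E : Entropy f, (∀ v ∈ Icc (0:ℝ) 1, 0 ≤ dIcc (dIcc E.eta) v) →
    ∀ φ : TTest T, (∀ p, 0 ≤ φ.toFun p) → entProd f T E u.toFun φ ≤ 0

/-- There is no interval in which `f` is affine. -/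
def NoAffinePiece (f : ℝ → ℝ) : Prop :=
  ∀ a b : ℝ, 0 ≤ a → a < b → b ≤ 1 →
    ¬ ∃ c d : ℝ, ∀ v ∈ Icc a b, f v = c * v + d

/-- Entropy-splittable solutions. -/
def Splittable (f : ℝ → ℝ) (T : ℝ) (u : cU T) : Prop :=
  EMsol f T u ∧
  ∃ Ep En : Set (ℝ × ℝ), IsClosed Ep ∧ IsClosed En ∧
    Ep ⊆ Icc (0:ℝ) T ×ˢ (univ : Set ℝ) ∧ En ⊆ Icc (0:ℝ) T ×ˢ (univ : Set ℝ) ∧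
    (∃ ρp ρn : ℝ → Measure (ℝ × ℝ), IsKineticMeasure f T u.toFun ρp ρn ∧
      ∀ᵐ v ∂(volume.restrict (Icc (0:ℝ) 1)), ρp v Epᶜ = 0 ∧ ρn v Enᶜ = 0) ∧
    ∀ L > 0, ∀ a b : ℝ, 0 ≤ a → a < b → b ≤ T →
      ∃ a' b' : ℝ, a ≤ a' ∧ a' < b' ∧ b' ≤ b ∧
        ∀ t ∈ Ioo a' b', ∀ x ∈ Icc (-L) L, (t, x) ∉ Ep ∩ En

/-- Nice solutions with respect to `σ`: the set `𝒮_σ`. -/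
def NiceSol (f D σ : ℝ → ℝ) (T : ℝ) (u : cU T) : Prop :=
  Splittable f T u ∧ Hfun f D σ T u ≠ ⊤ ∧
  ∀ L > 0, ∃ δ > 0,
    ∀ᵐ p ∂(volume.restrict (Icc (0:ℝ) T ×ˢ Icc (-L) L)), δ ≤ σ (u.toFun p)

/-- The relaxed functional `H̄`. -/
def Hbar (f D σ : ℝ → ℝ) (T : ℝ) (u : cU T) : ℝ≥0∞ :=
  ⨅ s : { s : ℕ → cU T // (∀ n, NiceSol f D σ T (s n)) ∧
          Tendsto (fun n => dX T (s n) u) atTop (𝓝 0) },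
    Filter.liminf (fun n => Hfun f D σ T (s.1 n)) atTop

/-- Continuity in time with values in `L¹_loc(ℝ)`. -/
def ContL1 (T : ℝ) (u : ℝ × ℝ → ℝ) : Prop :=
  ∀ t₀ ∈ Icc (0:ℝ) T, ∀ R > 0, ∀ δ > 0, ∃ ζ > 0, ∀ t ∈ Icc (0:ℝ) T,
    |t - t₀| < ζ → (∫ x in Icc (-R) R, |u (t, x) - u (t₀, x)|) < δ

/-! ### The relaxation `R_{f,σ}` and the Γ-limit `I` on `𝒰` -/

/-- The function `R_{f,σ}(w,c)`. -/
def Rfs (f σ : ℝ → ℝ) (w c : ℝ) : ℝ≥0∞ :=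
  ⨅ ν : { ν : Measure ℝ // IsProbabilityMeasure ν ∧ ν (Icc (0:ℝ) 1)ᶜ = 0 ∧ (∫ l, l ∂ν) = w },
    if (∫ l, σ l ∂ν.1) = 0 then (if (∫ l, f l ∂ν.1) = c then 0 else ⊤)
    else ENNReal.ofReal ((∫ l, f l ∂ν.1 - c) ^ 2 / ∫ l, σ l ∂ν.1)

/-- The Γ-limit `I` of `I_ε` on `𝒰`. -/
def Ilim (f σ : ℝ → ℝ) (T : ℝ) (u : cU T) : ℝ≥0∞ :=
  ⨅ Φ : { Φ : ℝ × ℝ → ℝ // L2loc T Φ ∧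
          ∀ φ : TTest T, - pair T Φ (pxF φ.toFun) = pair T u.toFun (ptF φ.toFun) },
    ∫⁻ p in Icc (0:ℝ) T ×ˢ (univ : Set ℝ), Rfs f σ (u.toFun p) (Φ.1 p)

/-! ### The classes `𝓜_g` and `𝓜₀` -/

/-- The class `𝓜_g`. -/
def Mg (f σ : ℝ → ℝ) (T : ℝ) (μ : YM T) : Prop :=
  calI f σ T μ ≠ ⊤ ∧
  ∃ r > 0, ∃ L > 0, ∃ ν : Measure ℝ, IsProbabilityMeasure ν ∧ ν (Icc (0:ℝ) 1)ᶜ = 0 ∧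
    (∀ p : ℝ × ℝ, p.1 ∈ Icc (0:ℝ) T → r ≤ μ.mom (fun l => l) p ∧ r ≤ μ.mom σ p) ∧
    ∀ p : ℝ × ℝ, p.1 ∈ Icc (0:ℝ) T → L < |p.2| → μ.m p = ν

/-- The class `𝓜₀` of Dirac masses of smooth functions in `𝓜_g`. -/
def M0 (f σ : ℝ → ℝ) (T : ℝ) (μ : YM T) : Prop :=
  Mg f σ T μ ∧ ∃ u : ℝ × ℝ → ℝ, ContDiff ℝ 1 u ∧ (∀ p, u p ∈ Icc (0:ℝ) 1) ∧
    ∀ p, μ.m p = Measure.dirac (u p)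

/-! ### The spaces `𝓓¹_a` and the Riesz representation of the cost -/

/-- `P` represents (the gradient of) an element of the Hilbert space `𝓓¹_a`. -/
def InD1 (T : ℝ) (a P : ℝ × ℝ → ℝ) : Prop :=
  Measurable P ∧ IntegrableOn (fun p => a p * P p ^ 2) (Icc (0:ℝ) T ×ˢ (univ : Set ℝ)) ∧
  ∀ δ > 0, ∃ φ : TTestC,
    (∫ p in Icc (0:ℝ) T ×ˢ (univ : Set ℝ), a p * (P p - pxF φ.toFun p) ^ 2) < δ

/-- The extended linear functional `ℓ^u_ε(φ)` with boundary terms. -/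
def ellC (f D : ℝ → ℝ) (T ε : ℝ) (u w : ℝ × ℝ → ℝ) (φ : TTestC) : ℝ :=
  (∫ x, u (T, x) * φ.toFun (T, x)) - (∫ x, u (0, x) * φ.toFun (0, x))
    - pair T u (ptF φ.toFun) - pair T (fun p => f (u p)) (pxF φ.toFun)
    + ε / 2 * pair T (fun p => D (u p) * w p) (pxF φ.toFun)

/-- `u` is a weak solution to `u_t + f(u)_x = (ε/2)(D(u)u_x)_x - (σ(u)Ψ_x)_x` with `Ψ_x = P`. -/
def rieszEq (f D σ : ℝ → ℝ) (T ε : ℝ) (u w P : ℝ × ℝ → ℝ) : Prop :=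
  ∀ φ : TTestC,
    (∫ x, u (T, x) * φ.toFun (T, x)) - (∫ x, u (0, x) * φ.toFun (0, x))
      - (pair T u (ptF φ.toFun)
        + pair T (fun p => f (u p) - ε / 2 * (D (u p) * w p) + σ (u p) * P p)
            (pxF φ.toFun)) = 0

/-- `μ(ι)_t + μ(f)_x = -(μ(σ) P)_x` weakly. -/
def calIEq (f σ : ℝ → ℝ) (T : ℝ) (μ : YM T) (P : ℝ × ℝ → ℝ) : Prop :=
  ∀ φ : TTest T,
    - pair T (μ.mom (fun l => l)) (ptF φ.toFun) - pair T (μ.mom f) (pxF φ.toFun)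
      = pair T (fun p => μ.mom σ p * P p) (pxF φ.toFun)

/-! ### The cost functional on `L¹_loc` -/

/-- Locally integrable on `[0,T] × ℝ`. -/
def L1loc (T : ℝ) (u : ℝ × ℝ → ℝ) : Prop :=
  Measurable u ∧ ∀ R > 0, IntegrableOn u (Icc (0:ℝ) T ×ˢ Icc (-R) R)

/-- The cost functional `Î_ε` on `L¹_loc([0,T] × ℝ)`. -/
def Ihat (f D σ : ℝ → ℝ) (T ε : ℝ) (u : ℝ × ℝ → ℝ) : ℝ≥0∞ :=
  if L2loc T (fun p => f (u p)) ∧ hasDx T u then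
    ⨆ φ : TTest T, ENNReal.ofReal (IexprW f D σ T ε u (wDx T u) φ)
  else ⊤

/-! ### Hamilton–Jacobi equations -/

/-- The space `𝓑` (representatives of equivalence classes modulo additive constants). -/
structure HJ (T : ℝ) where
  b : ℝ × ℝ → ℝ
  meas : Measurable b
  sq : ∀ t ∈ Icc (0:ℝ) T, ∀ R > 0, IntegrableOn (fun x => b (t, x) ^ 2) (Icc (-R) R)
  contL2 : ∀ t₀ ∈ Icc (0:ℝ) T, ∀ R > 0, ∀ δ > 0, ∃ ζ > 0, ∀ t ∈ Icc (0:ℝ) T,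
    |t - t₀| < ζ → (∫ x in Icc (-R) R, (b (t, x) - b (t₀, x)) ^ 2) < δ
  ux : cU T
  hux : ∀ φ : TTest T, pair T b (pxF φ.toFun) = - pair T ux.toFun φ.toFun

/-- The part of the distance on `𝓑` involving the infimum over additive constants. -/
def dConst (T : ℝ) (b1 b2 : HJ T) : ℝ :=
  sInf { r : ℝ | ∃ c : ℝ, r = sSup { s : ℝ | ∃ t ∈ Icc (0:ℝ) T,
    s = ∑' n : ℕ, (2 : ℝ)⁻¹ ^ (n + 1) *
      Real.sqrt (∫ x in Icc (-((n : ℝ) + 1)) ((n : ℝ) + 1),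
        (b1.b (t, x) - b2.b (t, x) + c) ^ 2) } }

/-- The metric `d_𝓑`. -/
def dB (T : ℝ) (b1 b2 : HJ T) : ℝ := dcU T b1.ux b2.ux + dConst T b1 b2

/-- The metric `d_𝒴`. -/
def dY (T : ℝ) (b1 b2 : HJ T) : ℝ := dX T b1.ux b2.ux + dConst T b1 b2

/-- The expression inside the supremum defining `J_ε`. -/
def JexprW (f D σ : ℝ → ℝ) (T ε : ℝ) (bb uxf w2 : ℝ × ℝ → ℝ) (φ : TTest T) : ℝ :=
  - pair T bb (ptF φ.toFun) + pair T (fun p => f (uxf p)) φ.toFun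
    - ε / 2 * pair T (fun p => D (uxf p) * w2 p) φ.toFun
    - 1 / 2 * pair T (fun p => σ (uxf p) * φ.toFun p) φ.toFun

/-- The cost functional `J_ε` on `𝓑`. -/
def Jeps (f D σ : ℝ → ℝ) (T ε : ℝ) (b : HJ T) : ℝ≥0∞ :=
  if hasDx T b.ux.toFun then
    ⨆ φ : TTest T, ENNReal.ofReal (JexprW f D σ T ε b.b b.ux.toFun (wDx T b.ux.toFun) φ)
  else ⊤

/-- The rescaled cost functional `K_ε := ε⁻¹ J_ε`. -/
def Keps (f D σ : ℝ → ℝ) (T ε : ℝ) (b : HJ T) : ℝ≥0∞ :=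
  ENNReal.ofReal ε⁻¹ * Jeps f D σ T ε b

/-- Weak solutions to `b_t + f(b_x) = 0`. -/
def HJWeakSol (f : ℝ → ℝ) (T : ℝ) (b : HJ T) : Prop :=
  ∀ φ : TTest T, - pair T b.b (ptF φ.toFun) + pair T (fun p => f (b.ux.toFun p)) φ.toFun = 0

/-- The compatibility condition `b_x = μ(ι)` defining `𝓐`. -/
def APred (T : ℝ) (bm : HJ T × YM T) : Prop :=
  ∀ᵐ p ∂(volume.restrict (Icc (0:ℝ) T ×ˢ (univ : Set ℝ))),
    bm.1.ux.toFun p = bm.2.mom (fun l => l) p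

/-- The metric `d_𝓐`. -/
def dA (T : ℝ) (dw : YM T → YM T → ℝ)
    (x y : { bm : HJ T × YM T // APred T bm }) : ℝ :=
  dB T x.1.1 y.1.1 + dM T dw x.1.2 y.1.2

/-- The lift `𝓙_ε` of `J_ε` to `𝓐`. -/
def calJeps (f D σ : ℝ → ℝ) (T ε : ℝ) (x : { bm : HJ T × YM T // APred T bm }) : ℝ≥0∞ :=
  if ∀ p, x.1.2.m p = Measure.dirac (x.1.1.ux.toFun p) then Jeps f D σ T ε x.1.1 else ⊤

/-- The limiting functional `𝓙` on `𝓐`. -/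
def calJ (f σ : ℝ → ℝ) (T : ℝ) (x : { bm : HJ T × YM T // APred T bm }) : ℝ≥0∞ :=
  ⨆ φ : TTest T, ENNReal.ofReal
    (- pair T x.1.1.b (ptF φ.toFun) + pair T (x.1.2.mom f) φ.toFun
      - 1 / 2 * pair T (fun p => x.1.2.mom σ p * φ.toFun p) φ.toFun)

/-! ### Jump sets and BV solutions -/

/-- The function `ρ(v, u⁺, u⁻)` of Remark 2.3. -/
def rhoJ (f : ℝ → ℝ) (v a b : ℝ) : ℝ :=
  if v ∈ Icc (min a b) (max a b) then
    f b * (a - v) + f a * (v - b) - f v * (a - b)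
  else 0

section
open scoped Real
open Real (norm_eq_abs dist_eq)
open MeasureTheory.Measure (volume_eq_prod prod_restrict restrict_univ)

variable {T : ℝ} {f D σ : ℝ → ℝ}

local notation "ℝ²" => ℝ × ℝ
local notation "strip" T:max => SProd.sprod (Icc (0:ℝ) T) (univ : Set ℝ)
local notation "box" T:max R:max => SProd.sprod (Icc (0:ℝ) T) (Icc (-R) R)
local notation "Smooth" => ContDiff ℝ ((⊤ : ℕ∞) : WithTop ℕ∞)
-- the value at the test `φ` of the expression whose supremum is the limit functional at `x`
local notation "act" f:max σ:max T:max x:max φ:max => - pair T (HJ.b (Prod.fst (Subtype.val x))) (ptF (TTest.toFun φ)) + pair T (YM.mom (Prod.snd (Subtype.val x)) f) (TTest.toFun φ) - 1 / 2 * pair T (fun p => YM.mom (Prod.snd (Subtype.val x)) σ p * TTest.toFun φ p) (TTest.toFun φ)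

/-! ### One-dimensional calculus -/

lemma exists_support_subset_Ioo {φ : ℝ → ℝ} (hc : HasCompactSupport φ) :
    ∃ R > 0, ∀ x, R ≤ |x| → φ x = 0 := by
  obtain ⟨R, hR⟩ := hc.isBounded.subset_closedBall 0
  refine ⟨max R 0 + 1, by positivity, fun x hx => ?_⟩
  by_contra h
  have h1 := hR (subset_tsupport _ (Function.mem_support.2 h))
  rw [Metric.mem_closedBall, dist_eq, sub_zero] at h1
  linarith [le_max_left R 0]

lemma abs_continuous_comp {F g : ℝ → ℝ} {a b : ℝ} (hF : ContDiff ℝ 1 F)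
    (hg : AbsolutelyContinuousOnInterval g a b) :
    AbsolutelyContinuousOnInterval (fun x => F (g x)) a b := by
  obtain ⟨C, hC⟩ := hg.exists_bound
  have hloc : ∃ K : NNReal, LipschitzOnWith K F (Icc (-C) C) :=
    hF.contDiffOn.exists_lipschitzOnWith one_ne_zero (convex_Icc _ _) isCompact_Icc
  obtain ⟨K, hK⟩ := hloc
  rw [absolutelyContinuousOnInterval_iff] at hg ⊢
  intro ε hε
  obtain ⟨δ, hδ, h⟩ := hg (ε / (K + 1)) (by positivity)
  refine ⟨δ, hδ, fun E hE hlen => ?_⟩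
  have h1 := h E hE hlen
  have h2 : ∀ i ∈ Finset.range E.1, dist (F (g (E.2 i).1)) (F (g (E.2 i).2)) ≤
      K * dist (g (E.2 i).1) (g (E.2 i).2) := by
    intro i hi
    have := hE.1 i hi
    refine hK.dist_le_mul _ ?_ _ ?_
    · exact abs_le.1 (hC _ this.1)
    · exact abs_le.1 (hC _ this.2)
  calc _ ≤ ∑ i ∈ Finset.range E.1, K * dist (g (E.2 i).1) (g (E.2 i).2) := Finset.sum_le_sum h2
    _ = K * ∑ i ∈ Finset.range E.1, dist (g (E.2 i).1) (g (E.2 i).2) := by rw [Finset.mul_sum]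
    _ ≤ K * (ε / (K + 1)) := by gcongr
    _ < ε := by
      rw [mul_div_assoc', div_lt_iff₀ (by positivity)]
      nlinarith [K.2]

/-- Integration by parts against a compactly supported function, with the chain rule for a `C¹`
function of a primitive of a locally integrable function. -/
lemma ibp_comp {w φ F g : ℝ → ℝ} (hw : LocallyIntegrable w) {c : ℝ}
    (hg : ∀ x, g x = c + ∫ s in 0..x, w s) (hF : ContDiff ℝ 1 F)
    (hφ : ContDiff ℝ 1 φ) (hc : HasCompactSupport φ) :
    ∫ x, F (g x) * deriv φ x = - ∫ x, deriv F (g x) * w x * φ x := by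
  obtain ⟨R, hR, hsupp⟩ := exists_support_subset_Ioo hc
  have hwi : ∀ a b, IntervalIntegrable w volume a b := fun a b =>
    (hw.integrableOn_isCompact isCompact_uIcc).intervalIntegrable
  have hgac : AbsolutelyContinuousOnInterval g (-R) R := by
    have h1 := (hwi (-R) R).absolutelyContinuousOnInterval_intervalIntegral (c := 0)
      (by rw [uIcc_of_le (by linarith)]; constructor <;> linarith)
    have h2 : AbsolutelyContinuousOnInterval (fun _ : ℝ => c) (-R) R :=
      (LipschitzWith.const' (α := ℝ) c).lipschitzOnWith.absolutelyContinuousOnInterval (K := 0)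
    have hgeq : g = (fun _ : ℝ => c) + fun x => ∫ s in 0..x, w s := funext hg
    rw [hgeq]
    exact h2.add h1
  have hFg := abs_continuous_comp hF hgac
  have hφac : AbsolutelyContinuousOnInterval φ (-R) R := by
    obtain ⟨K, hK⟩ := hφ.contDiffOn.exists_lipschitzOnWith (s := uIcc (-R) R) one_ne_zero
      (convex_uIcc _ _) isCompact_uIcc
    exact hK.absolutelyContinuousOnInterval
  have key := hFg.integral_mul_deriv_eq_deriv_mul hφac
  rw [hsupp R (by rw [abs_of_pos hR]), hsupp (-R) (by rw [abs_neg, abs_of_pos hR])] at key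
  simp only [mul_zero, sub_zero, zero_sub] at key
  have hs1 : Function.support (fun x => F (g x) * deriv φ x) ⊆ Ioc (-R) R := by
    intro x hx
    have h1 : deriv φ x ≠ 0 := right_ne_zero_of_mul hx
    have h2 : x ∈ tsupport φ := support_deriv_subset h1
    by_contra hn
    have : x ∉ Ioo (-R) R := fun h => hn (Ioo_subset_Ioc_self h)
    -- off `(-R, R)` the function `φ` attains its zero value on a half-neighbourhood
    by_cases hx' : R < |x|
    · have : φ =ᶠ[𝓝 x] 0 := by
        filter_upwards [(isOpen_lt continuous_const continuous_abs).mem_nhds hx'] with y hy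
        exact hsupp y hy.le
      exact h1 (by rw [this.deriv_eq]; simp)
    · have hxR : |x| = R := le_antisymm (not_lt.1 hx') (by
        by_contra h; exact this (abs_lt.1 (not_le.1 h)))
      have hder : HasDerivAt φ (deriv φ x) x := (hφ.differentiable one_ne_zero x).hasDerivAt
      rcases abs_choice x with h | h
      · grind
      · have : HasDerivWithinAt φ 0 (Iic x) x := by
          refine (hasDerivWithinAt_const x (Iic x) (0:ℝ)).congr (fun y hy => ?_) (hsupp x hxR.ge)
          apply hsupp
          have : y ≤ x := hy
          rw [← hxR, h]; exact (neg_le_neg this).trans (neg_le_abs y)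
        exact h1 ((uniqueDiffWithinAt_Iic x).eq_deriv _ hder.hasDerivWithinAt this)
  have hs2 : Function.support (fun x => deriv F (g x) * w x * φ x) ⊆ Ioc (-R) R := by
    intro x hx
    have h1 : φ x ≠ 0 := right_ne_zero_of_mul hx
    have : |x| < R := by by_contra h; exact h1 (hsupp x (not_lt.1 h))
    exact Ioo_subset_Ioc_self (abs_lt.1 this)
  rw [← intervalIntegral.integral_eq_integral_of_support_subset hs1,
    ← intervalIntegral.integral_eq_integral_of_support_subset hs2, key]
  congr 1
  apply intervalIntegral.integral_congr_ae
  filter_upwards [LocallyIntegrable.ae_hasDerivAt_integral hw] with x hx _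
  have h1 : HasDerivAt g (w x) x := by
    have := (hx 0).const_add c
    refine this.congr_of_eventuallyEq (.of_forall fun y => hg y)
  have h2 := ((hF.differentiable one_ne_zero (g x)).hasDerivAt).comp x h1
  rw [show deriv (fun x => F (g x)) x = _ from h2.deriv]

lemma ibp_prim {w φ g : ℝ → ℝ} (hw : LocallyIntegrable w) {c : ℝ}
    (hg : ∀ x, g x = c + ∫ s in 0..x, w s)
    (hφ : ContDiff ℝ 1 φ) (hc : HasCompactSupport φ) :
    ∫ x, g x * deriv φ x = - ∫ x, w x * φ x := by
  have := ibp_comp hw hg contDiff_id hφ hc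
  simpa using this

/-- Cauchy–Schwarz for integrals. -/
lemma abs_integral_mul_le {α : Type*} [MeasurableSpace α] {μ : Measure α} {f g : α → ℝ}
    (hf : Integrable (fun x => f x ^ 2) μ) (hg : Integrable (fun x => g x ^ 2) μ)
    (hfg : Integrable (fun x => f x * g x) μ) :
    |∫ x, f x * g x ∂μ| ≤ √(∫ x, f x ^ 2 ∂μ) * √(∫ x, g x ^ 2 ∂μ) := by
  have h : ∀ y : ℝ, 0 ≤ (∫ x, g x ^ 2 ∂μ) * (y * y) + (2 * ∫ x, f x * g x ∂μ) * y
      + ∫ x, f x ^ 2 ∂μ := by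
    intro y
    have h1 : 0 ≤ ∫ x, (f x + y * g x) ^ 2 ∂μ := integral_nonneg fun x => sq_nonneg _
    have h2 : ∫ x, (f x + y * g x) ^ 2 ∂μ = (∫ x, f x ^ 2 ∂μ) + 2 * y * (∫ x, f x * g x ∂μ)
        + y ^ 2 * ∫ x, g x ^ 2 ∂μ := by
      have hi : Integrable (fun x => f x ^ 2 + 2 * y * (f x * g x)) μ := hf.add (hfg.const_mul _)
      rw [← integral_const_mul, ← integral_const_mul, ← integral_add hf (hfg.const_mul _),
        ← integral_add hi (hg.const_mul _)]
      congr 1; ext x; ring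
    linarith
  have hd := discrim_le_zero h
  rw [discrim] at hd
  rw [← Real.sqrt_mul (integral_nonneg fun x => sq_nonneg _)]
  apply Real.abs_le_sqrt
  nlinarith

/-! ### The seminorms and the distance on `U` -/

lemma STest.deriv_cont {N : ℝ} (φ : STest N) : Continuous (deriv φ.toFun) :=
  φ.smooth.continuous_deriv (by simp)

lemma STest.zero_of_le {N : ℝ} (φ : STest N) {x : ℝ} (hx : N ≤ |x|) : φ.toFun x = 0 := by
  by_contra h
  have := φ.supp h
  rw [mem_Ioo, ← abs_lt] at this
  linarith

lemma STest.contDiff_one {N : ℝ} (φ : STest N) : ContDiff ℝ 1 φ.toFun :=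
  φ.smooth.of_le (by exact_mod_cast le_top)

lemma STest.integrable_deriv_sq {N : ℝ} (φ : STest N) :
    Integrable (fun x => deriv φ.toFun x ^ 2) := by
  have hc : HasCompactSupport (fun x => deriv φ.toFun x * deriv φ.toFun x) :=
    φ.cpt.deriv.mul_right
  have hd := φ.deriv_cont
  simp_rw [pow_two]
  exact Continuous.integrable_of_hasCompactSupport (by fun_prop) hc

lemma STest.bound {N : ℝ} (φ : STest N) (x : ℝ) :
    |φ.toFun x| ≤ √(2 * N) * √(∫ y, deriv φ.toFun y ^ 2) := by
  by_cases hx : N ≤ |x|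
  · rw [φ.zero_of_le hx, abs_zero]; positivity
  push Not at hx
  have hN : 0 < N := (abs_nonneg x).trans_lt hx
  have hx' := abs_lt.1 hx
  have h0 : φ.toFun (-N) = 0 := φ.zero_of_le (by rw [abs_neg]; exact le_abs_self N)
  have h1 : φ.toFun x = ∫ y in (-N)..x, deriv φ.toFun y := by
    rw [intervalIntegral.integral_deriv_eq_sub
      (fun y _ => φ.contDiff_one.differentiable one_ne_zero y)
      (φ.deriv_cont.intervalIntegrable _ _), h0, sub_zero]
  have hcont := φ.deriv_cont
  rw [h1, intervalIntegral.integral_of_le hx'.1.le]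
  have hI : ∀ {h : ℝ → ℝ}, Continuous h → IntegrableOn h (Ioc (-N) x) := fun hh =>
    (hh.integrableOn_Icc).mono_set Ioc_subset_Icc_self
  have h2 := abs_integral_mul_le (μ := volume.restrict (Ioc (-N) x)) (f := fun _ => (1:ℝ))
    (g := deriv φ.toFun) (hI (by fun_prop)) (hI (by fun_prop)) (hI (by fun_prop))
  simp only [one_mul, one_pow] at h2
  refine h2.trans ?_
  gcongr
  · simp [measureReal_def, Real.volume_Ioc]
    rw [ENNReal.toReal_ofReal] <;> linarith
  · exact .of_forall fun _ => sq_nonneg _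
  · exact φ.integrable_deriv_sq
  · exact Measure.restrict_le_self

lemma STest.abs_integral_le {N : ℝ} (φ : STest N) {w : ℝ → ℝ} {C : ℝ} (hC : ∀ x, |w x| ≤ C)
    (hN : 0 ≤ N) :
    |∫ x, w x * φ.toFun x| ≤ C * (√(2 * N) * √(∫ y, deriv φ.toFun y ^ 2)) * (2 * N) := by
  have hC0 : 0 ≤ C := (abs_nonneg _).trans (hC 0)
  have : ∫ x, w x * φ.toFun x = ∫ x in Icc (-N) N, w x * φ.toFun x := by
    rw [setIntegral_eq_integral_of_forall_compl_eq_zero]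
    intro x hx
    rw [φ.zero_of_le, mul_zero]
    by_contra h
    exact hx (abs_le.1 (not_le.1 h).le)
  rw [this]
  have h := norm_setIntegral_le_of_norm_le_const (μ := volume) (s := Icc (-N) N)
    (C := C * (√(2 * N) * √(∫ y, deriv φ.toFun y ^ 2))) (f := fun x => w x * φ.toFun x)
    (by simp) (fun x _ => by
      rw [norm_mul]; exact mul_le_mul (hC x) (φ.bound x) (abs_nonneg _) hC0)
  refine h.trans (le_of_eq ?_)
  rw [measureReal_def, Real.volume_Icc, ENNReal.toReal_ofReal (by linarith)]
  ring

lemma negNorm_bdd {N : ℝ} (hN : 0 ≤ N) {w : ℝ → ℝ} {C : ℝ} (hC : ∀ x, |w x| ≤ C) :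
    BddAbove { r : ℝ | ∃ φ : STest N, (∫ x, deriv φ.toFun x ^ 2) = 1 ∧
      r = ∫ x, w x * φ.toFun x } := by
  refine ⟨C * (√(2 * N) * √1) * (2 * N), ?_⟩
  rintro r ⟨φ, h1, rfl⟩
  have := φ.abs_integral_le hC hN
  rw [h1] at this
  exact (le_abs_self _).trans this

/-- The test function `c φ`. -/
def STest.smul {N : ℝ} (c : ℝ) (φ : STest N) : STest N where
  toFun := fun x => c * φ.toFun x
  smooth := contDiff_const.mul φ.smooth
  cpt := φ.cpt.mul_left
  supp := fun x hx => φ.supp (right_ne_zero_of_mul hx)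

lemma STest.deriv_smul {N : ℝ} (c : ℝ) (φ : STest N) :
    deriv (STest.smul c φ).toFun = fun x => c * deriv φ.toFun x := by
  ext x
  exact deriv_const_mul c (φ.contDiff_one.differentiable one_ne_zero x)

lemma negNorm_nonneg (N : ℝ) (w : ℝ → ℝ) : 0 ≤ negNorm N w := by
  unfold negNorm
  by_cases hb : BddAbove { r : ℝ | ∃ φ : STest N, (∫ x, deriv φ.toFun x ^ 2) = 1 ∧
      r = ∫ x, w x * φ.toFun x }
  · by_cases hne : ∃ φ : STest N, (∫ x, deriv φ.toFun x ^ 2) = 1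
    · obtain ⟨φ, h1⟩ := hne
      have hA := le_csSup hb ⟨φ, h1, rfl⟩
      have hB := le_csSup hb ⟨STest.smul (-1) φ, by rw [STest.deriv_smul]; simpa using h1, rfl⟩
      have : ∫ x, w x * (STest.smul (-1) φ).toFun x = - ∫ x, w x * φ.toFun x := by
        rw [← integral_neg]; congr 1; ext x; simp [STest.smul]
      rw [this] at hB
      linarith
    · simp_all
  · simp_all

lemma STest.integral_le_negNorm {N : ℝ} (hN : 0 ≤ N) (φ : STest N) {w : ℝ → ℝ} {C : ℝ}
    (hC : ∀ x, |w x| ≤ C) :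
    |∫ x, w x * φ.toFun x| ≤ negNorm N w * √(∫ x, deriv φ.toFun x ^ 2) := by
  set I := ∫ x, deriv φ.toFun x ^ 2 with hI
  have hI0 : 0 ≤ I := integral_nonneg fun x => sq_nonneg _
  rcases hI0.eq_or_lt with h0 | h0
  · have := φ.abs_integral_le hC hN
    rw [← hI, ← h0] at this
    simpa [← h0] using this
  · have hs : 0 < √I := Real.sqrt_pos.2 h0
    have key : ∀ c : ℝ, c ^ 2 = I⁻¹ → c * ∫ x, w x * φ.toFun x ≤ negNorm N w := by
      intro c hc
      refine le_csSup (negNorm_bdd hN hC) ⟨STest.smul c φ, ?_, ?_⟩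
      · rw [STest.deriv_smul]
        simp only [mul_pow]
        rw [integral_const_mul, ← hI, hc, inv_mul_cancel₀ h0.ne']
      · rw [← integral_const_mul]; congr 1; ext x; simp [STest.smul]; ring
    have hsq : (√I)⁻¹ ^ 2 = I⁻¹ := by rw [inv_pow, Real.sq_sqrt hI0]
    have k1 := key (√I)⁻¹ hsq
    have k2 := key (-(√I)⁻¹) (by rw [neg_sq, hsq])
    rw [← div_le_iff₀ hs, div_eq_inv_mul, ← abs_of_pos (inv_pos.2 hs), ← abs_mul]
    exact abs_le.2 ⟨by linarith, k1⟩

lemma dU_term_nonneg (u v : ℝ → ℝ) (n : ℕ) : 0 ≤ (2 : ℝ)⁻¹ ^ (n + 1) *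
    (negNorm ((n : ℝ) + 1) (fun x => u x - v x) /
      (1 + negNorm ((n : ℝ) + 1) (fun x => u x - v x))) := by
  have := negNorm_nonneg ((n : ℝ) + 1) (fun x => u x - v x)
  positivity

lemma summable_half_pow : Summable (fun n : ℕ => (2 : ℝ)⁻¹ ^ (n + 1)) :=
  (summable_nat_add_iff 1).2 (summable_geometric_of_lt_one (by norm_num) (by norm_num))

lemma dU_summable (u v : ℝ → ℝ) : Summable (fun n : ℕ => (2 : ℝ)⁻¹ ^ (n + 1) *
    (negNorm ((n : ℝ) + 1) (fun x => u x - v x) /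
      (1 + negNorm ((n : ℝ) + 1) (fun x => u x - v x)))) := by
  refine Summable.of_nonneg_of_le (dU_term_nonneg u v) (fun n => ?_) summable_half_pow
  have := negNorm_nonneg ((n : ℝ) + 1) (fun x => u x - v x)
  apply mul_le_of_le_one_right (by positivity)
  rw [div_le_one (by positivity)]
  linarith

lemma dU_nonneg (u v : ℝ → ℝ) : 0 ≤ dU u v := tsum_nonneg (dU_term_nonneg u v)

/-- Closeness for `d_U` controls the pairing with a fixed test function. -/
lemma dU_weak {ψ : ℝ → ℝ} (hψ : Smooth ψ) (hc : HasCompactSupport ψ) {δ : ℝ}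
    (hδ : 0 < δ) :
    ∃ ζ > 0, ∀ u v : ℝ → ℝ, (∀ x, u x ∈ Icc (0:ℝ) 1) → (∀ x, v x ∈ Icc (0:ℝ) 1) →
      dU u v < ζ → |∫ x, (u x - v x) * ψ x| < δ := by
  obtain ⟨R, hR, hs⟩ := exists_support_subset_Ioo hc
  obtain ⟨n, hn⟩ := exists_nat_ge R
  let φ : STest ((n:ℝ) + 1) := ⟨ψ, hψ, hc, fun x hx => by
    have : |x| < R := by by_contra h; exact hx (hs x (not_lt.1 h))
    exact abs_lt.1 (by linarith)⟩
  set A := √(∫ x, deriv φ.toFun x ^ 2) with hA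
  have hA0 : 0 ≤ A := Real.sqrt_nonneg _
  -- a bound `η` on the seminorm suffices
  set η : ℝ := δ / (A + 1) / 2 with hη
  have hη0 : 0 < η := by positivity
  refine ⟨(2:ℝ)⁻¹ ^ (n+1) * (η / (1 + η)), by positivity, fun u v hu hv hd => ?_⟩
  have h1 := (dU_summable u v).le_tsum n (fun m _ => dU_term_nonneg u v m)
  have h2 := h1.trans_lt hd
  set q := negNorm ((n : ℝ) + 1) (fun x => u x - v x) with hq
  have hq0 : 0 ≤ q := negNorm_nonneg _ _
  have h3 : q / (1 + q) < η / (1 + η) := lt_of_mul_lt_mul_left h2 (by positivity)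
  have h4 : q < η := by
    rw [div_lt_div_iff₀ (by positivity) (by positivity)] at h3
    nlinarith
  have h5 := φ.integral_le_negNorm (by positivity) (w := fun x => u x - v x) (C := 1) (fun x => by
    grind)
  refine h5.trans_lt ?_
  calc q * A ≤ η * A := by gcongr
    _ < δ := by
      rw [hη, div_div, div_mul_eq_mul_div, div_lt_iff₀ (by positivity)]
      nlinarith

/-! ### The weighted sum of local `L²` norms -/

/-- The weighted sum of local `L²` norms that enters the distance on `𝓑`. -/
def wsum (g : ℝ → ℝ) : ℝ :=
  ∑' n : ℕ, (2 : ℝ)⁻¹ ^ (n + 1) * √(∫ x in Icc (-((n : ℝ) + 1)) ((n : ℝ) + 1), g x ^ 2)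

lemma wsum_nonneg (g : ℝ → ℝ) : 0 ≤ wsum g := tsum_nonneg fun n => by positivity

lemma wsum_congr_ae {g h : ℝ → ℝ} (H : ∀ᵐ x, g x = h x) : wsum g = wsum h := by
  unfold wsum
  congr 1; ext n; congr 2
  apply integral_congr_ae
  filter_upwards [ae_restrict_of_ae H] with x hx
  rw [hx]

lemma sqrt_integral_sq_le {g : ℝ → ℝ} {N B : ℝ} (hN : 0 ≤ N) (hB : 0 ≤ B)
    (h : ∀ x, |x| ≤ N → |g x| ≤ B) :
    √(∫ x in Icc (-N) N, g x ^ 2) ≤ √(2 * N) * B := by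
  have h1 := norm_setIntegral_le_of_norm_le_const (μ := volume) (s := Icc (-N) N)
    (C := B ^ 2) (f := fun x => g x ^ 2) (by simp) (fun x hx => by
      rw [norm_pow]; exact pow_le_pow_left₀ (abs_nonneg _) (h x (abs_le.2 hx)) 2)
  rw [measureReal_def, Real.volume_Icc, ENNReal.toReal_ofReal (by linarith)] at h1
  refine (Real.sqrt_le_sqrt ((le_abs_self _).trans h1)).trans (le_of_eq ?_)
  rw [show B ^ 2 * (N - -N) = (2 * N) * B ^ 2 by ring, Real.sqrt_mul (by linarith),
    Real.sqrt_sq hB]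

lemma summable_weight (C : ℝ) : Summable (fun n : ℕ => (2 : ℝ)⁻¹ ^ (n + 1) *
    (√(2 * ((n : ℝ) + 1)) * (C * (1 + ((n : ℝ) + 1))))) := by
  have h1 : Summable (fun n : ℕ => |C| * (2 * ((n : ℝ) ^ 2 * (2:ℝ)⁻¹ ^ n))) :=
    ((summable_pow_mul_geometric_of_norm_lt_one 2 (by norm_num : ‖(2:ℝ)⁻¹‖ < 1)).mul_left 2).mul_left _
  have h2 := (summable_nat_add_iff 2).2 h1
  refine Summable.of_norm_bounded (h2.mul_left 2) (fun n => ?_)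
  have h4 : √(2 * ((n : ℝ) + 1)) ≤ 2 * ((n:ℝ) + 1) := by
    apply Real.sqrt_le_iff.2 ⟨by positivity, by nlinarith [(Nat.cast_nonneg n : (0:ℝ) ≤ n)]⟩
  simp only [norm_mul, norm_pow, norm_inv, Real.norm_ofNat, norm_eq_abs,
    abs_of_nonneg (Real.sqrt_nonneg _), abs_of_nonneg (show (0:ℝ) ≤ 1 + (n + 1) by positivity)]
  push_cast
  have h5 : (0:ℝ) < 2⁻¹ ^ n := by positivity
  calc (2:ℝ)⁻¹ ^ (n + 1) * (√(2 * ((n : ℝ) + 1)) * (|C| * (1 + ((n : ℝ) + 1))))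
      ≤ (2:ℝ)⁻¹ ^ (n + 1) * ((2 * ((n:ℝ) + 1)) * (|C| * (1 + ((n : ℝ) + 1)))) := by gcongr
    _ = 2⁻¹ ^ n * |C| * ((n + 1) * (n + 2)) := by rw [pow_succ]; ring
    _ ≤ 2⁻¹ ^ n * |C| * ((n + 2) * (n + 2)) := by gcongr; linarith
    _ = _ := by rw [pow_add]; ring

lemma wsum_term_le {g : ℝ → ℝ} {C : ℝ} (hC : 0 ≤ C) (hg : ∀ x, |g x| ≤ C * (1 + |x|)) (n : ℕ) :
    (2 : ℝ)⁻¹ ^ (n + 1) * √(∫ x in Icc (-((n : ℝ) + 1)) ((n : ℝ) + 1), g x ^ 2) ≤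
    (2 : ℝ)⁻¹ ^ (n + 1) * (√(2 * ((n : ℝ) + 1)) * (C * (1 + ((n : ℝ) + 1)))) := by
  gcongr
  exact sqrt_integral_sq_le (by positivity) (by positivity) fun x hx =>
    (hg x).trans (by gcongr)

lemma wsum_summable {g : ℝ → ℝ} {C : ℝ} (hC : 0 ≤ C) (hg : ∀ x, |g x| ≤ C * (1 + |x|)) :
    Summable (fun n : ℕ =>
      (2 : ℝ)⁻¹ ^ (n + 1) * √(∫ x in Icc (-((n : ℝ) + 1)) ((n : ℝ) + 1), g x ^ 2)) :=
  Summable.of_nonneg_of_le (fun _ => by positivity) (wsum_term_le hC hg) (summable_weight C)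

lemma wsum_le {g : ℝ → ℝ} {C : ℝ} (hC : 0 ≤ C) (hg : ∀ x, |g x| ≤ C * (1 + |x|)) :
    wsum g ≤ ∑' n : ℕ, (2 : ℝ)⁻¹ ^ (n + 1) *
      (√(2 * ((n : ℝ) + 1)) * (C * (1 + ((n : ℝ) + 1)))) :=
  (wsum_summable hC hg).tsum_le_tsum (wsum_term_le hC hg) (summable_weight C)

/-- Functions of controlled growth that are small on a large interval have small `wsum`. -/
lemma wsum_small {C δ : ℝ} (hC : 0 ≤ C) (hδ : 0 < δ) :
    ∃ k : ℕ, ∀ g : ℝ → ℝ, (∀ x, |g x| ≤ C * (1 + |x|)) →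
      (∀ x : ℝ, |x| ≤ (k:ℝ) → |g x| ≤ 1 / ((k : ℝ) + 1)) → wsum g < δ := by
  let τ : ℕ → ℕ → ℝ := fun k n => (2 : ℝ)⁻¹ ^ (n + 1) *
    (√(2 * ((n : ℝ) + 1)) * (if n + 1 ≤ k then 1 / ((k:ℝ) + 1) else C * (1 + ((n : ℝ) + 1))))
  have hlim : Tendsto (fun k => ∑' n, τ k n) atTop (𝓝 (∑' _ : ℕ, (0:ℝ))) := by
    refine tendsto_tsum_of_dominated_convergence (summable_weight (C + 1)) (fun n => ?_) ?_
    · have h1 : Tendsto (fun k : ℕ => (2 : ℝ)⁻¹ ^ (n + 1) *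
          (√(2 * ((n : ℝ) + 1)) * (1 / ((k:ℝ) + 1)))) atTop (𝓝 ((2 : ℝ)⁻¹ ^ (n + 1) *
          (√(2 * ((n : ℝ) + 1)) * 0))) :=
        (tendsto_one_div_add_atTop_nhds_zero_nat.const_mul _).const_mul _
      rw [mul_zero, mul_zero] at h1
      refine h1.congr' ?_
      filter_upwards [eventually_ge_atTop (n+1)] with k hk
      simp only [τ, if_pos hk]
    · refine .of_forall fun k n => ?_
      have hnn : 0 ≤ (if n + 1 ≤ k then 1 / ((k:ℝ) + 1) else C * (1 + ((n : ℝ) + 1))) := by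
        positivity
      have hle : (if n + 1 ≤ k then 1 / ((k:ℝ) + 1) else C * (1 + ((n : ℝ) + 1))) ≤
          (C + 1) * (1 + ((n : ℝ) + 1)) := by
        split_ifs
        · have : 1 / ((k:ℝ) + 1) ≤ 1 := by bound
          nlinarith [(Nat.cast_nonneg n : (0:ℝ) ≤ n)]
        · linarith
      show ‖(2 : ℝ)⁻¹ ^ (n + 1) * (√(2 * ((n : ℝ) + 1)) *
        (if n + 1 ≤ k then 1 / ((k:ℝ) + 1) else C * (1 + ((n : ℝ) + 1))))‖ ≤ _
      rw [Real.norm_of_nonneg (by positivity)]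
      exact mul_le_mul_of_nonneg_left (mul_le_mul_of_nonneg_left hle (by positivity))
        (by positivity)
  rw [tsum_zero] at hlim
  obtain ⟨k, hk⟩ := (hlim.eventually (gt_mem_nhds hδ)).exists
  refine ⟨k, fun g hg hs => lt_of_le_of_lt ?_ hk⟩
  have hterm : ∀ n : ℕ, (2 : ℝ)⁻¹ ^ (n + 1) *
      √(∫ x in Icc (-((n : ℝ) + 1)) ((n : ℝ) + 1), g x ^ 2) ≤ τ k n := by
    intro n
    simp only [τ]
    gcongr
    refine sqrt_integral_sq_le (by positivity) (by split_ifs <;> positivity) fun x hx => ?_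
    split_ifs with h
    · exact hs x (hx.trans (by exact_mod_cast h))
    · exact (hg x).trans (by gcongr)
  refine (wsum_summable hC hg).tsum_le_tsum hterm ?_
  refine Summable.of_nonneg_of_le (fun n => ?_) (fun n => ?_) (summable_weight (C + 1))
  · positivity
  · simp only [τ]
    gcongr
    split_ifs
    · have : 1 / ((k:ℝ) + 1) ≤ 1 := by bound
      nlinarith [(Nat.cast_nonneg n : (0:ℝ) ≤ n)]
    · linarith

lemma locallyIntegrable_of_bdd {w : ℝ → ℝ} (hw : Measurable w) {C : ℝ} (hC : ∀ x, |w x| ≤ C) :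
    LocallyIntegrable w := by
  refine (locallyIntegrable_const C).mono hw.aestronglyMeasurable
    (.of_forall fun x => ?_)
  exact (hC x).trans (le_abs_self C)

lemma prim_continuous {w g : ℝ → ℝ} (hw : LocallyIntegrable w) {c : ℝ}
    (hg : ∀ x, g x = c + ∫ s in 0..x, w s) : Continuous g := by
  rw [show g = fun x => c + ∫ s in 0..x, w s from funext hg]
  exact continuous_const.add (intervalIntegral.continuous_primitive
    (fun a b => (hw.integrableOn_isCompact isCompact_uIcc).intervalIntegrable) 0)

lemma prim_growth {w g : ℝ → ℝ} {c C : ℝ} (hC : ∀ x, |w x| ≤ C)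
    (hg : ∀ x, g x = c + ∫ s in 0..x, w s) (x : ℝ) : |g x| ≤ |c| + C * |x| := by
  rw [hg]
  refine (abs_add_le _ _).trans ?_
  gcongr
  have := intervalIntegral.norm_integral_le_of_norm_le_const (a := 0) (b := x) (f := w) (C := C)
    (fun s _ => hC s)
  simpa using this

/-- The negative seminorm of `w` is bounded by the local `L²` norm of any primitive of `w`. -/
lemma negNorm_le_prim {w g : ℝ → ℝ} (hw : Measurable w) {c C : ℝ} (hC : ∀ x, |w x| ≤ C)
    (hg : ∀ x, g x = c + ∫ s in 0..x, w s) (N : ℝ) :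
    negNorm N w ≤ √(∫ x in Icc (-N) N, g x ^ 2) := by
  have hl := locallyIntegrable_of_bdd hw hC
  have hgc := prim_continuous hl hg
  refine Real.sSup_le ?_ (Real.sqrt_nonneg _)
  rintro r ⟨φ, h1, rfl⟩
  have h2 := ibp_prim hl hg φ.contDiff_one φ.cpt
  have hdc := φ.deriv_cont
  have h3 : ∫ x, g x * deriv φ.toFun x = ∫ x in Icc (-N) N, g x * deriv φ.toFun x := by
    rw [setIntegral_eq_integral_of_forall_compl_eq_zero]
    intro x hx
    have : deriv φ.toFun x = 0 := by
      by_contra h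
      apply hx
      have : x ∈ tsupport φ.toFun := support_deriv_subset h
      exact closure_minimal (φ.supp.trans Ioo_subset_Icc_self) isClosed_Icc this
    rw [this, mul_zero]
  have hI : ∀ {h : ℝ → ℝ}, Continuous h → IntegrableOn h (Icc (-N) N) :=
    fun hh => hh.integrableOn_Icc
  have h4 := abs_integral_mul_le (μ := volume.restrict (Icc (-N) N)) (f := g)
    (g := deriv φ.toFun) (hI (by fun_prop)) (hI (by fun_prop)) (hI (by fun_prop))
  have h5 : √(∫ x in Icc (-N) N, deriv φ.toFun x ^ 2) ≤ 1 := by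
    rw [Real.sqrt_le_one, ← h1]
    exact setIntegral_le_integral φ.integrable_deriv_sq (.of_forall fun _ => sq_nonneg _)
  have h6 : ∫ x, w x * φ.toFun x = - ∫ x in Icc (-N) N, g x * deriv φ.toFun x := by linarith
  rw [h6]
  refine (neg_le_abs _).trans (h4.trans ?_)
  exact mul_le_of_le_one_right (Real.sqrt_nonneg _) h5

lemma dU_le_wsum {u v g : ℝ → ℝ} (hu : Measurable u) (hv : Measurable v)
    (hu1 : ∀ x, u x ∈ Icc (0:ℝ) 1) (hv1 : ∀ x, v x ∈ Icc (0:ℝ) 1) {c : ℝ}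
    (hg : ∀ x, g x = c + ∫ s in 0..x, (u s - v s)) : dU u v ≤ wsum g := by
  have hC : ∀ x, |u x - v x| ≤ 1 := fun x => by grind
  have hgr := prim_growth hC hg
  refine (dU_summable u v).tsum_le_tsum (fun n => ?_)
    (wsum_summable (C := |c| + 1) (by positivity) fun x => (hgr x).trans ?_)
  · gcongr
    have h1 := negNorm_le_prim (hu.sub hv) hC hg ((n:ℝ) + 1)
    have h0 := negNorm_nonneg ((n:ℝ)+1) (fun x => u x - v x)
    refine le_trans ?_ h1
    exact div_le_self h0 (by linarith)
  · nlinarith [abs_nonneg c, abs_nonneg x]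

lemma dU_congr_ae {u u' v v' : ℝ → ℝ} (h : ∀ᵐ x, u x = u' x) (h' : ∀ᵐ x, v x = v' x) :
    dU u v = dU u' v' := by
  have : ∀ N, negNorm N (fun x => u x - v x) = negNorm N (fun x => u' x - v' x) := by
    intro N
    unfold negNorm
    congr 1; ext r
    have : ∀ φ : STest N, ∫ x, (u x - v x) * φ.toFun x = ∫ x, (u' x - v' x) * φ.toFun x := by
      intro φ
      apply integral_congr_ae
      filter_upwards [h, h'] with x h1 h2
      rw [h1, h2]
    simp [this]
  unfold dU
  simp [this]

/-! ### The fundamental lemma in one variable -/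

/-- A smooth compactly supported function with vanishing integral has a smooth compactly supported
primitive. -/
lemma exists_primitive {φ : ℝ → ℝ} (hφ : Smooth φ) (hc : HasCompactSupport φ)
    (h0 : ∫ x, φ x = 0) :
    ∃ Φ : ℝ → ℝ, Smooth Φ ∧ HasCompactSupport Φ ∧ ∀ x, deriv Φ x = φ x := by
  obtain ⟨R, hR, hs⟩ := exists_support_subset_Ioo hc
  have hcont := hφ.continuous
  have hder : ∀ x, HasDerivAt (fun y => ∫ s in (-R)..y, φ s) (φ x) x := fun x =>
    (hcont.integral_hasStrictDerivAt (-R) x).hasDerivAt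
  have hd : deriv (fun y => ∫ s in (-R)..y, φ s) = φ := funext fun x => (hder x).deriv
  refine ⟨fun y => ∫ s in (-R)..y, φ s, ?_, ?_, fun x => (hder x).deriv⟩
  · rw [contDiff_infty_iff_deriv]
    exact ⟨fun x => (hder x).differentiableAt, by rw [hd]; exact hφ⟩
  · refine HasCompactSupport.intro (isCompact_Icc (a := -R) (b := R)) fun x hx => ?_
    rw [mem_Icc, not_and_or, not_le, not_le] at hx
    rcases hx with hx | hx
    · show ∫ s in (-R)..x, φ s = 0
      rw [intervalIntegral.integral_symm, intervalIntegral.integral_of_le hx.le,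
        setIntegral_eq_zero_of_forall_eq_zero, neg_zero]
      intro s hs'
      apply hs
      rw [abs_of_nonpos (by linarith [hs'.2])]; linarith [hs'.2]
    · show ∫ s in (-R)..x, φ s = 0
      rw [intervalIntegral.integral_eq_integral_of_support_subset, h0]
      intro s hs'
      have : |s| < R := by by_contra h; exact hs' (hs s (not_lt.1 h))
      have := abs_lt.1 this
      exact ⟨this.1, by linarith⟩

lemma exists_unit_bump : ∃ ψ : ℝ → ℝ, Smooth ψ ∧ HasCompactSupport ψ ∧
    (∀ x, 0 ≤ ψ x) ∧ (∀ x, 1 ≤ |x| → ψ x = 0) ∧ ∫ x, ψ x = 1 := by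
  let B : ContDiffBump (0:ℝ) := ⟨1/2, 1, by norm_num, by norm_num⟩
  refine ⟨B.normed volume, B.contDiff_normed, B.hasCompactSupport_normed,
    fun x => B.nonneg_normed x, fun x hx => ?_, B.integral_normed⟩
  have : x ∉ Function.support (B.normed volume) := by
    rw [B.support_normed_eq, Metric.mem_ball, dist_eq, sub_zero]
    exact not_lt.2 hx
  simpa using this

lemma weak_deriv_ae {g u : ℝ → ℝ} (hg : LocallyIntegrable g) (hu : LocallyIntegrable u)
    (h : ∀ ψ : ℝ → ℝ, Smooth ψ → HasCompactSupport ψ →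
      ∫ x, g x * deriv ψ x = - ∫ x, u x * ψ x) :
    ∃ c, ∀ᵐ x, g x = c + ∫ s in 0..x, u s := by
  obtain ⟨ψ, hψ, hψc, -, -, hψ1⟩ := exists_unit_bump
  set U : ℝ → ℝ := fun x => ∫ s in 0..x, u s with hU
  have hUg : ∀ x, U x = 0 + ∫ s in 0..x, u s := fun x => by simp [hU]
  have hUc := prim_continuous hu hUg
  have hk : LocallyIntegrable (fun x => g x - U x) := hg.sub hUc.locallyIntegrable
  have hInt : ∀ {φ : ℝ → ℝ}, Smooth φ → HasCompactSupport φ →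
      Integrable (fun x => (g x - U x) * φ x) := fun hφ hφc => by
    simpa [mul_comm] using hk.integrable_smul_left_of_hasCompactSupport hφ.continuous hφc
  have hInt' : ∀ {φ k : ℝ → ℝ}, LocallyIntegrable k → Continuous φ → HasCompactSupport φ →
      Integrable (fun x => k x * φ x) := fun hk hφ hφc => by
    simpa [mul_comm] using hk.integrable_smul_left_of_hasCompactSupport hφ hφc
  have hz : ∀ Φ : ℝ → ℝ, Smooth Φ → HasCompactSupport Φ →
      ∫ x, (g x - U x) * deriv Φ x = 0 := by
    intro Φ hΦ hΦc
    have h1 := h Φ hΦ hΦc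
    have h2 := ibp_prim hu hUg (hΦ.of_le (by exact_mod_cast le_top)) hΦc
    have hdc : Continuous (deriv Φ) := hΦ.continuous_deriv (by simp)
    simp_rw [sub_mul]
    rw [integral_sub (hInt' hg hdc hΦc.deriv) (hInt' hUc.locallyIntegrable hdc hΦc.deriv),
      h1, h2, sub_self]
  refine ⟨∫ x, (g x - U x) * ψ x, ?_⟩
  set c := ∫ x, (g x - U x) * ψ x with hc
  have key := ae_eq_zero_of_integral_contDiff_smul_eq_zero (hk.sub (locallyIntegrable_const c))
    (μ := volume) (fun φ hφ hφc => by
      have hφi : Integrable φ := hφ.continuous.integrable_of_hasCompactSupport hφc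
      have hψi : Integrable ψ := hψ.continuous.integrable_of_hasCompactSupport hψc
      obtain ⟨Φ, hΦ, hΦc, hd⟩ := exists_primitive (φ := fun x => φ x - (∫ y, φ y) * ψ x)
        (hφ.sub (contDiff_const.mul hψ)) (hφc.sub hψc.mul_left) (by
          rw [integral_sub hφi (hψi.const_mul _), integral_const_mul, hψ1]; ring)
      have h1 := hz Φ hΦ hΦc
      simp_rw [hd] at h1
      have h2 : ∀ x, (g x - U x) * (φ x - (∫ y, φ y) * ψ x) =
        (g x - U x) * φ x - (∫ y, φ y) * ((g x - U x) * ψ x) := fun x => by ring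
      simp_rw [h2] at h1
      rw [integral_sub (hInt hφ hφc) ((hInt hψ hψc).const_mul _), integral_const_mul, ← hc] at h1
      have h3 : ∀ x, φ x • (((fun x => g x - U x) : ℝ → ℝ) - (fun _ => c : ℝ → ℝ)) x =
        (g x - U x) * φ x - c * φ x := fun x => by
          simp only [Pi.sub_apply, smul_eq_mul]; ring
      simp_rw [h3]
      rw [integral_sub (hInt hφ hφc) (hφi.const_mul _), integral_const_mul]
      linarith)
  filter_upwards [key] with x hx
  simp only [Pi.sub_apply] at hx
  linarith

/-! ### Integrals over the strip -/

/-- The test function `χ(t) ψ(x)`. -/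
def TTest.prod {χ ψ : ℝ → ℝ} (hχ : Smooth χ) (hχc : HasCompactSupport χ)
    (hχs : Function.support χ ⊆ Ioo 0 T) (hψ : Smooth ψ)
    (hψc : HasCompactSupport ψ) : TTest T where
  toFun := fun p => χ p.1 * ψ p.2
  smooth := (hχ.comp contDiff_fst).mul (hψ.comp contDiff_snd)
  cpt := by
    refine HasCompactSupport.intro (hχc.isCompact.prod hψc.isCompact) ?_
    intro p hp
    rw [Set.mem_prod, not_and_or] at hp
    rcases hp with h | h
    · rw [image_eq_zero_of_notMem_tsupport h, zero_mul]
    · rw [image_eq_zero_of_notMem_tsupport h, mul_zero]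
  supp := by
    intro p hp
    refine ⟨hχs ?_, mem_univ _⟩
    intro h0
    apply hp
    simp [h0]

lemma ptF_prod {χ ψ : ℝ → ℝ} (hχ : ContDiff ℝ 1 χ) (hψ : ContDiff ℝ 1 ψ) (p : ℝ²) :
    ptF (fun p => χ p.1 * ψ p.2) p = deriv χ p.1 * ψ p.2 := by
  have h1 : HasFDerivAt (fun p : ℝ² => χ p.1)
      (deriv χ p.1 • ContinuousLinearMap.fst ℝ ℝ ℝ) p :=
    ((hχ.differentiable one_ne_zero p.1).hasDerivAt).comp_hasFDerivAt p hasFDerivAt_fst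
  have h2 : HasFDerivAt (fun p : ℝ² => ψ p.2)
      (deriv ψ p.2 • ContinuousLinearMap.snd ℝ ℝ ℝ) p :=
    ((hψ.differentiable one_ne_zero p.2).hasDerivAt).comp_hasFDerivAt p hasFDerivAt_snd
  unfold ptF
  have h3 : HasFDerivAt (fun p : ℝ² => χ p.1 * ψ p.2) _ p := h1.mul h2
  rw [h3.fderiv]
  simp
  ring

lemma pxF_prod {χ ψ : ℝ → ℝ} (hχ : ContDiff ℝ 1 χ) (hψ : ContDiff ℝ 1 ψ) (p : ℝ²) :
    pxF (fun p => χ p.1 * ψ p.2) p = χ p.1 * deriv ψ p.2 := by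
  have h1 : HasFDerivAt (fun p : ℝ² => χ p.1)
      (deriv χ p.1 • ContinuousLinearMap.fst ℝ ℝ ℝ) p :=
    ((hχ.differentiable one_ne_zero p.1).hasDerivAt).comp_hasFDerivAt p hasFDerivAt_fst
  have h2 : HasFDerivAt (fun p : ℝ² => ψ p.2)
      (deriv ψ p.2 • ContinuousLinearMap.snd ℝ ℝ ℝ) p :=
    ((hψ.differentiable one_ne_zero p.2).hasDerivAt).comp_hasFDerivAt p hasFDerivAt_snd
  unfold pxF
  have h3 : HasFDerivAt (fun p : ℝ² => χ p.1 * ψ p.2) _ p := h1.mul h2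
  rw [h3.fderiv]
  simp

lemma exists_strip_bound {E : Type*} [TopologicalSpace E] [Zero E] {h : ℝ² → E}
    (hc : HasCompactSupport h) : ∃ R : ℝ, 0 < R ∧ ∀ p : ℝ², R ≤ |p.2| → h p = 0 := by
  obtain ⟨C, hC⟩ := hc.isCompact.isBounded.exists_norm_le
  refine ⟨|C| + 1, by positivity, fun p hp => ?_⟩
  by_contra hne
  have h1 := hC p (subset_tsupport _ hne)
  have h2 : |p.2| ≤ ‖p‖ := by bound
  have := le_abs_self C
  linarith

lemma ptF_cont {ψ : ℝ² → ℝ} (h : ContDiff ℝ 1 ψ) : Continuous (ptF ψ) :=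
  (h.continuous_fderiv one_ne_zero).clm_apply continuous_const

lemma pxF_cont {ψ : ℝ² → ℝ} (h : ContDiff ℝ 1 ψ) : Continuous (pxF ψ) :=
  (h.continuous_fderiv one_ne_zero).clm_apply continuous_const

lemma ptF_cpt {ψ : ℝ² → ℝ} (h : HasCompactSupport ψ) : HasCompactSupport (ptF ψ) := by
  have := h.fderiv (𝕜 := ℝ)
  exact this.comp_left (g := fun L : ℝ² →L[ℝ] ℝ => L (1, 0)) (by simp)

lemma pxF_cpt {ψ : ℝ² → ℝ} (h : HasCompactSupport ψ) : HasCompactSupport (pxF ψ) := by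
  have := h.fderiv (𝕜 := ℝ)
  exact this.comp_left (g := fun L : ℝ² →L[ℝ] ℝ => L (0, 1)) (by simp)

lemma TTest.c1 (φ : TTest T) : ContDiff ℝ 1 φ.toFun := φ.smooth.of_le (by exact_mod_cast le_top)

lemma TTest.cont (φ : TTest T) : Continuous φ.toFun := φ.smooth.continuous

lemma measurableSet_strip : MeasurableSet (strip T) :=
  measurableSet_Icc.prod MeasurableSet.univ

lemma isCompact_box {R : ℝ} : IsCompact (box T R) :=
  isCompact_Icc.prod isCompact_Icc

lemma measurableSet_box {R : ℝ} : MeasurableSet (box T R) :=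
  measurableSet_Icc.prod measurableSet_Icc

/-- Integrals over the strip of functions vanishing for `|x| ≥ R` reduce to a box. -/
lemma strip_eq_box {R : ℝ} {k : ℝ² → ℝ} (hR : ∀ p : ℝ², R ≤ |p.2| → k p = 0) :
    ∫ p in strip T, k p = ∫ p in box T R, k p := by
  apply setIntegral_eq_of_subset_of_forall_sdiff_eq_zero measurableSet_strip
  · grind
  · grind

lemma integrableOn_strip {R : ℝ} {k : ℝ² → ℝ} (hR : ∀ p : ℝ², R ≤ |p.2| → k p = 0)
    (hk : IntegrableOn k (box T R)) :
    IntegrableOn k (strip T) := by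
  apply hk.of_forall_sdiff_eq_zero measurableSet_strip
  rintro p ⟨h1, h2⟩
  apply hR
  by_contra h
  push Not at h
  exact h2 ⟨h1.1, (abs_lt.1 h).1.le, (abs_lt.1 h).2.le⟩

lemma L1loc.mul_box {R : ℝ} {g h : ℝ² → ℝ} (hg : L1loc T g) (hh : Continuous h)
    (hR0 : 0 < R) : IntegrableOn (fun p => g p * h p) (box T R) :=
  (hg.2 R hR0).mul_continuousOn hh.continuousOn isCompact_box

lemma L1loc.mul_strip {g h : ℝ² → ℝ} (hg : L1loc T g) (hh : Continuous h)
    (hc : HasCompactSupport h) :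
    IntegrableOn (fun p => g p * h p) (strip T) := by
  obtain ⟨R, hR0, hR⟩ := exists_strip_bound hc
  exact integrableOn_strip (fun p hp => by rw [hR p hp, mul_zero]) (hg.mul_box hh hR0)

lemma L1loc.of_bdd {C : ℝ} {g : ℝ² → ℝ} (hg : Measurable g) (hC : ∀ p, |g p| ≤ C) :
    L1loc T g := by
  refine ⟨hg, fun R _ => ?_⟩
  exact Measure.integrableOn_of_bounded (M := C) isCompact_box.measure_lt_top.ne
    hg.aestronglyMeasurable (.of_forall fun p => hC p)

lemma L1loc.of_cont {g : ℝ² → ℝ} (hg : Continuous g) : L1loc T g :=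
  ⟨hg.measurable, fun _ _ => hg.continuousOn.integrableOn_compact isCompact_box⟩

lemma L2loc.l1 {g : ℝ² → ℝ} (hg : L2loc T g) : L1loc T g := by
  refine ⟨hg.1, fun R hR => ?_⟩
  have h1 : IntegrableOn (fun p => 1 + g p ^ 2) (box T R) :=
    (integrableOn_const isCompact_box.measure_lt_top.ne).add (hg.2 R hR)
  refine h1.mono' hg.1.aestronglyMeasurable (.of_forall fun p => ?_)
  rw [norm_eq_abs]
  nlinarith [sq_nonneg (|g p| - 1), sq_abs (g p), abs_nonneg (g p)]

lemma cU.l1 (u : cU T) : L1loc T u.toFun :=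
  L1loc.of_bdd u.meas (C := 1) fun p => abs_le.2 ⟨by linarith [(u.mem01 p).1], (u.mem01 p).2⟩

lemma pair_iter {g h : ℝ² → ℝ}
    (hi : IntegrableOn (fun p => g p * h p) (strip T)) :
    pair T g h = ∫ t in Icc 0 T, ∫ x, g (t, x) * h (t, x) := by
  unfold pair
  rw [volume_eq_prod] at hi ⊢
  rw [setIntegral_prod _ hi]
  simp

/-- Fubini null sets: an a.e. property on the strip holds, for a.e. `t`, for a.e. `x`. -/
lemma ae_strip_slice {P : ℝ² → Prop}
    (h : ∀ᵐ p ∂(volume.restrict (strip T)), P p) :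
    ∀ᵐ t ∂(volume.restrict (Icc 0 T)), ∀ᵐ x, P (t, x) := by
  rw [volume_eq_prod, ← prod_restrict, restrict_univ] at h
  exact Measure.ae_ae_of_ae_prod h

lemma ae_strip_of_slice {g h : ℝ² → ℝ} (hg : Measurable g) (hh : Measurable h)
    (hgh : ∀ᵐ t ∂(volume.restrict (Icc 0 T)), ∀ᵐ x, g (t, x) = h (t, x)) :
    ∀ᵐ p ∂(volume.restrict (strip T)), g p = h p := by
  rw [volume_eq_prod, ← prod_restrict, restrict_univ]
  exact (Measure.ae_prod_iff_ae_ae (measurableSet_eq_fun hg hh)).2 hgh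

/-- The fundamental lemma of the calculus of variations on `[0,T]`. -/
lemma eq_zero_of_forall_test (hT : 0 < T) {h : ℝ → ℝ} (hh : ContinuousOn h (Icc 0 T))
    (h0 : ∀ χ : ℝ → ℝ, Smooth χ → HasCompactSupport χ →
      Function.support χ ⊆ Ioo 0 T → ∫ t in Icc 0 T, χ t * h t = 0) :
    ∀ t ∈ Icc 0 T, h t = 0 := by
  have h1 : ∀ᵐ t ∂volume, t ∈ Ioo 0 T → h t = 0 := by
    apply isOpen_Ioo.ae_eq_zero_of_integral_contDiff_smul_eq_zero
    · exact (hh.mono Ioo_subset_Icc_self).locallyIntegrableOn measurableSet_Ioo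
    · intro χ hχ hχc hχs
      rw [← h0 χ hχ hχc ((subset_tsupport _).trans hχs)]
      symm
      apply setIntegral_eq_integral_of_forall_compl_eq_zero
      intro t ht
      have : χ t = 0 := by
        by_contra hne
        exact ht (Ioo_subset_Icc_self (hχs (subset_tsupport _ hne)))
      rw [this, zero_mul]
  have h2 : h =ᵐ[volume.restrict (Icc 0 T)] fun _ => (0:ℝ) := by
    rw [← restrict_Ioo_eq_restrict_Icc]
    exact (ae_restrict_iff' measurableSet_Ioo).2 h1
  exact Measure.eqOn_Icc_of_ae_eq volume hT.ne h2 hh continuousOn_const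

lemma continuousOn_of_delta {h : ℝ → ℝ}
    (H : ∀ t₀ ∈ Icc 0 T, ∀ δ > 0, ∃ ζ > 0, ∀ t ∈ Icc 0 T, |t - t₀| < ζ →
      |h t - h t₀| < δ) : ContinuousOn h (Icc 0 T) := by
  intro t₀ ht₀
  rw [Metric.continuousWithinAt_iff]
  intro δ hδ
  obtain ⟨ζ, hζ, h'⟩ := H t₀ ht₀ δ hδ
  exact ⟨ζ, hζ, fun {t} ht htt => h' t ht (by rwa [dist_eq] at htt)⟩

lemma cU.slice_meas (u : cU T) (t : ℝ) : Measurable fun x => u.toFun (t, x) :=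
  u.meas.comp measurable_prodMk_left

lemma cU.abs_le_one (u : cU T) (p : ℝ²) : |u.toFun p| ≤ 1 :=
  abs_le.2 ⟨by linarith [(u.mem01 p).1], (u.mem01 p).2⟩

lemma cU.slice_int (u : cU T) (t : ℝ) : LocallyIntegrable fun x => u.toFun (t, x) :=
  locallyIntegrable_of_bdd (u.slice_meas t) fun _ => u.abs_le_one _

lemma LocallyIntegrable.mul_test {g ψ : ℝ → ℝ} (hg : LocallyIntegrable g) (hψ : Continuous ψ)
    (hc : HasCompactSupport ψ) : Integrable fun x => g x * ψ x := by
  simpa [mul_comm, smul_eq_mul] using hg.integrable_smul_left_of_hasCompactSupport hψ hc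

lemma cU.cont_test (u : cU T) {ψ : ℝ → ℝ} (hψ : Smooth ψ)
    (hc : HasCompactSupport ψ) : ContinuousOn (fun t => ∫ x, u.toFun (t, x) * ψ x) (Icc 0 T) := by
  apply continuousOn_of_delta
  intro t₀ ht₀ δ hδ
  obtain ⟨ζ, hζ, h1⟩ := dU_weak hψ hc hδ
  obtain ⟨ξ, hξ, h2⟩ := u.cont t₀ ht₀ ζ hζ
  refine ⟨ξ, hξ, fun t ht htt => ?_⟩
  have := h1 (fun x => u.toFun (t, x)) (fun x => u.toFun (t₀, x))
    (fun _ => u.mem01 _) (fun _ => u.mem01 _) (h2 t ht htt)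
  rw [← integral_sub]
  · grind
  · exact LocallyIntegrable.mul_test (u.slice_int t) hψ.continuous hc
  · exact LocallyIntegrable.mul_test (u.slice_int t₀) hψ.continuous hc

/-! ### Continuous representatives of elements of `𝓑` -/

lemma exists_bump_at (x : ℝ) {r : ℝ} (hr : 0 < r) : ∃ ψ : ℝ → ℝ, Smooth ψ ∧
    HasCompactSupport ψ ∧ (∀ y, 0 ≤ ψ y) ∧ (∀ y, r ≤ |y - x| → ψ y = 0) ∧ ∫ y, ψ y = 1 := by
  let B : ContDiffBump x := ⟨r/2, r, by linarith, by linarith⟩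
  refine ⟨B.normed volume, B.contDiff_normed, B.hasCompactSupport_normed,
    fun x => B.nonneg_normed x, fun y hy => ?_, B.integral_normed⟩
  have : y ∉ Function.support (B.normed volume) := by
    rw [B.support_normed_eq]
    simpa [dist_eq] using hy
  simpa using this

lemma abs_sub_integral_bump_le {g ψ : ℝ → ℝ} {x r C : ℝ} (hg : LocallyIntegrable g)
    (hψ : Continuous ψ) (hψc : HasCompactSupport ψ) (h0 : ∀ y, 0 ≤ ψ y)
    (hr : ∀ y, r ≤ |y - x| → ψ y = 0) (h1 : ∫ y, ψ y = 1)
    (hgx : ∀ y, |y - x| < r → |g y - g x| ≤ C) : |(∫ y, g y * ψ y) - g x| ≤ C := by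
  have hi : Integrable fun y => g y * ψ y := LocallyIntegrable.mul_test hg hψ hψc
  have hψi := hψ.integrable_of_hasCompactSupport (μ := volume) hψc
  have : (∫ y, g y * ψ y) - g x = ∫ y, (g y - g x) * ψ y := by
    simp only [sub_mul]
    rw [integral_sub hi (hψi.const_mul _), integral_const_mul, h1, mul_one]
  rw [this, ← norm_eq_abs]
  calc ‖∫ y, (g y - g x) * ψ y‖ ≤ ∫ y, C * ψ y := by
        apply norm_integral_le_of_norm_le (hψi.const_mul _)
        refine .of_forall fun y => ?_
        rw [norm_mul, norm_eq_abs, norm_eq_abs, abs_of_nonneg (h0 y)]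
        by_cases hy : |y - x| < r
        · bound
        · simp_all
    _ = C := by rw [integral_const_mul, h1, mul_one]

lemma HJ.slice_meas (B : HJ T) (t : ℝ) : Measurable fun x => B.b (t, x) :=
  B.meas.comp measurable_prodMk_left

lemma HJ.diff_sq (B : HJ T) {t s : ℝ} (ht : t ∈ Icc 0 T) (hs : s ∈ Icc 0 T) {R : ℝ}
    (hR : 0 < R) : IntegrableOn (fun x => (B.b (t, x) - B.b (s, x)) ^ 2) (Icc (-R) R) := by
  refine (((B.sq t ht R hR).add (B.sq s hs R hR)).const_mul 2).mono'
    (((B.slice_meas t).sub (B.slice_meas s)).pow_const 2).aestronglyMeasurable ?_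
  refine .of_forall fun x => ?_
  simp only [norm_eq_abs, abs_pow, sq_abs, Pi.add_apply]
  nlinarith [sq_nonneg (B.b (t, x) + B.b (s, x))]

lemma HJ.l2_bound (B : HJ T) {R : ℝ} (hR : 0 < R) :
    ∃ C, ∀ t ∈ Icc 0 T, ∫ x in Icc (-R) R, B.b (t, x) ^ 2 ≤ C := by
  have := isCompact_Icc.induction_on (s := Icc 0 T)
    (p := fun A => ∃ C, ∀ t ∈ A ∩ Icc 0 T, ∫ x in Icc (-R) R, B.b (t, x) ^ 2 ≤ C)
    ⟨0, by simp⟩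
    (fun A A' h ⟨C, hC⟩ => ⟨C, fun t ht => hC t ⟨h ht.1, ht.2⟩⟩)
    (fun A A' ⟨C, hC⟩ ⟨C', hC'⟩ => ⟨max C C', fun t ht => ht.1.elim
      (fun h => (hC t ⟨h, ht.2⟩).trans (le_max_left _ _))
      (fun h => (hC' t ⟨h, ht.2⟩).trans (le_max_right _ _))⟩)
    (fun t₀ ht₀ => by
      obtain ⟨ζ, hζ, h⟩ := B.contL2 t₀ ht₀ R hR 1 one_pos
      refine ⟨Metric.ball t₀ ζ, mem_nhdsWithin_of_mem_nhds (Metric.ball_mem_nhds _ hζ),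
        2 * 1 + 2 * ∫ x in Icc (-R) R, B.b (t₀, x) ^ 2, fun t ht => ?_⟩
      have h1 := h t ht.2 (by simpa [dist_eq] using ht.1)
      calc ∫ x in Icc (-R) R, B.b (t, x) ^ 2
          ≤ ∫ x in Icc (-R) R, (2 * (B.b (t, x) - B.b (t₀, x)) ^ 2 + 2 * B.b (t₀, x) ^ 2) := by
            apply integral_mono (B.sq t ht.2 R hR)
              (((B.diff_sq ht.2 ht₀ hR).const_mul 2).add ((B.sq t₀ ht₀ R hR).const_mul 2))
            intro x
            simp only [Pi.add_apply]
            nlinarith [sq_nonneg (B.b (t, x) - 2 * B.b (t₀, x))]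
        _ = 2 * (∫ x in Icc (-R) R, (B.b (t, x) - B.b (t₀, x)) ^ 2) +
            2 * ∫ x in Icc (-R) R, B.b (t₀, x) ^ 2 := by
            rw [integral_add ((B.diff_sq ht.2 ht₀ hR).const_mul 2)
              ((B.sq t₀ ht₀ R hR).const_mul 2), integral_const_mul, integral_const_mul]
        _ ≤ _ := by linarith)
  simpa using this

lemma HJ.l2 (B : HJ T) : L2loc T B.b := by
  refine ⟨B.meas, fun R hR => ?_⟩
  obtain ⟨C, hC⟩ := B.l2_bound hR
  have hm : Measurable fun p => B.b p ^ 2 := B.meas.pow_const 2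
  unfold IntegrableOn
  rw [volume_eq_prod, ← prod_restrict]
  rw [integrable_prod_iff hm.aestronglyMeasurable]
  constructor
  · filter_upwards [ae_restrict_mem measurableSet_Icc] with t ht
    exact B.sq t ht R hR
  · apply Measure.integrableOn_of_bounded (M := C) isCompact_Icc.measure_lt_top.ne
    · exact (hm.aestronglyMeasurable (μ := volume.prod (volume.restrict (Icc (-R) R)))).norm.integral_prod_right'
    · filter_upwards [ae_restrict_mem measurableSet_Icc] with t ht
      simp only [norm_eq_abs, abs_pow, sq_abs]
      rw [abs_of_nonneg (integral_nonneg fun x => by positivity)]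
      exact hC t ht

lemma HJ.l1 (B : HJ T) : L1loc T B.b := B.l2.l1

lemma HJ.slice_int (B : HJ T) {t : ℝ} (ht : t ∈ Icc 0 T) :
    LocallyIntegrable fun x => B.b (t, x) := by
  rw [locallyIntegrable_iff]
  intro K hK
  obtain ⟨C, hC⟩ := hK.isBounded.exists_norm_le
  have hsub : K ⊆ Icc (-(|C| + 1)) (|C| + 1) := fun x hx => by
    have := hC x hx
    have h2 := le_abs_self C
    rw [norm_eq_abs, abs_le] at this
    constructor <;> linarith
  refine IntegrableOn.mono_set ?_ hsub
  have h1 : IntegrableOn (fun x => 1 + B.b (t, x) ^ 2) (Icc (-(|C| + 1)) (|C| + 1)) :=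
    (integrableOn_const isCompact_Icc.measure_lt_top.ne).add (B.sq t ht _ (by positivity))
  refine h1.mono' (B.slice_meas t).aestronglyMeasurable (.of_forall fun x => ?_)
  rw [norm_eq_abs]
  nlinarith [sq_nonneg (|B.b (t, x)| - 1), sq_abs (B.b (t, x)), abs_nonneg (B.b (t, x))]

lemma HJ.cont_test (B : HJ T) {ψ : ℝ → ℝ} (hψ : Continuous ψ)
    (hc : HasCompactSupport ψ) : ContinuousOn (fun t => ∫ x, B.b (t, x) * ψ x) (Icc 0 T) := by
  obtain ⟨R, hR, hs⟩ := exists_support_subset_Ioo hc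
  set Q := √(∫ x in Icc (-R) R, ψ x ^ 2) with hQ
  apply continuousOn_of_delta
  intro t₀ ht₀ δ hδ
  have hQ0 : 0 ≤ Q := Real.sqrt_nonneg _
  obtain ⟨ζ, hζ, h⟩ := B.contL2 t₀ ht₀ R hR ((δ / (Q + 1)) ^ 2) (by positivity)
  refine ⟨ζ, hζ, fun t ht htt => ?_⟩
  have h1 := h t ht htt
  have hi1 := LocallyIntegrable.mul_test (B.slice_int ht) hψ hc
  have hi2 := LocallyIntegrable.mul_test (B.slice_int ht₀) hψ hc
  rw [← integral_sub hi1 hi2]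
  have e1 : ∫ x, (B.b (t, x) * ψ x - B.b (t₀, x) * ψ x) =
      ∫ x in Icc (-R) R, (B.b (t, x) - B.b (t₀, x)) * ψ x := by
    rw [setIntegral_eq_integral_of_forall_compl_eq_zero]
    · simp only [sub_mul]
    · grind
  rw [e1]
  have h2 := abs_integral_mul_le (μ := volume.restrict (Icc (-R) R)) (B.diff_sq ht ht₀ hR)
    ((hψ.pow 2).continuousOn.integrableOn_compact isCompact_Icc) (by
      have : Integrable fun x => (B.b (t, x) - B.b (t₀, x)) * ψ x := by
        simp only [sub_mul]; exact hi1.sub hi2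
      exact this.integrableOn)
  refine h2.trans_lt ?_
  have h3 : √(∫ x in Icc (-R) R, (B.b (t, x) - B.b (t₀, x)) ^ 2) ≤ δ / (Q + 1) := by
    rw [← Real.sqrt_sq (show 0 ≤ δ / (Q + 1) by positivity)]
    exact Real.sqrt_le_sqrt h1.le
  calc _ ≤ δ / (Q + 1) * Q := mul_le_mul_of_nonneg_right h3 hQ0
    _ < δ := by
      rw [div_mul_eq_mul_div, div_lt_iff₀ (by positivity)]
      nlinarith

lemma one_le_top_inf : (1 : WithTop ℕ∞) ≤ ((⊤ : ℕ∞) : WithTop ℕ∞) := by exact_mod_cast le_top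

lemma deriv_smooth {ψ : ℝ → ℝ} (hψ : Smooth ψ) : Smooth (deriv ψ) :=
  (contDiff_infty_iff_deriv.1 hψ).2

lemma HJ.slice_weak (hT : 0 < T) (B : HJ T) {t : ℝ} (ht : t ∈ Icc 0 T) {ψ : ℝ → ℝ}
    (hψ : Smooth ψ) (hc : HasCompactSupport ψ) :
    ∫ x, B.b (t, x) * deriv ψ x = - ∫ x, B.ux.toFun (t, x) * ψ x := by
  have hψ' := deriv_smooth hψ
  have key : ∀ t ∈ Icc 0 T,
      (∫ x, B.b (t, x) * deriv ψ x) + ∫ x, B.ux.toFun (t, x) * ψ x = 0 := by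
    apply eq_zero_of_forall_test hT
      ((B.cont_test hψ'.continuous hc.deriv).add (B.ux.cont_test hψ hc))
    intro χ hχ hχc hχs
    let φ : TTest T := TTest.prod hχ hχc hχs hψ hc
    have h := B.hux φ
    have hχ1 := hχ.of_le one_le_top_inf
    have hψ1 := hψ.of_le one_le_top_inf
    have e : pxF φ.toFun = fun p => χ p.1 * deriv ψ p.2 := funext fun p => pxF_prod hχ1 hψ1 p
    have i1 := B.l1.mul_strip (pxF_cont φ.c1) (pxF_cpt φ.cpt)
    have i2 := B.ux.l1.mul_strip φ.cont φ.cpt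
    rw [pair_iter i1, pair_iter i2, ← integral_neg] at h
    have s1 : ∀ t, χ t * ((∫ x, B.b (t, x) * deriv ψ x) + ∫ x, B.ux.toFun (t, x) * ψ x) =
        (∫ x, B.b (t, x) * pxF φ.toFun (t, x)) + ∫ x, B.ux.toFun (t, x) * φ.toFun (t, x) := by
      intro t
      rw [mul_add, ← integral_const_mul, ← integral_const_mul, e]
      congr 1
      · grind
      · congr 1; ext x; simp only [φ, TTest.prod]; ring
    simp only [Pi.add_apply, s1]
    rw [integral_add, h, integral_neg, neg_add_cancel]
    · rw [IntegrableOn, volume_eq_prod, ← prod_restrict, restrict_univ] at i1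
      exact i1.integral_prod_left
    · rw [IntegrableOn, volume_eq_prod, ← prod_restrict, restrict_univ] at i2
      exact i2.integral_prod_left
  linarith [key t ht]

/-- `β` is a continuous representative of the element `B` of `𝓑`. -/
structure Rep (B : HJ T) (β : ℝ² → ℝ) : Prop where
  cont : Continuous β
  ae : ∀ t ∈ Icc 0 T, ∀ᵐ x, B.b (t, x) = β (t, x)
  prim : ∀ t ∈ Icc 0 T, ∀ x, β (t, x) = β (t, 0) + ∫ s in 0..x, B.ux.toFun (t, s)
  lip : ∀ t x y, |β (t, x) - β (t, y)| ≤ |x - y|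

lemma prim_lip {w g : ℝ → ℝ} {c : ℝ} (hw : LocallyIntegrable w) (hw1 : ∀ x, |w x| ≤ 1)
    (hg : ∀ x, g x = c + ∫ s in 0..x, w s) (x y : ℝ) : |g x - g y| ≤ |x - y| := by
  have ii : ∀ a b, IntervalIntegrable w volume a b := fun a b =>
    (hw.integrableOn_isCompact isCompact_uIcc).intervalIntegrable
  have : g x - g y = ∫ s in y..x, w s := by
    rw [hg x, hg y, ← intervalIntegral.integral_add_adjacent_intervals (ii 0 y) (ii y x)]; ring
  rw [this]
  have := intervalIntegral.norm_integral_le_of_norm_le_const (a := y) (b := x) (f := w) (C := 1)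
    (fun s _ => by rw [norm_eq_abs]; exact hw1 s)
  simpa using this

/-- Each slice of `b` is a.e. a primitive of `b_x`, and the constants of integration can be
chosen continuously in time. -/
lemma HJ.exists_rep (hT : 0 < T) (B : HJ T) : ∃ β, Rep B β := by
  have h1 : ∀ t : Icc 0 T, ∃ c, ∀ᵐ x, B.b (t, x) =
      c + ∫ s in 0..x, B.ux.toFun (t, s) := fun t =>
    weak_deriv_ae (B.slice_int t.2) (B.ux.slice_int t) fun ψ hψ hc => B.slice_weak hT t.2 hψ hc
  choose c hc using h1
  let pr : ℝ → Icc 0 T := projIcc 0 T hT.le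
  let β : ℝ² → ℝ := fun p => c (pr p.1) + ∫ s in 0..p.2, B.ux.toFun (pr p.1, s)
  have hprim : ∀ t x, β (t, x) = c (pr t) + ∫ s in 0..x, B.ux.toFun (pr t, s) :=
    fun t x => rfl
  have hlip : ∀ t x y, |β (t, x) - β (t, y)| ≤ |x - y| := fun t x y =>
    prim_lip (g := fun x => β (t, x)) (B.ux.slice_int (pr t)) (fun x => B.ux.abs_le_one _)
      (hprim t) x y
  have hae : ∀ t, ∀ᵐ x, B.b (pr t, x) = β (t, x) := fun t => hc (pr t)
  refine ⟨β, ?_, ?_, ?_, hlip⟩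
  · apply continuous_prod_of_continuous_lipschitzWith' β 1
    · intro t
      apply LipschitzWith.of_dist_le_mul
      intro x y
      simpa [dist_eq] using hlip t x y
    · intro x
      have hon : ContinuousOn (fun t => β (t, x)) (Icc 0 T) := by
        apply continuousOn_of_delta
        intro t₀ ht₀ δ hδ
        obtain ⟨ψ, hψ, hψc, hp, hr, hi⟩ := exists_bump_at x (show 0 < δ / 3 by linarith)
        have hct := B.cont_test hψ.continuous hψc t₀ ht₀
        rw [Metric.continuousWithinAt_iff] at hct
        obtain ⟨ζ, hζ, hz⟩ := hct (δ / 3) (by linarith)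
        refine ⟨ζ, hζ, fun t ht htt => ?_⟩
        have hz' := hz ht (by rwa [dist_eq])
        rw [dist_eq] at hz'
        have hb : ∀ t ∈ Icc 0 T, |(∫ y, B.b (t, y) * ψ y) - β (t, x)| ≤ δ / 3 := by
          intro t ht
          have e : ∫ y, B.b (t, y) * ψ y = ∫ y, β (t, y) * ψ y := by
            apply integral_congr_ae
            have := hae t
            rw [show ((pr t : Icc 0 T) : ℝ) = t by simp [pr, projIcc_of_mem hT.le ht]] at this
            filter_upwards [this] with y hy
            rw [hy]
          rw [e]
          refine abs_sub_integral_bump_le (g := fun y => β (t, y)) ?_ hψ.continuous hψc hp hr hi ?_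
          · exact (prim_continuous (B.ux.slice_int (pr t)) (hprim t)).locallyIntegrable
          · grind
        have h1 := abs_le.1 (hb t ht)
        have h2 := abs_le.1 (hb t₀ ht₀)
        have h3 := abs_lt.1 hz'
        rw [abs_lt]; constructor <;> linarith [h1.1, h1.2, h2.1, h2.2, h3.1, h3.2]
      have : (fun t => β (t, x)) = fun t => (fun s => β (s, x)) (pr t) := by
        ext t; simp only [β]; simp [pr]
      rw [this]
      exact hon.comp_continuous (continuous_subtype_val.comp continuous_projIcc) fun t => (pr t).2
  · intro t ht
    have := hae t
    rwa [show ((pr t : Icc 0 T) : ℝ) = t by simp [pr, projIcc_of_mem hT.le ht]] at this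
  · intro t ht x
    simp only [β]
    rw [show ((pr t : Icc 0 T) : ℝ) = t by simp [pr, projIcc_of_mem hT.le ht]]
    simp

/-! ### Convergence in `𝓑` and `𝓐` through continuous representatives -/

/-- The space `𝓐`. -/
abbrev AA (T : ℝ) := { bm : HJ T × YM T // APred T bm }

lemma slice_unif_small {β : ℝ² → ℝ} (hβ : Continuous β) (t₀ k : ℝ) {η : ℝ} (hη : 0 < η) :
    ∃ ζ > 0, ∀ t, |t - t₀| < ζ → ∀ x, |x| ≤ k → |β (t, x) - β (t₀, x)| ≤ η := by
  have h : ∀ x ∈ Icc (-k) k, ∀ᶠ z : ℝ² in 𝓝 t₀ ×ˢ 𝓝 x, |β (z.1, z.2) - β (t₀, z.2)| ≤ η := by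
    intro x _
    rw [← nhds_prod_eq]
    have hc : Continuous fun z : ℝ² => |β (z.1, z.2) - β (t₀, z.2)| := by fun_prop
    have h0 := hc.tendsto (t₀, x)
    simp only [sub_self, abs_zero] at h0
    filter_upwards [h0.eventually (gt_mem_nhds hη)] with z hz using hz.le
  have h2 := isCompact_Icc.eventually_forall_of_forall_eventually (x₀ := t₀) (K := Icc (-k) k)
    (P := fun t x => |β (t, x) - β (t₀, x)| ≤ η) (fun x hx => by rw [nhds_prod_eq]; exact h x hx)
  obtain ⟨ζ, hζ, hz⟩ := Metric.eventually_nhds_iff.1 h2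
  exact ⟨ζ, hζ, fun t ht x hx => hz (by rwa [dist_eq]) x (abs_le.1 hx)⟩

lemma prim_sub_growth {β : ℝ → ℝ} {u v γ : ℝ → ℝ} (hu : Measurable u) (hv : Measurable v)
    (hu1 : ∀ x, u x ∈ Icc (0:ℝ) 1) (hv1 : ∀ x, v x ∈ Icc (0:ℝ) 1)
    (hβ : ∀ x, β x = β 0 + ∫ s in 0..x, u s) (hγ : ∀ x, γ x = γ 0 + ∫ s in 0..x, v s)
    (c : ℝ) : ∀ x, β x - γ x + c = (β 0 - γ 0 + c) + ∫ s in 0..x, (u s - v s) := by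
  intro x
  have bd : ∀ {w : ℝ → ℝ}, (∀ x, w x ∈ Icc (0:ℝ) 1) → ∀ x, |w x| ≤ 1 := fun h x =>
    abs_le.2 ⟨by linarith [(h x).1], (h x).2⟩
  have ii : ∀ {w : ℝ → ℝ}, Measurable w → (∀ x, w x ∈ Icc (0:ℝ) 1) →
      IntervalIntegrable w volume 0 x := fun hw h =>
    ((locallyIntegrable_of_bdd hw (bd h)).integrableOn_isCompact isCompact_uIcc).intervalIntegrable
  rw [intervalIntegral.integral_sub (ii hu hu1) (ii hv hv1), hβ x, hγ x]
  ring

/-- A continuous function whose `x`-difference quotients are given by a `[0,1]`-valued measurable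
`u` defines an element of `𝒰`. -/
def mkCU {β u : ℝ² → ℝ} (hβ : Continuous β) (hu : Measurable u)
    (hu1 : ∀ p, u p ∈ Icc (0:ℝ) 1)
    (hp : ∀ t ∈ Icc 0 T, ∀ x, β (t, x) = β (t, 0) + ∫ s in 0..x, u (t, s)) : cU T where
  toFun := u
  meas := hu
  mem01 := hu1
  cont := by
    intro t₀ ht₀ δ hδ
    obtain ⟨k, hk⟩ := wsum_small (C := 1) zero_le_one hδ
    obtain ⟨ζ, hζ, h⟩ := slice_unif_small hβ t₀ k (η := 1 / ((k:ℝ) + 1)) (by positivity)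
    refine ⟨ζ, hζ, fun t ht htt => ?_⟩
    have hg := prim_sub_growth (hu.comp measurable_prodMk_left) (hu.comp measurable_prodMk_left)
      (fun x => hu1 (t, x)) (fun x => hu1 (t₀, x)) (hp t ht) (hp t₀ ht₀) 0
    refine (dU_le_wsum (hu.comp measurable_prodMk_left) (hu.comp measurable_prodMk_left)
      (fun x => hu1 (t, x)) (fun x => hu1 (t₀, x)) hg).trans_lt (hk _ ?_ ?_)
    · intro x
      refine (prim_growth (C := 1) ?_ hg x).trans ?_
      · intro x
        have h1 := hu1 (t, x); have h2 := hu1 (t₀, x)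
        simp only [mem_Icc] at h1 h2
        simp only [Function.comp_apply]
        rw [abs_le]; constructor <;> linarith
      · have := h t htt 0 (by simp)
        have h1 : 1 / ((k:ℝ) + 1) ≤ 1 := by bound
        rw [add_zero]; linarith
    · grind

/-- The element of `𝓑` with continuous representative `β` and derivative `u`. -/
def mkHJ {β u : ℝ² → ℝ} (hβ : Continuous β) (hu : Measurable u)
    (hu1 : ∀ p, u p ∈ Icc (0:ℝ) 1)
    (hp : ∀ t ∈ Icc 0 T, ∀ x, β (t, x) = β (t, 0) + ∫ s in 0..x, u (t, s)) : HJ T where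
  b := β
  meas := hβ.measurable
  sq := fun t _ R _ => (Continuous.continuousOn (by fun_prop)).integrableOn_compact isCompact_Icc
  contL2 := by
    intro t₀ _ R hR δ hδ
    obtain ⟨ζ, hζ, h⟩ := slice_unif_small hβ t₀ R (η := √(δ / (4 * R))) (by positivity)
    refine ⟨ζ, hζ, fun t _ htt => ?_⟩
    calc ∫ x in Icc (-R) R, (β (t, x) - β (t₀, x)) ^ 2
        ≤ ∫ _ in Icc (-R) R, δ / (4 * R) := by
          apply setIntegral_mono_on _ _ measurableSet_Icc
          · intro x hx
            have h1 := h t htt x (abs_le.2 hx)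
            calc (β (t, x) - β (t₀, x)) ^ 2 = |β (t, x) - β (t₀, x)| ^ 2 := (sq_abs _).symm
              _ ≤ √(δ / (4 * R)) ^ 2 := pow_le_pow_left₀ (abs_nonneg _) h1 2
              _ = δ / (4 * R) := Real.sq_sqrt (by positivity)
          · exact (Continuous.continuousOn (by fun_prop)).integrableOn_compact isCompact_Icc
          · simp
      _ = 2 * R * (δ / (4 * R)) := by
          rw [setIntegral_const, Real.volume_real_Icc_of_le (by linarith), smul_eq_mul]; ring
      _ < δ := by
          rw [show 2 * R * (δ / (4 * R)) = δ / 2 by field_simp; ring]; linarith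
  ux := mkCU hβ hu hu1 hp
  hux := by
    intro φ
    have hl : L1loc T u := (mkCU hβ hu hu1 hp).l1
    rw [pair_iter ((L1loc.of_cont hβ).mul_strip (pxF_cont φ.c1) (pxF_cpt φ.cpt))]
    change _ = - pair T u φ.toFun
    rw [pair_iter (hl.mul_strip φ.cont φ.cpt), ← integral_neg]
    apply setIntegral_congr_fun measurableSet_Icc
    intro t ht
    have hd : ∀ x, pxF φ.toFun (t, x) = deriv (fun x => φ.toFun (t, x)) x := by
      intro x
      have h1 : HasFDerivAt φ.toFun (fderiv ℝ φ.toFun (t, x)) (t, x) :=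
        (φ.c1.differentiable one_ne_zero _).hasFDerivAt
      have h2 : HasDerivAt (fun x : ℝ => (t, x)) (0, 1) x := by
        simpa using (hasDerivAt_const x t).prodMk (hasDerivAt_id x)
      exact (h1.comp_hasDerivAt x h2).deriv.symm
    simp only [hd]
    apply ibp_prim (c := β (t, 0)) _ (hp t ht) (φ.c1.comp (contDiff_prodMk_right t)) _
    · exact locallyIntegrable_of_bdd (C := 1) (hu.comp measurable_prodMk_left) fun x =>
        abs_le.2 ⟨by linarith [(hu1 (t, x)).1], (hu1 (t, x)).2⟩
    · obtain ⟨R, _, hR⟩ := exists_strip_bound φ.cpt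
      refine HasCompactSupport.intro (isCompact_Icc (a := -R) (b := R)) fun x hx => ?_
      apply hR
      by_contra hlt
      push Not at hlt
      exact hx ⟨(abs_lt.1 hlt).1.le, (abs_lt.1 hlt).2.le⟩

lemma mkHJ_rep {β u : ℝ² → ℝ} (hβ : Continuous β) (hu : Measurable u)
    (hu1 : ∀ p, u p ∈ Icc (0:ℝ) 1)
    (hp : ∀ t ∈ Icc 0 T, ∀ x, β (t, x) = β (t, 0) + ∫ s in 0..x, u (t, s))
    (hl : ∀ t x y, |β (t, x) - β (t, y)| ≤ |x - y|) :
    Rep (mkHJ hβ hu hu1 hp) β :=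
  ⟨hβ, fun _ _ => .of_forall fun _ => rfl, hp, hl⟩

lemma dcU_le {δ : ℝ} (hδ : 0 ≤ δ) {u v : cU T}
    (h : ∀ t ∈ Icc 0 T, dU (fun x => u.toFun (t, x)) (fun x => v.toFun (t, x)) ≤ δ) :
    dcU T u v ≤ δ := by
  apply Real.sSup_le _ hδ
  rintro r ⟨t, ht, rfl⟩
  exact h t ht

lemma dcU_nonneg (u v : cU T) : 0 ≤ dcU T u v := by
  apply Real.sSup_nonneg
  rintro r ⟨t, ht, rfl⟩
  exact dU_nonneg _ _

lemma dConst_set_nonneg (B1 B2 : HJ T) (c : ℝ) :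
    0 ≤ sSup { s : ℝ | ∃ t ∈ Icc 0 T, s = wsum fun x => B1.b (t, x) - B2.b (t, x) + c } := by
  apply Real.sSup_nonneg
  rintro r ⟨t, ht, rfl⟩
  exact wsum_nonneg _

lemma dConst_eq (B1 B2 : HJ T) : dConst T B1 B2 = sInf { r : ℝ | ∃ c : ℝ,
    r = sSup { s : ℝ | ∃ t ∈ Icc 0 T, s = wsum fun x => B1.b (t, x) - B2.b (t, x) + c } } :=
  rfl

lemma dConst_nonneg (B1 B2 : HJ T) : 0 ≤ dConst T B1 B2 := by
  rw [dConst_eq]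
  apply Real.sInf_nonneg
  rintro r ⟨c, rfl⟩
  exact dConst_set_nonneg B1 B2 c

lemma Rep.sub_prim {B1 B2 : HJ T} {β1 β2 : ℝ² → ℝ} (h1 : Rep B1 β1) (h2 : Rep B2 β2)
    {t : ℝ} (ht : t ∈ Icc 0 T) (c : ℝ) : ∀ x, β1 (t, x) - β2 (t, x) + c =
      (β1 (t, 0) - β2 (t, 0) + c) +
        ∫ s in 0..x, (B1.ux.toFun (t, s) - B2.ux.toFun (t, s)) :=
  prim_sub_growth (B1.ux.slice_meas t) (B2.ux.slice_meas t) (fun x => B1.ux.mem01 (t, x))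
    (fun x => B2.ux.mem01 (t, x)) (h1.prim t ht) (h2.prim t ht) c

lemma Rep.sub_growth {B1 B2 : HJ T} {β1 β2 : ℝ² → ℝ} (h1 : Rep B1 β1) (h2 : Rep B2 β2)
    {t : ℝ} (ht : t ∈ Icc 0 T) (c x : ℝ) :
    |β1 (t, x) - β2 (t, x) + c| ≤ |β1 (t, 0) - β2 (t, 0) + c| + 1 * |x| := by
  refine prim_growth (C := 1) ?_ (h1.sub_prim h2 ht c) x
  intro x
  have h1 := B1.ux.mem01 (t, x); have h2 := B2.ux.mem01 (t, x)
  simp only [mem_Icc] at h1 h2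
  rw [abs_le]; constructor <;> linarith

lemma Rep.wsum_eq {B1 B2 : HJ T} {β1 β2 : ℝ² → ℝ} (h1 : Rep B1 β1) (h2 : Rep B2 β2)
    {t : ℝ} (ht : t ∈ Icc 0 T) (c : ℝ) :
    (wsum fun x => B1.b (t, x) - B2.b (t, x) + c) = wsum fun x => β1 (t, x) - β2 (t, x) + c := by
  apply wsum_congr_ae
  filter_upwards [h1.ae t ht, h2.ae t ht] with x e1 e2
  rw [e1, e2]

/-- Local uniform closeness of representatives, up to a constant, controls `d_𝓑`. -/
lemma dB_small {δ : ℝ} (hδ : 0 < δ) : ∃ k : ℕ, ∀ (B1 B2 : HJ T) (β1 β2 : ℝ² → ℝ) (c : ℝ),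
    Rep B1 β1 → Rep B2 β2 →
    (∀ t ∈ Icc 0 T, ∀ x : ℝ, |x| ≤ k → |β1 (t, x) - β2 (t, x) + c| ≤ 1 / ((k:ℝ) + 1)) →
    dcU T B1.ux B2.ux ≤ δ ∧ dConst T B1 B2 ≤ δ := by
  obtain ⟨k, hk⟩ := wsum_small (C := 1) zero_le_one hδ
  refine ⟨k, fun B1 B2 β1 β2 c h1 h2 h => ?_⟩
  have hw : ∀ t ∈ Icc 0 T, (wsum fun x => β1 (t, x) - β2 (t, x) + c) < δ := by
    intro t ht
    apply hk _ _ (h t ht)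
    intro x
    have := h1.sub_growth h2 ht c x
    have h0 := h t ht 0 (by simp)
    have h1 : 1 / ((k:ℝ) + 1) ≤ 1 := by bound
    linarith
  constructor
  · apply dcU_le hδ.le
    intro t ht
    exact (dU_le_wsum (B1.ux.slice_meas t) (B2.ux.slice_meas t) (fun x => B1.ux.mem01 (t, x))
      (fun x => B2.ux.mem01 (t, x)) (h1.sub_prim h2 ht c)).trans (hw t ht).le
  · rw [dConst_eq]
    refine le_trans (b := sSup { s : ℝ | ∃ t ∈ Icc 0 T,
      s = wsum fun x => B1.b (t, x) - B2.b (t, x) + c }) (csInf_le ?_ ⟨c, rfl⟩) ?_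
    · refine ⟨0, ?_⟩
      rintro r ⟨c, rfl⟩
      exact dConst_set_nonneg B1 B2 c
    · apply Real.sSup_le _ hδ.le
      rintro r ⟨t, ht, rfl⟩
      rw [h1.wsum_eq h2 ht c]
      exact (hw t ht).le

lemma AA.bar_ae (hT : 0 < T) (x : AA T) {t : ℝ} (ht : t ∈ Icc 0 T) :
    ∀ᵐ y, x.1.1.ux.toFun (t, y) = x.1.2.bar.toFun (t, y) := by
  have hz : ∀ ψ : ℝ → ℝ, Smooth ψ → HasCompactSupport ψ →
      ∫ y, ψ y • (x.1.1.ux.toFun (t, y) - x.1.2.bar.toFun (t, y)) = 0 := by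
    intro ψ hψ hc
    have hc1 := x.1.1.ux.cont_test hψ hc
    have hc2 := x.1.2.bar.cont_test hψ hc
    have hae := ae_strip_slice x.2
    have : (fun t => ∫ y, x.1.1.ux.toFun (t, y) * ψ y) =ᵐ[volume.restrict (Icc 0 T)]
        fun t => ∫ y, x.1.2.bar.toFun (t, y) * ψ y := by
      filter_upwards [hae] with t ht
      apply integral_congr_ae
      filter_upwards [ht] with y hy
      rw [hy]; rfl
    have h := Measure.eqOn_Icc_of_ae_eq volume hT.ne this hc1 hc2 ht
    simp only at h
    have : ∀ y, ψ y • (x.1.1.ux.toFun (t, y) - x.1.2.bar.toFun (t, y)) =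
        x.1.1.ux.toFun (t, y) * ψ y - x.1.2.bar.toFun (t, y) * ψ y := fun y => by
      rw [smul_eq_mul]; ring
    simp only [this]
    rw [integral_sub (LocallyIntegrable.mul_test (x.1.1.ux.slice_int t) hψ.continuous hc)
      (LocallyIntegrable.mul_test (x.1.2.bar.slice_int t) hψ.continuous hc), h, sub_self]
  have := ae_eq_zero_of_integral_contDiff_smul_eq_zero
    ((x.1.1.ux.slice_int t).sub (x.1.2.bar.slice_int t)) hz
  filter_upwards [this] with y hy
  exact sub_eq_zero.1 hy

lemma AA.dcU_bar (hT : 0 < T) (x y : AA T) :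
    dcU T x.1.2.bar y.1.2.bar = dcU T x.1.1.ux y.1.1.ux := by
  unfold dcU
  congr 1
  ext r
  constructor <;> rintro ⟨t, ht, rfl⟩ <;> refine ⟨t, ht, ?_⟩
  · exact (dU_congr_ae (x.bar_ae hT ht) (y.bar_ae hT ht)).symm
  · exact (dU_congr_ae (x.bar_ae hT ht) (y.bar_ae hT ht))

/-- The weak* pairing of a Young measure with a test function. -/
def YM.wpair (μ : YM T) (g : ℝ × ℝ² → ℝ) : ℝ :=
  ∫ p in strip T, ∫ l, g (l, p) ∂μ.m p

/-- A sufficient criterion for convergence in `𝓐`. -/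
lemma AA.tendsto (hT : 0 < T) {dw : YM T → YM T → ℝ} (hdw : GeneratesWeakStar T dw)
    {xs : ℕ → AA T} {x : AA T} {βs : ℕ → ℝ² → ℝ} {β : ℝ² → ℝ} {c : ℕ → ℝ}
    (hβs : ∀ n, Rep (xs n).1.1 (βs n)) (hβ : Rep x.1.1 β)
    (hu : ∀ R δ : ℝ, 0 < δ → ∀ᶠ n in atTop, ∀ t ∈ Icc 0 T, ∀ y : ℝ, |y| ≤ R →
      |βs n (t, y) - β (t, y) + c n| ≤ δ)
    (hw : ∀ g : ℝ × ℝ² → ℝ, Continuous g → HasCompactSupport g →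
      Tendsto (fun n => (xs n).1.2.wpair g) atTop (𝓝 (x.1.2.wpair g))) :
    Tendsto (fun n => dA T dw (xs n) x) atTop (𝓝 0) := by
  have h1 := (hdw.2.2 (fun n => (xs n).1.2) x.1.2).2 hw
  have h2 : ∀ δ > 0, ∀ᶠ n in atTop, dcU T (xs n).1.1.ux x.1.1.ux ≤ δ ∧
      dConst T (xs n).1.1 x.1.1 ≤ δ := by
    intro δ hδ
    obtain ⟨k, hk⟩ := dB_small (T := T) hδ
    filter_upwards [hu k (1 / ((k:ℝ) + 1)) (by positivity)] with n hn
    exact hk _ _ _ _ (c n) (hβs n) hβ hn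
  have h3 : Tendsto (fun n => dcU T (xs n).1.1.ux x.1.1.ux) atTop (𝓝 0) := by
    rw [Metric.tendsto_atTop']
    intro δ hδ
    obtain ⟨N, hN⟩ := eventually_atTop.1 (h2 (δ / 2) (by linarith))
    refine ⟨N, fun n hn => ?_⟩
    rw [Real.dist_0_eq_abs, abs_of_nonneg (dcU_nonneg _ _)]
    linarith [(hN n hn.le).1]
  have h4 : Tendsto (fun n => dConst T (xs n).1.1 x.1.1) atTop (𝓝 0) := by
    rw [Metric.tendsto_atTop']
    intro δ hδ
    obtain ⟨N, hN⟩ := eventually_atTop.1 (h2 (δ / 2) (by linarith))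
    refine ⟨N, fun n hn => ?_⟩
    rw [Real.dist_0_eq_abs, abs_of_nonneg (dConst_nonneg _ _)]
    linarith [(hN n hn.le).2]
  have h5 := (h3.add h4).add (h1.add h3)
  simp only [add_zero] at h5
  refine h5.congr fun n => ?_
  unfold dA dB dM
  rw [AA.dcU_bar hT]

lemma TTest.fderiv_zero (φ : TTest T) {p : ℝ²}
    (hp : p ∉ strip T) : fderiv ℝ φ.toFun p = 0 := by
  have hcl : tsupport φ.toFun ⊆ strip T :=
    closure_minimal (φ.supp.trans (prod_mono Ioo_subset_Icc_self le_rfl))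
      (isClosed_Icc.prod isClosed_univ)
  by_contra hne
  exact hp (hcl (support_fderiv_subset ℝ hne))

lemma TTest.zero (φ : TTest T) {p : ℝ²}
    (hp : p ∉ strip T) : φ.toFun p = 0 := by
  by_contra hne
  exact hp (prod_mono Ioo_subset_Icc_self le_rfl (φ.supp hne))

lemma TTest.pt_zero (φ : TTest T) {p : ℝ²}
    (hp : p ∉ strip T) : ptF φ.toFun p = 0 := by
  simp [ptF, φ.fderiv_zero hp]

lemma TTest.px_zero (φ : TTest T) {p : ℝ²}
    (hp : p ∉ strip T) : pxF φ.toFun p = 0 := by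
  simp [pxF, φ.fderiv_zero hp]

lemma pair_eq_full {g h : ℝ² → ℝ}
    (hh : ∀ p, p ∉ strip T → h p = 0) : pair T g h = ∫ p, g p * h p :=
  setIntegral_eq_integral_of_forall_compl_eq_zero fun p hp => by rw [hh p hp, mul_zero]

/-- Integration by parts in `t` against a test function. -/
lemma pair_ptF {g : ℝ² → ℝ} (hg : ContDiff ℝ 1 g) (φ : TTest T) :
    pair T g (ptF φ.toFun) = - pair T (ptF g) φ.toFun := by
  rw [pair_eq_full fun p => φ.pt_zero, pair_eq_full fun p => φ.zero]
  unfold ptF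
  have hg' := ptF_cont hg
  apply integral_mul_fderiv_eq_neg_fderiv_mul_of_integrable
  · exact (hg'.mul φ.cont).integrable_of_hasCompactSupport φ.cpt.mul_left
  · exact (hg.continuous.mul (ptF_cont φ.c1)).integrable_of_hasCompactSupport
      (ptF_cpt φ.cpt).mul_left
  · exact (hg.continuous.mul φ.cont).integrable_of_hasCompactSupport φ.cpt.mul_left
  · exact fun x _ => hg.differentiable one_ne_zero x
  · exact fun x _ => φ.c1.differentiable one_ne_zero x

lemma pair_pxF {g : ℝ² → ℝ} (hg : ContDiff ℝ 1 g) (φ : TTest T) :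
    pair T g (pxF φ.toFun) = - pair T (pxF g) φ.toFun := by
  rw [pair_eq_full fun p => φ.px_zero, pair_eq_full fun p => φ.zero]
  unfold pxF
  have hg' := pxF_cont hg
  apply integral_mul_fderiv_eq_neg_fderiv_mul_of_integrable
  · exact (hg'.mul φ.cont).integrable_of_hasCompactSupport φ.cpt.mul_left
  · exact (hg.continuous.mul (pxF_cont φ.c1)).integrable_of_hasCompactSupport
      (pxF_cpt φ.cpt).mul_left
  · exact (hg.continuous.mul φ.cont).integrable_of_hasCompactSupport φ.cpt.mul_left
  · exact fun x _ => hg.differentiable one_ne_zero x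
  · exact fun x _ => φ.c1.differentiable one_ne_zero x

lemma pair_const_ptF (c : ℝ) (φ : TTest T) : pair T (fun _ => c) (ptF φ.toFun) = 0 := by
  rw [pair_ptF contDiff_const]
  simp [pair, ptF]

lemma L1loc.add {g h : ℝ² → ℝ} (hg : L1loc T g) (hh : L1loc T h) :
    L1loc T (fun p => g p + h p) :=
  ⟨hg.1.add hh.1, fun R hR => (hg.2 R hR).add (hh.2 R hR)⟩

lemma L1loc.sub {g h : ℝ² → ℝ} (hg : L1loc T g) (hh : L1loc T h) :
    L1loc T (fun p => g p - h p) :=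
  ⟨hg.1.sub hh.1, fun R hR => (hg.2 R hR).sub (hh.2 R hR)⟩

lemma L1loc.const_mul {g : ℝ² → ℝ} (hg : L1loc T g) (c : ℝ) :
    L1loc T (fun p => c * g p) :=
  ⟨hg.1.const_mul c, fun R hR => (hg.2 R hR).const_mul c⟩

lemma pair_add_left {g g' h : ℝ² → ℝ} (hg : L1loc T g) (hg' : L1loc T g')
    (hh : Continuous h) (hc : HasCompactSupport h) :
    pair T (fun p => g p + g' p) h = pair T g h + pair T g' h := by
  unfold pair
  simp only [add_mul]
  exact integral_add (hg.mul_strip hh hc) (hg'.mul_strip hh hc)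

lemma pair_sub_left {g g' h : ℝ² → ℝ} (hg : L1loc T g) (hg' : L1loc T g')
    (hh : Continuous h) (hc : HasCompactSupport h) :
    pair T (fun p => g p - g' p) h = pair T g h - pair T g' h := by
  unfold pair
  simp only [sub_mul]
  exact integral_sub (hg.mul_strip hh hc) (hg'.mul_strip hh hc)

lemma dConst_lt {δ : ℝ} {B1 B2 : HJ T} {β1 β2 : ℝ² → ℝ} (h1 : Rep B1 β1) (h2 : Rep B2 β2)
    (h : dConst T B1 B2 < δ) :
    ∃ c, ∀ t ∈ Icc 0 T, (wsum fun x => β1 (t, x) - β2 (t, x) + c) < δ := by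
  rw [dConst_eq] at h
  obtain ⟨r, ⟨c, rfl⟩, hr⟩ := exists_lt_of_csInf_lt (by exact ⟨_, 0, rfl⟩) h
  refine ⟨c, fun t ht => lt_of_le_of_lt ?_ hr⟩
  rw [← h1.wsum_eq h2 ht c]
  refine le_csSup ?_ ⟨t, ht, rfl⟩
  obtain ⟨C, hC⟩ := (isCompact_Icc (a := (0:ℝ)) (b := T)).exists_bound_of_continuousOn
    (f := fun t => β1 (t, 0) - β2 (t, 0) + c)
    (by have := h1.cont; have := h2.cont; exact Continuous.continuousOn (by fun_prop))
  refine ⟨∑' n : ℕ, (2 : ℝ)⁻¹ ^ (n + 1) *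
    (√(2 * ((n : ℝ) + 1)) * ((|C| + 1) * (1 + ((n : ℝ) + 1)))), ?_⟩
  · rintro s ⟨t, ht, rfl⟩
    rw [h1.wsum_eq h2 ht c]
    apply wsum_le (C := |C| + 1) (by positivity)
    intro x
    have e1 := h1.sub_growth h2 ht c x
    have e2 := hC t ht
    rw [norm_eq_abs] at e2
    nlinarith [abs_nonneg x, abs_nonneg C, le_abs_self C]

lemma pair_ptF_close (hT : 0 < T) (φ : TTest T) : ∃ K, 0 ≤ K ∧
    ∀ (B1 B2 : HJ T) (β1 β2 : ℝ² → ℝ) (c δ : ℝ), Rep B1 β1 → Rep B2 β2 → 0 ≤ δ →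
    (∀ t ∈ Icc 0 T, (wsum fun x => β1 (t, x) - β2 (t, x) + c) ≤ δ) →
    |pair T B1.b (ptF φ.toFun) - pair T B2.b (ptF φ.toFun)| ≤ K * δ := by
  obtain ⟨R, hR0, hR⟩ := exists_strip_bound (ptF_cpt φ.cpt)
  obtain ⟨n, hn⟩ := exists_nat_ge R
  have hpc := ptF_cont φ.c1
  obtain ⟨H, hH⟩ := hpc.bounded_above_of_compact_support (ptF_cpt φ.cpt)
  have hH0 : 0 ≤ H := (norm_nonneg _).trans (hH (0, 0))
  set I := Icc (-((n : ℝ) + 1)) ((n : ℝ) + 1) with hI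
  set Q := √((2 * ((n:ℝ) + 1)) * H ^ 2) with hQ
  refine ⟨(2:ℝ) ^ (n + 1) * Q * T, by positivity, fun B1 B2 β1 β2 c δ h1 h2 hδ hw => ?_⟩
  have e1 : pair T B1.b (ptF φ.toFun) - pair T B2.b (ptF φ.toFun) =
      pair T (fun p => B1.b p - B2.b p + c) (ptF φ.toFun) := by
    rw [pair_add_left (B1.l1.sub B2.l1) (L1loc.of_cont continuous_const) hpc (ptF_cpt φ.cpt),
      pair_const_ptF, pair_sub_left B1.l1 B2.l1 hpc (ptF_cpt φ.cpt), add_zero]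
  have hl : L1loc T (fun p => B1.b p - B2.b p + c) :=
    (B1.l1.sub B2.l1).add (L1loc.of_cont continuous_const)
  rw [e1, pair_iter (hl.mul_strip hpc (ptF_cpt φ.cpt)), ← norm_eq_abs]
  have hb : ∀ t ∈ Icc 0 T, ‖∫ x, (B1.b (t, x) - B2.b (t, x) + c) * ptF φ.toFun (t, x)‖ ≤
      (2:ℝ) ^ (n + 1) * Q * δ := by
    intro t ht
    have e2 : ∫ x, (B1.b (t, x) - B2.b (t, x) + c) * ptF φ.toFun (t, x) =
        ∫ x in I, (β1 (t, x) - β2 (t, x) + c) * ptF φ.toFun (t, x) := by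
      rw [setIntegral_eq_integral_of_forall_compl_eq_zero]
      · apply integral_congr_ae
        filter_upwards [h1.ae t ht, h2.ae t ht] with x a1 a2
        rw [a1, a2]
      · grind
    have c1 := h1.cont
    have c2 := h2.cont
    rw [e2, norm_eq_abs]
    have cs := abs_integral_mul_le (μ := volume.restrict I)
      (f := fun x => β1 (t, x) - β2 (t, x) + c) (g := fun x => ptF φ.toFun (t, x))
      ((Continuous.continuousOn (by fun_prop)).integrableOn_compact isCompact_Icc)
      ((Continuous.continuousOn (by fun_prop)).integrableOn_compact isCompact_Icc)
      ((Continuous.continuousOn (by fun_prop)).integrableOn_compact isCompact_Icc)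
    have b1 : √(∫ x in I, ptF φ.toFun (t, x) ^ 2) ≤ Q := by
      apply Real.sqrt_le_sqrt
      calc ∫ x in I, ptF φ.toFun (t, x) ^ 2 ≤ ∫ _ in I, H ^ 2 := by
            apply integral_mono
              ((Continuous.continuousOn (by fun_prop)).integrableOn_compact isCompact_Icc)
              (continuousOn_const.integrableOn_compact isCompact_Icc)
            intro x
            simp only
            rw [← sq_abs]
            exact pow_le_pow_left₀ (abs_nonneg _) (hH (t, x)) 2
        _ = _ := by
          rw [setIntegral_const, hI, Real.volume_real_Icc_of_le (by linarith), smul_eq_mul]; ring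
    have b2 : √(∫ x in I, (β1 (t, x) - β2 (t, x) + c) ^ 2) ≤ 2 ^ (n + 1) * δ := by
      have hg := fun x => h1.sub_growth h2 ht c x
      have hs := wsum_summable (C := |β1 (t, 0) - β2 (t, 0) + c| + 1) (by positivity)
        (g := fun x => β1 (t, x) - β2 (t, x) + c) (fun x => (hg x).trans
          (by nlinarith [abs_nonneg x, abs_nonneg (β1 (t, 0) - β2 (t, 0) + c)]))
      have := (hs.le_tsum n fun m _ => by positivity).trans (hw t ht)
      rw [inv_pow, inv_mul_le_iff₀ (by positivity)] at this
      exact this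
    calc _ ≤ _ := cs
      _ ≤ (2 ^ (n + 1) * δ) * Q := by gcongr
      _ = _ := by ring
  have := norm_setIntegral_le_of_norm_le_const (μ := volume) (s := Icc 0 T)
    (isCompact_Icc.measure_lt_top) (f := fun t => ∫ x, (B1.b (t, x) - B2.b (t, x) + c) *
      ptF φ.toFun (t, x)) hb
  rw [Real.volume_real_Icc_of_le hT.le] at this
  calc _ ≤ _ := this
    _ = _ := by ring

/-- Convergence in `𝓐` implies convergence of `⟨⟨b, φ_t⟩⟩` and weak* convergence. -/
lemma AA.of_tendsto (hT : 0 < T) {dw : YM T → YM T → ℝ} (hdw : GeneratesWeakStar T dw)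
    {xs : ℕ → AA T} {x : AA T} (h : Tendsto (fun n => dA T dw (xs n) x) atTop (𝓝 0)) :
    (∀ g : ℝ × ℝ² → ℝ, Continuous g → HasCompactSupport g →
      Tendsto (fun n => (xs n).1.2.wpair g) atTop (𝓝 (x.1.2.wpair g))) ∧
    ∀ φ : TTest T, Tendsto (fun n => pair T (xs n).1.1.b (ptF φ.toFun)) atTop
      (𝓝 (pair T x.1.1.b (ptF φ.toFun))) := by
  have hn1 := fun n => dcU_nonneg (xs n).1.1.ux x.1.1.ux
  have hn2 := fun n => dConst_nonneg (xs n).1.1 x.1.1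
  have hn3 := fun n => hdw.2.1 (xs n).1.2 x.1.2
  have hn4 := fun n => dcU_nonneg (xs n).1.2.bar x.1.2.bar
  constructor
  · refine (hdw.2.2 (fun n => (xs n).1.2) x.1.2).1 ?_
    refine squeeze_zero hn3 (fun n => ?_) h
    have := hn1 n; have := hn2 n; have := hn4 n
    simp only [dA, dB, dM]; linarith
  · intro φ
    obtain ⟨K, hK0, hK⟩ := pair_ptF_close hT φ
    have hd : Tendsto (fun n => dConst T (xs n).1.1 x.1.1) atTop (𝓝 0) := by
      refine squeeze_zero hn2 (fun n => ?_) h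
      have := hn1 n; have := hn3 n; have := hn4 n
      simp only [dA, dB, dM]; linarith
    obtain ⟨β, hβ⟩ := x.1.1.exists_rep hT
    rw [Metric.tendsto_atTop]
    intro δ hδ
    obtain ⟨N, hN⟩ := eventually_atTop.1 (hd.eventually (gt_mem_nhds
      (show 0 < δ / (K + 1) by positivity)))
    refine ⟨N, fun n hn => ?_⟩
    obtain ⟨βn, hβn⟩ := (xs n).1.1.exists_rep hT
    obtain ⟨c, hc⟩ := dConst_lt hβn hβ (hN n hn)
    rw [dist_eq]
    refine (hK _ _ _ _ c (δ / (K + 1)) hβn hβ (by positivity) fun t ht => (hc t ht).le).trans_lt ?_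
    rw [mul_div_assoc', div_lt_iff₀ (by positivity)]
    nlinarith

section
open scoped Convolution

/-! ### Chain rule for weak `x`-derivatives -/

/-- A sequence of smooth mollifiers shrinking to the origin. -/
def bmp (m : ℕ) : ContDiffBump (0:ℝ) :=
  ⟨1 / (2 * ((m:ℝ) + 1)), 1 / ((m:ℝ) + 1), by positivity, by bound⟩

/-- The mollifier centred at `q`. -/
def bmpAt (m : ℕ) (q y : ℝ) : ℝ := (bmp m).normed volume (q - y)

lemma bmpAt_smooth (m : ℕ) (q : ℝ) : Smooth (bmpAt m q) :=
  (bmp m).contDiff_normed.comp (contDiff_const.sub contDiff_id)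

lemma bmpAt_cpt (m : ℕ) (q : ℝ) : HasCompactSupport (bmpAt m q) :=
  (bmp m).hasCompactSupport_normed.comp_homeomorph (Homeomorph.subLeft q)

lemma bmpAt_integral (m : ℕ) (q : ℝ) : ∫ y, bmpAt m q y = 1 := by
  unfold bmpAt
  rw [integral_sub_left_eq_self (fun y => (bmp m).normed volume y)]
  exact (bmp m).integral_normed

lemma exists_bmpPrim (m : ℕ) (q r : ℝ) : ∃ Φ : ℝ → ℝ, Smooth Φ ∧
    HasCompactSupport Φ ∧ ∀ x, deriv Φ x = bmpAt m q x - bmpAt m r x := by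
  apply exists_primitive ((bmpAt_smooth m q).sub (bmpAt_smooth m r))
    ((bmpAt_cpt m q).sub (bmpAt_cpt m r))
  rw [integral_sub ((bmpAt_smooth m q).continuous.integrable_of_hasCompactSupport (bmpAt_cpt m q))
    ((bmpAt_smooth m r).continuous.integrable_of_hasCompactSupport (bmpAt_cpt m r)),
    bmpAt_integral, bmpAt_integral, sub_self]

/-- Smooth primitive of the difference of two mollifiers. -/
def bmpPrim (m : ℕ) (q r : ℝ) : ℝ → ℝ := (exists_bmpPrim m q r).choose

lemma bmpPrim_smooth (m : ℕ) (q r : ℝ) : Smooth (bmpPrim m q r) :=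
  (exists_bmpPrim m q r).choose_spec.1
lemma bmpPrim_cpt (m : ℕ) (q r : ℝ) : HasCompactSupport (bmpPrim m q r) :=
  (exists_bmpPrim m q r).choose_spec.2.1
lemma bmpPrim_deriv (m : ℕ) (q r x : ℝ) : deriv (bmpPrim m q r) x = bmpAt m q x - bmpAt m r x :=
  (exists_bmpPrim m q r).choose_spec.2.2 x

/-- Countably many test functions suffice to identify a weak derivative. -/
lemma weak_deriv_ae_countable {g w : ℝ → ℝ} (hg : LocallyIntegrable g) (hw : LocallyIntegrable w)
    (h : ∀ (m : ℕ) (q r : ℚ),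
      ∫ x, g x * deriv (bmpPrim m q r) x = - ∫ x, w x * bmpPrim m q r x) :
    ∃ c, ∀ᵐ x, g x = c + ∫ s in 0..x, w s := by
  set W : ℝ → ℝ := fun x => 0 + ∫ s in 0..x, w s with hW
  have hWc : Continuous W := prim_continuous hw fun x => rfl
  set k : ℝ → ℝ := fun x => g x - W x with hk
  have hkl : LocallyIntegrable k := hg.sub hWc.locallyIntegrable
  let cv : ℕ → ℝ → ℝ := fun m => (bmp m).normed volume ⋆[ContinuousLinearMap.lsmul ℝ ℝ, volume] k
  have hcv : ∀ m x, cv m x = ∫ y, k y * bmpAt m x y := by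
    intro m x
    simp only [cv, convolution_eq_swap]
    simp [bmpAt, mul_comm]
  have hcont : ∀ m, Continuous (cv m) := fun m =>
    HasCompactSupport.continuous_convolution_left _ (bmp m).hasCompactSupport_normed
      (bmp m).continuous_normed hkl
  have hrat : ∀ m (q : ℚ), cv m q = cv m ((0:ℚ):ℝ) := by
    intro m q
    have h1 := h m q 0
    have h2 := ibp_prim hw (g := W) (c := 0) (fun x => rfl)
      ((bmpPrim_smooth m q (0:ℚ)).of_le one_le_top_inf) (bmpPrim_cpt m q (0:ℚ))
    rw [hcv, hcv, ← sub_eq_zero, ← integral_sub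
      (LocallyIntegrable.mul_test hkl (bmpAt_smooth m _).continuous (bmpAt_cpt m _))
      (LocallyIntegrable.mul_test hkl (bmpAt_smooth m _).continuous (bmpAt_cpt m _))]
    have hd := (deriv_smooth (bmpPrim_smooth m q (0:ℚ))).continuous
    have h3 : ∫ x, k x * deriv (bmpPrim m q (0:ℚ)) x = 0 := by
      simp only [hk, sub_mul]
      rw [integral_sub (LocallyIntegrable.mul_test hg hd (bmpPrim_cpt m q (0:ℚ)).deriv)
        (LocallyIntegrable.mul_test hWc.locallyIntegrable hd (bmpPrim_cpt m q (0:ℚ)).deriv), h1, h2,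
        sub_self]
    rw [← h3]
    congr 1; ext x
    rw [bmpPrim_deriv]; ring
  have hall : ∀ m x, cv m x = cv m ((0:ℚ):ℝ) := by
    intro m
    have := (Rat.denseRange_cast (𝕜 := ℝ)).equalizer (hcont m)
      (continuous_const (y := cv m ((0:ℚ):ℝ))) (funext fun q => hrat m q)
    exact fun x => congrFun this x
  have hlim := ContDiffBump.ae_convolution_tendsto_right_of_locallyIntegrable
    (φ := bmp) (l := atTop) (K := 2) (μ := volume) (g := k)
    (by simpa [bmp] using tendsto_one_div_add_atTop_nhds_zero_nat (𝕜 := ℝ))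
    (.of_forall fun m => by simp only [bmp]; apply le_of_eq; field_simp) hkl
  obtain ⟨x₀, hx₀⟩ := hlim.exists
  refine ⟨k x₀, ?_⟩
  filter_upwards [hlim] with x hx
  have e : k x = k x₀ := by
    refine tendsto_nhds_unique hx (hx₀.congr fun m => ?_)
    exact (hall m x₀).trans (hall m x).symm
  rw [← e]
  simp [hk, hW]

lemma L1loc.slice_ae {g : ℝ² → ℝ} (hg : L1loc T g) :
    ∀ᵐ t ∂(volume.restrict (Icc 0 T)), LocallyIntegrable fun x => g (t, x) := by
  have h : ∀ n : ℕ, ∀ᵐ t ∂(volume.restrict (Icc 0 T)),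
      IntegrableOn (fun x => g (t, x)) (Icc (-((n:ℝ) + 1)) ((n:ℝ) + 1)) := by
    intro n
    have h1 := hg.2 ((n:ℝ) + 1) (by positivity)
    rw [IntegrableOn, volume_eq_prod, ← prod_restrict] at h1
    exact h1.prod_right_ae
  filter_upwards [ae_all_iff.2 h] with t ht
  rw [locallyIntegrable_iff]
  intro K hK
  obtain ⟨C, hC⟩ := hK.isBounded.exists_norm_le
  obtain ⟨n, hn⟩ := exists_nat_ge C
  refine (ht n).mono_set fun x hx => ?_
  have := hC x hx
  rw [norm_eq_abs, abs_le] at this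
  constructor <;> linarith

lemma ae_zero_of_forall_test {h : ℝ → ℝ} (hh : IntegrableOn h (Icc 0 T))
    (h0 : ∀ χ : ℝ → ℝ, Smooth χ → HasCompactSupport χ →
      Function.support χ ⊆ Ioo 0 T → ∫ t in Icc 0 T, χ t * h t = 0) :
    ∀ᵐ t ∂(volume.restrict (Icc 0 T)), h t = 0 := by
  rw [← restrict_Ioo_eq_restrict_Icc, ae_restrict_iff' measurableSet_Ioo]
  apply isOpen_Ioo.ae_eq_zero_of_integral_contDiff_smul_eq_zero
  · exact (hh.mono_set Ioo_subset_Icc_self).locallyIntegrableOn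
  · intro χ hχ hχc hχs
    rw [← h0 χ hχ hχc ((subset_tsupport _).trans hχs)]
    symm
    apply setIntegral_eq_integral_of_forall_compl_eq_zero
    intro t ht
    have : χ t = 0 := by
      by_contra hne
      exact ht (Ioo_subset_Icc_self (hχs (subset_tsupport _ hne)))
    rw [this, zero_mul]

lemma integrable_slice {k : ℝ² → ℝ}
    (hk : IntegrableOn k (strip T)) :
    IntegrableOn (fun t => ∫ x, k (t, x)) (Icc 0 T) := by
  rw [IntegrableOn, volume_eq_prod, ← prod_restrict, restrict_univ] at hk
  exact hk.integral_prod_left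

/-- For a.e. time the slice has an integral representation: a countable family of spatial tests
suffices. -/
lemma HasWeakDx.slice {u w : ℝ² → ℝ} (hu : L1loc T u) (hw : L1loc T w)
    (h : HasWeakDx T u w) : ∀ᵐ t ∂(volume.restrict (Icc 0 T)), ∃ c, ∀ᵐ x,
      u (t, x) = c + ∫ s in 0..x, w (t, s) := by
  have key : ∀ (m : ℕ) (q r : ℚ), ∀ᵐ t ∂(volume.restrict (Icc 0 T)),
      (∫ x, u (t, x) * deriv (bmpPrim m q r) x) + ∫ x, w (t, x) * bmpPrim m q r x = 0 := by
    intro m q r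
    set ψ := bmpPrim m q r
    have hψ : Smooth ψ := bmpPrim_smooth m q r
    have hc : HasCompactSupport ψ := bmpPrim_cpt m q r
    obtain ⟨R, hR0, hR⟩ := exists_support_subset_Ioo hc
    obtain ⟨R', hR0', hR'⟩ := exists_support_subset_Ioo hc.deriv
    have j1 : IntegrableOn (fun p : ℝ² => u p * deriv ψ p.2) (Icc 0 T ×ˢ univ) :=
      integrableOn_strip (fun p hp => by rw [hR' _ hp, mul_zero])
        (hu.mul_box ((deriv_smooth hψ).continuous.comp continuous_snd) hR0')
    have j2 : IntegrableOn (fun p : ℝ² => w p * ψ p.2) (Icc 0 T ×ˢ univ) :=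
      integrableOn_strip (fun p hp => by rw [hR _ hp, mul_zero])
        (hw.mul_box (hψ.continuous.comp continuous_snd) hR0)
    apply ae_zero_of_forall_test ((integrable_slice j1).add (integrable_slice j2))
    intro χ hχ hχc hχs
    let φ : TTest T := TTest.prod hχ hχc hχs hψ hc
    have h := h φ
    have e : pxF φ.toFun = fun p => χ p.1 * deriv ψ p.2 := funext fun p =>
      pxF_prod (hχ.of_le one_le_top_inf) (hψ.of_le one_le_top_inf) p
    have i1 := hu.mul_strip (pxF_cont φ.c1) (pxF_cpt φ.cpt)
    have i2 := hw.mul_strip φ.cont φ.cpt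
    rw [pair_iter i1, pair_iter i2, ← integral_neg] at h
    have s1 : ∀ t, χ t * ((∫ x, u (t, x) * deriv ψ x) + ∫ x, w (t, x) * ψ x) =
        (∫ x, u (t, x) * pxF φ.toFun (t, x)) + ∫ x, w (t, x) * φ.toFun (t, x) := by
      intro t
      rw [mul_add, ← integral_const_mul, ← integral_const_mul, e]
      congr 1
      · grind
      · congr 1; ext x; simp only [φ, TTest.prod]; ring
    simp only [Pi.add_apply, s1]
    rw [integral_add (integrable_slice i1) (integrable_slice i2), h, integral_neg, neg_add_cancel]
  have key' := ae_all_iff.2 fun m => ae_all_iff.2 fun q => ae_all_iff.2 fun r => key m q r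
  filter_upwards [key', hu.slice_ae, hw.slice_ae] with t h1 h2 h3
  apply weak_deriv_ae_countable h2 h3
  intro m q r
  linarith [h1 m q r]

/-- The chain rule for weak `x`-derivatives. -/
lemma HasWeakDx.chain {u w : ℝ² → ℝ} (hum : Measurable u)
    (hu1 : ∀ p, u p ∈ Icc (0:ℝ) 1) (hw : L1loc T w) (h : HasWeakDx T u w) {F : ℝ → ℝ}
    (hF : ContDiff ℝ 1 F) (φ : TTest T) :
    pair T (fun p => deriv F (u p) * w p) φ.toFun = - pair T (fun p => F (u p)) (pxF φ.toFun) := by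
  have hFc := hF.continuous
  have hdFc : Continuous (deriv F) := hF.continuous_deriv le_rfl
  obtain ⟨C, hC⟩ := (isCompact_Icc (a := (0:ℝ)) (b := 1)).exists_bound_of_continuousOn
    hFc.continuousOn
  obtain ⟨C', hC'⟩ := (isCompact_Icc (a := (0:ℝ)) (b := 1)).exists_bound_of_continuousOn
    hdFc.continuousOn
  have l1 : L1loc T (fun p => F (u p)) :=
    L1loc.of_bdd (C := C) (hFc.measurable.comp hum) fun p => hC _ (hu1 p)
  have l2 : L1loc T (fun p => deriv F (u p) * w p) :=
    ⟨(hdFc.measurable.comp hum).mul hw.1, fun R hR => (hw.2 R hR).bdd_mul (c := C')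
      (hdFc.measurable.comp hum).aestronglyMeasurable
      (.of_forall fun p => hC' _ (hu1 p))⟩
  have hul : L1loc T u := L1loc.of_bdd (C := 1) hum fun p =>
    abs_le.2 ⟨by linarith [(hu1 p).1], (hu1 p).2⟩
  rw [pair_iter (l1.mul_strip (pxF_cont φ.c1) (pxF_cpt φ.cpt)),
    pair_iter (l2.mul_strip φ.cont φ.cpt), ← integral_neg]
  apply integral_congr_ae
  filter_upwards [h.slice hul hw, hw.slice_ae] with t ht hwt
  obtain ⟨c, hc⟩ := ht
  have hd : ∀ x, pxF φ.toFun (t, x) = deriv (fun x => φ.toFun (t, x)) x := by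
    intro x
    have h1 : HasFDerivAt φ.toFun (fderiv ℝ φ.toFun (t, x)) (t, x) :=
      (φ.c1.differentiable one_ne_zero _).hasFDerivAt
    have h2 : HasDerivAt (fun x : ℝ => (t, x)) (0, 1) x := by
      simpa using (hasDerivAt_const x t).prodMk (hasDerivAt_id x)
    exact (h1.comp_hasDerivAt x h2).deriv.symm
  have hcs : HasCompactSupport fun x => φ.toFun (t, x) := by
    obtain ⟨R, _, hR⟩ := exists_strip_bound φ.cpt
    refine HasCompactSupport.intro (isCompact_Icc (a := -R) (b := R)) fun x hx => ?_
    apply hR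
    by_contra hlt
    push Not at hlt
    exact hx ⟨(abs_lt.1 hlt).1.le, (abs_lt.1 hlt).2.le⟩
  have := ibp_comp (g := fun x => c + ∫ s in 0..x, w (t, s)) hwt (fun x => rfl) hF
    (φ.c1.comp (contDiff_prodMk_right t)) hcs
  have e1 : ∫ x, deriv F (u (t, x)) * w (t, x) * φ.toFun (t, x) =
      ∫ x, deriv F (c + ∫ s in 0..x, w (t, s)) * w (t, x) * φ.toFun (t, x) := by
    apply integral_congr_ae
    filter_upwards [hc] with x hx
    rw [hx]
  have e2 : ∫ x, F (u (t, x)) * pxF φ.toFun (t, x) =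
      ∫ x, F (c + ∫ s in 0..x, w (t, s)) * deriv (fun x => φ.toFun (t, x)) x := by
    apply integral_congr_ae
    filter_upwards [hc] with x hx
    rw [hx, hd]
  rw [e1, e2]
  exact (neg_eq_iff_eq_neg.2 this).symm

/-- The viscous term of `J_ε` only involves the antiderivative `∫₀ᵛ D`. -/
lemma wDx_pair {D : ℝ → ℝ} (hD : ContinuousOn D (Icc 0 1)) : ∃ C, 0 ≤ C ∧
    ∃ P : ℝ → ℝ, ContDiff ℝ 1 P ∧ (∀ v ∈ Icc (0:ℝ) 1, |P v| ≤ C) ∧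
    ∀ (u w : ℝ² → ℝ), Measurable u → (∀ p, u p ∈ Icc (0:ℝ) 1) → L1loc T w →
      HasWeakDx T u w → ∀ φ : TTest T,
      pair T (fun p => D (u p) * w p) φ.toFun = - pair T (fun p => P (u p)) (pxF φ.toFun) := by
  set D' : ℝ → ℝ := fun v => D (projIcc 0 1 zero_le_one v) with hD'
  have hD'c : Continuous D' :=
    hD.comp_continuous (continuous_subtype_val.comp continuous_projIcc) fun v =>
      (projIcc 0 1 zero_le_one v).2
  have hd : ∀ v, HasDerivAt (fun v => ∫ s in 0..v, D' s) (D' v) v := fun v =>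
    intervalIntegral.integral_hasDerivAt_right (hD'c.intervalIntegrable _ _)
      hD'c.aestronglyMeasurable.stronglyMeasurableAtFilter hD'c.continuousAt
  have hde : deriv (fun v => ∫ s in 0..v, D' s) = D' := funext fun v => (hd v).deriv
  have hP : ContDiff ℝ 1 (fun v => ∫ s in 0..v, D' s) := by
    rw [contDiff_one_iff_deriv, hde]
    exact ⟨fun v => (hd v).differentiableAt, hD'c⟩
  obtain ⟨C, hC⟩ := (isCompact_Icc (a := (0:ℝ)) (b := 1)).exists_bound_of_continuousOn
    hP.continuous.continuousOn
  refine ⟨|C|, abs_nonneg _, _, hP, fun v hv => (hC v hv).trans (le_abs_self _), ?_⟩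
  intro u w hu hu1 hw h φ
  rw [← h.chain hu hu1 hw hP φ, hde]
  congr 1; ext p
  simp only [hD']
  rw [projIcc_of_mem zero_le_one (hu1 p)]

lemma wDx_spec {u : ℝ² → ℝ} (h : hasDx T u) :
    L2loc T (wDx T u) ∧ HasWeakDx T u (wDx T u) := by
  unfold wDx
  rw [dif_pos h]
  exact h.choose_spec

end

/-! ### The `Γ`-liminf inequality -/

lemma YM.ae01 (μ : YM T) (p : ℝ²) : ∀ᵐ l ∂μ.m p, l ∈ Icc (0:ℝ) 1 := by
  have := μ.supp01 p
  rwa [← mem_ae_iff] at this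

lemma YM.mom_congr (μ : YM T) {F G : ℝ → ℝ} (h : ∀ v ∈ Icc (0:ℝ) 1, F v = G v) :
    μ.mom F = μ.mom G := by
  funext p
  exact integral_congr_ae ((μ.ae01 p).mono fun l hl => h l hl)

lemma exists_ext {F : ℝ → ℝ} (hF : ContinuousOn F (Icc 0 1)) :
    ∃ G : ℝ → ℝ, Continuous G ∧ ∀ v ∈ Icc (0:ℝ) 1, F v = G v :=
  ⟨fun v => F (projIcc (0:ℝ) 1 zero_le_one v),
    hF.comp_continuous (continuous_subtype_val.comp continuous_projIcc) fun v => Subtype.coe_prop _,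
    fun v hv => by simp only [projIcc_of_mem zero_le_one hv]⟩

lemma exists_bd01 {F : ℝ → ℝ} (hF : ContinuousOn F (Icc 0 1)) :
    ∃ C : ℝ, 0 ≤ C ∧ ∀ v ∈ Icc (0:ℝ) 1, |F v| ≤ C := by
  obtain ⟨C, hC⟩ := isCompact_Icc.exists_bound_of_continuousOn hF
  exact ⟨max C 0, le_max_right _ _, fun v hv => (hC v hv).trans (le_max_left _ _)⟩

lemma YM.mom_abs_le (μ : YM T) {F : ℝ → ℝ} {C : ℝ} (h : ∀ v ∈ Icc (0:ℝ) 1, |F v| ≤ C)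
    (p : ℝ²) : |μ.mom F p| ≤ C := by
  have := μ.prob p
  have := norm_integral_le_of_norm_le_const (f := F) (C := C) ((μ.ae01 p).mono fun l hl => h l hl)
  simpa [YM.mom] using this

lemma YM.mom_meas (μ : YM T) {F : ℝ → ℝ} (hF : ContinuousOn F (Icc 0 1)) :
    Measurable (μ.mom F) := by
  obtain ⟨G, hG, h⟩ := exists_ext hF
  rw [μ.mom_congr h]; exact μ.meas G hG

lemma YM.mom_l1 (μ : YM T) {F : ℝ → ℝ} (hF : ContinuousOn F (Icc 0 1)) :
    L1loc T (μ.mom F) := by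
  obtain ⟨C, _, hC⟩ := exists_bd01 hF
  exact L1loc.of_bdd (μ.mom_meas hF) (μ.mom_abs_le hC)

lemma exists_cut01 : ∃ χ : ℝ → ℝ, Continuous χ ∧ HasCompactSupport χ ∧
    ∀ v ∈ Icc (0:ℝ) 1, χ v = 1 := by
  let B : ContDiffBump (0:ℝ) := ⟨2, 3, by norm_num, by norm_num⟩
  refine ⟨B, B.continuous, B.hasCompactSupport, fun v hv => B.one_of_mem_closedBall ?_⟩
  simp only [Metric.mem_closedBall, dist_zero_right, norm_eq_abs, abs_of_nonneg hv.1]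
  exact hv.2.trans (by norm_num : (1:ℝ) ≤ 2)

lemma wpair_prod {F : ℝ → ℝ} (hF : ContinuousOn F (Icc 0 1)) {h : ℝ² → ℝ} (hh : Continuous h)
    (hc : HasCompactSupport h) : ∃ g : ℝ × ℝ² → ℝ, Continuous g ∧ HasCompactSupport g ∧
      ∀ (T : ℝ) (μ : YM T), μ.wpair g = pair T (μ.mom F) h := by
  obtain ⟨G, hG, hFG⟩ := exists_ext hF
  obtain ⟨χ, hχ, hχc, hχ1⟩ := exists_cut01
  refine ⟨fun q => (χ q.1 * G q.1) * h q.2, by fun_prop, ?_, fun T μ => ?_⟩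
  · apply HasCompactSupport.intro (hχc.prod hc)
    rintro ⟨l, p⟩ hq
    simp only [mem_prod, not_and_or] at hq
    rcases hq with h1 | h1
    · simp [image_eq_zero_of_notMem_tsupport h1]
    · simp [image_eq_zero_of_notMem_tsupport h1]
  · unfold YM.wpair pair
    congr 1; funext p
    simp only []
    rw [integral_mul_const]
    congr 1
    refine integral_congr_ae ((μ.ae01 p).mono fun l hl => ?_)
    simp only [hχ1 l hl, hFG l hl, one_mul]

lemma AA.tendsto_mom {xs : ℕ → AA T} {x : AA T}
    (hw : ∀ g : ℝ × ℝ² → ℝ, Continuous g → HasCompactSupport g →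
      Tendsto (fun n => (xs n).1.2.wpair g) atTop (𝓝 (x.1.2.wpair g)))
    {F : ℝ → ℝ} (hF : ContinuousOn F (Icc 0 1)) {h : ℝ² → ℝ} (hh : Continuous h)
    (hc : HasCompactSupport h) :
    Tendsto (fun n => pair T ((xs n).1.2.mom F) h) atTop (𝓝 (pair T (x.1.2.mom F) h)) := by
  obtain ⟨g, hg, hgc, hp⟩ := wpair_prod hF hh hc
  simpa only [hp] using hw g hg hgc

lemma pair_abs_le {C : ℝ} {g h : ℝ² → ℝ} (hC : 0 ≤ C)
    (hb : ∀ p, |g p| ≤ C) (hh : Continuous h) (hc : HasCompactSupport h) :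
    |pair T g h| ≤ C * ∫ p, |h p| := by
  have hi : Integrable (fun p => |h p|) := (hh.integrable_of_hasCompactSupport hc).abs
  calc |pair T g h| ≤ ∫ p in strip T, |g p * h p| :=
        abs_integral_le_integral_abs
    _ ≤ ∫ p in strip T, C * |h p| := by
        apply integral_mono_of_nonneg (ae_of_all _ fun p => abs_nonneg _)
          (hi.const_mul C).integrableOn
        refine ae_of_all _ fun p => ?_
        simp only [abs_mul]
        exact mul_le_mul_of_nonneg_right (hb p) (abs_nonneg _)
    _ ≤ ∫ p, C * |h p| := setIntegral_le_integral (hi.const_mul C)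
        (ae_of_all _ fun p => by positivity)
    _ = _ := integral_const_mul _ _

/-- Up to a term of order `ε`, the prelimit functional dominates the expression in the limit. -/
lemma calJeps_ge (hD : ContinuousOn D (Icc 0 1)) : ∃ C : ℝ, 0 ≤ C ∧
    ∀ (x : AA T) (ε : ℝ) (φ : TTest T), 0 < ε → ENNReal.ofReal
      (act f σ T x φ
      - ε / 2 * (C * ∫ p, |pxF φ.toFun p|)) ≤ calJeps f D σ T ε x := by
  obtain ⟨C, hC, P, hP, hPC, hpair⟩ := wDx_pair hD
  refine ⟨C, hC, fun x ε φ hε => ?_⟩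
  unfold calJeps
  split_ifs with hd
  swap
  · exact le_top
  unfold Jeps
  split_ifs with hx
  swap
  · exact le_top
  refine le_trans ?_ (le_iSup _ φ)
  apply ENNReal.ofReal_le_ofReal
  have hm : ∀ F : ℝ → ℝ, x.1.2.mom F = fun p => F (x.1.1.ux.toFun p) := fun F => by
    funext p; simp only [YM.mom, hd p, integral_dirac]
  obtain ⟨hw1, hw2⟩ := wDx_spec hx
  unfold JexprW
  rw [hm f, hm σ, hpair _ _ x.1.1.ux.meas x.1.1.ux.mem01 hw1.l1 hw2 φ]
  have := pair_abs_le (T := T) (g := P ∘ x.1.1.ux.toFun) hC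
    (fun p => hPC _ (x.1.1.ux.mem01 p)) (pxF_cont φ.c1) (pxF_cpt φ.cpt)
  have h2 := neg_abs_le (pair T (P ∘ x.1.1.ux.toFun) (pxF φ.toFun))
  have h3 : ε / 2 * (-(C * ∫ p, |pxF φ.toFun p|)) ≤
      ε / 2 * pair T (P ∘ x.1.1.ux.toFun) (pxF φ.toFun) :=
    mul_le_mul_of_nonneg_left (by linarith) (by positivity)
  simp only [Function.comp_def] at h3
  linarith

/-- Each test function gives a lower bound on the energy at level `ε` whose limit is the
corresponding term of the supremum defining `calJ`. -/
theorem gamma_liminf (hT : 0 < T) (hf : ContinuousOn f (Icc 0 1))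
    (hD : ContinuousOn D (Icc 0 1)) (hσ : ContinuousOn σ (Icc 0 1)) {dw : YM T → YM T → ℝ}
    (hdw : GeneratesWeakStar T dw) :
    GammaLiminfGE (dA T dw) (fun ε => calJeps f D σ T ε) (calJ f σ T) := by
  intro x e xs he he0 hd
  obtain ⟨hw, hb⟩ := AA.of_tendsto hT hdw hd
  refine iSup_le fun φ => ?_
  obtain ⟨C, hC, hge⟩ := calJeps_ge (T := T) (f := f) (σ := σ) hD
  have hsq : ∀ μ : YM T, pair T (fun p => μ.mom σ p * φ.toFun p) φ.toFun =
      pair T (μ.mom σ) (fun p => φ.toFun p ^ 2) := fun μ => by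
    unfold pair; congr 1; funext p; ring
  have hlim : Tendsto (fun n => ENNReal.ofReal
      (- pair T (xs n).1.1.b (ptF φ.toFun) + pair T ((xs n).1.2.mom f) φ.toFun
      - 1 / 2 * pair T (fun p => (xs n).1.2.mom σ p * φ.toFun p) φ.toFun
      - e n / 2 * (C * ∫ p, |pxF φ.toFun p|))) atTop (𝓝 (ENNReal.ofReal
      (act f σ T x φ))) := by
    simp only [hsq]
    apply ENNReal.tendsto_ofReal
    have h4 : Tendsto (fun n => e n / 2 * (C * ∫ p, |pxF φ.toFun p|)) atTop (𝓝 0) := by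
      simpa using (he0.div_const 2).mul_const (C * ∫ p, |pxF φ.toFun p|)
    have hc2 : HasCompactSupport fun p => φ.toFun p ^ 2 :=
      φ.cpt.comp_left (g := fun y : ℝ => y ^ 2) (by simp)
    have := (((hb φ).neg.add (AA.tendsto_mom hw hf φ.cont φ.cpt)).sub
      ((AA.tendsto_mom hw hσ (h := fun p => φ.toFun p ^ 2) (φ.cont.pow 2) hc2).const_mul (1/2))).sub h4
    simpa only [sub_zero] using this
  rw [← hlim.liminf_eq]
  exact liminf_le_liminf (.of_forall fun n => hge (xs n) (e n) φ (he n))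

/-! ### Equicontinuity in time on sublevel sets -/

/-- A smooth approximation `χ` of the indicator function of `[s,t]`. -/
lemma time_test {s t T η : ℝ} (hs : 0 < s) (hst : s < t) (ht : t < T) (hη : 0 < η) {h : ℝ → ℝ}
    (hh : Continuous h) : ∃ χ : ℝ → ℝ, Smooth χ ∧ HasCompactSupport χ ∧
      Function.support χ ⊆ Ioo 0 T ∧ (∀ τ, |χ τ| ≤ 1) ∧ ∫ τ, |χ τ| ≤ t - s + η ∧
      |(- ∫ τ in Icc 0 T, h τ * deriv χ τ) - (h t - h s)| ≤ η := by
  obtain ⟨r1, hr1, hrs⟩ := Metric.continuous_iff.1 hh s (η / 2) (by linarith)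
  obtain ⟨r2, hr2, hrt⟩ := Metric.continuous_iff.1 hh t (η / 2) (by linarith)
  obtain ⟨r, hr, h1, h2, h3, h4, h5⟩ : ∃ r > 0, r ≤ r1 ∧ r ≤ r2 ∧ r < s ∧ r < T - t ∧
      2 * r ≤ η := by
    refine ⟨min (min r1 r2) (min (min (s/2) ((T-t)/2)) (η/2)), ?_, ?_, ?_, ?_, ?_, ?_⟩
    · positivity
    · simp
    · simp
    · grind
    · grind
    · grind
  obtain ⟨ψ, hψ, hψc, hψ0, hψr, hψ1⟩ := exists_bump_at s hr
  obtain ⟨ξ, hξ, hξc, hξ0, hξr, hξ1⟩ := exists_bump_at t hr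
  have hk : Continuous fun τ => ψ τ - ξ τ := hψ.continuous.sub hξ.continuous
  have hder : ∀ τ, HasDerivAt (fun τ => ∫ y in 0..τ, (ψ y - ξ y)) (ψ τ - ξ τ) τ := fun τ =>
    intervalIntegral.integral_hasDerivAt_right (hk.intervalIntegrable _ _)
      (hk.stronglyMeasurableAtFilter _ _) hk.continuousAt
  have key : ∀ (ψ : ℝ → ℝ), Continuous ψ → HasCompactSupport ψ → (∀ y, 0 ≤ ψ y) →
      ∫ y, ψ y = 1 → ∀ z, r < z → (∀ y, r ≤ |y - z| → ψ y = 0) → ∀ τ,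
      (∫ y in 0..τ, ψ y) ∈ Icc (0:ℝ) 1 ∧ (τ ≤ z - r → ∫ y in 0..τ, ψ y = 0) ∧
      (z + r ≤ τ → ∫ y in 0..τ, ψ y = 1) := by
    intro ψ hψ hψc hψ0 hψ1 z hz hr' τ
    have hi := hψ.integrable_of_hasCompactSupport (μ := volume) hψc
    have e : ∫ y in 0..τ, ψ y = ∫ y in Iic τ, ψ y := by
      have : ∫ y in Iic (0:ℝ), ψ y = 0 := by
        apply setIntegral_eq_zero_of_forall_eq_zero
        intro y hy
        apply hr'
        rw [abs_sub_comm, le_abs]; left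
        have : y ≤ 0 := hy
        linarith
      rw [← intervalIntegral.integral_Iic_sub_Iic hi.integrableOn hi.integrableOn, this, sub_zero]
    rw [e]
    refine ⟨⟨setIntegral_nonneg measurableSet_Iic fun y _ => hψ0 y, ?_⟩, fun hτ => ?_, fun hτ => ?_⟩
    · rw [← hψ1]; exact setIntegral_le_integral hi (ae_of_all _ hψ0)
    · apply setIntegral_eq_zero_of_forall_eq_zero
      intro y hy
      apply hr'
      rw [abs_sub_comm, le_abs]; left
      have : y ≤ τ := hy
      linarith
    · rw [← hψ1]
      apply setIntegral_eq_integral_of_forall_compl_eq_zero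
      intro y hy
      apply hr'
      rw [le_abs]; left
      have : τ < y := by simpa using hy
      linarith
  have ks := key ψ hψ.continuous hψc hψ0 hψ1 s h3 hψr
  have kt := key ξ hξ.continuous hξc hξ0 hξ1 t (by linarith) hξr
  set χ : ℝ → ℝ := fun τ => ∫ y in 0..τ, (ψ y - ξ y) with hχ
  have hχe : ∀ τ, χ τ = (∫ y in 0..τ, ψ y) - ∫ y in 0..τ, ξ y := fun τ =>
    intervalIntegral.integral_sub (hψ.continuous.intervalIntegrable _ _)
      (hξ.continuous.intervalIntegrable _ _)
  have hd : deriv χ = fun τ => ψ τ - ξ τ := funext fun τ => (hder τ).deriv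
  have hz : ∀ τ, τ ∉ Icc (s - r) (t + r) → χ τ = 0 := by
    intro τ hτ
    rw [hχe]
    simp only [mem_Icc, not_and_or, not_le] at hτ
    rcases hτ with h | h
    · grind
    · grind
  have hχ1 : ∀ τ, |χ τ| ≤ 1 := fun τ => by
    rw [hχe, abs_le]
    have a := (ks τ).1
    have b := (kt τ).1
    constructor <;> linarith [a.1, a.2, b.1, b.2]
  have hsm : Smooth χ := by
    rw [contDiff_infty_iff_deriv]
    refine ⟨fun τ => (hder τ).differentiableAt, ?_⟩
    rw [hd]; exact hψ.sub hξ
  refine ⟨χ, hsm, HasCompactSupport.intro isCompact_Icc hz, fun τ hτ => ?_, hχ1, ?_, ?_⟩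
  · by_contra hc
    apply hτ
    apply hz
    intro hm
    exact hc ⟨by linarith [hm.1], by linarith [hm.2]⟩
  · have : ∫ τ, |χ τ| = ∫ τ in Icc (s - r) (t + r), |χ τ| := by
      symm
      apply setIntegral_eq_integral_of_forall_compl_eq_zero
      intro τ hτ
      rw [hz τ hτ, abs_zero]
    rw [this]
    calc ∫ τ in Icc (s - r) (t + r), |χ τ| ≤ ∫ τ in Icc (s - r) (t + r), (1:ℝ) := by
          apply setIntegral_mono_on _ _ measurableSet_Icc (fun τ _ => hχ1 τ)
          · exact (hsm.continuous.abs.continuousOn).integrableOn_compact isCompact_Icc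
          · simp
      _ = (t + r) - (s - r) := by
          simp [Measure.real, Real.volume_Icc]; linarith
      _ ≤ _ := by linarith
  · have e1 : ∫ τ in Icc 0 T, h τ * deriv χ τ = ∫ τ, h τ * deriv χ τ := by
      apply setIntegral_eq_integral_of_forall_compl_eq_zero
      intro τ hτ
      simp only [mem_Icc, not_and_or, not_le] at hτ
      simp only [hd]
      rcases hτ with h | h
      · rw [hψr τ (by rw [abs_sub_comm, le_abs]; left; linarith),
          hξr τ (by rw [abs_sub_comm, le_abs]; left; linarith)]; simp
      · rw [hψr τ (by rw [le_abs]; left; linarith),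
          hξr τ (by rw [le_abs]; left; linarith)]; simp
    have hl : LocallyIntegrable h := hh.locallyIntegrable
    have a := abs_sub_integral_bump_le (C := η / 2) hl hψ.continuous hψc hψ0 hψr hψ1
      (fun y hy => (hrs y (by rw [dist_eq]; linarith)).le)
    have b := abs_sub_integral_bump_le (C := η / 2) hl hξ.continuous hξc hξ0 hξr hξ1
      (fun y hy => (hrt y (by rw [dist_eq]; linarith)).le)
    rw [e1, hd]
    simp only [mul_sub]
    rw [integral_sub (LocallyIntegrable.mul_test hl hψ.continuous hψc)
      (LocallyIntegrable.mul_test hl hξ.continuous hξc)]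
    rw [abs_le] at a b ⊢
    constructor <;> linarith [a.1, a.2, b.1, b.2]

lemma continuous_slice_int {β : ℝ² → ℝ} (hβ : Continuous β) {ψ : ℝ → ℝ} (hψ : Continuous ψ)
    (hc : HasCompactSupport ψ) : Continuous fun τ => ∫ x, β (τ, x) * ψ x := by
  have : (fun τ => ∫ x, β (τ, x) * ψ x) = fun τ => ∫ x in tsupport ψ, β (τ, x) * ψ x := by
    funext τ
    symm
    apply setIntegral_eq_integral_of_forall_compl_eq_zero
    intro x hx
    rw [image_eq_zero_of_notMem_tsupport hx, mul_zero]
  rw [this]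
  exact continuous_parametric_integral_of_continuous (f := fun τ x => β (τ, x) * ψ x)
    (by fun_prop) hc

/-- The bound on `b(t) - b(s)`, tested against `ψ`, coming from a bound on the cost. -/
lemma slice_incr_le {M : ℝ} (hM : 0 < M) (hf : ContinuousOn f (Icc 0 1))
    (hD : ContinuousOn D (Icc 0 1)) (hσ : ContinuousOn σ (Icc 0 1)) : ∃ C : ℝ, 0 ≤ C ∧
    ∀ (x : AA T) (ε : ℝ) (β : ℝ² → ℝ) (ψ : ℝ → ℝ), ε ∈ Ioc (0:ℝ) 1 →
      calJeps f D σ T ε x ≤ ENNReal.ofReal M → Rep x.1.1 β → Smooth ψ →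
      HasCompactSupport ψ → ∀ s t a : ℝ, 0 < s → s < t → t < T → 0 < a →
      (∫ y, β (t, y) * ψ y) - (∫ y, β (s, y) * ψ y) ≤
        M / a + (t - s) * (C * ((∫ y, |ψ y|) + a * (∫ y, ψ y ^ 2) + ∫ y, |deriv ψ y|)) := by
  obtain ⟨C0, hC0, hge⟩ := calJeps_ge (T := T) (f := f) (σ := σ) hD
  obtain ⟨C1, hC1, hfb⟩ := exists_bd01 hf
  obtain ⟨C2, hC2, hsb⟩ := exists_bd01 hσ
  refine ⟨C0 + C1 + C2, by positivity, ?_⟩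
  intro x ε β ψ hε hx hβ hψ hψc s t a hs hst ht ha
  set A := (∫ y, |ψ y|) + a * (∫ y, ψ y ^ 2) + ∫ y, |deriv ψ y| with hA
  have hA0 : 0 ≤ A := by positivity
  have hψ1 : ContDiff ℝ 1 ψ := hψ.of_le (by exact_mod_cast le_top)
  suffices H : ∀ η > 0, (∫ y, β (t, y) * ψ y) - (∫ y, β (s, y) * ψ y) ≤
      M / a + (t - s) * ((C0 + C1 + C2) * A) + η * (1 + (C0 + C1 + C2) * A) by
    apply le_of_forall_pos_le_add
    intro δ hδ
    have hp : 0 < 1 + (C0 + C1 + C2) * A := by positivity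
    have := H (δ / (1 + (C0 + C1 + C2) * A)) (by positivity)
    rwa [div_mul_cancel₀ _ hp.ne'] at this
  intro η hη
  obtain ⟨χ, hχ, hχc, hχs, hχ1, hχi, hχh⟩ := time_test hs hst ht hη
    (continuous_slice_int hβ.cont hψ.continuous hψc)
  have hχa : Smooth fun τ => a * χ τ := contDiff_const.mul hχ
  have hχa1 : ContDiff ℝ 1 fun τ => a * χ τ := hχa.of_le (by exact_mod_cast le_top)
  let φ : TTest T := TTest.prod hχa (hχc.mul_left)
    (fun τ hτ => hχs fun h0 => hτ (by simp only [h0, mul_zero])) hψ hψc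
  have hφ : φ.toFun = fun p => (a * χ p.1) * ψ p.2 := rfl
  have e1 := (hge x ε φ hε.1).trans hx
  rw [ENNReal.ofReal_le_ofReal_iff hM.le] at e1
  have hχi0 : 0 ≤ ∫ τ, |χ τ| := integral_nonneg fun y => abs_nonneg _
  have l1 : ∫ p, |φ.toFun p| = a * (∫ τ, |χ τ|) * ∫ y, |ψ y| := by
    rw [hφ]
    simp only [abs_mul, abs_of_pos ha]
    rw [volume_eq_prod, integral_prod_mul (fun τ => a * |χ τ|) (fun y => |ψ y|),
      integral_const_mul]
  have l2 : ∫ p, |pxF φ.toFun p| = a * (∫ τ, |χ τ|) * ∫ y, |deriv ψ y| := by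
    simp only [hφ, pxF_prod hχa1 hψ1, abs_mul, abs_of_pos ha]
    rw [volume_eq_prod, integral_prod_mul (fun τ => a * |χ τ|) (fun y => |deriv ψ y|),
      integral_const_mul]
  have l3 : ∫ p, |φ.toFun p ^ 2| ≤ a ^ 2 * (∫ τ, |χ τ|) * ∫ y, ψ y ^ 2 := by
    have l3' : ∀ p, |φ.toFun p ^ 2| = (a ^ 2 * χ p.1 ^ 2) * ψ p.2 ^ 2 := fun p => by grind
    simp only [l3']
    rw [volume_eq_prod, integral_prod_mul (fun τ => a ^ 2 * χ τ ^ 2) (fun y => ψ y ^ 2),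
      integral_const_mul]
    apply mul_le_mul_of_nonneg_right _ (integral_nonneg fun y => sq_nonneg _)
    apply mul_le_mul_of_nonneg_left _ (sq_nonneg _)
    apply integral_mono_of_nonneg (ae_of_all _ fun y => sq_nonneg _)
      (hχ.continuous.integrable_of_hasCompactSupport hχc).abs
    refine ae_of_all _ fun y => ?_
    simp only [← sq_abs (χ y)]
    have := hχ1 y
    have h0 := abs_nonneg (χ y)
    nlinarith
  have f1 := (abs_le.1 (pair_abs_le (T := T) hC1 (x.1.2.mom_abs_le hfb) φ.cont φ.cpt)).1
  have hc2 : HasCompactSupport fun p => φ.toFun p ^ 2 :=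
      φ.cpt.comp_left (g := fun y : ℝ => y ^ 2) (by simp)
  have f2 := (abs_le.1 (pair_abs_le (T := T) hC2 (x.1.2.mom_abs_le hsb)
    (h := fun p => φ.toFun p ^ 2) (φ.cont.pow 2) hc2)).2
  have hsq : pair T (fun p => x.1.2.mom σ p * φ.toFun p) φ.toFun =
      pair T (x.1.2.mom σ) (fun p => φ.toFun p ^ 2) := by
    unfold pair; congr 1; funext p; ring
  have e2 : pair T x.1.1.b (ptF φ.toFun) =
      a * ∫ τ in Icc 0 T, (∫ y, β (τ, y) * ψ y) * deriv χ τ := by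
    rw [pair_iter (x.1.1.l1.mul_strip (ptF_cont φ.c1) (ptF_cpt φ.cpt)), ← integral_const_mul]
    apply setIntegral_congr_fun measurableSet_Icc
    intro τ hτ
    simp only [hφ, ptF_prod hχa1 hψ1]
    rw [← integral_mul_const, ← integral_const_mul]
    refine integral_congr_ae ((hβ.ae τ hτ).mono fun y hy => ?_)
    simp only [hy, deriv_const_mul_field]
    ring
  rw [hsq, e2] at e1
  rw [l2] at e1
  rw [l1] at f1
  set X := ∫ τ, |χ τ|
  set S1 := ∫ y, |ψ y|
  set S2 := ∫ y, ψ y ^ 2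
  set S3 := ∫ y, |deriv ψ y|
  have hS1 : 0 ≤ S1 := integral_nonneg fun y => abs_nonneg _
  have hS2 : 0 ≤ S2 := integral_nonneg fun y => sq_nonneg _
  have hS3 : 0 ≤ S3 := integral_nonneg fun y => abs_nonneg _
  have g1 : ε / 2 * (C0 * (a * X * S3)) ≤ C0 * (a * X * S3) := by
    have : 0 ≤ C0 * (a * X * S3) := by positivity
    nlinarith [hε.1, hε.2]
  have g2 : C2 * ∫ p, |φ.toFun p ^ 2| ≤ C2 * (a ^ 2 * X * S2) :=
    mul_le_mul_of_nonneg_left l3 hC2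
  have g2' : 0 ≤ C2 * (a ^ 2 * X * S2) := by positivity
  set I := ∫ τ in Icc 0 T, (∫ y, β (τ, y) * ψ y) * deriv χ τ
  have e3 : a * (-I) ≤ M + C1 * (a * X * S1) + C2 * (a ^ 2 * X * S2) + C0 * (a * X * S3) := by
    linarith
  have e4 : -I ≤ M / a + X * (C1 * S1 + C2 * (a * S2) + C0 * S3) := by
    have : M / a + X * (C1 * S1 + C2 * (a * S2) + C0 * S3) =
        (M + C1 * (a * X * S1) + C2 * (a ^ 2 * X * S2) + C0 * (a * X * S3)) / a := by grind
    rw [this, le_div_iff₀ ha]; linarith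
  have e5 : C1 * S1 + C2 * (a * S2) + C0 * S3 ≤ (C0 + C1 + C2) * A := by
    rw [hA]
    have : 0 ≤ a * S2 := by positivity
    nlinarith [mul_nonneg hC0 hS1, mul_nonneg hC0 this, mul_nonneg hC1 this, mul_nonneg hC1 hS3,
      mul_nonneg hC2 hS1, mul_nonneg hC2 hS3]
  have e6 : X * (C1 * S1 + C2 * (a * S2) + C0 * S3) ≤ (t - s + η) * ((C0 + C1 + C2) * A) :=
    mul_le_mul hχi e5 (by positivity) (by linarith)
  have e7 := (abs_le.1 hχh).1
  linarith

/-- Sublevel sets are equicontinuous in time, uniformly in space. -/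
lemma exists_modulus {M : ℝ} (hT : 0 < T) (hM : 0 < M) (hf : ContinuousOn f (Icc 0 1))
    (hD : ContinuousOn D (Icc 0 1)) (hσ : ContinuousOn σ (Icc 0 1)) {δ : ℝ} (hδ : 0 < δ) :
    ∃ ζ > 0, ∀ (x : AA T) (ε : ℝ) (β : ℝ² → ℝ), ε ∈ Ioc (0:ℝ) 1 →
      calJeps f D σ T ε x ≤ ENNReal.ofReal M → Rep x.1.1 β →
      ∀ s ∈ Icc 0 T, ∀ t ∈ Icc 0 T, |t - s| < ζ → ∀ y, |β (t, y) - β (s, y)| ≤ δ := by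
  obtain ⟨C, hC, hle⟩ := slice_incr_le (T := T) hM hf hD hσ
  obtain ⟨ψ, hψ, hψc, hψ0, hψr, hψ1⟩ := exists_bump_at 0 (show 0 < δ / 4 by linarith)
  set a := 4 * M / δ
  have ha : 0 < a := by positivity
  set S := C * ((∫ y, |ψ y|) + a * (∫ y, ψ y ^ 2) + ∫ y, |deriv ψ y|)
  have hS : 0 ≤ S := by positivity
  refine ⟨δ / (4 * (S + 1)), by positivity, ?_⟩
  intro x ε β hε hx hβ
  have hMa : M / a = δ / 4 := by simp only [a]; field_simp
  have key : ∀ s t y, 0 < s → s < t → t < T → t - s < δ / (4 * (S + 1)) →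
      |β (t, y) - β (s, y)| ≤ δ := by
    intro s t y hs hst ht hd
    have hbd : (t - s) * S ≤ δ / 4 := by
      have h1 : (t - s) * (S + 1) ≤ δ / (4 * (S + 1)) * (S + 1) :=
        mul_le_mul_of_nonneg_right hd.le (by linarith)
      have h2 : δ / (4 * (S + 1)) * (S + 1) = δ / 4 := by field_simp
      nlinarith
    have hψ' : Smooth fun z => ψ (z - y) := hψ.comp (contDiff_id.sub contDiff_const)
    have hψc' : HasCompactSupport fun z => ψ (z - y) :=
      hψc.comp_homeomorph (Homeomorph.subRight y)
    have n1 : ∫ z, |ψ (z - y)| = ∫ z, |ψ z| := integral_sub_right_eq_self (fun z => |ψ z|) y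
    have n2 : ∫ z, ψ (z - y) ^ 2 = ∫ z, ψ z ^ 2 := integral_sub_right_eq_self (fun z => ψ z ^ 2) y
    have n3 : ∫ z, |deriv (fun z => ψ (z - y)) z| = ∫ z, |deriv ψ z| := by
      simp only [deriv_comp_sub_const]
      exact integral_sub_right_eq_self (fun z => |deriv ψ z|) y
    have i1 := hle x ε β _ hε hx hβ hψ' hψc' s t a hs hst ht ha
    have i2 := hle x ε β _ hε hx hβ hψ'.neg hψc'.neg s t a hs hst ht ha
    have dn : deriv (fun z => -ψ (z - y)) = fun z => - deriv (fun z => ψ (z - y)) z := by simp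
    simp only [dn, abs_neg, neg_sq, mul_neg, integral_neg] at i2
    rw [n1, n2, n3, hMa] at i1 i2
    have app : ∀ τ, |(∫ z, β (τ, z) * ψ (z - y)) - β (τ, y)| ≤ δ / 4 := fun τ => by
      apply abs_sub_integral_bump_le (g := fun z => β (τ, z)) (r := δ / 4) _ hψ'.continuous hψc'
        (fun z => hψ0 _) (fun z hz => hψr _ (by simpa using hz))
      · rw [integral_sub_right_eq_self ψ y]; exact hψ1
      · intro z hz
        exact (hβ.lip τ z y).trans hz.le
      · exact (hβ.cont.comp (by fun_prop : Continuous fun z : ℝ => (τ, z))).locallyIntegrable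
    have a1 := abs_le.1 (app s)
    have a2 := abs_le.1 (app t)
    rw [abs_le]
    constructor <;> linarith [a1.1, a1.2, a2.1, a2.2]
  have key2 : ∀ s t y, s ∈ Ioo 0 T → t ∈ Ioo 0 T → |t - s| < δ / (4 * (S + 1)) →
      |β (t, y) - β (s, y)| ≤ δ := by
    intro s t y hs ht hd
    rcases lt_trichotomy s t with h | h | h
    · grind
    · rw [h]; simp [hδ.le]
    · rw [abs_sub_comm]
      exact key t s y ht.1 h hs.2 (by rwa [abs_sub_comm, abs_of_pos (by linarith)] at hd)
  intro s hs t ht hd y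
  -- move `s` and `t` slightly towards the midpoint of `[0,T]`
  have hlim : Tendsto (fun l : ℝ => |β ((1 - l) * t + l * (T/2), y) - β ((1 - l) * s + l * (T/2), y)|)
      (𝓝[>] 0) (𝓝 |β (t, y) - β (s, y)|) := by
    have hc : Continuous fun l : ℝ =>
        |β ((1 - l) * t + l * (T/2), y) - β ((1 - l) * s + l * (T/2), y)| := by
      have := hβ.cont
      fun_prop
    have := (hc.tendsto 0).mono_left (nhdsWithin_le_nhds (s := Ioi 0))
    simpa using this
  apply le_of_tendsto hlim
  have hev : ∀ᶠ l : ℝ in 𝓝[>] 0, l ∈ Ioo (0:ℝ) 1 := Ioo_mem_nhdsGT one_pos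
  filter_upwards [hev] with l hl
  have hin : ∀ s ∈ Icc 0 T, (1 - l) * s + l * (T/2) ∈ Ioo 0 T := fun s hs => by
    have h1 : 0 ≤ (1 - l) * s := mul_nonneg (by linarith [hl.2]) hs.1
    have h2 : (1 - l) * s ≤ (1 - l) * T := mul_le_mul_of_nonneg_left hs.2 (by linarith [hl.2])
    have h3 : 0 < l * T := mul_pos hl.1 hT
    constructor <;> nlinarith
  apply key2 _ _ y (hin s hs) (hin t ht)
  have : (1 - l) * t + l * (T/2) - ((1 - l) * s + l * (T/2)) = (1 - l) * (t - s) := by ring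
  rw [this, abs_mul, abs_of_pos (by linarith [hl.2])]
  refine lt_of_le_of_lt ?_ hd
  have := abs_nonneg (t - s)
  nlinarith [hl.1]

/-! ### Compactness: the functions `b` -/

/-- Arzelà–Ascoli on the plane, with locally uniform convergence. -/
lemma ascoli_seq {γ : ℕ → ℝ² → ℝ} (hc : ∀ n, Continuous (γ n))
    (heq : ∀ p, ∀ δ > 0, ∃ r > 0, ∀ q, dist q p < r → ∀ n, |γ n q - γ n p| < δ)
    (hbd : ∀ p, ∃ C, ∀ n, |γ n p| ≤ C) :
    ∃ g : ℝ² → ℝ, Continuous g ∧ ∃ s : ℕ → ℕ, StrictMono s ∧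
      ∀ R δ : ℝ, 0 < δ → ∀ᶠ n in atTop, ∀ p : ℝ², ‖p‖ ≤ R → |γ (s n) p - g p| < δ := by
  let G : ℕ → C(ℝ², ℝ) := fun n => ⟨γ n, hc n⟩
  have hK : IsCompact (closure (range G)) := by
    apply ArzelaAscoli.isCompact_closure_of_isClosedEmbedding (F := fun h : C(ℝ², ℝ) => ⇑h)
      (𝔖 := {K : Set (ℝ²) | IsCompact K}) (fun K hK => hK)
    · haveI : T2Space (UniformOnFun (ℝ²) ℝ {K : Set (ℝ²) | IsCompact K}) :=
        UniformOnFun.t2Space_of_covering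
          (sUnion_eq_univ_iff.2 fun p => ⟨{p}, isCompact_singleton, mem_singleton p⟩)
      exact ContinuousMap.isUniformEmbedding_toUniformOnFunIsCompact.isClosedEmbedding
    · intro K _
      apply Equicontinuous.equicontinuousOn
      intro p
      rw [Metric.equicontinuousAt_iff]
      intro δ hδ
      obtain ⟨r, hr, h⟩ := heq p δ hδ
      refine ⟨r, hr, fun q hq i => ?_⟩
      obtain ⟨_, n, rfl⟩ := i
      rw [dist_comm, dist_eq]
      exact h q hq n
    · intro K _ p _
      obtain ⟨C, hC⟩ := hbd p
      refine ⟨Icc (-C) C, isCompact_Icc, ?_⟩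
      rintro _ ⟨n, rfl⟩
      exact abs_le.1 (hC n)
  obtain ⟨g, _, s, hs, hlim⟩ := hK.tendsto_subseq (x := G) fun n => subset_closure (mem_range_self n)
  refine ⟨g, g.continuous, s, hs, fun R δ hδ => ?_⟩
  rw [ContinuousMap.tendsto_iff_forall_isCompact_tendstoUniformlyOn] at hlim
  have := Metric.tendstoUniformlyOn_iff.1 (hlim _ (isCompact_closedBall (0 : ℝ²) R)) δ hδ
  filter_upwards [this] with n hn p hp
  have := hn p (by simpa using hp)
  rwa [dist_comm, dist_eq] at this

/-- A continuous function that is monotone and `1`-Lipschitz in `x` is the primitive of its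
`x`-derivative. -/
lemma exists_dx {γ : ℝ² → ℝ} (hγ : Continuous γ)
    (hl : ∀ t x y, |γ (t, x) - γ (t, y)| ≤ |x - y|) (hm : ∀ t x y, x ≤ y → γ (t, x) ≤ γ (t, y)) :
    ∃ u : ℝ² → ℝ, Measurable u ∧ (∀ p, u p ∈ Icc (0:ℝ) 1) ∧
      ∀ t x, γ (t, x) = γ (t, 0) + ∫ s in 0..x, u (t, s) := by
  have hlip : ∀ t, LipschitzWith 1 fun x => γ (t, x) := fun t =>
    LipschitzWith.of_dist_le_mul fun x y => by
      rw [dist_eq, dist_eq, NNReal.coe_one, one_mul]; exact hl t x y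
  refine ⟨fun p => deriv (fun x => γ (p.1, x)) p.2, ?_, fun p => ⟨?_, ?_⟩, fun t x => ?_⟩
  · exact measurable_deriv_with_param (f := fun t x => γ (t, x)) (by simpa [Function.uncurry_def] using hγ)
  · have hmono : Monotone fun x => γ (p.1, x) := fun x y hxy => hm p.1 x y hxy
    exact hmono.deriv_nonneg
  · have := norm_deriv_le_of_lipschitz (x₀ := p.2) (hlip p.1)
    rw [NNReal.coe_one] at this
    exact (le_abs_self _).trans this
  · have := ((hlip t).lipschitzOnWith (s := uIcc 0 x)).absolutelyContinuousOnInterval.integral_deriv_eq_sub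
    rw [this]; ring

/-! ### Compactness: Young measures -/

section
open ProbabilityTheory

lemma YM.measurable_m (μ : YM T) : Measurable μ.m := by
  have := μ.prob
  refine Measurable.measure_of_isPiSystem_of_isProbabilityMeasure
    (borel_eq_generateFrom_isClosed (α := ℝ) ▸ BorelSpace.measurable_eq) isPiSystem_isClosed ?_
  intro F hF
  refine measurable_of_tendsto_metrizable (f := fun n p => ∫⁻ x, hF.apprSeq n x ∂μ.m p)
    (fun n => ?_) (tendsto_pi_nhds.2 fun p => HasOuterApproxClosed.tendsto_lintegral_apprSeq hF (μ.m p))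
  have : (fun p => ∫⁻ x, hF.apprSeq n x ∂μ.m p) =
      fun p => ENNReal.ofReal (∫ x, ((hF.apprSeq n x : NNReal) : ℝ) ∂μ.m p) := by
    funext p
    rw [ofReal_integral_eq_lintegral_ofReal]
    · simp
    · exact BoundedContinuousFunction.integrable_of_nnreal _ (hF.apprSeq n)
    · exact ae_of_all _ fun x => NNReal.coe_nonneg _
  rw [this]
  exact (μ.meas _ (NNReal.continuous_coe.comp (hF.apprSeq n).continuous)).ennreal_ofReal

/-- A Young measure as a Markov kernel. -/
def YM.ker (μ : YM T) : Kernel (ℝ²) ℝ := ⟨μ.m, μ.measurable_m⟩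

instance (μ : YM T) : IsMarkovKernel μ.ker := ⟨μ.prob⟩

/-- A positive continuous density on the strip `[0,T] × ℝ`, of total mass one. -/
def wgt (T : ℝ) (p : ℝ²) : ℝ := (T * √π)⁻¹ * Real.exp (-1 * p.2 ^ 2)

lemma wgt_pos (hT : 0 < T) (p : ℝ²) : 0 < wgt T p := by
  have := Real.pi_pos
  unfold wgt; positivity

lemma wgt_cont : Continuous (wgt T) := by unfold wgt; fun_prop

/-- A probability measure equivalent to the Lebesgue measure on the strip. -/
def refM (T : ℝ) : Measure (ℝ²) :=
  (volume.restrict (strip T)).withDensity fun p => ENNReal.ofReal (wgt T p)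

lemma refM_prob (hT : 0 < T) : IsProbabilityMeasure (refM T) := by
  constructor
  have hi : Integrable (wgt T) (volume.restrict (strip T)) := by
    unfold wgt
    rw [volume_eq_prod, ← prod_restrict, restrict_univ]
    exact Integrable.mul_prod (f := fun _ : ℝ => (T * √π)⁻¹)
      (g := fun x : ℝ => Real.exp (-1 * x ^ 2)) (integrable_const _)
      (integrable_exp_neg_mul_sq one_pos)
  unfold refM
  rw [withDensity_apply _ MeasurableSet.univ, restrict_univ,
    ← ofReal_integral_eq_lintegral_ofReal hi (ae_of_all _ fun p => (wgt_pos hT p).le)]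
  have : ∫ p in strip T, wgt T p = 1 := by
    unfold wgt
    rw [volume_eq_prod, ← prod_restrict, restrict_univ,
      integral_prod_mul (fun _ : ℝ => (T * √π)⁻¹) (fun x : ℝ => Real.exp (-1 * x ^ 2)),
      integral_gaussian]
    have := Real.pi_pos
    simp [Measure.real, hT.le]
    field_simp
  rw [this, ENNReal.ofReal_one]

lemma ae_refM (hT : 0 < T) {P : ℝ² → Prop} (h : ∀ᵐ p ∂refM T, P p) :
    ∀ᵐ p ∂(volume.restrict (strip T)), P p := by
  unfold refM at h
  rw [ae_withDensity_iff wgt_cont.measurable.ennreal_ofReal] at h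
  exact h.mono fun p hp => hp (by simpa using wgt_pos hT p)

/-- Integrals against a kernel over the strip are integrals against the joint law. -/
lemma kernel_integral (hT : 0 < T) {g : ℝ × ℝ² → ℝ} (hg : Continuous g)
    (hgc : HasCompactSupport g) : ∃ G : BoundedContinuousFunction (ℝ² × ℝ) ℝ,
      ∀ κ : Kernel (ℝ²) ℝ, IsMarkovKernel κ →
      ∫ q, G q ∂(refM T ⊗ₘ κ) = ∫ p in strip T, ∫ l, g (l, p) ∂κ p := by
  have hGc : Continuous fun q : ℝ² × ℝ => g (q.2, q.1) / wgt T q.1 := by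
    have := wgt_cont (T := T)
    exact (hg.comp (by fun_prop)).div (by fun_prop) fun q => (wgt_pos hT q.1).ne'
  have hGs : HasCompactSupport fun q : ℝ² × ℝ => g (q.2, q.1) / wgt T q.1 := by
    refine HasCompactSupport.intro (hgc.image (continuous_swap (X := ℝ) (Y := ℝ²))) ?_
    rintro ⟨p, l⟩ hq
    have : g (l, p) = 0 := by
      by_contra h
      exact hq ⟨(l, p), subset_tsupport _ h, rfl⟩
    simp only [this, zero_div]
  obtain ⟨C, hC⟩ := hGc.bounded_above_of_compact_support hGs
  refine ⟨BoundedContinuousFunction.ofNormedAddCommGroup _ hGc C hC, fun κ hκ => ?_⟩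
  have := refM_prob hT
  rw [Measure.integral_compProd (BoundedContinuousFunction.integrable _ _)]
  unfold refM
  rw [integral_withDensity_eq_integral_toReal_smul wgt_cont.measurable.ennreal_ofReal
    (ae_of_all _ fun p => ENNReal.ofReal_lt_top)]
  congr 1; funext p
  simp only [BoundedContinuousFunction.coe_ofNormedAddCommGroup, smul_eq_mul,
    ENNReal.toReal_ofReal (wgt_pos hT p).le, integral_div]
  field_simp [(wgt_pos hT p).ne']

/-- Every sequence of Young measures has a weak* convergent subsequence, with limit a kernel. -/
lemma ym_compact (hT : 0 < T) (μ : ℕ → YM T) : ∃ κ : Kernel (ℝ²) ℝ, IsMarkovKernel κ ∧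
    (∀ᵐ p ∂(volume.restrict (strip T)), κ p (Icc (0:ℝ) 1)ᶜ = 0) ∧
    ∃ s : ℕ → ℕ, StrictMono s ∧ ∀ g : ℝ × ℝ² → ℝ, Continuous g → HasCompactSupport g →
      Tendsto (fun n => (μ (s n)).wpair g) atTop
        (𝓝 (∫ p in strip T, ∫ l, g (l, p) ∂κ p)) := by
  have := refM_prob hT
  let P : ℕ → ProbabilityMeasure (ℝ² × ℝ) := fun n => ⟨refM T ⊗ₘ (μ n).ker, inferInstance⟩
  have hout : ∀ n, (P n : Measure (ℝ² × ℝ)) (univ ×ˢ (Icc (0:ℝ) 1)ᶜ) = 0 := fun n => by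
    change (refM T ⊗ₘ (μ n).ker) (univ ×ˢ (Icc (0:ℝ) 1)ᶜ) = 0
    rw [Measure.compProd_apply_prod MeasurableSet.univ measurableSet_Icc.compl]
    simp only [restrict_univ]
    rw [lintegral_eq_zero_iff ((μ n).ker.measurable_coe measurableSet_Icc.compl)]
    exact ae_of_all _ fun p => (μ n).supp01 p
  have htight : IsTightMeasureSet {((ν : ProbabilityMeasure (ℝ² × ℝ)) :
      Measure (ℝ² × ℝ)) | ν ∈ range P} := by
    rw [isTightMeasureSet_iff_exists_isCompact_measure_compl_le]
    intro ε hε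
    obtain ⟨K, hK, hKε⟩ := isTightMeasureSet_iff_exists_isCompact_measure_compl_le.1
      (isTightMeasureSet_singleton (μ := refM T)) ε hε
    refine ⟨K ×ˢ Icc (0:ℝ) 1, hK.prod isCompact_Icc, ?_⟩
    rintro _ ⟨_, ⟨n, rfl⟩, rfl⟩
    have hsub : (K ×ˢ Icc (0:ℝ) 1)ᶜ ⊆ (Kᶜ ×ˢ (univ : Set ℝ)) ∪ (univ ×ˢ (Icc (0:ℝ) 1)ᶜ) := by grind
    refine (measure_mono hsub).trans ((measure_union_le _ _).trans ?_)
    rw [hout n, add_zero]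
    change (refM T ⊗ₘ (μ n).ker) (Kᶜ ×ˢ univ) ≤ ε
    rw [Measure.compProd_apply_prod hK.measurableSet.compl MeasurableSet.univ]
    simpa using hKε (refM T) (mem_singleton _)
  obtain ⟨Q, _, s, hs, hlim⟩ := (isCompact_closure_of_isTightMeasureSet htight).tendsto_subseq
    (x := P) fun n => subset_closure (mem_range_self n)
  let ϖ : Measure (ℝ² × ℝ) := Q.1
  have hϖ : IsProbabilityMeasure ϖ := Q.2
  have hfst : ϖ.fst = refM T := by
    have h1 := ProbabilityMeasure.tendsto_map_of_tendsto_of_continuous _ _ hlim continuous_fst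
    have h2 : ∀ n, (P n).map (continuous_fst.measurable.aemeasurable) =
        (⟨refM T, inferInstance⟩ : ProbabilityMeasure (ℝ²)) := fun n => by
      apply Subtype.ext
      change Measure.map Prod.fst (refM T ⊗ₘ (μ n).ker) = refM T
      exact Measure.fst_compProd _ _
    simp only [Function.comp_def, h2] at h1
    have h3 := tendsto_nhds_unique h1 tendsto_const_nhds
    exact congrArg Subtype.val h3
  have hdis : refM T ⊗ₘ ϖ.condKernel = ϖ := by rw [← hfst]; exact ϖ.disintegrate ϖ.condKernel
  refine ⟨ϖ.condKernel, inferInstance, ?_, s, hs, fun g hg hgc => ?_⟩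
  · have h0 : ϖ (univ ×ˢ (Icc (0:ℝ) 1)ᶜ) = 0 := by
      have := ProbabilityMeasure.le_liminf_measure_open_of_tendsto hlim
        (G := univ ×ˢ (Icc (0:ℝ) 1)ᶜ) (isOpen_univ.prod isClosed_Icc.isOpen_compl)
      simp only [Function.comp_def, hout] at this
      exact le_antisymm (this.trans (by simp)) bot_le
    rw [← hdis, Measure.compProd_apply_prod MeasurableSet.univ measurableSet_Icc.compl,
      restrict_univ,
      lintegral_eq_zero_iff (ϖ.condKernel.measurable_coe measurableSet_Icc.compl)] at h0
    exact ae_refM hT h0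
  · obtain ⟨G, hG⟩ := kernel_integral hT hg hgc
    have h1 := ProbabilityMeasure.tendsto_iff_forall_integral_tendsto.1 hlim G
    rw [← hG ϖ.condKernel inferInstance, hdis]
    refine h1.congr fun n => ?_
    exact hG (μ (s n)).ker inferInstance

end

/-! ### Equicoercivity -/

lemma ae_strip_zero {h : ℝ² → ℝ} (hh : L1loc T h)
    (h0 : ∀ φ : TTest T, pair T h φ.toFun = 0) :
    ∀ᵐ p ∂(volume.restrict (strip T)), h p = 0 := by
  have hres : (volume : Measure (ℝ²)).restrict (strip T) =
      volume.restrict (Ioo (0:ℝ) T ×ˢ (univ : Set ℝ)) := by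
    rw [volume_eq_prod, ← prod_restrict, ← prod_restrict,
      restrict_Ioo_eq_restrict_Icc]
  have hop : IsOpen (Ioo (0:ℝ) T ×ˢ (univ : Set ℝ)) := isOpen_Ioo.prod isOpen_univ
  rw [hres, ae_restrict_iff' hop.measurableSet]
  apply hop.ae_eq_zero_of_integral_contDiff_smul_eq_zero
  · intro p hp
    have hR : 0 < |p.2| + 1 := by positivity
    refine ⟨box T (|p.2| + 1), ?_, hh.2 _ hR⟩
    apply mem_nhdsWithin_of_mem_nhds
    apply prod_mem_nhds (Icc_mem_nhds hp.1.1 hp.1.2)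
    exact Icc_mem_nhds (by linarith [neg_abs_le p.2]) (by linarith [le_abs_self p.2])
  · intro χ hχ hχc hχs
    have := h0 ⟨χ, hχ, hχc, (subset_tsupport _).trans hχs⟩
    unfold pair at this
    rw [← this, ← setIntegral_eq_integral_of_forall_compl_eq_zero (s := strip T)]
    · simp only [smul_eq_mul, mul_comm]
    · intro q hq
      have : χ q = 0 := by
        by_contra hne
        have := hχs (subset_tsupport _ hne)
        exact hq ⟨Ioo_subset_Icc_self this.1, mem_univ _⟩
      rw [this, zero_smul]

lemma pair_tendsto_of_unif {γ : ℕ → ℝ² → ℝ} {g h : ℝ² → ℝ}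
    (hγ : ∀ n, Continuous (γ n)) (hg : Continuous g)
    (hu : ∀ R δ : ℝ, 0 < δ → ∀ᶠ n in atTop, ∀ p : ℝ², ‖p‖ ≤ R → |γ n p - g p| < δ)
    (hh : Continuous h) (hc : HasCompactSupport h) :
    Tendsto (fun n => pair T (γ n) h) atTop (𝓝 (pair T g h)) := by
  obtain ⟨R, hR⟩ := hc.isCompact.isBounded.subset_closedBall (0 : ℝ²)
  set I := ∫ p in strip T, |h p| with hI
  have hI0 : 0 ≤ I := integral_nonneg fun _ => abs_nonneg _
  have hInt : IntegrableOn (fun p => |h p|) (strip T) :=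
    (hh.integrable_of_hasCompactSupport hc).abs.integrableOn
  rw [Metric.tendsto_atTop']
  intro δ hδ
  obtain ⟨N, hN⟩ := eventually_atTop.1 (hu R (δ / (I + 1)) (by positivity))
  refine ⟨N, fun n hn => ?_⟩
  rw [dist_eq, ← pair_sub_left (L1loc.of_cont (hγ n)) (L1loc.of_cont hg) hh hc]
  have h1 : |pair T (fun p => γ n p - g p) h| ≤ δ / (I + 1) * I := by
    rw [hI, ← integral_const_mul]
    unfold pair
    rw [← norm_eq_abs]
    refine norm_integral_le_of_norm_le (hInt.const_mul _) (ae_of_all _ fun p => ?_)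
    rw [norm_eq_abs, abs_mul]
    by_cases hp : h p = 0
    · simp [hp]
    · have : ‖p‖ ≤ R := by simpa using hR (subset_tsupport _ hp)
      exact mul_le_mul_of_nonneg_right (hN n hn.le p this).le (abs_nonneg _)
  refine h1.trans_lt ?_
  rw [div_mul_eq_mul_div, div_lt_iff₀ (by positivity)]
  nlinarith

lemma Rep.mono {B : HJ T} {β : ℝ² → ℝ} (h : Rep B β) {t : ℝ} (ht : t ∈ Icc 0 T)
    {x y : ℝ} (hxy : x ≤ y) : β (t, x) ≤ β (t, y) := by
  have ii : ∀ a b, IntervalIntegrable (fun s => B.ux.toFun (t, s)) volume a b := fun a b =>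
    ((B.ux.slice_int t).integrableOn_isCompact isCompact_uIcc).intervalIntegrable
  have : β (t, y) - β (t, x) = ∫ s in x..y, B.ux.toFun (t, s) := by
    rw [h.prim t ht x, h.prim t ht y,
      ← intervalIntegral.integral_add_adjacent_intervals (ii 0 x) (ii x y)]; ring
  have h0 : 0 ≤ ∫ s in x..y, B.ux.toFun (t, s) :=
    intervalIntegral.integral_nonneg hxy fun s _ => (B.ux.mem01 _).1
  linarith

/-- The time modulus of continuity `ζ` for the potential `b`. -/
def ModCont (ζ : ℝ → ℝ) (x : AA T) : Prop :=
  ∃ β, Rep x.1.1 β ∧ ∀ δ > 0, ∀ s ∈ Icc 0 T, ∀ t ∈ Icc 0 T, |t - s| < ζ δ →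
    ∀ y, |β (t, y) - β (s, y)| ≤ δ

lemma mod_bound {z : ℝ} (hz : 0 < z) {h : ℝ → ℝ}
    (hm : ∀ s ∈ Icc 0 T, ∀ t ∈ Icc 0 T, |t - s| < z → |h t - h s| ≤ 1) (k : ℕ) :
    ∀ t ∈ Icc 0 T, t ≤ k * (z / 2) → |h t - h 0| ≤ k := by
  induction k with
  | zero => intro t ht h0; have : t = 0 := le_antisymm (by simpa using h0) ht.1; simp [this]
  | succ k ih =>
    intro t ht hk
    push_cast at hk ⊢
    have hs : max 0 (t - z / 2) ∈ Icc 0 T :=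
      ⟨le_max_left _ _, max_le (ht.1.trans ht.2) (by linarith [ht.2])⟩
    have h1 := ih _ hs (max_le (by positivity) (by linarith))
    have h2 := hm _ hs t ht (by
      rw [abs_of_nonneg (sub_nonneg.2 (max_le ht.1 (by linarith)))]
      linarith [le_max_right 0 (t - z / 2)])
    have := abs_sub_le (h t) (h (max 0 (t - z / 2))) (h 0)
    linarith

/-- A common time modulus of continuity is enough for relative sequential compactness, since
potentials are `1`-Lipschitz in space and Young measures on `[0,1]` are always compact. -/
theorem seqCompact_modCont (hT : 0 < T) {dw : YM T → YM T → ℝ}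
    (hdw : GeneratesWeakStar T dw) {ζ : ℝ → ℝ} (hζ : ∀ δ, 0 < δ → 0 < ζ δ) :
    SeqCompactIn (dA T dw) {x : AA T | ModCont ζ x} := by
  intro xs hxs
  choose β hβ hmod using hxs
  let ϖ : ℝ → ℝ := fun t => (projIcc 0 T hT.le t : ℝ)
  have hϖ : ∀ t, ϖ t ∈ Icc 0 T := fun t => Subtype.coe_prop _
  have hϖc : Continuous ϖ := continuous_subtype_val.comp continuous_projIcc
  have hϖe : ∀ t ∈ Icc 0 T, ϖ t = t := fun t ht => by simp only [ϖ, projIcc_of_mem hT.le ht]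
  let γ : ℕ → ℝ² → ℝ := fun n p => β n (ϖ p.1, p.2) - β n (0, 0)
  have hγc : ∀ n, Continuous (γ n) := fun n => by
    have := (hβ n).cont
    fun_prop
  have hγl : ∀ n t x y, |γ n (t, x) - γ n (t, y)| ≤ |x - y| := fun n t x y => by
    have := (hβ n).lip (ϖ t) x y
    simp only [γ]
    rwa [sub_sub_sub_cancel_right]
  obtain ⟨g, hg, s, hs, hlim⟩ := ascoli_seq hγc (by
      intro p δ hδ
      refine ⟨min (ζ (δ / 2)) (δ / 2), lt_min (hζ _ (by linarith)) (by linarith), fun q hq n => ?_⟩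
      rw [Prod.dist_eq, max_lt_iff, dist_eq, dist_eq] at hq
      have h1 := hmod n (δ / 2) (by linarith) _ (hϖ p.1) _ (hϖ q.1)
        ((abs_projIcc_sub_projIcc hT.le).trans_lt (hq.1.trans_le (min_le_left _ _))) q.2
      have h2 := (hβ n).lip (ϖ p.1) q.2 p.2
      have h3 := hq.2.trans_le (min_le_right _ _)
      have h4 := abs_sub_le (β n (ϖ q.1, q.2)) (β n (ϖ p.1, q.2)) (β n (ϖ p.1, p.2))
      simp only [γ]
      rw [sub_sub_sub_cancel_right]
      linarith) (by
      intro p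
      obtain ⟨k, hk⟩ := exists_nat_gt (T / (ζ 1 / 2))
      have hz := hζ 1 one_pos
      rw [div_lt_iff₀ (by positivity)] at hk
      refine ⟨|p.2| + k, fun n => ?_⟩
      have h1 := mod_bound hz (h := fun t => β n (t, 0))
        (fun s hs t ht hst => hmod n 1 one_pos s hs t ht hst 0) k (ϖ p.1) (hϖ _)
        ((hϖ p.1).2.trans hk.le)
      have h2 := (hβ n).lip (ϖ p.1) p.2 0
      rw [sub_zero] at h2
      have h3 := abs_sub_le (β n (ϖ p.1, p.2)) (β n (ϖ p.1, 0)) (β n (0, 0))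
      simp only [γ]
      linarith)
  have hpt : ∀ p, Tendsto (fun n => γ (s n) p) atTop (𝓝 (g p)) := fun p => by
    rw [Metric.tendsto_atTop']
    intro δ hδ
    obtain ⟨N, hN⟩ := eventually_atTop.1 (hlim ‖p‖ δ hδ)
    exact ⟨N, fun n hn => hN n hn.le p le_rfl⟩
  have hgl : ∀ t x y, |g (t, x) - g (t, y)| ≤ |x - y| := fun t x y =>
    le_of_tendsto ((hpt (t, x)).sub (hpt (t, y))).abs (.of_forall fun n => hγl _ t x y)
  have hgm : ∀ t x y, x ≤ y → g (t, x) ≤ g (t, y) := fun t x y hxy =>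
    le_of_tendsto_of_tendsto' (hpt (t, x)) (hpt (t, y)) fun n =>
      sub_le_sub_right ((hβ (s n)).mono (hϖ t) hxy) _
  obtain ⟨u, hu, hu1, hprim⟩ := exists_dx hg hgl hgm
  let B : HJ T := mkHJ hg hu hu1 fun t _ x => hprim t x
  obtain ⟨κ, hκ, hκ0, s', hs', hκw⟩ := ym_compact hT fun n => (xs (s n)).1.2
  have hκm : ∀ {F : ℝ → ℝ}, Continuous F → Measurable fun p => ∫ l, F l ∂κ p := fun hF =>
    (hF.measurable.stronglyMeasurable.integral_kernel (κ := κ)).measurable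
  have h01 : ∀ p, κ p (Icc (0:ℝ) 1)ᶜ = 0 → ∀ᵐ l ∂κ p, l ∈ Icc (0:ℝ) 1 := fun p hp => by bound
  obtain ⟨χ, hχ, hχc, hχ1⟩ := exists_cut01
  -- the truncated mean agrees a.e. with the mean, and is bounded
  let a : ℝ² → ℝ := fun p => ∫ l, χ l * l ∂κ p
  have ha : Measurable a := hκm (by fun_prop)
  have hal : L1loc T a := by
    have hcc : HasCompactSupport fun l => χ l * l := hχc.mul_right
    obtain ⟨C, hC⟩ := (hχ.mul continuous_id).bounded_above_of_compact_support hcc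
    refine L1loc.of_bdd (C := C) ha fun p => ?_
    have := norm_integral_le_of_norm_le_const (μ := κ p) (ae_of_all _ hC)
    simpa using this
  have hae : ∀ᵐ p ∂(volume.restrict (strip T)), a p - u p = 0 := by
    apply ae_strip_zero (hal.sub (mkCU (T := T) hg hu hu1 fun t _ x => hprim t x).l1)
    intro φ
    have hul : L1loc T u := (mkCU (T := T) hg hu hu1 fun t _ x => hprim t x).l1
    change pair T (fun p => a p - u p) φ.toFun = 0
    rw [pair_sub_left hal hul φ.cont φ.cpt, sub_eq_zero]
    have hB : pair T g (pxF φ.toFun) = - pair T u φ.toFun := B.hux φ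
    have hBn : ∀ n, pair T (γ n) (pxF φ.toFun) = - pair T (xs n).1.1.ux.toFun φ.toFun := fun n => by
      have hpn : ∀ t ∈ Icc 0 T, ∀ x, γ n (t, x) = γ n (t, 0) +
          ∫ s in 0..x, (xs n).1.1.ux.toFun (t, s) := fun t ht x => by
        have := (hβ n).prim t ht x
        simp only [γ, hϖe t ht]; rw [this]; ring
      exact (mkHJ (hγc n) (xs n).1.1.ux.meas (xs n).1.1.ux.mem01 hpn).hux φ
    have h1 : Tendsto (fun n => pair T (xs (s n)).1.1.ux.toFun φ.toFun) atTop
        (𝓝 (pair T u φ.toFun)) := by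
      have := (pair_tendsto_of_unif (T := T) (fun n => hγc (s n)) hg hlim (pxF_cont φ.c1)
        (pxF_cpt φ.cpt)).neg
      simpa only [hB, hBn, neg_neg] using this
    have hcs : HasCompactSupport fun q : ℝ × ℝ² => (χ q.1 * q.1) * φ.toFun q.2 := by
      apply HasCompactSupport.intro (hχc.prod φ.cpt)
      rintro ⟨l, p⟩ hq
      simp only [mem_prod, not_and_or] at hq
      rcases hq with h1 | h1
      · simp [image_eq_zero_of_notMem_tsupport h1]
      · simp [image_eq_zero_of_notMem_tsupport h1]
    have hcn : Continuous fun q : ℝ × ℝ² => (χ q.1 * q.1) * φ.toFun q.2 := by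
      have := φ.cont
      fun_prop
    have h2 := hκw _ hcn hcs
    have h3 : ∀ n, (xs (s n)).1.2.wpair (fun q : ℝ × ℝ² => (χ q.1 * q.1) * φ.toFun q.2) =
        pair T (xs (s n)).1.1.ux.toFun φ.toFun := fun n => by
      unfold YM.wpair pair
      refine integral_congr_ae ((xs (s n)).2.mono fun p hp => ?_)
      simp only [integral_mul_const]
      rw [hp]
      congr 1
      exact integral_congr_ae (((xs (s n)).1.2.ae01 p).mono fun l hl => by simp [hχ1 l hl])
    simp only [h3, integral_mul_const] at h2
    exact tendsto_nhds_unique h2 (h1.comp hs'.tendsto_atTop)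
  let G : Set (ℝ²) := {p | κ p (Icc (0:ℝ) 1)ᶜ = 0} ∩ {p | a p = u p}
  have hG : MeasurableSet G :=
    ((κ.measurable_coe measurableSet_Icc.compl) (measurableSet_singleton 0)).inter
      (measurableSet_eq_fun ha hu)
  let m : ℝ² → Measure ℝ := fun p => if p ∈ G then κ p else Measure.dirac (u p)
  have hm1 : ∀ p ∈ G, m p = κ p := fun p hp => if_pos hp
  have hm2 : ∀ p ∉ G, m p = Measure.dirac (u p) := fun p hp => if_neg hp
  have hbar : ∀ p, ∫ l, l ∂m p = u p := fun p => by
    by_cases hp : p ∈ G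
    · rw [hm1 p hp, ← hp.2]
      exact integral_congr_ae ((h01 p hp.1).mono fun l hl => by simp [hχ1 l hl])
    · rw [hm2 p hp, integral_dirac]
  let ν : YM T := {
    m := m
    prob := fun p => by
      by_cases hp : p ∈ G
      · rw [hm1 p hp]; infer_instance
      · rw [hm2 p hp]; infer_instance
    supp01 := fun p => by
      by_cases hp : p ∈ G
      · grind
      · rw [hm2 p hp, Measure.dirac_apply' _ measurableSet_Icc.compl]
        simp [hu1 p]
    meas := fun F hF => by
      have : (fun p => ∫ l, F l ∂m p) = fun p => if p ∈ G then ∫ l, F l ∂κ p else F (u p) := by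
        funext p
        by_cases hp : p ∈ G
        · grind
        · rw [hm2 p hp, if_neg hp, integral_dirac]
      rw [this]
      exact Measurable.ite hG (hκm hF) (hF.measurable.comp hu)
    bar_mem := fun p => by rw [hbar p]; exact hu1 p
    bar_cont := fun t₀ ht₀ δ hδ => by
      simp only [hbar]
      exact B.ux.cont t₀ ht₀ δ hδ }
  have hGae : ∀ᵐ p ∂(volume.restrict (strip T)), p ∈ G := by
    filter_upwards [hae, hκ0] with p h1 h2
    exact ⟨h2, sub_eq_zero.1 h1⟩
  let y : AA T := ⟨(B, ν), ae_of_all _ fun p => (hbar p).symm⟩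
  have hRep : Rep y.1.1 g := mkHJ_rep hg hu hu1 (fun t _ x => hprim t x) hgl
  refine ⟨y, ⟨g, hRep, fun δ hδ σ hσ t ht hst z => ?_⟩, s ∘ s', hs.comp hs', ?_⟩
  · refine le_of_tendsto ((hpt (t, z)).sub (hpt (σ, z))).abs (.of_forall fun n => ?_)
    simp only [γ, hϖe t ht, hϖe σ hσ, sub_sub_sub_cancel_right]
    exact hmod (s n) δ hδ σ hσ t ht hst z
  · refine AA.tendsto hT hdw (βs := fun n => β (s (s' n))) (c := fun n => - β (s (s' n)) (0, 0))
      (fun n => hβ _) hRep (fun R δ hδ => ?_) fun k hk hkc => ?_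
    · have := hs'.tendsto_atTop.eventually (hlim (max T R) δ hδ)
      filter_upwards [this] with n hn t ht z hz
      have := hn (t, z) (by
        rw [Prod.norm_def]
        exact max_le_max (by rw [norm_eq_abs, abs_of_nonneg ht.1]; exact ht.2) hz)
      simp only [γ, hϖe t ht] at this
      rw [show β (s (s' n)) (t, z) - g (t, z) + -β (s (s' n)) (0, 0) =
        β (s (s' n)) (t, z) - β (s (s' n)) (0, 0) - g (t, z) by ring]
      exact this.le
    · have h1 := hκw k hk hkc
      have h2 : y.1.2.wpair k = ∫ p in strip T, ∫ l, k (l, p) ∂κ p := by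
        unfold YM.wpair
        refine integral_congr_ae (hGae.mono fun p hp => ?_)
        change ∫ l, k (l, p) ∂m p = _
        rw [hm1 p hp]
      rw [h2]
      exact h1

/-- Sublevel sets of the energy share a time modulus of continuity. -/
theorem equicoercive_main (hT : 0 < T) (hf : ContinuousOn f (Icc 0 1))
    (hD : ContinuousOn D (Icc 0 1)) (hσ : ContinuousOn σ (Icc 0 1)) {dw : YM T → YM T → ℝ}
    (hdw : GeneratesWeakStar T dw) :
    Equicoercive (dA T dw) (fun ε => calJeps f D σ T ε) := by
  intro M hM
  have H : ∀ δ : ℝ, ∃ ζ : ℝ, 0 < δ → 0 < ζ ∧ ∀ (x : AA T) (ε : ℝ) (β : ℝ² → ℝ),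
      ε ∈ Ioc (0:ℝ) 1 → calJeps f D σ T ε x ≤ ENNReal.ofReal M → Rep x.1.1 β →
      ∀ s ∈ Icc 0 T, ∀ t ∈ Icc 0 T, |t - s| < ζ → ∀ y, |β (t, y) - β (s, y)| ≤ δ := by
    intro δ
    by_cases hδ : 0 < δ
    · obtain ⟨ζ, hζ, h⟩ := exists_modulus hT hM hf hD hσ hδ
      exact ⟨ζ, fun _ => ⟨hζ, h⟩⟩
    · grind
  choose ζ hζ using H
  refine ⟨{x : AA T | ModCont ζ x}, seqCompact_modCont hT hdw fun δ hδ => (hζ δ hδ).1, ?_⟩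
  intro ε hε x hx
  obtain ⟨β, hβ⟩ := HJ.exists_rep hT x.1.1
  exact ⟨β, hβ, fun δ hδ => (hζ δ hδ).2 x ε β hε hx hβ⟩

/-! ### Averaging of fast oscillations -/

lemma osc_shift_unif {F : ℝ² × ℝ → ℝ} (hF : Continuous F)
    (hper : ∀ z y, F (z, y + 2 * π) = F (z, y)) {K : Set (ℝ²)} (hK : IsCompact K)
    (hsupp : ∀ z ∉ K, ∀ y, F (z, y) = 0) {η : ℝ} (hη : 0 < η) :
    ∃ ρ > 0, ∀ h : ℝ, |h| < ρ → ∀ z y, |F (z + (0, h), y) - F (z, y)| ≤ η := by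
  let B : ContDiffBump (0:ℝ) := ⟨2 * π, 3 * π, by positivity, by linarith [Real.pi_pos]⟩
  have hBc : Continuous fun q : ℝ² × ℝ => F q * B q.2 :=
    hF.mul (B.continuous.comp continuous_snd)
  have hBs : HasCompactSupport fun q : ℝ² × ℝ => F q * B q.2 := by
    apply HasCompactSupport.intro (hK.prod B.hasCompactSupport)
    rintro ⟨z, y⟩ hq
    simp only [mem_prod, not_and_or] at hq
    rcases hq with h1 | h1
    · simp [hsupp z h1]
    · simp [image_eq_zero_of_notMem_tsupport h1]
  have huc := hBs.uniformContinuous_of_continuous hBc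
  rw [Metric.uniformContinuous_iff] at huc
  obtain ⟨ρ, hρ, H⟩ := huc η hη
  refine ⟨ρ, hρ, fun h hh z y => ?_⟩
  have key : ∀ y ∈ Ico 0 (2 * π), |F (z + (0, h), y) - F (z, y)| ≤ η := by
    intro y hy
    have hB1 : B y = 1 := B.one_of_mem_closedBall (by
      simp only [Metric.mem_closedBall, dist_zero_right, norm_eq_abs, abs_of_nonneg hy.1]
      exact hy.2.le)
    have := H (a := (z + (0, h), y)) (b := (z, y)) (by
      simpa [Prod.dist_eq, hρ] using hh)
    simp only [hB1, mul_one, dist_eq] at this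
    exact this.le
  have hp : ∀ z, Function.Periodic (fun y => F (z, y)) (2 * π) := fun z y => hper z y
  obtain ⟨y', hy', h1⟩ := ((hp (z + (0, h))).sub (hp z)).exists_mem_Ico₀ Real.two_pi_pos y
  have h2 := key y' hy'
  simp only [Pi.sub_apply] at h1
  rwa [h1]

/-- Riemann–Lebesgue: a fast periodic phase averages out. Shifting `x` moves the phase through a
whole period, as the phase is not constant in `x`. -/
lemma osc_average {F : ℝ² × ℝ → ℝ} (hF : Continuous F)
    (hper : ∀ z y, F (z, y + 2 * π) = F (z, y)) {K : Set (ℝ²)} (hK : IsCompact K)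
    (hsupp : ∀ z ∉ K, ∀ y, F (z, y) = 0) {d e : ℝ} (hd : d ≠ 0) :
    Tendsto (fun k : ℕ => ∫ z, F (z, ((k:ℝ) + 1) * (e * z.1 + d * z.2))) atTop
      (𝓝 (∫ z, (2 * π)⁻¹ * ∫ y in 0..(2 * π), F (z, y))) := by
  have hpi := Real.two_pi_pos
  set K1 := Metric.cthickening 1 K with hK1
  have hK1c : IsCompact K1 := hK.cthickening
  have hsub : K ⊆ K1 := Metric.self_subset_cthickening K
  set V := (volume : Measure (ℝ²)).real K1 with hV
  have hV0 : 0 ≤ V := measureReal_nonneg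
  have hp : ∀ z, Function.Periodic (fun y => F (z, y)) (2 * π) := fun z y => hper z y
  rw [Metric.tendsto_atTop]
  intro δ hδ
  obtain ⟨ρ, hρ, H⟩ := osc_shift_unif hF hper hK hsupp (η := δ / (2 * (V + 1))) (by positivity)
  obtain ⟨k₀, hk₀⟩ := exists_nat_gt (2 * π / (min ρ 1 * |d|))
  refine ⟨k₀, fun k hk => ?_⟩
  set ℓ : ℝ² → ℝ := fun z => ((k:ℝ) + 1) * (e * z.1 + d * z.2) with hℓ
  have hℓc : Continuous ℓ := by fun_prop
  set I := ∫ z, F (z, ℓ z) with hI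
  let A : ℝ → ℝ := fun τ => ∫ z, F (z, ℓ z + τ)
  have hInt : ∀ τ : ℝ, Integrable fun z => F (z, ℓ z + τ) := fun τ =>
    Continuous.integrable_of_hasCompactSupport (by fun_prop)
      (HasCompactSupport.intro hK fun z hz => hsupp z hz _)
  have hd0 : 0 < |d| := abs_pos.2 hd
  have hIA : ∀ τ ∈ Icc 0 (2 * π), |I - A τ| ≤ δ / (2 * (V + 1)) * V := by
    intro τ hτ
    set h := τ / (((k:ℝ) + 1) * d) with hh
    have hk1 : (0:ℝ) < (k:ℝ) + 1 := by positivity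
    have hhs : |h| < min ρ 1 := by
      rw [hh, abs_div, abs_mul, abs_of_pos hk1, abs_of_nonneg hτ.1, div_lt_iff₀ (by positivity)]
      rw [div_lt_iff₀ (by positivity)] at hk₀
      have : (k₀:ℝ) ≤ k := by exact_mod_cast hk
      have h3 : (k₀:ℝ) * (min ρ 1 * |d|) ≤ (k + 1) * (min ρ 1 * |d|) := by
        gcongr; linarith
      nlinarith [hτ.2]
    have hIs : I = ∫ z, F (z + (0, h), ℓ z + τ) := by
      rw [hI, ← integral_add_right_eq_self (fun z => F (z, ℓ z)) ((0:ℝ), h)]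
      congr 1; funext z
      congr 2
      simp only [hℓ, Prod.fst_add, Prod.snd_add, hh]
      field_simp
      ring
    have hint2 : Integrable fun z => F (z + (0, h), ℓ z + τ) := by
      apply Continuous.integrable_of_hasCompactSupport (by fun_prop)
      apply HasCompactSupport.intro hK1c
      intro z hz
      apply hsupp
      intro hz'
      apply hz
      refine Metric.mem_cthickening_of_dist_le z _ 1 K hz' ?_
      have : |h| ≤ 1 := (hhs.trans_le (min_le_right _ _)).le
      simpa [Prod.dist_eq] using this
    rw [hIs]
    simp only [A]
    rw [← integral_sub hint2 (hInt τ)]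
    have hz0 : ∀ z ∉ K1, F (z + (0, h), ℓ z + τ) - F (z, ℓ z + τ) = 0 := by
      intro z hz
      have h1 : F (z, ℓ z + τ) = 0 := hsupp _ (fun h' => hz (hsub h')) _
      have h2 : F (z + (0, h), ℓ z + τ) = 0 := by
        apply hsupp
        intro hz'
        apply hz
        refine Metric.mem_cthickening_of_dist_le z _ 1 K hz' ?_
        have : |h| ≤ 1 := (hhs.trans_le (min_le_right _ _)).le
        simpa [Prod.dist_eq] using this
      rw [h1, h2, sub_zero]
    rw [← setIntegral_eq_integral_of_forall_compl_eq_zero (s := K1) hz0, ← norm_eq_abs]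
    exact norm_setIntegral_le_of_norm_le_const hK1c.measure_lt_top fun z _ =>
      H h (hhs.trans_le (min_le_left _ _)) z _
  have hjoint : Integrable (Function.uncurry fun (τ : ℝ) (z : ℝ²) => F (z, ℓ z + τ))
      ((volume.restrict (uIoc 0 (2 * π))).prod volume) := by
    rw [uIoc_of_le hpi.le]
    have hc : Continuous (Function.uncurry fun (τ : ℝ) (z : ℝ²) => F (z, ℓ z + τ)) := by fun_prop
    have h1 : IntegrableOn (Function.uncurry fun (τ : ℝ) (z : ℝ²) => F (z, ℓ z + τ))
        (Ioc 0 (2 * π) ×ˢ K) (volume.prod volume) :=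
      (hc.continuousOn.integrableOn_compact (isCompact_Icc.prod hK)).mono_set
        (prod_mono Ioc_subset_Icc_self subset_rfl)
    have h2 : IntegrableOn (Function.uncurry fun (τ : ℝ) (z : ℝ²) => F (z, ℓ z + τ))
        (Ioc 0 (2 * π) ×ˢ univ) (volume.prod volume) := by
      apply h1.of_forall_diff_eq_zero (measurableSet_Ioc.prod MeasurableSet.univ)
      rintro ⟨τ, z⟩ ⟨ha, hb⟩
      exact hsupp z (fun hz => hb ⟨ha.1, hz⟩) _
    rwa [IntegrableOn, ← prod_restrict, restrict_univ] at h2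
  have hJ : ∫ z, (2 * π)⁻¹ * ∫ y in 0..(2 * π), F (z, y) =
      (2 * π)⁻¹ * ∫ τ in 0..(2 * π), A τ := by
    rw [integral_const_mul]
    congr 1
    simp only [A]
    rw [intervalIntegral_integral_swap]
    · congr 1; funext z
      rw [intervalIntegral.integral_comp_add_left (fun y => F (z, y))]
      have := (hp z).intervalIntegral_add_eq 0 (ℓ z)
      simpa using this
    · exact hjoint
  rw [hJ, dist_eq]
  have hAc : IntervalIntegrable A volume 0 (2 * π) := by
    rw [intervalIntegrable_iff]
    exact hjoint.integral_prod_left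
  have h1 : I - (2 * π)⁻¹ * ∫ τ in 0..(2 * π), A τ =
      (2 * π)⁻¹ * ∫ τ in 0..(2 * π), (I - A τ) := by
    rw [intervalIntegral.integral_sub intervalIntegrable_const hAc, intervalIntegral.integral_const]
    simp only [sub_zero, smul_eq_mul]
    field_simp
  rw [h1, abs_mul, abs_of_pos (inv_pos.2 hpi)]
  have h2 : ‖∫ τ in 0..(2 * π), (I - A τ)‖ ≤ δ / (2 * (V + 1)) * V * |2 * π - 0| := by
    apply intervalIntegral.norm_integral_le_of_norm_le_const
    intro τ hτ
    rw [uIoc_of_le hpi.le] at hτ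
    exact hIA τ ⟨hτ.1.le, hτ.2⟩
  rw [norm_eq_abs, sub_zero, abs_of_pos hpi] at h2
  calc (2 * π)⁻¹ * |∫ τ in 0..(2 * π), (I - A τ)|
      ≤ (2 * π)⁻¹ * (δ / (2 * (V + 1)) * V * (2 * π)) := by gcongr
    _ = δ * V / (2 * (V + 1)) := by field_simp
    _ < δ := by rw [div_lt_iff₀ (by positivity)]; nlinarith

/-! ### Oscillating perturbations on a cell -/

/-- The profile `arcsin (a sin y)`; for `a` close to `1` it is nearly a triangular wave. -/
def wav (a y : ℝ) : ℝ := Real.arcsin (a * Real.sin y)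

/-- The derivative of `wav a`, nearly the sign of the cosine for `a` close to `1`. -/
def wav' (a y : ℝ) : ℝ := a * Real.cos y / Real.sqrt (1 - (a * Real.sin y) ^ 2)

lemma wav_aux {a : ℝ} (h0 : 0 ≤ a) (h1 : a < 1) (y : ℝ) : (a * Real.sin y) ^ 2 < 1 := by
  have := Real.sin_sq_le_one y
  nlinarith [sq_nonneg (Real.sin y), mul_nonneg h0 (sq_nonneg (Real.sin y))]

lemma wav_smooth {a : ℝ} (h0 : 0 ≤ a) (h1 : a < 1) : ContDiff ℝ 2 (wav a) := by
  rw [contDiff_iff_contDiffAt]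
  intro y
  have h := wav_aux h0 h1 y
  have := Real.contDiffAt_arcsin (x := a * Real.sin y) (n := 2)
    (by intro h'; rw [h'] at h; norm_num at h) (by intro h'; rw [h'] at h; norm_num at h)
  exact ContDiffAt.comp y this (contDiff_const.mul Real.contDiff_sin).contDiffAt

lemma wav_deriv {a : ℝ} (h0 : 0 ≤ a) (h1 : a < 1) (y : ℝ) : HasDerivAt (wav a) (wav' a y) y := by
  have h := wav_aux h0 h1 y
  have := (Real.hasDerivAt_arcsin (x := a * Real.sin y)
    (by intro h'; rw [h'] at h; norm_num at h) (by intro h'; rw [h'] at h; norm_num at h)).comp y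
    ((Real.hasDerivAt_sin y).const_mul a)
  have e : wav' a y = 1 / Real.sqrt (1 - (a * Real.sin y) ^ 2) * (a * Real.cos y) := by
    unfold wav'; ring
  rw [e]; exact this

lemma wav'_cont {a : ℝ} (h0 : 0 ≤ a) (h1 : a < 1) : Continuous (wav' a) := by
  unfold wav'
  apply Continuous.div (by fun_prop) (by fun_prop)
  intro y
  exact (Real.sqrt_pos.2 (by linarith [wav_aux h0 h1 y])).ne'

lemma wav_abs (a y : ℝ) : |wav a y| ≤ 2 := by
  have := Real.neg_pi_div_two_le_arcsin (a * Real.sin y)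
  have h2 := Real.arcsin_le_pi_div_two (a * Real.sin y)
  have := Real.pi_lt_four
  unfold wav
  rw [abs_le]; constructor <;> linarith

lemma wav'_abs {a : ℝ} (h0 : 0 ≤ a) (h1 : a < 1) (y : ℝ) : |wav' a y| ≤ 1 := by
  have h := wav_aux h0 h1 y
  unfold wav'
  rw [abs_div, abs_of_nonneg (Real.sqrt_nonneg _), div_le_one (Real.sqrt_pos.2 (by linarith))]
  apply Real.abs_le_sqrt
  have h2 : (a * Real.cos y) ^ 2 + (a * Real.sin y) ^ 2 = a ^ 2 := by
    rw [mul_pow, mul_pow, ← mul_add, Real.cos_sq_add_sin_sq, mul_one]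
  nlinarith

lemma wav'_per (a y : ℝ) : wav' a (y + 2 * π) = wav' a y := by
  simp [wav']

lemma wav'_anti (a y : ℝ) : wav' a (y + π) = - wav' a y := by
  simp [wav', neg_div]

lemma wav'_tendsto {a : ℕ → ℝ} (ha : Tendsto a atTop (𝓝 1)) {y : ℝ} (hy : Real.cos y ≠ 0) :
    Tendsto (fun n => wav' (a n) y) atTop (𝓝 (Real.cos y / |Real.cos y|)) := by
  have h : Real.sqrt (1 - (1 * Real.sin y) ^ 2) = |Real.cos y| := by
    rw [one_mul, ← Real.abs_cos_eq_sqrt_one_sub_sin_sq]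
  unfold wav'
  rw [← h]
  conv => enter [3, 1]; rw [← one_mul (Real.cos y)]
  apply Tendsto.div (ha.mul_const _)
  · exact (Real.continuous_sqrt.tendsto _).comp
      (tendsto_const_nhds.sub ((ha.mul_const _).pow 2))
  · grind

lemma cos_ne_zero_ae : ∀ᵐ y : ℝ, Real.cos y ≠ 0 := by
  have : {y : ℝ | Real.cos y = 0}.Countable := by
    have : {y : ℝ | Real.cos y = 0} ⊆ range fun k : ℤ => (2 * (k:ℝ) + 1) * π / 2 := by
      intro y hy
      obtain ⟨k, hk⟩ := Real.cos_eq_zero_iff.1 hy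
      exact ⟨k, hk.symm⟩
    exact (countable_range _).mono this
  have := this.measure_zero volume
  rw [ae_iff]; simpa using this

/-- Averages of `H (χ S')` over a period tend to the mean of `H 1` and `H (-1)`. -/
lemma wav_average {a χ : ℕ → ℝ} (ha0 : ∀ n, 0 ≤ a n) (ha1 : ∀ n, a n < 1)
    (ha : Tendsto a atTop (𝓝 1)) (hχ : Tendsto χ atTop (𝓝 1)) (hχ1 : ∀ n, |χ n| ≤ 1)
    {h : ℝ → ℝ} (hh : Continuous h) :
    Tendsto (fun n => (2 * π)⁻¹ * ∫ y in 0..(2 * π), h (χ n * wav' (a n) y)) atTop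
      (𝓝 ((h 1 + h (-1)) / 2)) := by
  have hpi := Real.two_pi_pos
  have hc : ∀ n, Continuous fun y => h (χ n * wav' (a n) y) := fun n => by
    have := wav'_cont (ha0 n) (ha1 n); fun_prop
  have hc' : ∀ n, Continuous fun y => h (-(χ n * wav' (a n) y)) := fun n => by
    have := wav'_cont (ha0 n) (ha1 n); fun_prop
  have hsym : ∀ n, ∫ y in 0..(2 * π), h (χ n * wav' (a n) y) =
      ∫ y in 0..(2 * π), (h (χ n * wav' (a n) y) + h (-(χ n * wav' (a n) y))) / 2 := by
    intro n
    have hp : Function.Periodic (fun y => h (χ n * wav' (a n) y)) (2 * π) := fun y => by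
      simp only [wav'_per]
    have h1 := hp.intervalIntegral_add_eq 0 π
    have h2 : ∫ y in 0..(2 * π), h (-(χ n * wav' (a n) y)) =
        ∫ y in 0..(2 * π), h (χ n * wav' (a n) y) := by
      have h3 : ∀ y, h (-(χ n * wav' (a n) y)) = (fun y => h (χ n * wav' (a n) y)) (y + π) := by
        intro y; simp [wav'_anti]
      simp only [h3]
      rw [intervalIntegral.integral_comp_add_right (fun y => h (χ n * wav' (a n) y))]
      rw [zero_add] at h1
      rw [h1, zero_add, add_comm]
    rw [intervalIntegral.integral_div, intervalIntegral.integral_add ((hc n).intervalIntegrable _ _)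
      ((hc' n).intervalIntegrable _ _), h2]
    ring
  simp only [hsym]
  have hlim : (h 1 + h (-1)) / 2 =
      (2 * π)⁻¹ * ∫ y in 0..(2 * π), (h 1 + h (-1)) / 2 := by
    rw [intervalIntegral.integral_const]
    simp only [sub_zero, smul_eq_mul]
    field_simp
  rw [hlim]
  apply Tendsto.const_mul
  obtain ⟨C, hC⟩ := (isCompact_Icc (a := (-1:ℝ)) (b := 1)).exists_bound_of_continuousOn
    hh.continuousOn
  have hb : ∀ n y, χ n * wav' (a n) y ∈ Icc (-1:ℝ) 1 := by
    intro n y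
    rw [mem_Icc, ← abs_le, abs_mul]
    exact mul_le_one₀ (hχ1 n) (abs_nonneg _) (wav'_abs (ha0 n) (ha1 n) y)
  apply intervalIntegral.tendsto_integral_filter_of_dominated_convergence (fun _ => C)
  · exact .of_forall fun n => ((hc n).add (hc' n)).div_const 2 |>.aestronglyMeasurable
  · refine .of_forall fun n => .of_forall fun y _ => ?_
    have h1 := hC _ (hb n y)
    have h2 := hC (-(χ n * wav' (a n) y)) (by
      have := hb n y; exact ⟨by linarith [this.2], by linarith [this.1]⟩)
    rw [norm_eq_abs] at *
    rw [abs_le] at *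
    constructor <;> linarith
  · simp
  · filter_upwards [cos_ne_zero_ae] with y hy _
    have h1 := hχ.mul (wav'_tendsto ha hy)
    rw [one_mul] at h1
    have h2 := ((hh.tendsto _).comp h1).add ((hh.tendsto _).comp h1.neg)
    have h3 : h (Real.cos y / |Real.cos y|) + h (-(Real.cos y / |Real.cos y|)) = h 1 + h (-1) := by
      grind
    rw [h3] at h2
    exact h2.div_const 2

/-- Smooth cut-off of an interval, increasing to its indicator. -/
def cut1 (a b : ℝ) (n : ℕ) (t : ℝ) : ℝ :=
  Real.smoothTransition ((n:ℝ) * (t - a) - 1) * Real.smoothTransition ((n:ℝ) * (b - t) - 1)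

lemma cut1_smooth (a b : ℝ) (n : ℕ) : ContDiff ℝ 2 (cut1 a b n) := by
  unfold cut1
  apply ContDiff.mul <;> exact Real.smoothTransition.contDiff.comp (by fun_prop)

lemma cut1_nonneg (a b : ℝ) (n : ℕ) (t : ℝ) : 0 ≤ cut1 a b n t :=
  mul_nonneg (Real.smoothTransition.nonneg _) (Real.smoothTransition.nonneg _)

lemma cut1_le (a b : ℝ) (n : ℕ) (t : ℝ) : cut1 a b n t ≤ 1 :=
  mul_le_one₀ (Real.smoothTransition.le_one _) (Real.smoothTransition.nonneg _)
    (Real.smoothTransition.le_one _)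

lemma cut1_zero {a b : ℝ} (n : ℕ) {t : ℝ} (ht : t ∉ Ioo a b) : cut1 a b n t = 0 := by
  unfold cut1
  rw [mem_Ioo, not_and_or, not_lt, not_lt] at ht
  have hn : (0:ℝ) ≤ n := n.cast_nonneg
  rcases ht with h | h
  · rw [Real.smoothTransition.zero_of_nonpos, zero_mul]; nlinarith
  · rw [Real.smoothTransition.zero_of_nonpos (x := (n:ℝ) * (b - t) - 1), mul_zero]; nlinarith

lemma cut1_tendsto {a b t : ℝ} (ht : t ∈ Ioo a b) :
    Tendsto (fun n => cut1 a b n t) atTop (𝓝 1) := by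
  apply tendsto_const_nhds.congr'
  have h1 : ∀ᶠ n : ℕ in atTop, 2 ≤ (n:ℝ) * (t - a) :=
    (tendsto_natCast_atTop_atTop.atTop_mul_const (sub_pos.2 ht.1)).eventually_ge_atTop 2
  have h2 : ∀ᶠ n : ℕ in atTop, 2 ≤ (n:ℝ) * (b - t) :=
    (tendsto_natCast_atTop_atTop.atTop_mul_const (sub_pos.2 ht.2)).eventually_ge_atTop 2
  filter_upwards [h1, h2] with n h1 h2
  unfold cut1
  rw [Real.smoothTransition.one_of_one_le (by linarith),
    Real.smoothTransition.one_of_one_le (by linarith), one_mul]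

/-- Existence, on a rectangle, of a small perturbation whose gradient is close to `± (e, d)`,
each sign being taken half of the time. -/
lemma cell {ι : Type*} [Finite ι] {H : ι → ℝ² × ℝ → ℝ} (hH : ∀ i, Continuous (H i))
    {a b c c' : ℝ} {d e : ℝ} (hd : d ≠ 0) {δ : ℝ} (hδ : 0 < δ) :
    ∃ v ϑ : ℝ² → ℝ, ContDiff ℝ 2 v ∧ Continuous ϑ ∧ (∀ z, |ϑ z| ≤ 1) ∧
      (∀ z ∉ Ico a b ×ˢ Ico c c', v z = 0 ∧ ϑ z = 0 ∧ ptF v z = 0 ∧ pxF v z = 0) ∧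
      (∀ z, |v z| ≤ δ) ∧ (∀ z, |pxF v z - ϑ z * d| ≤ δ) ∧ (∀ z, |ptF v z - ϑ z * e| ≤ δ) ∧
      ∀ i, |(∫ z in Ico a b ×ˢ Ico c c', H i (z, ϑ z)) -
        ∫ z in Ico a b ×ˢ Ico c c', (H i (z, 1) + H i (z, -1)) / 2| ≤ δ := by
  set S := Ico a b ×ˢ Ico c c' with hS
  set K := Icc a b ×ˢ Icc c c' with hK
  have hKc : IsCompact K := isCompact_Icc.prod isCompact_Icc
  have hSK : S ⊆ K := prod_mono Ico_subset_Icc_self Ico_subset_Icc_self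
  let χ : ℕ → ℝ² → ℝ := fun n z => cut1 a b n z.1 * cut1 c c' n z.2
  have hχs : ∀ n, ContDiff ℝ 2 (χ n) := fun n =>
    ((cut1_smooth a b n).comp contDiff_fst).mul ((cut1_smooth c c' n).comp contDiff_snd)
  have hχ0 : ∀ n z, 0 ≤ χ n z := fun n z => mul_nonneg (cut1_nonneg _ _ _ _) (cut1_nonneg _ _ _ _)
  have hχ1 : ∀ n z, χ n z ≤ 1 := fun n z =>
    mul_le_one₀ (cut1_le _ _ _ _) (cut1_nonneg _ _ _ _) (cut1_le _ _ _ _)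
  have hχz : ∀ n, ∀ z ∉ Ioo a b ×ˢ Ioo c c', χ n z = 0 := by
    intro n z hz
    simp only [mem_prod, not_and_or] at hz
    rcases hz with h | h
    · simp [χ, cut1_zero n h]
    · simp [χ, cut1_zero n h]
  have hχz' : ∀ n, ∀ z ∉ S, χ n z = 0 := fun n z hz => hχz n z fun h =>
    hz ⟨Ioo_subset_Ico_self h.1, Ioo_subset_Ico_self h.2⟩
  have hχK : ∀ n, ∀ z ∉ K, χ n z = 0 := fun n z hz => hχz' n z fun h => hz (hSK h)
  let α : ℕ → ℝ := fun n => 1 - 1 / ((n:ℝ) + 1)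
  have hα0 : ∀ n, 0 ≤ α n := fun n => by bound
  have hα1 : ∀ n, α n < 1 := fun n => by
    have : (0:ℝ) < 1 / ((n:ℝ) + 1) := by positivity
    simp only [α]; linarith
  have hα : Tendsto α atTop (𝓝 1) := by
    have := (tendsto_one_div_add_atTop_nhds_zero_nat (𝕜 := ℝ)).const_sub 1
    simpa [α] using this
  -- choice of the cut-off and of the profile
  have hstep : ∀ i, Tendsto (fun n => ∫ z in S, (2 * π)⁻¹ *
      ∫ y in 0..(2 * π), H i (z, χ n z * wav' (α n) y)) atTop
      (𝓝 (∫ z in S, (H i (z, 1) + H i (z, -1)) / 2)) := by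
    intro i
    obtain ⟨C, hC⟩ := (hKc.prod (isCompact_Icc (a := (-1:ℝ)) (b := 1))).exists_bound_of_continuousOn
      (hH i).continuousOn
    apply tendsto_integral_of_dominated_convergence (fun _ => C)
    · intro n
      have := wav'_cont (hα0 n) (hα1 n)
      have h2 := (hχs n).continuous
      have h3 := hH i
      apply Continuous.aestronglyMeasurable
      apply Continuous.mul continuous_const
      apply intervalIntegral.continuous_parametric_intervalIntegral_of_continuous'
      simp only [Function.uncurry_def]; fun_prop
    · refine integrableOn_const (hs := ?_)
      exact ((measure_mono hSK).trans_lt hKc.measure_lt_top).ne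
    · intro n
      refine ae_restrict_of_forall_mem (measurableSet_Ico.prod measurableSet_Ico) fun z hz => ?_
      have h1 : ‖∫ y in 0..(2 * π), H i (z, χ n z * wav' (α n) y)‖ ≤
          C * |2 * π - 0| := by
        apply intervalIntegral.norm_integral_le_of_norm_le_const
        intro y _
        apply hC
        refine ⟨hSK hz, ?_⟩
        rw [mem_Icc, ← abs_le, abs_mul]
        exact mul_le_one₀ (by rw [abs_of_nonneg (hχ0 _ _)]; exact hχ1 _ _) (abs_nonneg _)
          (wav'_abs (hα0 n) (hα1 n) y)
      have hpi := Real.two_pi_pos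
      rw [norm_mul, norm_inv, Real.norm_of_nonneg hpi.le]
      rw [sub_zero, abs_of_pos hpi] at h1
      calc _ ≤ (2 * π)⁻¹ * (C * (2 * π)) := by gcongr
        _ = C := by field_simp
    · have hae : ∀ᵐ z : ℝ², z.1 ≠ a ∧ z.2 ≠ c := by
        have h1 : ∀ᵐ t : ℝ, t ≠ a := by simp [ae_iff]
        have h2 : ∀ᵐ t : ℝ, t ≠ c := by simp [ae_iff]
        exact (Measure.quasiMeasurePreserving_fst.ae h1).and
          (Measure.quasiMeasurePreserving_snd.ae h2)
      filter_upwards [ae_restrict_of_ae hae,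
        ae_restrict_mem (measurableSet_Ico.prod measurableSet_Ico)] with z hz hzS
      have hz1 : z.1 ∈ Ioo a b := ⟨lt_of_le_of_ne hzS.1.1 hz.1.symm, hzS.1.2⟩
      have hz2 : z.2 ∈ Ioo c c' := ⟨lt_of_le_of_ne hzS.2.1 hz.2.symm, hzS.2.2⟩
      have h1 := (cut1_tendsto hz1).mul (cut1_tendsto hz2)
      rw [one_mul] at h1
      exact wav_average (χ := fun n => χ n z) hα0 hα1 hα h1
        (fun n => by rw [abs_of_nonneg (hχ0 _ _)]; exact hχ1 _ _) (h := fun s => H i (z, s))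
        (by have := hH i; fun_prop)
  have hev : ∀ᶠ n in atTop, ∀ i, |(∫ z in S, (2 * π)⁻¹ *
      ∫ y in 0..(2 * π), H i (z, χ n z * wav' (α n) y)) -
      ∫ z in S, (H i (z, 1) + H i (z, -1)) / 2| < δ / 2 := by
    rw [eventually_all]
    intro i
    have := (Metric.tendsto_nhds.1 (hstep i)) (δ / 2) (by positivity)
    simpa only [dist_eq] using this
  obtain ⟨n, hn⟩ := hev.exists
  have hwc := wav'_cont (hα0 n) (hα1 n)
  have hχc := (hχs n).continuous
  have hpi := Real.two_pi_pos
  -- choice of the frequency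
  have hosc : ∀ i, Tendsto (fun k : ℕ => ∫ z in S,
      H i (z, χ n z * wav' (α n) (((k:ℝ) + 1) * (e * z.1 + d * z.2)))) atTop
      (𝓝 (∫ z in S, (2 * π)⁻¹ *
        ∫ y in 0..(2 * π), H i (z, χ n z * wav' (α n) y))) := by
    intro i
    have hHi := hH i
    have h1 := osc_average (F := fun q => H i (q.1, χ n q.1 * wav' (α n) q.2) - H i (q.1, 0))
      (by fun_prop) (fun z y => by simp only [wav'_per]) hKc
      (fun z hz y => by simp [hχK n z hz]) (d := d) (e := e) hd
    have hI : ∀ g : ℝ² → ℝ, Continuous g → IntegrableOn g S := fun g hg =>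
      (hg.continuousOn.integrableOn_compact hKc).mono_set hSK
    have hP : Continuous fun z => ∫ y in 0..(2 * π), H i (z, χ n z * wav' (α n) y) := by
      fun_prop
    have e1 : ∀ k : ℕ, ∫ z, (H i (z, χ n z * wav' (α n) (((k:ℝ) + 1) * (e * z.1 + d * z.2)))
        - H i (z, 0)) = (∫ z in S, H i (z, χ n z * wav' (α n) (((k:ℝ) + 1) * (e * z.1 + d * z.2))))
        - ∫ z in S, H i (z, 0) := by
      intro k
      rw [← setIntegral_eq_integral_of_forall_compl_eq_zero (s := S)
        (fun z hz => by simp [hχz' n z hz]),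
        integral_sub (hI _ (by fun_prop)) (hI _ (by fun_prop))]
    have e2 : ∫ z, (2 * π)⁻¹ * ∫ y in 0..(2 * π),
        (H i (z, χ n z * wav' (α n) y) - H i (z, 0)) = (∫ z in S, (2 * π)⁻¹ *
        ∫ y in 0..(2 * π), H i (z, χ n z * wav' (α n) y)) - ∫ z in S, H i (z, 0) := by
      rw [← setIntegral_eq_integral_of_forall_compl_eq_zero (s := S)
        (fun z hz => by simp [hχz' n z hz]),
        ← integral_sub (hI _ (by fun_prop)) (hI _ (by fun_prop))]
      congr 1; funext z
      rw [intervalIntegral.integral_sub (Continuous.intervalIntegrable (by fun_prop) _ _)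
        intervalIntegrable_const, intervalIntegral.integral_const]
      simp only [sub_zero, smul_eq_mul]
      field_simp
    simp only [e1, e2] at h1
    simpa using h1.add_const (∫ z in S, H i (z, 0))
  have hcs : HasCompactSupport (χ n) := HasCompactSupport.intro hKc (hχK n)
  obtain ⟨C, hC⟩ := (hcs.fderiv (𝕜 := ℝ)).exists_bound_of_continuous
    ((hχs n).continuous_fderiv (by norm_num))
  have hC0 : 0 ≤ C := (norm_nonneg _).trans (hC 0)
  have hev2 : ∀ᶠ k : ℕ in atTop, ∀ i, |(∫ z in S,
      H i (z, χ n z * wav' (α n) (((k:ℝ) + 1) * (e * z.1 + d * z.2)))) -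
      (∫ z in S, (2 * π)⁻¹ *
        ∫ y in 0..(2 * π), H i (z, χ n z * wav' (α n) y))| < δ / 2 := by
    rw [eventually_all]
    intro i
    have := (Metric.tendsto_nhds.1 (hosc i)) (δ / 2) (by positivity)
    simpa only [dist_eq] using this
  obtain ⟨k, hk1, hk2⟩ := (hev2.and (tendsto_natCast_atTop_atTop.eventually_ge_atTop
    ((2 * C + 2) / δ))).exists
  have hk0 : (0:ℝ) < (k:ℝ) + 1 := by positivity
  have hkδ : (2 * C + 2) / ((k:ℝ) + 1) ≤ δ := by
    rw [div_le_iff₀ hδ] at hk2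
    rw [div_le_iff₀ hk0]
    nlinarith
  let ℓ : ℝ² → ℝ := fun z => ((k:ℝ) + 1) * (e * z.1 + d * z.2)
  let L : ℝ² →L[ℝ] ℝ :=
    ((k:ℝ) + 1) • (e • ContinuousLinearMap.fst ℝ ℝ ℝ + d • ContinuousLinearMap.snd ℝ ℝ ℝ)
  let v : ℝ² → ℝ := fun z => χ n z * (((k:ℝ) + 1)⁻¹ * wav (α n) (ℓ z))
  have hℓ : ∀ z, HasFDerivAt ℓ L z := fun z => by fun_prop
  have hv : ∀ z, HasFDerivAt v (χ n z • (((k:ℝ) + 1)⁻¹ • (wav' (α n) (ℓ z) • L)) +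
      (((k:ℝ) + 1)⁻¹ * wav (α n) (ℓ z)) • fderiv ℝ (χ n) z) z := fun z =>
    ((hχs n).differentiable (by norm_num) z).hasFDerivAt.mul
      (((wav_deriv (hα0 n) (hα1 n) (ℓ z)).comp_hasFDerivAt z (hℓ z)).const_mul _)
  have hvx : ∀ z, pxF v z = χ n z * wav' (α n) (ℓ z) * d +
      (((k:ℝ) + 1)⁻¹ * wav (α n) (ℓ z)) * fderiv ℝ (χ n) z (0, 1) := fun z => by
    rw [pxF, (hv z).fderiv]
    simp [L]; field_simp
  have hvt : ∀ z, ptF v z = χ n z * wav' (α n) (ℓ z) * e +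
      (((k:ℝ) + 1)⁻¹ * wav (α n) (ℓ z)) * fderiv ℝ (χ n) z (1, 0) := fun z => by
    rw [ptF, (hv z).fderiv]
    simp [L]; field_simp
  have hfz : ∀ z, χ n z = 0 → fderiv ℝ (χ n) z = 0 := fun z hz =>
    IsLocalMin.fderiv_eq_zero (.of_forall fun w => by rw [hz]; exact hχ0 n w)
  have hsm : ∀ z : ℝ², |((k:ℝ) + 1)⁻¹ * wav (α n) (ℓ z)| ≤ 2 / ((k:ℝ) + 1) := fun z => by
    rw [abs_mul, abs_of_pos (inv_pos.2 hk0), inv_mul_eq_div]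
    gcongr; exact wav_abs _ _
  have hsm2 : ∀ z w : ℝ², ‖w‖ ≤ 1 →
      |((k:ℝ) + 1)⁻¹ * wav (α n) (ℓ z) * fderiv ℝ (χ n) z w| ≤ δ := fun z w hw => by
    rw [abs_mul]
    have h1 : |fderiv ℝ (χ n) z w| ≤ C := by
      have := (fderiv ℝ (χ n) z).le_opNorm w
      rw [norm_eq_abs] at this
      calc _ ≤ _ := this
        _ ≤ C * 1 := by gcongr; exact hC z
        _ = C := mul_one _
    calc _ ≤ 2 / ((k:ℝ) + 1) * C := by gcongr; exact hsm z
      _ = (2 * C) / ((k:ℝ) + 1) := by ring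
      _ ≤ (2 * C + 2) / ((k:ℝ) + 1) := by gcongr; linarith
      _ ≤ δ := hkδ
  refine ⟨v, fun z => χ n z * wav' (α n) (ℓ z), ?_, ?_, ?_, ?_, ?_, ?_, ?_, ?_⟩
  · exact (hχs n).mul (contDiff_const.mul ((wav_smooth (hα0 n) (hα1 n)).comp
      (by simp only [ℓ]; fun_prop)))
  · fun_prop
  · intro z
    rw [abs_mul]
    exact mul_le_one₀ (by rw [abs_of_nonneg (hχ0 _ _)]; exact hχ1 _ _) (abs_nonneg _)
      (wav'_abs (hα0 n) (hα1 n) _)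
  · intro z hz
    have h0 := hχz' n z hz
    rw [hvt, hvx, hfz z h0]
    simp [v, h0]
  · intro z
    simp only [v, abs_mul (χ n z)]
    rw [abs_of_nonneg (hχ0 n z)]
    calc _ ≤ 1 * (2 / ((k:ℝ) + 1)) := by gcongr; exact hχ1 n z; exact hsm z
      _ ≤ (2 * C + 2) / ((k:ℝ) + 1) := by rw [one_mul]; gcongr; linarith
      _ ≤ δ := hkδ
  · intro z
    rw [hvx, add_sub_cancel_left]
    exact hsm2 z _ (by simp [Prod.norm_def])
  · intro z
    rw [hvt, add_sub_cancel_left]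
    exact hsm2 z _ (by simp [Prod.norm_def])
  · intro i
    have h1 := hk1 i
    have h2 := hn i
    rw [abs_lt] at h1 h2
    rw [abs_le]
    constructor <;> simp only [ℓ] <;> linarith

/-! ### Gluing cells -/

/-- On the set `S` there is a `δ`-small perturbation `v`, vanishing off `S`, with gradient
`δ`-close to `ϑ (e, d)`, where `ϑ` takes the values `± 1` half of the time each, as tested
against the functions `H i`. -/
def OscOn {ι : Type*} (H : ι → ℝ² × ℝ → ℝ) (d e : ℝ² → ℝ) (δ : ℝ) (S : Set (ℝ²)) :
    Prop :=
  ∃ v ϑ : ℝ² → ℝ, ContDiff ℝ 2 v ∧ Continuous ϑ ∧ (∀ z, |ϑ z| ≤ 1) ∧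
      (∀ z ∉ S, v z = 0 ∧ ϑ z = 0 ∧ ptF v z = 0 ∧ pxF v z = 0) ∧
      (∀ z, |v z| ≤ δ) ∧ (∀ z, |pxF v z - ϑ z * d z| ≤ δ) ∧ (∀ z, |ptF v z - ϑ z * e z| ≤ δ) ∧
      ∀ i, |(∫ z in S, H i (z, ϑ z)) - ∫ z in S, (H i (z, 1) + H i (z, -1)) / 2| ≤
        δ * volume.real S

lemma OscOn.union {ι : Type*} {H : ι → ℝ² × ℝ → ℝ} (hH : ∀ i, Continuous (H i))
    {d e : ℝ² → ℝ} {δ : ℝ} {K S S' : Set (ℝ²)} (hK : IsCompact K) (hS : S ⊆ K) (hS' : S' ⊆ K)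
    (hm : MeasurableSet S) (hm' : MeasurableSet S') (hdis : Disjoint S S')
    (h : OscOn H d e δ S) (h' : OscOn H d e δ S') : OscOn H d e δ (S ∪ S') := by
  obtain ⟨v, ϑ, h1, h2, h3, h4, h5, h6, h7, h8⟩ := h
  obtain ⟨v', ϑ', h1', h2', h3', h4', h5', h6', h7', h8'⟩ := h'
  have ex : ∀ z, pxF (fun z => v z + v' z) z = pxF v z + pxF v' z := fun z => by
    simp only [pxF]
    rw [fderiv_fun_add (h1.differentiable (by norm_num) z) (h1'.differentiable (by norm_num) z)]
    simp
  have et : ∀ z, ptF (fun z => v z + v' z) z = ptF v z + ptF v' z := fun z => by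
    simp only [ptF]
    rw [fderiv_fun_add (h1.differentiable (by norm_num) z) (h1'.differentiable (by norm_num) z)]
    simp
  have hcase : ∀ z, z ∉ S ∨ z ∉ S' := fun z => by grind
  refine ⟨fun z => v z + v' z, fun z => ϑ z + ϑ' z, h1.add h1', h2.add h2', ?_, ?_, ?_, ?_, ?_, ?_⟩
  · intro z
    rcases hcase z with hz | hz
    · grind
    · grind
  · grind
  · intro z
    rcases hcase z with hz | hz
    · grind
    · grind
  · intro z
    rw [ex]
    rcases hcase z with hz | hz
    · grind
    · grind
  · intro z
    rw [et]
    rcases hcase z with hz | hz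
    · grind
    · grind
  · intro i
    have hHi := hH i
    have hI : ∀ g : ℝ² → ℝ, Continuous g → IntegrableOn g K := fun g hg =>
      hg.continuousOn.integrableOn_compact hK
    have hmS : volume.real (S ∪ S') = volume.real S + volume.real S' :=
      measureReal_union hdis hm' ((measure_mono hS).trans_lt hK.measure_lt_top).ne
        ((measure_mono hS').trans_lt hK.measure_lt_top).ne
    have g1 := (hI (fun z => H i (z, ϑ z + ϑ' z)) (by fun_prop))
    have g2 := (hI (fun z => (H i (z, 1) + H i (z, -1)) / 2) (by fun_prop))
    rw [setIntegral_union hdis hm' (g1.mono_set hS) (g1.mono_set hS'),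
      setIntegral_union hdis hm' (g2.mono_set hS) (g2.mono_set hS'), hmS]
    have k1 : ∫ z in S, H i (z, ϑ z + ϑ' z) = ∫ z in S, H i (z, ϑ z) := by
      apply setIntegral_congr_fun hm
      intro z hz
      have := h4' z ((Set.disjoint_left.1 hdis) hz)
      simp [this]
    have k2 : ∫ z in S', H i (z, ϑ z + ϑ' z) = ∫ z in S', H i (z, ϑ' z) := by
      apply setIntegral_congr_fun hm'
      intro z hz
      have := h4 z ((Set.disjoint_right.1 hdis) hz)
      simp [this]
    rw [k1, k2]
    have a1 := h8 i
    have a2 := h8' i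
    rw [abs_le] at *
    constructor <;> nlinarith

lemma OscOn.biUnion {ι : Type*} {H : ι → ℝ² × ℝ → ℝ} (hH : ∀ i, Continuous (H i))
    {d e : ℝ² → ℝ} {δ : ℝ} (hδ : 0 ≤ δ) {K : Set (ℝ²)} (hK : IsCompact K) {κ : Type*}
    {S : κ → Set (ℝ²)} (hS : ∀ q, S q ⊆ K) (hm : ∀ q, MeasurableSet (S q))
    (hdis : ∀ q q', q ≠ q' → Disjoint (S q) (S q')) (s : Finset κ)
    (h : ∀ q ∈ s, OscOn H d e δ (S q)) : OscOn H d e δ (⋃ q ∈ s, S q) := by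
  induction s using Finset.induction_on with
  | empty =>
    refine ⟨fun _ => 0, fun _ => 0, contDiff_const, continuous_const, ?_⟩
    simp [pxF, ptF, hδ]
  | insert q s hq ih =>
    rw [Finset.set_biUnion_insert]
    refine OscOn.union hH hK (hS q) (iUnion₂_subset fun q _ => hS q) (hm q)
      (Finset.measurableSet_biUnion s fun q _ => hm q) ?_ (h q (Finset.mem_insert_self q s))
      (ih fun q' hq' => h q' (Finset.mem_insert_of_mem hq'))
    rw [Set.disjoint_iUnion₂_right]
    intro q' hq'
    exact hdis q q' fun e => hq (e ▸ hq')

/-- On a rectangle where `d` and `e` are nearly constant, the perturbation of `cell` for a constant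
gradient is used. -/
lemma OscOn.small {ι : Type*} [Finite ι] {H : ι → ℝ² × ℝ → ℝ} (hH : ∀ i, Continuous (H i))
    {d e : ℝ² → ℝ} {δ : ℝ} (hδ : 0 < δ) {a b c c' : ℝ} (hab : a < b) (hcc : c < c') {d₀ e₀ : ℝ}
    (hd : ∀ z ∈ Ico a b ×ˢ Ico c c', |d z - d₀| ≤ δ / 3)
    (he : ∀ z ∈ Ico a b ×ˢ Ico c c', |e z - e₀| ≤ δ / 3) :
    OscOn H d e δ (Ico a b ×ˢ Ico c c') := by
  obtain ⟨d₁, hd1, hd0⟩ : ∃ d₁ : ℝ, |d₁ - d₀| ≤ δ / 3 ∧ d₁ ≠ 0 := by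
    by_cases h : d₀ = 0
    · exact ⟨δ / 3, by rw [h, sub_zero, abs_of_pos (by positivity)], by positivity⟩
    · exact ⟨d₀, by simp; positivity, h⟩
  have hV : volume.real (Ico a b ×ˢ Ico c c') = (b - a) * (c' - c) := by
    rw [volume_eq_prod, measureReal_prod_prod, Real.volume_real_Ico_of_le hab.le,
      Real.volume_real_Ico_of_le hcc.le]
  have hV0 : 0 < (b - a) * (c' - c) := mul_pos (sub_pos.2 hab) (sub_pos.2 hcc)
  obtain ⟨v, ϑ, h1, h2, h3, h4, h5, h6, h7, h8⟩ := cell hH (a := a) (b := b) (c := c) (c' := c')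
    (e := e₀) hd0 (δ := min (δ / 3) (δ * ((b - a) * (c' - c)))) (by positivity)
  refine ⟨v, ϑ, h1, h2, h3, h4, fun z => (h5 z).trans ?_, fun z => ?_, fun z => ?_, fun i => ?_⟩
  · grind
  · by_cases hz : z ∈ Ico a b ×ˢ Ico c c'
    · have e1 : pxF v z - ϑ z * d z =
          (pxF v z - ϑ z * d₁) + ϑ z * (d₁ - d₀) - ϑ z * (d z - d₀) := by ring
      rw [e1]
      have a1 := (h6 z).trans (min_le_left _ _)
      have a2 : |ϑ z * (d₁ - d₀)| ≤ 1 * (δ / 3) := by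
        rw [abs_mul]; gcongr; exact h3 z
      have a3 : |ϑ z * (d z - d₀)| ≤ 1 * (δ / 3) := by
        rw [abs_mul]; gcongr; exacts [h3 z, hd z hz]
      rw [abs_le] at *
      constructor <;> linarith
    · grind
  · by_cases hz : z ∈ Ico a b ×ˢ Ico c c'
    · have e1 : ptF v z - ϑ z * e z = (ptF v z - ϑ z * e₀) - ϑ z * (e z - e₀) := by ring
      rw [e1]
      have a1 := (h7 z).trans (min_le_left _ _)
      have a3 : |ϑ z * (e z - e₀)| ≤ 1 * (δ / 3) := by
        rw [abs_mul]; gcongr; exacts [h3 z, he z hz]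
      rw [abs_le] at *
      constructor <;> linarith
    · grind
  · rw [hV]
    exact (h8 i).trans (min_le_right _ _)

/-- A box is cut into squares so small that `d` and `e` are nearly constant on each. -/
lemma oscOn_box {ι : Type*} [Finite ι] {H : ι → ℝ² × ℝ → ℝ} (hH : ∀ i, Continuous (H i))
    {d e : ℝ² → ℝ} (hd : Continuous d) (he : Continuous e) {δ : ℝ} (hδ : 0 < δ)
    (hT : 0 < T) (n₀ : ℕ) :
    OscOn H d e δ (Ico 0 T ×ˢ Ico (-(n₀ * T)) (n₀ * T)) := by
  set L := (n₀ : ℝ) * T with hL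
  have hL0 : 0 ≤ L := by positivity
  set K := Icc 0 T ×ˢ Icc (-L) L with hK
  have hKc : IsCompact K := isCompact_Icc.prod isCompact_Icc
  have hud := hKc.uniformContinuousOn_of_continuous hd.continuousOn
  have hue := hKc.uniformContinuousOn_of_continuous he.continuousOn
  rw [Metric.uniformContinuousOn_iff] at hud hue
  obtain ⟨r, hr, Hd⟩ := hud (δ / 3) (by positivity)
  obtain ⟨r', hr', He⟩ := hue (δ / 3) (by positivity)
  obtain ⟨m, hm⟩ := exists_nat_gt (T / min r r')
  have hm0 : (0:ℝ) < m := lt_trans (by positivity) hm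
  set ρ := T / m with hρ
  have hρ0 : 0 < ρ := by positivity
  have hρr : ρ < min r r' := by
    rw [div_lt_iff₀ (by positivity)] at hm
    rw [hρ, div_lt_iff₀ hm0]; linarith
  have hmρ : m * ρ = T := by rw [hρ]; field_simp
  let S : ℕ × ℕ → Set (ℝ²) := fun q =>
    (Ico 0 T ×ˢ Ico (-L) L) ∩ {z | ⌊z.1 / ρ⌋₊ = q.1 ∧ ⌊(z.2 + L) / ρ⌋₊ = q.2}
  have hU : Ico 0 T ×ˢ Ico (-L) L =
      ⋃ q ∈ Finset.range m ×ˢ Finset.range (2 * n₀ * m), S q := by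
    ext z
    simp only [mem_iUnion, exists_prop]
    constructor
    · intro hz
      refine ⟨(⌊z.1 / ρ⌋₊, ⌊(z.2 + L) / ρ⌋₊), ?_, hz, rfl, rfl⟩
      simp only [Finset.mem_product, Finset.mem_range]
      have h1 := hz.1
      have h2 := hz.2
      rw [Nat.floor_lt (div_nonneg h1.1 hρ0.le),
        Nat.floor_lt (div_nonneg (by linarith [h2.1]) hρ0.le), div_lt_iff₀ hρ0, div_lt_iff₀ hρ0]
      refine ⟨by rw [hmρ]; exact h1.2, ?_⟩
      push_cast
      have : (2 * (n₀:ℝ) * m) * ρ = 2 * L := by rw [mul_assoc, hmρ, hL]; ring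
      rw [this]; linarith [h2.2]
    · grind
  have hSeq : ∀ q ∈ Finset.range m ×ˢ Finset.range (2 * n₀ * m), S q =
      Ico (q.1 * ρ) ((q.1 + 1) * ρ) ×ˢ Ico (-L + q.2 * ρ) (-L + (q.2 + 1) * ρ) := by
    rintro ⟨i, j⟩ hq
    simp only [Finset.mem_product, Finset.mem_range] at hq
    have hi : ((i:ℝ) + 1) * ρ ≤ T := by
      rw [← hmρ]; gcongr; exact_mod_cast hq.1
    have hj : ((j:ℝ) + 1) * ρ ≤ 2 * L := by
      have h2 : (2 * (n₀:ℝ) * m) * ρ = 2 * L := by rw [mul_assoc, hmρ, hL]; ring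
      rw [← h2]; gcongr; exact_mod_cast hq.2
    have hi0 : 0 ≤ (i:ℝ) * ρ := by positivity
    have hj0 : 0 ≤ (j:ℝ) * ρ := by positivity
    ext ⟨t, x⟩
    simp only [S, mem_inter_iff, mem_prod, mem_Ico, mem_setOf_eq]
    constructor
    · rintro ⟨⟨ht, hx⟩, e1, e2⟩
      rw [Nat.floor_eq_iff (div_nonneg ht.1 hρ0.le), le_div_iff₀ hρ0, div_lt_iff₀ hρ0] at e1
      rw [Nat.floor_eq_iff (div_nonneg (by linarith) hρ0.le), le_div_iff₀ hρ0, div_lt_iff₀ hρ0] at e2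
      exact ⟨e1, by linarith, by linarith⟩
    · rintro ⟨ht, hx⟩
      have ht0 : 0 ≤ t := by linarith
      have hx0 : 0 ≤ x + L := by linarith
      refine ⟨⟨⟨ht0, by linarith⟩, by linarith, by linarith⟩, ?_, ?_⟩
      · rw [Nat.floor_eq_iff (div_nonneg ht0 hρ0.le), le_div_iff₀ hρ0, div_lt_iff₀ hρ0]
        exact ht
      · rw [Nat.floor_eq_iff (div_nonneg hx0 hρ0.le), le_div_iff₀ hρ0, div_lt_iff₀ hρ0]
        exact ⟨by linarith, by linarith⟩
  have hSK : ∀ q, S q ⊆ K := fun q z hz =>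
    ⟨Ico_subset_Icc_self hz.1.1, Ico_subset_Icc_self hz.1.2⟩
  have hSm : ∀ q, MeasurableSet (S q) := fun q => by
    apply (measurableSet_Ico.prod measurableSet_Ico).inter
    have m1 : Measurable fun z : ℝ² => ⌊z.1 / ρ⌋₊ := by fun_prop
    have m2 : Measurable fun z : ℝ² => ⌊(z.2 + L) / ρ⌋₊ := by fun_prop
    exact (m1 (measurableSet_singleton q.1)).inter (m2 (measurableSet_singleton q.2))
  rw [hU]
  refine OscOn.biUnion hH hδ.le hKc hSK hSm ?_ _ ?_
  · grind
  · intro q hq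
    have hsq := hSeq q hq
    have hcor : ((q.1:ℝ) * ρ, -L + (q.2:ℝ) * ρ) ∈ S q := by grind
    have hdist : ∀ z ∈ S q, dist z ((q.1:ℝ) * ρ, -L + (q.2:ℝ) * ρ) < min r r' := by
      intro z hz
      rw [hsq] at hz
      refine lt_of_le_of_lt ?_ hρr
      rw [Prod.dist_eq, dist_eq, dist_eq]
      have := hz.1.1; have := hz.1.2; have := hz.2.1; have := hz.2.2
      apply max_le <;> rw [abs_le] <;> constructor <;> nlinarith
    have A : ∀ z ∈ S q, |d z - d ((q.1:ℝ) * ρ, -L + (q.2:ℝ) * ρ)| ≤ δ / 3 := fun z hz =>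
      (Hd z (hSK q hz) _ (hSK q hcor) ((hdist z hz).trans_le (min_le_left _ _))).le
    have B : ∀ z ∈ S q, |e z - e ((q.1:ℝ) * ρ, -L + (q.2:ℝ) * ρ)| ≤ δ / 3 := fun z hz =>
      (He z (hSK q hz) _ (hSK q hcor) ((hdist z hz).trans_le (min_le_right _ _))).le
    rw [hsq] at A B ⊢
    exact OscOn.small hH hδ (by nlinarith) (by nlinarith) A B

/-- The oscillation lemma: a small perturbation `v` supported in a box, with gradient close to
`ϑ (e, d)`, such that integrals of continuous functions of `ϑ` and of the error terms are close
to the mean of their values at `ϑ = 1` and `ϑ = -1`, with vanishing error terms. -/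
lemma osc_lemma {ι : Type*} [Finite ι] {Φ : ι → ℝ² × (ℝ × ℝ²) → ℝ}
    (hΦ : ∀ i, Continuous (Φ i)) {d e : ℝ² → ℝ} (hd : Continuous d) (he : Continuous e)
    {δ : ℝ} (hδ : 0 < δ) (hT : 0 < T) (n₀ : ℕ) :
    ∃ v ϑ : ℝ² → ℝ, ContDiff ℝ 2 v ∧ Continuous ϑ ∧ (∀ z, |ϑ z| ≤ 1) ∧
      (∀ z ∉ Ico 0 T ×ˢ Ico (-(n₀ * T)) (n₀ * T),
        v z = 0 ∧ ϑ z = 0 ∧ ptF v z = 0 ∧ pxF v z = 0) ∧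
      (∀ z, |v z| ≤ δ) ∧ (∀ z, |pxF v z - ϑ z * d z| ≤ δ) ∧ (∀ z, |ptF v z - ϑ z * e z| ≤ δ) ∧
      ∀ i, |(∫ z in Icc 0 T ×ˢ Icc (-(n₀ * T)) (n₀ * T),
          Φ i (z, ϑ z, pxF v z - ϑ z * d z, ptF v z - ϑ z * e z)) -
        ∫ z in Icc 0 T ×ˢ Icc (-(n₀ * T)) (n₀ * T), (Φ i (z, 1, 0, 0) + Φ i (z, -1, 0, 0)) / 2| ≤ δ
      := by
  set L := (n₀ : ℝ) * T with hL
  set K := Icc 0 T ×ˢ Icc (-L) L with hK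
  have hKc : IsCompact K := isCompact_Icc.prod isCompact_Icc
  set V := (volume : Measure (ℝ²)).real K with hV
  have hV0 : 0 ≤ V := measureReal_nonneg
  set η := δ / (2 * (V + 1)) with hη
  have hη0 : 0 < η := by positivity
  have hηV : η * V ≤ δ / 2 := by
    rw [hη, div_mul_eq_mul_div, div_le_iff₀ (by positivity)]; nlinarith
  have hKK : IsCompact (K ×ˢ (Icc (-1:ℝ) 1 ×ˢ (Icc (-1:ℝ) 1 ×ˢ Icc (-1:ℝ) 1))) :=
    hKc.prod (isCompact_Icc.prod (isCompact_Icc.prod isCompact_Icc))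
  have hunif : ∀ i, ∃ r > 0, ∀ p ∈ K ×ˢ (Icc (-1:ℝ) 1 ×ˢ (Icc (-1:ℝ) 1 ×ˢ Icc (-1:ℝ) 1)),
      ∀ q ∈ K ×ˢ (Icc (-1:ℝ) 1 ×ˢ (Icc (-1:ℝ) 1 ×ˢ Icc (-1:ℝ) 1)), dist p q < r →
        dist (Φ i p) (Φ i q) < η := fun i =>
    (Metric.uniformContinuousOn_iff.1
      (hKK.uniformContinuousOn_of_continuous (hΦ i).continuousOn)) η hη0
  choose r hr Hr using hunif
  obtain ⟨δ', hδ', hδ'r, hδ'1⟩ : ∃ δ' > 0, (∀ i, δ' < r i) ∧ δ' ≤ min (min δ η) 1 := by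
    have h1 : ∀ᶠ x in 𝓝[>] (0:ℝ), ∀ i, x < r i := by
      rw [eventually_all]
      exact fun i => nhdsWithin_le_nhds (gt_mem_nhds (hr i))
    have h2 : ∀ᶠ x in 𝓝[>] (0:ℝ), x < min (min δ η) 1 :=
      nhdsWithin_le_nhds (gt_mem_nhds (by positivity))
    have h3 : ∀ᶠ x in 𝓝[>] (0:ℝ), 0 < x := eventually_mem_nhdsWithin
    obtain ⟨x, a, b, c⟩ := (h1.and (h2.and h3)).exists
    exact ⟨x, c, a, b.le⟩
  obtain ⟨v, ϑ, h1, h2, h3, h4, h5, h6, h7, h8⟩ := oscOn_box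
    (H := fun i q => Φ i (q.1, q.2, 0, 0)) (fun i => by have := hΦ i; fun_prop) hd he hδ' hT n₀
  have hδδ : δ' ≤ δ := hδ'1.trans ((min_le_left _ _).trans (min_le_left _ _))
  refine ⟨v, ϑ, h1, h2, h3, h4, fun z => (h5 z).trans hδδ, fun z => (h6 z).trans hδδ,
    fun z => (h7 z).trans hδδ, fun i => ?_⟩
  have hKS : (Ico 0 T ×ˢ Ico (-L) L : Set (ℝ²)) =ᵐ[volume] K := by
    rw [volume_eq_prod]
    exact Measure.set_prod_ae_eq Ico_ae_eq_Icc Ico_ae_eq_Icc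
  have h8i := h8 i
  simp only at h8i
  rw [setIntegral_congr_set hKS, setIntegral_congr_set hKS, measureReal_congr hKS] at h8i
  have hpx : Continuous (pxF v) := by
    unfold pxF; exact (h1.continuous_fderiv (by norm_num)).clm_apply continuous_const
  have hpt : Continuous (ptF v) := by
    unfold ptF; exact (h1.continuous_fderiv (by norm_num)).clm_apply continuous_const
  have hΦi := hΦ i
  have hI : ∀ g : ℝ² → ℝ, Continuous g → IntegrableOn g K := fun g hg =>
      hg.continuousOn.integrableOn_compact hKc
  have hdiff : |(∫ z in K, Φ i (z, ϑ z, pxF v z - ϑ z * d z, ptF v z - ϑ z * e z)) -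
      ∫ z in K, Φ i (z, ϑ z, 0, 0)| ≤ η * V := by
    rw [← integral_sub (hI _ (by fun_prop)) (hI _ (by fun_prop)), ← norm_eq_abs]
    apply norm_setIntegral_le_of_norm_le_const hKc.measure_lt_top
    intro z hz
    have hm : ∀ s : ℝ, |s| ≤ δ' → s ∈ Icc (-1:ℝ) 1 := fun s hs =>
      abs_le.1 (hs.trans (hδ'1.trans (min_le_right _ _)))
    have h01 : (0:ℝ) ∈ Icc (-1:ℝ) 1 := by simp
    refine (Hr i _ ⟨hz, abs_le.1 (h3 z), hm _ (h6 z), hm _ (h7 z)⟩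
      _ ⟨hz, abs_le.1 (h3 z), h01, h01⟩ ?_).le
    refine lt_of_le_of_lt ?_ (hδ'r i)
    simp only [Prod.dist_eq, dist_self, dist_eq, sub_zero]
    refine max_le hδ'.le (max_le hδ'.le (max_le (h6 z) (h7 z)))
  have hδ'V : δ' * V ≤ η * V := by
    gcongr; exact hδ'1.trans ((min_le_left _ _).trans (min_le_right _ _))
  rw [← hV] at h8i
  rw [abs_le] at *
  constructor <;> linarith

/-! ### Discrete mixtures and their splitting -/

/-- Average of `F` over the atoms `lam 0, …, lam (N - 1)`. -/
def av (N : ℕ) (F : ℝ → ℝ) (lam : ℕ → ℝ² → ℝ) (z : ℝ²) : ℝ :=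
  (∑ i ∈ Finset.range N, F (lam i z)) / N

/-- Limiting cost of a potential `b` whose slope is resolved into `N` equally weighted atoms. -/
def mcost (f σ : ℝ → ℝ) (T : ℝ) (N : ℕ) (b : ℝ² → ℝ) (lam : ℕ → ℝ² → ℝ) : ℝ :=
  ∫ z in strip T, (ptF b z + av N f lam z) ^ 2 / (2 * av N σ lam z)

/-- `b` is a regular potential whose slope is, on the strip, the average of the `N` atoms
`lam i`, which stay away from `0` and `1`; outside a bounded set all atoms equal `p` and `b`
solves the Hamilton-Jacobi equation exactly. -/
structure IsMS (f : ℝ → ℝ) (T : ℝ) (N : ℕ) (b : ℝ² → ℝ) (lam : ℕ → ℝ² → ℝ)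
    (κ p L : ℝ) : Prop where
  pos : 0 < N
  κ0 : 0 < κ
  smooth : ContDiff ℝ 2 b
  cont : ∀ i, Continuous (lam i)
  mem : ∀ z : ℝ², z.1 ∈ Icc 0 T → ∀ i < N, lam i z ∈ Icc κ (1 - κ)
  slope : ∀ z : ℝ², z.1 ∈ Icc 0 T → pxF b z = av N id lam z
  out_lam : ∀ z : ℝ², z.1 ∈ Icc 0 T → L ≤ |z.2| → ∀ i < N, lam i z = p
  out_t : ∀ z : ℝ², z.1 ∈ Icc 0 T → L ≤ |z.2| → ptF b z = - f p

lemma av_cont {N : ℕ} {F : ℝ → ℝ} (hF : Continuous F) {lam : ℕ → ℝ² → ℝ}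
    (h : ∀ i, Continuous (lam i)) : Continuous (av N F lam) := by
  unfold av
  exact (continuous_finset_sum _ fun i _ => hF.comp (h i)).div_const _

lemma av_const {N : ℕ} (hN : 0 < N) {F : ℝ → ℝ} {lam : ℕ → ℝ² → ℝ} {z : ℝ²} {p : ℝ}
    (h : ∀ i < N, lam i z = p) : av N F lam z = F p := by
  unfold av
  have h1 : ∑ i ∈ Finset.range N, F (lam i z) = ∑ i ∈ Finset.range N, F p :=
    Finset.sum_congr rfl fun i hi => by rw [h i (Finset.mem_range.1 hi)]
  rw [h1, Finset.sum_const, Finset.card_range, nsmul_eq_mul]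
  have : (N:ℝ) ≠ 0 := by positivity
  field_simp

lemma av_congr {N : ℕ} {F G : ℝ → ℝ} {lam lam' : ℕ → ℝ² → ℝ} {z : ℝ²}
    (h : ∀ i < N, F (lam i z) = G (lam' i z)) : av N F lam z = av N G lam' z := by
  unfold av
  rw [Finset.sum_congr rfl fun i hi => h i (Finset.mem_range.1 hi)]

lemma av_pos {N : ℕ} (hN : 0 < N) {F : ℝ → ℝ} {lam : ℕ → ℝ² → ℝ} {z : ℝ²}
    (h : ∀ i < N, 0 < F (lam i z)) : 0 < av N F lam z := by
  unfold av
  have : (0:ℝ) < N := by exact_mod_cast hN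
  refine div_pos (Finset.sum_pos (fun i hi => h i (Finset.mem_range.1 hi)) ?_) this
  exact ⟨0, Finset.mem_range.2 hN⟩

lemma av_two {N : ℕ} (F : ℝ → ℝ) (lam : ℕ → ℝ² → ℝ) (z : ℝ²) :
    av (2 * N) F lam z =
      (av N F (fun i => lam (2 * i)) z + av N F (fun i => lam (2 * i + 1)) z) / 2 := by
  have h : ∀ N, ∑ i ∈ Finset.range (2 * N), F (lam i z) =
      ∑ i ∈ Finset.range N, F (lam (2 * i) z) + ∑ i ∈ Finset.range N, F (lam (2 * i + 1) z) := by
    intro N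
    induction N with
    | zero => simp
    | succ n ih =>
      rw [show 2 * (n + 1) = 2 * n + 1 + 1 by ring, Finset.sum_range_succ, Finset.sum_range_succ,
        Finset.sum_range_succ, Finset.sum_range_succ, ih]
      ring
  unfold av
  rw [h]
  push_cast
  rw [← add_div, div_div, mul_comm]

lemma strip_eq_box' {L : ℝ} {k : ℝ² → ℝ}
    (h : ∀ z : ℝ², z.1 ∈ Icc 0 T → L < |z.2| → k z = 0) :
    ∫ z in strip T, k z = ∫ z in box T L, k z := by
  refine setIntegral_eq_of_subset_of_forall_diff_eq_zero
    (measurableSet_Icc.prod MeasurableSet.univ) (prod_mono subset_rfl (subset_univ _)) ?_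
  rintro z ⟨hz, hz'⟩
  apply h z hz.1
  by_contra! hc
  exact hz' ⟨hz.1, abs_le.1 hc⟩

/-- Halving the number of atoms. The atoms `2 i` and `2 i + 1` are merged into one, which oscillates
between the two; the time derivative `e` of the oscillation is chosen so that the control `Ψ`, the
quotient of `b_t` plus the mean flux by the mean mobility, is the same in both phases. -/
lemma IsMS.split (hf : Continuous f) (hσ : Continuous σ)
    (hpos : ∀ v ∈ Ioo (0:ℝ) 1, 0 < σ v) (hT : 0 < T) {N : ℕ} {b : ℝ² → ℝ}
    {lam : ℕ → ℝ² → ℝ} {κ p L : ℝ} (h : IsMS f T (2 * N) b lam κ p L)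
    {ι : Type*} [Finite ι] {F : ι → ℝ → ℝ} (hF : ∀ i, Continuous (F i)) {g : ι → ℝ² → ℝ}
    (hg : ∀ i, Continuous (g i)) (hgc : ∀ i, HasCompactSupport (g i)) {δ : ℝ} (hδ : 0 < δ) :
    ∃ b' lam' κ' L', IsMS f T N b' lam' κ' p L' ∧
      mcost f σ T N b' lam' ≤ mcost f σ T (2 * N) b lam + δ ∧ (∀ z, |b' z - b z| ≤ δ) ∧
      ∀ i, |pair T (av N (F i) lam') (g i) - pair T (av (2 * N) (F i) lam) (g i)| ≤ δ := by
  have hN : 0 < N := by have := h.pos; omega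
  have hκ := h.κ0
  -- the bound on `κ` follows from nonemptiness of the range of the atoms
  have hκ1 : κ ≤ 1 / 2 := by
    have := h.mem (0, 0) (by simp [hT.le]) 0 h.pos
    have := this.1.trans this.2
    linarith
  set l0 : ℕ → ℝ² → ℝ := fun i => lam (2 * i) with hl0
  set l1 : ℕ → ℝ² → ℝ := fun i => lam (2 * i + 1) with hl1
  have c0 : ∀ i, Continuous (l0 i) := fun i => h.cont _
  have c1 : ∀ i, Continuous (l1 i) := fun i => h.cont _
  let cl : ℝ → ℝ := fun s => max (κ / 2) (min s (1 - κ / 2))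
  have hcl : Continuous cl := by fun_prop
  have hclm : ∀ s, cl s ∈ Ioo (0:ℝ) 1 := fun s => by grind
  have hcle : ∀ s ∈ Icc (κ / 2) (1 - κ / 2), cl s = s := fun s hs => by grind
  let σ' : ℝ → ℝ := fun s => σ (cl s)
  have hσ' : Continuous σ' := hσ.comp hcl
  have hσp : ∀ s, 0 < σ' s := fun s => hpos _ (hclm s)
  have hbt : Continuous (ptF b) := by
    unfold ptF; exact (h.smooth.continuous_fderiv (by norm_num)).clm_apply continuous_const
  let s : ℝ² → ℝ := fun z => (av N σ' l0 z + av N σ' l1 z) / 2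
  have hs0 : ∀ z, 0 < s z := fun z => by
    have a := av_pos hN (F := σ') (lam := l0) (z := z) fun i _ => hσp _
    have b := av_pos hN (F := σ') (lam := l1) (z := z) fun i _ => hσp _
    simp only [s]; linarith
  have cs0 := av_cont (N := N) hσ' c0
  have cs1 := av_cont (N := N) hσ' c1
  have cf0 := av_cont (N := N) hf c0
  have cf1 := av_cont (N := N) hf c1
  let Ψ : ℝ² → ℝ := fun z => (ptF b z + (av N f l0 z + av N f l1 z) / 2) / s z
  have hΨ : Continuous Ψ := by
    refine Continuous.div (by fun_prop) (by fun_prop) fun z => (hs0 z).ne'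
  let d : ℝ² → ℝ := fun z => (av N id l1 z - av N id l0 z) / 2
  let e : ℝ² → ℝ := fun z => ((av N f l0 z - av N f l1 z) + (av N σ' l1 z - av N σ' l0 z) * Ψ z) / 2
  have hd : Continuous d := ((av_cont continuous_id c1).sub (av_cont continuous_id c0)).div_const 2
  have he : Continuous e := by fun_prop
  let Λ : ℕ → ℝ² × (ℝ × ℝ²) → ℝ := fun i q =>
    (l0 i q.1 + l1 i q.1) / 2 + q.2.1 * ((l1 i q.1 - l0 i q.1) / 2) + q.2.2.1
  have hΛ : ∀ i, Continuous (Λ i) := fun i => by fun_prop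
  have hΛa : ∀ {G : ℝ → ℝ}, Continuous G →
      Continuous fun q => (∑ i ∈ Finset.range N, G (Λ i q)) / (N:ℝ) := fun hG =>
    (continuous_finset_sum _ fun i _ => hG.comp (hΛ i)).div_const _
  have hΛp : ∀ q, 0 < (∑ i ∈ Finset.range N, σ' (Λ i q)) / (N:ℝ) := fun q => by
    have : (0:ℝ) < N := by exact_mod_cast hN
    exact div_pos (Finset.sum_pos (fun i _ => hσp _) ⟨0, Finset.mem_range.2 hN⟩) this
  let Φ : Option ι → ℝ² × (ℝ × ℝ²) → ℝ := fun o => match o with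
    | none => fun q => (ptF b q.1 + q.2.1 * e q.1 + q.2.2.2 +
        (∑ i ∈ Finset.range N, f (Λ i q)) / (N:ℝ)) ^ 2 /
        (2 * ((∑ i ∈ Finset.range N, σ' (Λ i q)) / (N:ℝ)))
    | some j => fun q => (∑ i ∈ Finset.range N, F j (Λ i q)) / (N:ℝ) * g j q.1
  have hΦ : ∀ o, Continuous (Φ o) := by
    intro o
    cases o with
    | none =>
      have a1 := hΛa hf
      have a2 := hΛa hσ'
      refine Continuous.div (by fun_prop) (by fun_prop) fun q => ?_
      have := hΛp q
      positivity
    | some j =>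
      have a1 := hΛa (hF j)
      have a2 := hg j
      exact a1.mul (by fun_prop)
  -- a box containing the region where `b` is not yet a solution and the supports of the tests
  obtain ⟨n₀, hn0⟩ : ∃ n₀ : ℕ, L ≤ n₀ * T ∧ ∀ j, ∀ z : ℝ², n₀ * T < |z.2| → g j z = 0 := by
    have h1 : ∀ᶠ n : ℕ in atTop, L ≤ n * T :=
      (tendsto_natCast_atTop_atTop.atTop_mul_const hT).eventually_ge_atTop L
    have h2 : ∀ᶠ n : ℕ in atTop, ∀ j, ∀ z : ℝ², n * T < |z.2| → g j z = 0 := by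
      rw [eventually_all]
      intro j
      obtain ⟨R, hR, H⟩ := exists_strip_bound (hgc j)
      filter_upwards [(tendsto_natCast_atTop_atTop.atTop_mul_const hT).eventually_ge_atTop R]
        with n hn z hz
      exact H z (hn.trans hz.le)
    exact (h1.and h2).exists
  obtain ⟨hn0L, hn0g⟩ := hn0
  obtain ⟨v, ϑ, k1, k2, k3, k4, k5, k6, k7, k8⟩ :=
    osc_lemma hΦ hd he (δ := min δ (κ / 2)) (by positivity) hT n₀
  have kout : ∀ z : ℝ², (n₀:ℝ) * T < |z.2| → v z = 0 ∧ ϑ z = 0 ∧ ptF v z = 0 ∧ pxF v z = 0 := by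
    grind
  let r : ℝ² → ℝ := fun z => pxF v z - ϑ z * d z
  have hpx : Continuous (pxF v) := by
    unfold pxF; exact (k1.continuous_fderiv (by norm_num)).clm_apply continuous_const
  let lam' : ℕ → ℝ² → ℝ := fun i z => Λ i (z, ϑ z, r z, ptF v z - ϑ z * e z)
  let b' : ℝ² → ℝ := fun z => b z + v z
  have hpxb : ∀ z, pxF b' z = pxF b z + pxF v z := fun z => by
    simp only [pxF, b']
    rw [fderiv_fun_add (h.smooth.differentiable (by norm_num) z) (k1.differentiable (by norm_num) z)]
    simp
  have hptb : ∀ z, ptF b' z = ptF b z + ptF v z := fun z => by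
    simp only [ptF, b']
    rw [fderiv_fun_add (h.smooth.differentiable (by norm_num) z) (k1.differentiable (by norm_num) z)]
    simp
  have hmem0 : ∀ z : ℝ², z.1 ∈ Icc 0 T → ∀ i < N, l0 i z ∈ Icc κ (1 - κ) := fun z hz i hi =>
    h.mem z hz _ (by omega)
  have hmem1 : ∀ z : ℝ², z.1 ∈ Icc 0 T → ∀ i < N, l1 i z ∈ Icc κ (1 - κ) := fun z hz i hi =>
    h.mem z hz _ (by omega)
  have hmem' : ∀ z : ℝ², z.1 ∈ Icc 0 T → ∀ i < N, lam' i z ∈ Icc (κ / 2) (1 - κ / 2) := by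
    intro z hz i hi
    have a0 := hmem0 z hz i hi
    have a1 := hmem1 z hz i hi
    have a2 := abs_le.1 (k3 z)
    have a3 := abs_le.1 ((k6 z).trans (min_le_right _ _))
    simp only [lam', Λ, r]
    have e1 : (l0 i z + l1 i z) / 2 + ϑ z * ((l1 i z - l0 i z) / 2) =
        (1 - ϑ z) / 2 * l0 i z + (1 + ϑ z) / 2 * l1 i z := by ring
    rw [e1]
    constructor
    · nlinarith [mul_nonneg (sub_nonneg.2 a2.2) (sub_nonneg.2 a0.1),
        mul_nonneg (neg_le_iff_add_nonneg.1 a2.1) (sub_nonneg.2 a1.1), a3.1]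
    · nlinarith [mul_nonneg (sub_nonneg.2 a2.2) (sub_nonneg.2 a0.2),
        mul_nonneg (neg_le_iff_add_nonneg.1 a2.1) (sub_nonneg.2 a1.2), a3.2]
  have hmsub : ∀ x, x ∈ Icc κ (1 - κ) → x ∈ Icc (κ / 2) (1 - κ / 2) := fun x hx =>
    ⟨by linarith [hx.1], by linarith [hx.2]⟩
  have eσ' : ∀ z : ℝ², z.1 ∈ Icc 0 T → av N σ' lam' z = av N σ lam' z := fun z hz =>
    av_congr fun i hi => by simp only [σ']; rw [hcle _ (hmem' z hz i hi)]
  have eσ0 : ∀ z : ℝ², z.1 ∈ Icc 0 T → av N σ' l0 z = av N σ l0 z := fun z hz =>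
    av_congr fun i hi => by simp only [σ']; rw [hcle _ (hmsub _ (hmem0 z hz i hi))]
  have eσ1 : ∀ z : ℝ², z.1 ∈ Icc 0 T → av N σ' l1 z = av N σ l1 z := fun z hz =>
    av_congr fun i hi => by simp only [σ']; rw [hcle _ (hmsub _ (hmem1 z hz i hi))]
  have hΛ1 : ∀ i z, Λ i (z, 1, 0, 0) = l1 i z := fun i z => by simp only [Λ]; ring
  have hΛ0 : ∀ i z, Λ i (z, -1, 0, 0) = l0 i z := fun i z => by simp only [Λ]; ring
  have hout' : ∀ z : ℝ², z.1 ∈ Icc 0 T → (n₀:ℝ) * T < |z.2| → ∀ i < N, lam' i z = p := by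
    intro z hz hz2 i hi
    have a := kout z hz2
    have b0 : l0 i z = p := h.out_lam z hz (hn0L.trans hz2.le) _ (by omega)
    have b1 : l1 i z = p := h.out_lam z hz (hn0L.trans hz2.le) _ (by omega)
    simp only [lam', Λ, r, a, b0, b1]
    ring
  have houtt' : ∀ z : ℝ², z.1 ∈ Icc 0 T → (n₀:ℝ) * T < |z.2| → ptF b' z = - f p := by
    intro z hz hz2
    rw [hptb, (kout z hz2).2.2.1, add_zero]
    exact h.out_t z hz (hn0L.trans hz2.le)
  refine ⟨b', lam', κ / 2, n₀ * T + 1, ⟨hN, by positivity, h.smooth.add k1, ?_, hmem', ?_, ?_, ?_⟩,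
    ?_, ?_, ?_⟩
  · intro i
    have := c0 i; have := c1 i
    simp only [lam', Λ, r]
    fun_prop
  · intro z hz
    rw [hpxb, h.slope z hz, av_two]
    have hN' : (N:ℝ) ≠ 0 := by positivity
    have e1 : av N id lam' z = (av N id l0 z + av N id l1 z) / 2 + ϑ z * d z + r z := by
      simp only [av, id, lam', Λ, d, Finset.sum_add_distrib, ← Finset.mul_sum, ← Finset.sum_div,
        Finset.sum_sub_distrib, Finset.sum_const, Finset.card_range, nsmul_eq_mul]
      field_simp
    rw [e1]
    simp only [r]; ring
  · grind
  · grind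
  · -- the cost
    have hk := k8 none
    have e1 : mcost f σ T N b' lam' = ∫ z in Icc 0 T ×ˢ Icc (-(n₀ * T)) (n₀ * T),
        Φ none (z, ϑ z, pxF v z - ϑ z * d z, ptF v z - ϑ z * e z) := by
      unfold mcost
      rw [strip_eq_box' (L := n₀ * T)]
      · refine setIntegral_congr_fun (measurableSet_Icc.prod measurableSet_Icc) fun z hz => ?_
        simp only [Φ]
        have e2 := eσ' z hz.1
        simp only [av] at e2 ⊢
        rw [← e2, hptb]
        simp only [lam', r]
        congr 2; ring
      · intro z hz hz2
        rw [houtt' z hz hz2, av_const hN (hout' z hz hz2)]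
        simp
    have e2 : mcost f σ T (2 * N) b lam = ∫ z in Icc 0 T ×ˢ Icc (-(n₀ * T)) (n₀ * T),
        (Φ none (z, 1, 0, 0) + Φ none (z, -1, 0, 0)) / 2 := by
      unfold mcost
      rw [strip_eq_box' (L := n₀ * T)]
      · refine setIntegral_congr_fun (measurableSet_Icc.prod measurableSet_Icc) fun z hz => ?_
        have e3 := eσ0 z hz.1
        have e4 := eσ1 z hz.1
        have hp0 := av_pos hN (F := σ') (lam := l0) (z := z) fun i _ => hσp _
        have hp1 := av_pos hN (F := σ') (lam := l1) (z := z) fun i _ => hσp _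
        have r1 : Φ none (z, 1, 0, 0) = (av N σ' l1 z) * Ψ z ^ 2 / 2 := by
          have : ptF b z + 1 * e z + 0 + av N f l1 z = av N σ' l1 z * Ψ z := by grind
          simp only [Φ, hΛ1]
          change (ptF b z + 1 * e z + 0 + av N f l1 z) ^ 2 / (2 * av N σ' l1 z) = _
          rw [this]; field_simp
        have r2 : Φ none (z, -1, 0, 0) = (av N σ' l0 z) * Ψ z ^ 2 / 2 := by
          have : ptF b z + -1 * e z + 0 + av N f l0 z = av N σ' l0 z * Ψ z := by
            have hh : ptF b z + (av N f l0 z + av N f l1 z) / 2 = s z * Ψ z := by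
              simp only [Ψ]; field_simp [(hs0 z).ne']
            simp only [e, s] at hh ⊢
            linarith
          simp only [Φ, hΛ0]
          change (ptF b z + -1 * e z + 0 + av N f l0 z) ^ 2 / (2 * av N σ' l0 z) = _
          rw [this]; field_simp
        rw [r1, r2, av_two, av_two, ← e3, ← e4]
        have hs := hs0 z
        simp only [Ψ]
        change (ptF b z + (av N f l0 z + av N f l1 z) / 2) ^ 2 / (2 * s z) = _
        have : av N σ' l1 z = 2 * s z - av N σ' l0 z := by simp only [s]; ring
        rw [this]
        field_simp
        ring
      · intro z hz hz2
        rw [h.out_t z hz (hn0L.trans hz2.le), av_const h.pos (h.out_lam z hz (hn0L.trans hz2.le))]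
        simp
    rw [e1, e2]
    have := (abs_le.1 hk).2
    have h3 := min_le_left δ (κ / 2)
    linarith
  · grind
  · intro j
    have hk := k8 (some j)
    have e1 : pair T (av N (F j) lam') (g j) = ∫ z in Icc 0 T ×ˢ Icc (-(n₀ * T)) (n₀ * T),
        Φ (some j) (z, ϑ z, pxF v z - ϑ z * d z, ptF v z - ϑ z * e z) := by
      unfold pair
      rw [strip_eq_box' (L := n₀ * T)]
      · rfl
      · grind
    have e2 : pair T (av (2 * N) (F j) lam) (g j) = ∫ z in Icc 0 T ×ˢ Icc (-(n₀ * T)) (n₀ * T),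
        (Φ (some j) (z, 1, 0, 0) + Φ (some j) (z, -1, 0, 0)) / 2 := by
      unfold pair
      rw [strip_eq_box' (L := n₀ * T)]
      · congr 1; funext z
        simp only [Φ, hΛ1, hΛ0]
        rw [av_two]
        simp only [av, l0, l1]
        ring
      · grind
    rw [e1, e2]
    exact hk.trans (min_le_left _ _)

/-- Iterated splitting: a mixture of `2 ^ m` atoms is replaced by a single one. -/
lemma IsMS.to_one (hf : Continuous f) (hσ : Continuous σ)
    (hpos : ∀ v ∈ Ioo (0:ℝ) 1, 0 < σ v) (hT : 0 < T)
    {ι : Type*} [Finite ι] {F : ι → ℝ → ℝ} (hF : ∀ i, Continuous (F i)) {g : ι → ℝ² → ℝ}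
    (hg : ∀ i, Continuous (g i)) (hgc : ∀ i, HasCompactSupport (g i)) (m : ℕ) :
    ∀ {b : ℝ² → ℝ} {lam : ℕ → ℝ² → ℝ} {κ p L δ : ℝ}, 0 < δ → IsMS f T (2 ^ m) b lam κ p L →
    ∃ b' lam' κ' L', IsMS f T 1 b' lam' κ' p L' ∧
      mcost f σ T 1 b' lam' ≤ mcost f σ T (2 ^ m) b lam + δ ∧ (∀ z, |b' z - b z| ≤ δ) ∧
      ∀ i, |pair T (av 1 (F i) lam') (g i) - pair T (av (2 ^ m) (F i) lam) (g i)| ≤ δ := by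
  induction m with
  | zero =>
    intro b lam κ p L δ hδ h
    exact ⟨b, lam, κ, L, h, by simp [hδ.le], by simp [hδ.le], by simp [hδ.le]⟩
  | succ m ih =>
    intro b lam κ p L δ hδ h
    have hpow : 2 ^ (m + 1) = 2 * 2 ^ m := by ring
    rw [hpow] at h ⊢
    obtain ⟨b1, lam1, κ1, L1, h1, h2, h3, h4⟩ := h.split hf hσ hpos hT hF hg hgc (half_pos hδ)
    obtain ⟨b2, lam2, κ2, L2, k1, k2, k3, k4⟩ := ih (half_pos hδ) h1
    refine ⟨b2, lam2, κ2, L2, k1, by linarith, fun z => ?_, fun i => ?_⟩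
    · grind
    · grind

/-! ### Regular states as elements of the state space -/

lemma av_one (F : ℝ → ℝ) (lam : ℕ → ℝ² → ℝ) (z : ℝ²) : av 1 F lam z = F (lam 0 z) := by
  simp [av]

lemma pair_congr_strip {g g' h : ℝ² → ℝ}
    (hg : ∀ z : ℝ², z.1 ∈ Icc 0 T → g z = g' z) : pair T g h = pair T g' h := by
  unfold pair
  apply setIntegral_congr_fun measurableSet_strip
  intro z hz
  simp only [hg z hz.1]

lemma hasDerivAt_slice {g : ℝ² → ℝ} (hg : ContDiff ℝ 1 g) (t x : ℝ) :
    HasDerivAt (fun y => g (t, y)) (pxF g (t, x)) x := by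
  have h1 : HasFDerivAt g (fderiv ℝ g (t, x)) (t, x) :=
    (hg.differentiable one_ne_zero _).hasFDerivAt
  have h2 : HasDerivAt (fun x : ℝ => (t, x)) (0, 1) x := by
    simpa using (hasDerivAt_const x t).prodMk (hasDerivAt_id x)
  exact h1.comp_hasDerivAt x h2

lemma pxF_contDiff {g : ℝ² → ℝ} (hg : ContDiff ℝ 2 g) : ContDiff ℝ 1 (pxF g) := by
  unfold pxF
  exact (hg.fderiv_right (m := 1) (by norm_num)).clm_apply contDiff_const

/-- Completing the square, pointwise under the integral. -/
lemma square_bound {L : ℝ} {g s φ : ℝ² → ℝ} (hg : Continuous g) (hs : Continuous s)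
    (hs0 : ∀ z : ℝ², z.1 ∈ Icc 0 T → 0 < s z)
    (hg0 : ∀ z : ℝ², z.1 ∈ Icc 0 T → L < |z.2| → g z = 0)
    (hφ : Continuous φ) (hφc : HasCompactSupport φ) :
    pair T g φ - 1 / 2 * pair T (fun z => s z * φ z) φ ≤
      ∫ z in strip T, g z ^ 2 / (2 * s z) := by
  have i1 := (L1loc.of_cont (T := T) hg).mul_strip hφ hφc
  have i2 : IntegrableOn (fun z => (fun z => s z * φ z) z * φ z)
      (strip T) :=
    (L1loc.of_cont (T := T) (hs.mul hφ)).mul_strip hφ hφc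
  have i3 : IntegrableOn (fun z => g z ^ 2 / (2 * s z)) (strip T) := by
    have : IntegrableOn (fun z => g z ^ 2 / (2 * s z)) (box T L) := by
      apply ContinuousOn.integrableOn_compact isCompact_box
      apply ContinuousOn.div (by fun_prop) (by fun_prop)
      intro z hz
      have := hs0 z hz.1
      positivity
    apply this.of_forall_sdiff_eq_zero measurableSet_strip
    rintro z ⟨h1, h2⟩
    have : g z = 0 := by grind
    simp [this]
  unfold pair
  rw [← integral_const_mul, ← integral_sub i1 (i2.const_mul _)]
  apply setIntegral_mono_on (i1.sub (i2.const_mul _)) i3 measurableSet_strip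
  intro z hz
  have := hs0 z hz.1
  rw [le_div_iff₀ (by positivity)]
  change (g z * φ z - 1 / 2 * (s z * φ z * φ z)) * (2 * s z) ≤ g z ^ 2
  nlinarith [sq_nonneg (g z - s z * φ z)]

/-- Every regular state with a single atom defines an element of the state space whose cost at
level `ε` is at most a quadratic polynomial in `ε` with the limiting cost as constant term. -/
lemma IsMS.realize {κ p L : ℝ} {b : ℝ² → ℝ} {lam : ℕ → ℝ² → ℝ}
    (hT : 0 < T) (hf : Continuous f) (hD : Continuous D) (hσ : Continuous σ)
    (hpos : ∀ v ∈ Ioo (0:ℝ) 1, 0 < σ v) (h : IsMS f T 1 b lam κ p L) :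
    ∃ (y : AA T) (β : ℝ² → ℝ), Rep y.1.1 β ∧ (∀ t ∈ Icc 0 T, ∀ x, β (t, x) = b (t, x)) ∧
      (∀ F g, pair T (y.1.2.mom F) g = pair T (av 1 F lam) g) ∧
      ∃ A B : ℝ, ∀ ε, 0 < ε →
        calJeps f D σ T ε y ≤ ENNReal.ofReal (mcost f σ T 1 b lam - ε * A + ε ^ 2 * B) := by
  set τ : ℝ → ℝ := fun t => projIcc 0 T hT.le t with hτ
  have hτc : Continuous τ := continuous_subtype_val.comp continuous_projIcc
  have hτm : ∀ t, τ t ∈ Icc 0 T := fun t => (projIcc 0 T hT.le t).2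
  have hτe : ∀ t ∈ Icc 0 T, τ t = t := fun t ht => by simp [hτ, projIcc_of_mem hT.le ht]
  have hb1 : ContDiff ℝ 1 b := h.smooth.of_le (by norm_num)
  set β : ℝ² → ℝ := fun z => b (τ z.1, z.2) with hβ
  set u : ℝ² → ℝ := fun z => pxF b (τ z.1, z.2) with hu
  have hsl : ∀ z : ℝ², z.1 ∈ Icc 0 T → pxF b z = lam 0 z := fun z hz => by
    rw [h.slope z hz, av_one]; rfl
  have hκ := h.κ0
  have hmem : ∀ z : ℝ², z.1 ∈ Icc 0 T → lam 0 z ∈ Ioo (0:ℝ) 1 := fun z hz => by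
    have := h.mem z hz 0 one_pos
    exact ⟨by linarith [this.1], by linarith [this.2]⟩
  have huo : ∀ z, u z ∈ Ioo (0:ℝ) 1 := fun z => by grind
  have hu1 : ∀ z, u z ∈ Icc (0:ℝ) 1 := fun z => Ioo_subset_Icc_self (huo z)
  have hβc : Continuous β := by fun_prop
  have huc : Continuous u := by
    have := pxF_cont hb1
    simp only [hu]; fun_prop
  have hus : ∀ z : ℝ², z.1 ∈ Icc 0 T → u z = lam 0 z := fun z hz => by grind
  have hub : ∀ z : ℝ², z.1 ∈ Icc 0 T → u z = pxF b z := fun z hz => by grind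
  have hprim : ∀ t x, β (t, x) = β (t, 0) + ∫ s in 0..x, u (t, s) := by
    intro t x
    have : ∫ s in 0..x, u (t, s) = b (τ t, x) - b (τ t, 0) := by
      apply intervalIntegral.integral_eq_sub_of_hasDerivAt
      · intro y _
        exact hasDerivAt_slice hb1 _ _
      · exact (Continuous.intervalIntegrable (by fun_prop) _ _)
    rw [this]; simp [hβ]
  have hlip : ∀ t x y, |β (t, x) - β (t, y)| ≤ |x - y| := by
    intro t x y
    refine prim_lip (w := fun s => u (t, s)) ?_ ?_ (hprim t) x y
    · exact Continuous.locallyIntegrable (by fun_prop)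
    · grind
  set H := mkHJ hβc huc.measurable hu1 (fun t _ => hprim t) with hH
  let Y : YM T :=
    { m := fun z => Measure.dirac (u z)
      prob := fun z => by infer_instance
      supp01 := fun z => by
        rw [Measure.dirac_apply' _ measurableSet_Icc.compl]
        simp only [indicator_apply_eq_zero]
        intro hz; exact absurd (hu1 z) hz
      meas := fun F hF => by
        simp only [integral_dirac]
        exact (hF.comp huc).measurable
      bar_mem := fun z => by simpa only [integral_dirac] using hu1 z
      bar_cont := by
        simp only [integral_dirac]
        exact H.ux.cont }
  have hmom : ∀ F z, Y.mom F z = F (u z) := fun F z => by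
    change ∫ l, F l ∂ Measure.dirac (u z) = _
    rw [integral_dirac]
  let y : AA T := ⟨(H, Y), by
    unfold APred
    exact .of_forall fun z => (hmom (fun l => l) z).symm⟩
  -- the weak second derivative
  have hbx := pxF_contDiff h.smooth
  have hbxx : Continuous (pxF (pxF b)) := pxF_cont hbx
  have hwk : HasWeakDx T u (pxF (pxF b)) := by
    intro φ
    rw [pair_congr_strip hub, pair_pxF hbx]
  have hdx : hasDx T u := ⟨_, ⟨hbxx.measurable, fun R _ =>
    (Continuous.continuousOn (by fun_prop)).integrableOn_compact isCompact_box⟩, hwk⟩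
  have hsw : ∀ φ : TTest T, pair T (fun z => D (u z) * wDx T u z) φ.toFun =
      pair T (fun z => D (u z) * pxF (pxF b) z) φ.toFun := by
    intro φ
    obtain ⟨C, _, P, _, _, hP⟩ := wDx_pair (T := T) hD.continuousOn
    have := wDx_spec hdx
    rw [hP u _ huc.measurable hu1 this.1.l1 this.2, hP u _ huc.measurable hu1
      (L1loc.of_cont hbxx) hwk]
  have hbt : Continuous (ptF b) := ptF_cont hb1
  set a : ℝ² → ℝ := fun z => ptF b z + f (u z) with ha
  set d : ℝ² → ℝ := fun z => D (u z) * pxF (pxF b) z with hd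
  set s : ℝ² → ℝ := fun z => σ (u z) with hs
  have hac : Continuous a := by simp only [ha]; fun_prop
  have hdc : Continuous d := by simp only [hd]; fun_prop
  have hsc : Continuous s := by simp only [hs]; fun_prop
  have hs0 : ∀ z, 0 < s z := fun z => hpos _ (huo z)
  have ha0 : ∀ z : ℝ², z.1 ∈ Icc 0 T → L < |z.2| → a z = 0 := by
    intro z hz hL
    simp only [ha]
    rw [h.out_t z hz hL.le, hus z hz, h.out_lam z hz hL.le 0 one_pos]; ring
  have hd0 : ∀ z : ℝ², z.1 ∈ Icc 0 T → L < |z.2| → d z = 0 := by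
    rintro ⟨t, x⟩ hz hL
    have h1 := hasDerivAt_slice hbx t x
    have h2 : (fun y => pxF b (t, y)) =ᶠ[𝓝 x] fun _ => p := by
      filter_upwards [continuous_abs.continuousAt.eventually (lt_mem_nhds hL)] with y hy
      rw [hsl (t, y) hz, h.out_lam (t, y) hz hy.le 0 one_pos]
    have h3 := (hasDerivAt_const x p).congr_of_eventuallyEq h2
    simp only [hd]
    rw [h1.unique h3, mul_zero]
  have hkey : ∀ ε, ∀ φ : TTest T, JexprW f D σ T ε H.b H.ux.toFun (wDx T H.ux.toFun) φ ≤
      ∫ z in strip T, (a z - ε / 2 * d z) ^ 2 / (2 * s z) := by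
    intro ε φ
    refine le_trans (le_of_eq ?_) (square_bound (L := L) (g := fun z => a z - ε / 2 * d z)
      (hac.sub (hdc.const_mul _)) hsc (fun z _ => hs0 z) (fun z h1 h2 => by grind) φ.cont φ.cpt)
    change - pair T β (ptF φ.toFun) + pair T (fun z => f (u z)) φ.toFun
      - ε / 2 * pair T (fun z => D (u z) * wDx T u z) φ.toFun
      - 1 / 2 * pair T (fun z => σ (u z) * φ.toFun z) φ.toFun = _
    rw [pair_congr_strip (g := β) (g' := b) fun z hz => by simp only [hβ]; rw [hτe _ hz],
      pair_ptF hb1, hsw φ, pair_sub_left (L1loc.of_cont hac) (L1loc.of_cont (hdc.const_mul _))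
      φ.cont φ.cpt, pair_add_left (L1loc.of_cont hbt) (L1loc.of_cont (by fun_prop)) φ.cont φ.cpt]
    have : pair T (fun z => ε / 2 * d z) φ.toFun = ε / 2 * pair T d φ.toFun := by
      unfold pair
      rw [← integral_const_mul]
      congr 1; ext z; ring
    rw [this]; ring
  -- integrability of the coefficients of the polynomial in `ε`
  have hInt : ∀ k : ℝ² → ℝ, Continuous k → (∀ z : ℝ², z.1 ∈ Icc 0 T → L < |z.2| → k z = 0) →
      IntegrableOn (fun z => k z / (2 * s z)) (strip T) := by
    intro k hk hk0
    have : IntegrableOn (fun z => k z / (2 * s z)) (box T L) :=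
      (Continuous.continuousOn (hk.div (by fun_prop) fun z => by grind)).integrableOn_compact isCompact_box
    apply this.of_forall_sdiff_eq_zero measurableSet_strip
    rintro z ⟨h1, h2⟩
    rw [hk0 z h1.1, zero_div]
    by_contra h
    exact h2 ⟨h1.1, abs_le.1 (not_lt.1 h)⟩
  have j1 := hInt (fun z => a z ^ 2) (by fun_prop) fun z h1 h2 => by simp [ha0 z h1 h2]
  have j2 := hInt (fun z => a z * d z) (by fun_prop) fun z h1 h2 => by simp [ha0 z h1 h2]
  have j3 := hInt (fun z => d z ^ 2 / 4) (by fun_prop) fun z h1 h2 => by simp [hd0 z h1 h2]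
  refine ⟨y, β, mkHJ_rep hβc huc.measurable hu1 (fun t _ => hprim t) hlip, ?_, ?_,
    ∫ z in strip T, a z * d z / (2 * s z),
    ∫ z in strip T, d z ^ 2 / 4 / (2 * s z), ?_⟩
  · grind
  · intro F g
    apply pair_congr_strip
    intro z hz
    rw [av_one, ← hus z hz]
    exact hmom F z
  · intro ε hε
    have hy : ∀ z, y.1.2.m z = Measure.dirac (y.1.1.ux.toFun z) := fun z => rfl
    unfold calJeps
    rw [if_pos hy]
    unfold Jeps
    rw [if_pos (show hasDx T y.1.1.ux.toFun from hdx)]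
    apply iSup_le
    intro φ
    apply ENNReal.ofReal_le_ofReal
    refine (hkey ε φ).trans (le_of_eq ?_)
    have hm : mcost f σ T 1 b lam =
        ∫ z in strip T, a z ^ 2 / (2 * s z) := by
      unfold mcost
      apply setIntegral_congr_fun measurableSet_strip
      intro z hz
      simp only [ha, hs, av_one, hus z hz.1]
    have j4 : IntegrableOn (fun z => a z ^ 2 / (2 * s z) - ε * (a z * d z / (2 * s z)))
        (strip T) := j1.sub (j2.const_mul _)
    rw [hm, ← integral_const_mul, ← integral_const_mul, ← integral_sub j1 (j2.const_mul _),
      ← integral_add j4 (j3.const_mul _)]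
    congr 1; ext z
    have := hs0 z
    field_simp
    ring

/-! ### Hat functions and moment functionals -/

/-- Truncation of a real number to `[0,1]`. -/
def cl (x : ℝ) : ℝ := max 0 (min 1 x)

lemma cl_cont : Continuous cl := by unfold cl; fun_prop

lemma cl_nonneg (x : ℝ) : 0 ≤ cl x := le_max_left _ _

lemma cl_le_one (x : ℝ) : cl x ≤ 1 := max_le zero_le_one (min_le_left _ _)

lemma cl_mono {x y : ℝ} (h : x ≤ y) : cl x ≤ cl y :=
  max_le_max le_rfl (min_le_min le_rfl h)

lemma cl_of_nonpos {x : ℝ} (h : x ≤ 0) : cl x = 0 := by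
  unfold cl
  rw [min_eq_right (by linarith), max_eq_left h]

lemma cl_of_one_le {x : ℝ} (h : 1 ≤ x) : cl x = 1 := by
  unfold cl
  rw [min_eq_left h, max_eq_right zero_le_one]

lemma cl_of_mem {x : ℝ} (h0 : 0 ≤ x) (h1 : x ≤ 1) : cl x = x := by
  unfold cl
  rw [min_eq_right h1, max_eq_right h0]

lemma sum_cl (n : ℕ) : ∀ y : ℝ, 0 ≤ y → y ≤ n → ∑ i ∈ Finset.range n, cl (y - i) = y := by
  induction n with
  | zero => intro y h0 h1; simp at h1 ⊢; linarith
  | succ n ih =>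
    intro y h0 h1
    push_cast at h1
    rw [Finset.sum_range_succ]
    rcases le_total y n with h | h
    · rw [ih y h0 h, cl_of_nonpos (by linarith), add_zero]
    · have : ∑ i ∈ Finset.range n, cl (y - i) = n := by
        rw [Finset.sum_congr rfl (g := fun _ => (1:ℝ))]
        · simp
        · intro i hi
          apply cl_of_one_le
          have : (i:ℝ) + 1 ≤ n := by exact_mod_cast Finset.mem_range.1 hi
          linarith
      rw [this, cl_of_mem (by linarith) (by linarith)]
      ring

/-- The piecewise linear hat function of the grid `{0, 1/n, …, 1}` centred at `j/n`. -/
def hat (n j : ℕ) (l : ℝ) : ℝ := cl (n * l - j + 1) - cl (n * l - j)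

lemma hat_cont (n j : ℕ) : Continuous (hat n j) := by
  unfold hat
  exact (cl_cont.comp (by fun_prop)).sub (cl_cont.comp (by fun_prop))

lemma hat_nonneg (n j : ℕ) (l : ℝ) : 0 ≤ hat n j l := by
  unfold hat
  linarith [cl_mono (show n * l - j ≤ n * l - j + 1 by linarith)]

lemma sum_hat {n : ℕ} {l : ℝ} (hl : l ∈ Icc (0:ℝ) 1) :
    ∑ j ∈ Finset.range (n + 1), hat n j l = 1 := by
  have h : ∀ m : ℕ, ∑ j ∈ Finset.range (m + 1), hat n j l = 1 - cl (n * l - m) := by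
    intro m
    have h0 : (0:ℝ) ≤ n * l := mul_nonneg (Nat.cast_nonneg n) hl.1
    induction m with
    | zero =>
      simp only [zero_add, Finset.sum_range_one, hat, Nat.cast_zero, sub_zero]
      rw [cl_of_one_le (by linarith)]
    | succ m ih =>
      rw [Finset.sum_range_succ, ih, hat]
      push_cast
      rw [show (n:ℝ) * l - (m + 1) + 1 = n * l - m by ring]
      ring
  rw [h n, cl_of_nonpos, sub_zero]
  have := mul_le_mul_of_nonneg_left hl.2 (Nat.cast_nonneg (α := ℝ) n)
  linarith

lemma sum_hat_mul {n : ℕ} (hn : 0 < n) {l : ℝ} (hl : l ∈ Icc (0:ℝ) 1) :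
    ∑ j ∈ Finset.range (n + 1), hat n j l * ((j:ℝ) / n) = l := by
  have hn' : (0:ℝ) < n := by exact_mod_cast hn
  have h : ∀ m : ℕ, ∑ j ∈ Finset.range (m + 1), hat n j l * j =
      ∑ j ∈ Finset.range m, cl (n * l - j) - m * cl (n * l - m) := by
    intro m
    induction m with
    | zero => simp
    | succ m ih =>
      rw [Finset.sum_range_succ, ih, hat, Finset.sum_range_succ]
      push_cast
      rw [show (n:ℝ) * l - (m + 1) + 1 = n * l - m by ring]
      ring
  have h1 : (n:ℝ) * l ≤ n := by simp_all
  have h2 := h n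
  rw [sum_cl n _ (mul_nonneg hn'.le hl.1) h1, cl_of_nonpos (by linarith), mul_zero, sub_zero] at h2
  simp only [← mul_div_assoc]
  rw [← Finset.sum_div, h2]
  field_simp

lemma hat_local {n j : ℕ} (hn : 0 < n) {l : ℝ} (h : hat n j l ≠ 0) : |(j:ℝ) / n - l| ≤ 1 / n := by
  have hn' : (0:ℝ) < n := by exact_mod_cast hn
  have : |(j:ℝ) - n * l| ≤ 1 := by
    by_contra hc
    apply h
    unfold hat
    rcases lt_abs.1 (not_le.1 hc) with h1 | h1
    · rw [cl_of_nonpos (by linarith), cl_of_nonpos (by linarith), sub_zero]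
    · rw [cl_of_one_le (by linarith), cl_of_one_le (by linarith), sub_self]
  rw [show (j:ℝ) / n - l = (j - n * l) / n by field_simp, abs_div, abs_of_pos hn']
  gcongr

lemma hat_node {n j k : ℕ} (hn : 0 < n) : hat n j ((k:ℝ) / n) = if j = k then 1 else 0 := by
  have hn' : (0:ℝ) < n := by exact_mod_cast hn
  unfold hat
  rw [mul_div_cancel₀ _ hn'.ne']
  rcases lt_trichotomy j k with h | h | h
  · have : (j:ℝ) + 1 ≤ k := by exact_mod_cast h
    rw [cl_of_one_le (by linarith), cl_of_one_le (by linarith), if_neg h.ne, sub_self]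
  · rw [h, if_pos rfl, cl_of_one_le (by linarith), cl_of_nonpos (by linarith), sub_zero]
  · have : (k:ℝ) + 1 ≤ j := by exact_mod_cast h
    rw [cl_of_nonpos (by linarith), cl_of_nonpos (by linarith), if_neg h.ne', sub_zero]

/-- A modulus of uniform continuity on `[0,1]`. -/
lemma exists_unif01 {F : ℝ → ℝ} (hF : Continuous F) {η : ℝ} (hη : 0 < η) :
    ∃ r > 0, ∀ x ∈ Icc (0:ℝ) 1, ∀ y ∈ Icc (0:ℝ) 1, |x - y| ≤ r → |F x - F y| ≤ η := by
  have := (isCompact_Icc (a := (0:ℝ)) (b := 1)).uniformContinuousOn_of_continuous hF.continuousOn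
  rw [Metric.uniformContinuousOn_iff] at this
  obtain ⟨r, hr, h⟩ := this η hη
  refine ⟨r / 2, by positivity, fun x hx y hy hxy => (h x hx y hy ?_).le⟩
  rw [dist_eq]; linarith

/-- Piecewise linear interpolation converges uniformly at the rate of the modulus of
continuity. -/
lemma hat_interp {F : ℝ → ℝ} {n : ℕ} (hn : 0 < n) {r η : ℝ}
    (hr : ∀ x ∈ Icc (0:ℝ) 1, ∀ y ∈ Icc (0:ℝ) 1, |x - y| ≤ r → |F x - F y| ≤ η)
    (hnr : 1 / (n:ℝ) ≤ r) {l : ℝ} (hl : l ∈ Icc (0:ℝ) 1) :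
    |∑ j ∈ Finset.range (n + 1), hat n j l * F ((j:ℝ) / n) - F l| ≤ η := by
  have hn' : (0:ℝ) < n := by exact_mod_cast hn
  have e : F l = ∑ j ∈ Finset.range (n + 1), hat n j l * F l := by
    rw [← Finset.sum_mul, sum_hat hl, one_mul]
  rw [e, ← Finset.sum_sub_distrib]
  calc |∑ j ∈ Finset.range (n + 1), (hat n j l * F ((j:ℝ) / n) - hat n j l * F l)|
      ≤ ∑ j ∈ Finset.range (n + 1), |hat n j l * F ((j:ℝ) / n) - hat n j l * F l| :=
        Finset.abs_sum_le_sum_abs _ _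
    _ ≤ ∑ j ∈ Finset.range (n + 1), hat n j l * η := by
        apply Finset.sum_le_sum
        intro j hj
        rw [← mul_sub, abs_mul, abs_of_nonneg (hat_nonneg n j l)]
        by_cases h : hat n j l = 0
        · rw [h]; simp
        · apply mul_le_mul_of_nonneg_left _ (hat_nonneg n j l)
          have hj' : (j:ℝ) ≤ n := by exact_mod_cast Nat.lt_succ_iff.1 (Finset.mem_range.1 hj)
          exact hr _ ⟨by positivity, by rwa [div_le_one hn']⟩ _ hl ((hat_local hn h).trans hnr)
    _ = η := by rw [← Finset.sum_mul, sum_hat hl, one_mul]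

/-- The moments of a continuous field of probability measures on `[0,1]`: a positive, unital,
linear functional on continuous functions at each point, depending continuously on the point. -/
structure IsMomF (M : (ℝ → ℝ) → ℝ² → ℝ) : Prop where
  cont : ∀ F, Continuous F → Continuous (M F)
  add : ∀ F G, Continuous F → Continuous G → ∀ z, M (fun l => F l + G l) z = M F z + M G z
  smul : ∀ (a : ℝ) F, Continuous F → ∀ z, M (fun l => a * F l) z = a * M F z
  mono : ∀ F G, Continuous F → Continuous G → (∀ l ∈ Icc (0:ℝ) 1, F l ≤ G l) → ∀ z, M F z ≤ M G z
  one : ∀ z, M (fun _ => 1) z = 1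

lemma IsMomF.const {M : (ℝ → ℝ) → ℝ² → ℝ} (hM : IsMomF M) (c : ℝ) (z : ℝ²) :
    M (fun _ => c) z = c := by
  have := hM.smul c (fun _ => 1) continuous_const z
  simpa [hM.one] using this

lemma IsMomF.sum {M : (ℝ → ℝ) → ℝ² → ℝ} (hM : IsMomF M) (m : ℕ) (F : ℕ → ℝ → ℝ)
    (hF : ∀ j, Continuous (F j)) (a : ℕ → ℝ) (z : ℝ²) :
    M (fun l => ∑ j ∈ Finset.range m, F j l * a j) z =
      ∑ j ∈ Finset.range m, M (F j) z * a j := by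
  induction m with
  | zero => simpa using hM.const 0 z
  | succ m ih =>
    simp only [Finset.sum_range_succ]
    rw [hM.add _ _ (continuous_finset_sum _ fun j _ => (hF j).mul_const _) ((hF m).mul_const _), ih]
    have := hM.smul (a m) (F m) (hF m) z
    rw [show (fun l => F m l * a m) = fun l => a m * F m l by ext l; ring, this]
    ring

lemma IsMomF.congr {M : (ℝ → ℝ) → ℝ² → ℝ} (hM : IsMomF M) {F G : ℝ → ℝ} (hF : Continuous F)
    (hG : Continuous G) (h : ∀ l ∈ Icc (0:ℝ) 1, F l = G l) (z : ℝ²) : M F z = M G z :=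
  le_antisymm (hM.mono F G hF hG (fun l hl => (h l hl).le) z)
    (hM.mono G F hG hF (fun l hl => (h l hl).ge) z)

lemma IsMomF.close {M : (ℝ → ℝ) → ℝ² → ℝ} (hM : IsMomF M) {F G : ℝ → ℝ} (hF : Continuous F)
    (hG : Continuous G) {η : ℝ} (h : ∀ l ∈ Icc (0:ℝ) 1, |F l - G l| ≤ η) (z : ℝ²) :
    |M F z - M G z| ≤ η := by
  have h1 := hM.mono F (fun l => G l + η) hF (by fun_prop)
    (fun l hl => by linarith [(abs_le.1 (h l hl)).2]) z
  have h2 := hM.mono G (fun l => F l + η) hG (by fun_prop)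
    (fun l hl => by linarith [(abs_le.1 (h l hl)).1]) z
  rw [hM.add G (fun _ => η) hG continuous_const, hM.const] at h1
  rw [hM.add F (fun _ => η) hF continuous_const, hM.const] at h2
  exact abs_le.2 ⟨by linarith, by linarith⟩

/-! ### Discretization of a moment functional into equally weighted atoms -/

/-- Cumulative weights. -/
def cumW (w : ℕ → ℝ) (j : ℕ) : ℝ := ∑ k ∈ Finset.range j, w k

/-- Fraction of the `i`-th of `N` equal cells of `[0,1]` lying in the `j`-th interval of the
partition of `[0,1]` with lengths `w`. -/
def qw (N : ℕ) (w : ℕ → ℝ) (i j : ℕ) : ℝ := cl (N * cumW w (j + 1) - i) - cl (N * cumW w j - i)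

section Weights
variable {n N : ℕ} {w : ℕ → ℝ}

lemma cumW_succ (w : ℕ → ℝ) (j : ℕ) : cumW w (j + 1) = cumW w j + w j := Finset.sum_range_succ _ _

lemma cumW_mem (h0 : ∀ j, 0 ≤ w j) (h1 : cumW w (n + 1) = 1) {j : ℕ} (hj : j ≤ n + 1) :
    cumW w j ∈ Icc (0:ℝ) 1 := by
  refine ⟨Finset.sum_nonneg fun k _ => h0 k, ?_⟩
  rw [← h1]
  exact Finset.sum_le_sum_of_subset_of_nonneg (Finset.range_mono hj) fun k _ _ => h0 k

lemma qw_nonneg (h0 : ∀ j, 0 ≤ w j) (i j : ℕ) : 0 ≤ qw N w i j := by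
  unfold qw
  have : (N:ℝ) * cumW w j - i ≤ N * cumW w (j + 1) - i := by
    rw [cumW_succ]
    have := mul_nonneg (Nat.cast_nonneg (α := ℝ) N) (h0 j)
    linarith
  linarith [cl_mono this]

lemma sum_qw (h1 : cumW w (n + 1) = 1) {i : ℕ} (hi : i < N) :
    ∑ j ∈ Finset.range (n + 1), qw N w i j = 1 := by
  unfold qw
  rw [Finset.sum_range_sub (fun j => cl (N * cumW w j - i)), h1]
  have h2 : (i:ℝ) + 1 ≤ N := by exact_mod_cast hi
  have h3 : cumW w 0 = 0 := by simp [cumW]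
  rw [h3, cl_of_one_le (by linarith), cl_of_nonpos (by simp), sub_zero]

lemma sum_qw' (h0 : ∀ j, 0 ≤ w j) (h1 : cumW w (n + 1) = 1) {j : ℕ} (hj : j < n + 1) :
    ∑ i ∈ Finset.range N, qw N w i j = N * w j := by
  unfold qw
  have hN := Nat.cast_nonneg (α := ℝ) N
  have key : ∀ k ≤ n + 1, ∑ i ∈ Finset.range N, cl (N * cumW w k - i) = N * cumW w k := by
    intro k hk
    have := cumW_mem h0 h1 hk
    exact sum_cl N _ (mul_nonneg hN this.1) (by nlinarith [this.2])
  rw [Finset.sum_sub_distrib, key _ hj, key _ hj.le, cumW_succ]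
  ring

/-- A weighted average over atoms `x j` is replaced by an unweighted one over cell averages;
only the cells cut by an endpoint of the partition contribute to the error. -/
lemma weights_error (hN : 0 < N) (h0 : ∀ j, 0 ≤ w j) (h1 : cumW w (n + 1) = 1) {x : ℕ → ℝ}
    (hx : ∀ j < n + 1, x j ∈ Icc (0:ℝ) 1) {F : ℝ → ℝ} {C : ℝ} (hC : ∀ l ∈ Icc (0:ℝ) 1, |F l| ≤ C) :
    |(∑ i ∈ Finset.range N, F (∑ j ∈ Finset.range (n + 1), qw N w i j * x j)) / N -
      ∑ j ∈ Finset.range (n + 1), w j * F (x j)| ≤ 2 * C * (n + 2) / N := by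
  have hN' : (0:ℝ) < N := by exact_mod_cast hN
  have hC0 : 0 ≤ C := (abs_nonneg _).trans (hC 0 ⟨le_rfl, zero_le_one⟩)
  set ind : ℕ → ℕ → ℝ := fun i j =>
    if (0:ℝ) < cl (N * cumW w j - i) ∧ cl (N * cumW w j - i) < 1 then 1 else 0 with hind
  have hind0 : ∀ i j, 0 ≤ ind i j := fun i j => by simp only [hind]; split_ifs <;> norm_num
  have hcell : ∀ j, ∑ i ∈ Finset.range N, ind i j ≤ 1 := by
    intro j
    simp only [hind]
    rw [← Finset.sum_filter, Finset.sum_const, nsmul_eq_mul, mul_one]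
    have : ((Finset.range N).filter fun i : ℕ =>
        (0:ℝ) < cl (N * cumW w j - i) ∧ cl (N * cumW w j - i) < 1).card ≤ 1 := by
      rw [Finset.card_le_one]
      have hb : ∀ i : ℕ, (0:ℝ) < cl (N * cumW w j - i) ∧ cl (N * cumW w j - i) < 1 →
          (i:ℝ) < N * cumW w j ∧ (N:ℝ) * cumW w j < i + 1 := by
        rintro i ⟨ha, hb⟩
        constructor
        · by_contra h
          rw [cl_of_nonpos (by linarith)] at ha; exact lt_irrefl _ ha
        · by_contra h
          rw [cl_of_one_le (by linarith)] at hb; exact lt_irrefl _ hb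
      intro a ha b hbb
      obtain ⟨a1, a2⟩ := hb a (Finset.mem_filter.1 ha).2
      obtain ⟨b1, b2⟩ := hb b (Finset.mem_filter.1 hbb).2
      have c1 : (a:ℝ) < b + 1 := by linarith
      have c2 : (b:ℝ) < a + 1 := by linarith
      norm_cast at c1 c2
      omega
    exact_mod_cast this
  have hconv : ∀ i < N, (∑ j ∈ Finset.range (n + 1), qw N w i j * x j) ∈ Icc (0:ℝ) 1 := by
    intro i hi
    constructor
    · exact Finset.sum_nonneg fun j hj => mul_nonneg (qw_nonneg h0 i j)
        (hx j (Finset.mem_range.1 hj)).1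
    · rw [← sum_qw (N := N) h1 hi]
      apply Finset.sum_le_sum
      intro j hj
      have := (hx j (Finset.mem_range.1 hj)).2
      nlinarith [qw_nonneg (N := N) h0 i j]
  have hterm : ∀ i < N, |F (∑ j ∈ Finset.range (n + 1), qw N w i j * x j) -
      ∑ j ∈ Finset.range (n + 1), qw N w i j * F (x j)| ≤
      2 * C * ∑ j ∈ Finset.range (n + 2), ind i j := by
    intro i hi
    by_cases hbad : ∃ j < n + 2, ind i j = 1
    · obtain ⟨j, hj, hij⟩ := hbad
      have hs : 1 ≤ ∑ j ∈ Finset.range (n + 2), ind i j := by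
        rw [← hij]
        exact Finset.single_le_sum (f := fun j => ind i j) (fun k _ => hind0 i k)
          (Finset.mem_range.2 hj)
      have e1 := hC _ (hconv i hi)
      have e2 : |∑ j ∈ Finset.range (n + 1), qw N w i j * F (x j)| ≤ C := by
        calc _ ≤ ∑ j ∈ Finset.range (n + 1), |qw N w i j * F (x j)| :=
              Finset.abs_sum_le_sum_abs _ _
          _ ≤ ∑ j ∈ Finset.range (n + 1), qw N w i j * C := by
              apply Finset.sum_le_sum
              intro j hj
              rw [abs_mul, abs_of_nonneg (qw_nonneg h0 i j)]
              exact mul_le_mul_of_nonneg_left (hC _ (hx j (Finset.mem_range.1 hj)))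
                (qw_nonneg h0 i j)
          _ = C := by rw [← Finset.sum_mul, sum_qw h1 hi, one_mul]
      calc _ ≤ C + C := (abs_sub _ _).trans (add_le_add e1 e2)
        _ ≤ _ := by nlinarith
    · push Not at hbad
      have hv : ∀ j < n + 2, cl (N * cumW w j - i) = 0 ∨ cl (N * cumW w j - i) = 1 := by
        intro j hj
        have := hbad j hj
        by_contra hc
        push Not at hc
        apply this
        simp only [hind]
        rw [if_pos]
        exact ⟨lt_of_le_of_ne (cl_nonneg _) hc.1.symm, lt_of_le_of_ne (cl_le_one _) hc.2⟩
      have hq : ∀ j < n + 1, qw N w i j = 0 ∨ qw N w i j = 1 := by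
        intro j hj
        have hn := qw_nonneg (N := N) h0 i j
        unfold qw at hn ⊢
        rcases hv j (by omega) with h | h <;> rcases hv (j + 1) (by omega) with h' | h' <;>
          rw [h, h'] at hn ⊢ <;>
          first | (left; linarith) | (right; linarith) | (exfalso; linarith)
      have hsum := sum_qw (N := N) h1 hi
      obtain ⟨j, hj, hj1⟩ : ∃ j ∈ Finset.range (n + 1), qw N w i j ≠ 0 :=
        Finset.exists_ne_zero_of_sum_ne_zero (by rw [hsum]; norm_num)
      have hj1' : qw N w i j = 1 := (hq j (Finset.mem_range.1 hj)).resolve_left hj1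
      have hz : ∀ k ∈ Finset.range (n + 1), k ≠ j → qw N w i k = 0 := by
        rw [← Finset.add_sum_erase _ _ hj, hj1'] at hsum
        have hs0 : ∑ k ∈ (Finset.range (n + 1)).erase j, qw N w i k = 0 := by linarith
        intro k hk hkj
        exact (Finset.sum_eq_zero_iff_of_nonneg fun k _ => qw_nonneg h0 i k).1 hs0 k
          (Finset.mem_erase.2 ⟨hkj, hk⟩)
      have hone : ∀ G : ℕ → ℝ, ∑ k ∈ Finset.range (n + 1), qw N w i k * G k = G j := by
        intro G
        rw [Finset.sum_eq_single j (fun k hk hkj => by rw [hz k hk hkj, zero_mul])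
          (fun h => absurd hj h), hj1', one_mul]
      rw [hone, hone (fun k => F (x k)), sub_self, abs_zero]
      exact mul_nonneg (by positivity) (Finset.sum_nonneg fun k _ => hind0 i k)
  have hrew : ∑ j ∈ Finset.range (n + 1), w j * F (x j) =
      (∑ i ∈ Finset.range N, ∑ j ∈ Finset.range (n + 1), qw N w i j * F (x j)) / N := by
    rw [Finset.sum_comm, eq_div_iff hN'.ne', Finset.sum_mul]
    apply Finset.sum_congr rfl
    intro j hj
    rw [← Finset.sum_mul, sum_qw' h0 h1 (Finset.mem_range.1 hj)]
    ring
  rw [hrew, ← sub_div, abs_div, abs_of_pos hN', ← Finset.sum_sub_distrib]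
  gcongr
  calc _ ≤ ∑ i ∈ Finset.range N, |F (∑ j ∈ Finset.range (n + 1), qw N w i j * x j) -
        ∑ j ∈ Finset.range (n + 1), qw N w i j * F (x j)| := Finset.abs_sum_le_sum_abs _ _
    _ ≤ ∑ i ∈ Finset.range N, 2 * C * ∑ j ∈ Finset.range (n + 2), ind i j :=
        Finset.sum_le_sum fun i hi => hterm i (Finset.mem_range.1 hi)
    _ = 2 * C * ∑ j ∈ Finset.range (n + 2), ∑ i ∈ Finset.range N, ind i j := by
        rw [← Finset.mul_sum, Finset.sum_comm]
    _ ≤ 2 * C * ∑ j ∈ Finset.range (n + 2), 1 := by bound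
    _ = 2 * C * (n + 2) := by simp

end Weights

/-- Continuous moment functionals are uniformly approximated, on finitely many functions, by
averages over equally many continuous atoms with exactly the same barycenter; the atoms stay
inside `(0,1)` and degenerate to `p` wherever the functional is the evaluation at `p`. -/
lemma IsMomF.discretize {M : (ℝ → ℝ) → ℝ² → ℝ} (hM : IsMomF M) {κ₀ p : ℝ} (hκ₀ : 0 < κ₀)
    {q : ℕ} (hq : 0 < q) (hp : p = 1 / (q:ℝ)) {ι : Type*} [Finite ι] {F : ι → ℝ → ℝ}
    (hF : ∀ k, Continuous (F k)) {η : ℝ} (hη : 0 < η) :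
    ∃ (m : ℕ) (κ : ℝ) (lam : ℕ → ℝ² → ℝ), 0 < κ ∧ (∀ i, Continuous (lam i)) ∧
      (∀ z, M id z ∈ Icc κ₀ (1 - κ₀) → ∀ i < 2 ^ m, lam i z ∈ Icc κ (1 - κ)) ∧
      (∀ z, av (2 ^ m) id lam z = M id z) ∧
      (∀ k z, |av (2 ^ m) (F k) lam z - M (F k) z| ≤ η) ∧
      ∀ z, (∀ G, Continuous G → M G z = G p) → ∀ i < 2 ^ m, lam i z = p := by
  -- common modulus of continuity and common bound
  have e1 : ∀ᶠ r in 𝓝[>] (0:ℝ), ∀ k, ∀ x ∈ Icc (0:ℝ) 1, ∀ y ∈ Icc (0:ℝ) 1, |x - y| ≤ r →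
      |F k x - F k y| ≤ η / 3 := by
    rw [eventually_all]
    intro k
    obtain ⟨r, hr, h⟩ := exists_unif01 (hF k) (show 0 < η / 3 by positivity)
    filter_upwards [Ioo_mem_nhdsGT hr] with r' hr' x hx y hy hxy
    exact h x hx y hy (hxy.trans hr'.2.le)
  obtain ⟨r, hr, hr0, hr1⟩ := (e1.and (Ioo_mem_nhdsGT (zero_lt_one (α := ℝ)))).exists
  have e2 : ∀ᶠ C in atTop, ∀ k, ∀ x ∈ Icc (0:ℝ) 1, |F k x| ≤ C := by
    rw [eventually_all]
    intro k
    obtain ⟨C, _, h⟩ := exists_bd01 (hF k).continuousOn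
    filter_upwards [eventually_ge_atTop C] with C' hC' x hx
    exact (h x hx).trans hC'
  obtain ⟨C, hC, hC0⟩ := (e2.and (eventually_ge_atTop 0)).exists
  obtain ⟨s, hs⟩ := exists_nat_gt (1 / r)
  have hs0 : (0:ℝ) < s := lt_trans (by positivity) hs
  have hs0' : 0 < s := by exact_mod_cast hs0
  set n := q * s with hn
  have hn0 : 0 < n := Nat.mul_pos hq hs0'
  have hn' : (0:ℝ) < n := by exact_mod_cast hn0
  have hnr : 1 / (n:ℝ) ≤ r := by
    have h1 : (s:ℝ) ≤ n := by exact_mod_cast Nat.le_mul_of_pos_left s hq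
    calc 1 / (n:ℝ) ≤ 1 / s := one_div_le_one_div_of_le hs0 h1
      _ ≤ r := by
        rw [div_lt_iff₀ hr0] at hs
        rw [div_le_iff₀ hs0]; linarith
  obtain ⟨m, hm⟩ := pow_unbounded_of_one_lt (2 * C * (n + 2) / (η / 3)) (one_lt_two (α := ℝ))
  set N := 2 ^ m with hN
  have hN0 : 0 < N := by positivity
  have hN' : (0:ℝ) < N := by exact_mod_cast hN0
  have herr : 2 * C * (n + 2) / N ≤ η / 3 := by
    rw [div_lt_iff₀ (by positivity)] at hm
    rw [div_le_iff₀ hN']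
    have : (N:ℝ) = 2 ^ m := by simp [hN]
    rw [this]; linarith
  set w : ℝ² → ℕ → ℝ := fun z j => M (hat n j) z with hw
  have hwc : ∀ j, Continuous fun z => w z j := fun j => hM.cont _ (hat_cont n j)
  have hw0 : ∀ z j, 0 ≤ w z j := by
    intro z j
    have := hM.mono (fun _ => 0) _ continuous_const (hat_cont n j) (fun l _ => hat_nonneg n j l) z
    rwa [hM.const] at this
  have hw1 : ∀ z, cumW (w z) (n + 1) = 1 := by
    intro z
    have h1 := hM.sum (n + 1) (hat n) (hat_cont n) (fun _ => 1) z
    simp only [mul_one] at h1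
    unfold cumW
    rw [← h1, hM.congr (G := fun _ => 1) (continuous_finset_sum _ fun j _ => hat_cont n j)
      continuous_const (fun l hl => sum_hat hl), hM.one]
  have hwbar : ∀ z, ∑ j ∈ Finset.range (n + 1), w z j * ((j:ℝ) / n) = M id z := by
    intro z
    rw [← hM.sum (n + 1) (hat n) (hat_cont n) (fun j => (j:ℝ) / n) z]
    exact hM.congr (continuous_finset_sum _ fun j _ => (hat_cont n j).mul_const _)
      continuous_id (fun l hl => sum_hat_mul hn0 hl) z
  have hx : ∀ j < n + 1, (j:ℝ) / n ∈ Icc (0:ℝ) 1 := by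
    intro j hj
    have : (j:ℝ) ≤ n := by exact_mod_cast Nat.lt_succ_iff.1 hj
    exact ⟨by positivity, by rwa [div_le_one hn']⟩
  -- raw atoms
  set la : ℕ → ℝ² → ℝ := fun i z =>
    ∑ j ∈ Finset.range (n + 1), qw N (w z) i j * ((j:ℝ) / n) with hla
  have hlac : ∀ i, Continuous (la i) := by
    intro i
    have hcum : ∀ j, Continuous fun z => cumW (w z) j := fun j =>
      continuous_finset_sum _ fun k _ => hwc k
    apply continuous_finset_sum
    intro j _
    apply Continuous.mul_const
    unfold qw
    exact (cl_cont.comp ((continuous_const.mul (hcum _)).sub continuous_const)).sub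
      (cl_cont.comp ((continuous_const.mul (hcum _)).sub continuous_const))
  have hla01 : ∀ z, ∀ i < N, la i z ∈ Icc (0:ℝ) 1 := by
    intro z i hi
    constructor
    · exact Finset.sum_nonneg fun j hj => mul_nonneg (qw_nonneg (hw0 z) i j)
        (hx j (Finset.mem_range.1 hj)).1
    · rw [← sum_qw (N := N) (hw1 z) hi]
      apply Finset.sum_le_sum
      intro j hj
      have := (hx j (Finset.mem_range.1 hj)).2
      nlinarith [qw_nonneg (N := N) (hw0 z) i j]
  have hlabar : ∀ z, av N id la z = M id z := by
    intro z
    rw [← hwbar z]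
    unfold av
    simp only [id, hla]
    rw [Finset.sum_comm, div_eq_iff hN'.ne', Finset.sum_mul]
    apply Finset.sum_congr rfl
    intro j hj
    rw [← Finset.sum_mul, sum_qw' (hw0 z) (hw1 z) (Finset.mem_range.1 hj)]
    ring
  have hMid : ∀ z, M id z ∈ Icc (0:ℝ) 1 := by
    intro z
    have h1 := hM.mono (fun _ => 0) id continuous_const continuous_id (fun l hl => hl.1) z
    have h2 := hM.mono id (fun _ => 1) continuous_id continuous_const (fun l hl => hl.2) z
    rw [hM.const] at h1 h2
    exact ⟨h1, h2⟩
  -- contraction towards the barycenter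
  set lam : ℕ → ℝ² → ℝ := fun i z => (1 - r) * la i z + r * M id z with hlam
  have hlam01 : ∀ z, ∀ i < N, lam i z ∈ Icc (0:ℝ) 1 := by
    intro z i hi
    have h1 := hla01 z i hi
    have h2 := hMid z
    constructor
    · exact add_nonneg (mul_nonneg (by linarith) h1.1) (mul_nonneg hr0.le h2.1)
    · simp only [hlam]; nlinarith [h1.2, h2.2]
  refine ⟨m, r * κ₀, lam, by positivity, ?_, ?_, ?_, ?_, ?_⟩
  · intro i
    exact ((hlac i).const_mul _).add ((hM.cont _ continuous_id).const_mul _)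
  · intro z hz i hi
    have h1 := hla01 z i hi
    simp only [hlam]
    constructor
    · nlinarith [h1.1, hz.1]
    · nlinarith [h1.2, hz.2]
  · intro z
    have h1 := hlabar z
    unfold av at h1 ⊢
    simp only [id, hlam] at h1 ⊢
    rw [Finset.sum_add_distrib, ← Finset.mul_sum, Finset.sum_const, Finset.card_range,
      nsmul_eq_mul]
    rw [div_eq_iff hN'.ne'] at h1 ⊢
    rw [h1]; simp only [hN]; push_cast; ring
  · intro k z
    have a1 : |av N (F k) lam z - av N (F k) la z| ≤ η / 3 := by
      unfold av
      rw [← sub_div, ← Finset.sum_sub_distrib, abs_div, abs_of_pos hN', div_le_iff₀ hN']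
      calc _ ≤ ∑ i ∈ Finset.range N, |F k (lam i z) - F k (la i z)| :=
            Finset.abs_sum_le_sum_abs _ _
        _ ≤ ∑ i ∈ Finset.range N, η / 3 := by
            apply Finset.sum_le_sum
            intro i hi
            have hi' := Finset.mem_range.1 hi
            apply hr k _ (hlam01 z i hi') _ (hla01 z i hi')
            have h1 := hla01 z i hi'
            have h2 := hMid z
            rw [show lam i z - la i z = r * (M id z - la i z) by simp only [hlam]; ring, abs_mul,
              abs_of_pos hr0]
            have : |M id z - la i z| ≤ 1 :=
              abs_le.2 ⟨by linarith [h1.2, h2.1], by linarith [h1.1, h2.2]⟩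
            nlinarith
        _ = η / 3 * N := by rw [Finset.sum_const, Finset.card_range, nsmul_eq_mul]; ring
    have a2 : |av N (F k) la z - ∑ j ∈ Finset.range (n + 1), w z j * F k ((j:ℝ) / n)| ≤ η / 3 :=
      (weights_error hN0 (hw0 z) (hw1 z) hx (hC k)).trans herr
    have a3 : |∑ j ∈ Finset.range (n + 1), w z j * F k ((j:ℝ) / n) - M (F k) z| ≤ η / 3 := by
      rw [← hM.sum (n + 1) (hat n) (hat_cont n) (fun j => F k ((j:ℝ) / n)) z]
      exact hM.close (continuous_finset_sum _ fun j _ => (hat_cont n j).mul_const _) (hF k)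
        (fun l hl => hat_interp hn0 (hr k) hnr hl) z
    rw [abs_le] at a1 a2 a3 ⊢
    constructor <;> linarith [a1.1, a1.2, a2.1, a2.2, a3.1, a3.2]
  · intro z hz i hi
    have hps : p = (s:ℝ) / n := by grind
    have hwz : ∀ j, w z j = if j = s then 1 else 0 := by
      intro j
      simp only [hw]
      rw [hz _ (hat_cont n j), hps, hat_node hn0]
    have hcum : ∀ j, cumW (w z) j = 0 ∨ cumW (w z) j = 1 := by
      intro j
      unfold cumW
      simp only [hwz, Finset.sum_ite_eq']
      split_ifs <;> simp
    have hcl : ∀ j, cl (N * cumW (w z) j - i) = cumW (w z) j := by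
      intro j
      have hi' : (i:ℝ) + 1 ≤ N := by exact_mod_cast hi
      rcases hcum j with h | h
      · rw [h, cl_of_nonpos (by simp)]
      · rw [h, cl_of_one_le (by linarith)]
    have hqz : ∀ j, qw N (w z) i j = w z j := by
      intro j
      unfold qw
      rw [hcl, hcl, cumW_succ]; ring
    have : la i z = M id z := by
      simp only [hla, hqz]; exact hwbar z
    simp only [hlam]
    rw [this, hz id continuous_id]
    simp only [id]; ring

/-- A regular potential with a continuous moment functional whose barycenter is the slope; the
barycenter and the mobility are nondegenerate, and outside a bounded set the functional is the
evaluation at `p` and the Hamilton-Jacobi equation holds exactly. -/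
structure IsCut (f σ : ℝ → ℝ) (T : ℝ) (b : ℝ² → ℝ) (M : (ℝ → ℝ) → ℝ² → ℝ)
    (κ p L : ℝ) : Prop where
  κ0 : 0 < κ
  smooth : ContDiff ℝ 2 b
  mom : IsMomF M
  mem : ∀ z : ℝ², z.1 ∈ Icc 0 T → M id z ∈ Icc κ (1 - κ)
  slope : ∀ z : ℝ², z.1 ∈ Icc 0 T → pxF b z = M id z
  sig : ∀ z : ℝ², z.1 ∈ Icc 0 T → 0 < M σ z
  out_mom : ∀ z : ℝ², z.1 ∈ Icc 0 T → L ≤ |z.2| → ∀ G, Continuous G → M G z = G p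
  out_t : ∀ z : ℝ², z.1 ∈ Icc 0 T → L ≤ |z.2| → ptF b z = - f p

/-- Limiting cost of a potential with a moment functional. -/
def ccost (f σ : ℝ → ℝ) (T : ℝ) (b : ℝ² → ℝ) (M : (ℝ → ℝ) → ℝ² → ℝ) : ℝ :=
  ∫ z in strip T, (ptF b z + M f z) ^ 2 / (2 * M σ z)

lemma quot_close {X X' s s' a s₀ η : ℝ} (hs₀ : 0 < s₀) (hη1 : η ≤ 1)
    (hη2 : η ≤ s₀ / 2) (hX : |X| ≤ a) (hs : s₀ ≤ s) (hX' : |X' - X| ≤ η) (hs' : |s' - s| ≤ η) :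
    X' ^ 2 / (2 * s') ≤ X ^ 2 / (2 * s) + ((2 * a + 1) / s₀ + a ^ 2 / s₀ ^ 2) * η := by
  have hη0 : 0 ≤ η := (abs_nonneg _).trans hX'
  have ha : 0 ≤ a := (abs_nonneg _).trans hX
  have hs'1 : s₀ / 2 ≤ s' := by linarith [(abs_le.1 hs').1]
  have hsp : 0 < s := by linarith
  have hs'p : 0 < s' := by linarith
  have e : X' ^ 2 / (2 * s') = X ^ 2 / (2 * s) + (X' ^ 2 - X ^ 2) / (2 * s') +
      X ^ 2 * (s - s') / (2 * s * s') := by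
    field_simp; ring
  have hXa : X ^ 2 ≤ a ^ 2 := by rw [← sq_abs]; gcongr
  have h1 : (X' ^ 2 - X ^ 2) / (2 * s') ≤ (2 * a + 1) / s₀ * η := by
    have hn : X' ^ 2 - X ^ 2 ≤ (2 * a + 1) * η := by
      have : X' ^ 2 - X ^ 2 = (X' - X) * (2 * X + (X' - X)) := by ring
      rw [this]
      calc _ ≤ |X' - X| * |2 * X + (X' - X)| := by rw [← abs_mul]; exact le_abs_self _
        _ ≤ η * (2 * a + 1) := by
          gcongr
          calc _ ≤ |2 * X| + |X' - X| := abs_add_le _ _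
            _ ≤ 2 * a + 1 := by grind
        _ = _ := by ring
    calc _ ≤ (2 * a + 1) * η / (2 * s') := by gcongr
      _ ≤ (2 * a + 1) * η / s₀ := by gcongr; linarith
      _ = _ := by ring
  have h2 : X ^ 2 * (s - s') / (2 * s * s') ≤ a ^ 2 / s₀ ^ 2 * η := by
    have hd : s - s' ≤ η := by linarith [(abs_le.1 hs').1]
    calc _ ≤ a ^ 2 * η / (2 * s * s') := by
          gcongr ?_ / _
          calc X ^ 2 * (s - s') ≤ X ^ 2 * η := by gcongr
            _ ≤ _ := by gcongr
      _ ≤ a ^ 2 * η / s₀ ^ 2 := by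
          gcongr
          nlinarith
      _ = _ := by ring
  rw [e]
  nlinarith

/-- The atoms of a discretized state approximate cost and finitely many moments. -/
lemma IsCut.to_MS {κ p L : ℝ} {b : ℝ² → ℝ} {M : (ℝ → ℝ) → ℝ² → ℝ}
    (hf : Continuous f) (hσ : Continuous σ) (hpos : ∀ v ∈ Ioo (0:ℝ) 1, 0 < σ v)
    (h : IsCut f σ T b M κ p L)
    {q : ℕ} (hq : 0 < q) (hp : p = 1 / (q:ℝ)) {ι : Type*} [Finite ι] {F : ι → ℝ → ℝ}
    (hF : ∀ k, Continuous (F k)) {g : ι → ℝ² → ℝ} (hg : ∀ k, Continuous (g k))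
    (hgc : ∀ k, HasCompactSupport (g k)) {δ : ℝ} (hδ : 0 < δ) :
    ∃ (m : ℕ) (κ' : ℝ) (lam : ℕ → ℝ² → ℝ), IsMS f T (2 ^ m) b lam κ' p L ∧
      mcost f σ T (2 ^ m) b lam ≤ ccost f σ T b M + δ ∧
      ∀ k, |pair T (av (2 ^ m) (F k) lam) (g k) - pair T (M (F k)) (g k)| ≤ δ := by
  have hMf := h.mom.cont f hf
  have hMσ := h.mom.cont σ hσ
  have hbt : Continuous (ptF b) := ptF_cont (h.smooth.of_le (by norm_num))
  set K := box T L with hK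
  have hKc : IsCompact K := isCompact_box
  obtain ⟨a, ha⟩ := hKc.exists_bound_of_continuousOn (f := fun z => ptF b z + M f z)
    (by fun_prop)
  obtain ⟨s₀, hs₀, hs⟩ : ∃ s₀ > 0, ∀ z ∈ K, s₀ ≤ M σ z := by
    rcases K.eq_empty_or_nonempty with he | hne
    · grind
    · obtain ⟨z₀, hz₀, hmin⟩ := hKc.exists_isMinOn hne hMσ.continuousOn
      exact ⟨M σ z₀, h.sig z₀ hz₀.1, fun z hz => hmin hz⟩
  set c := (2 * a + 1) / s₀ + a ^ 2 / s₀ ^ 2 with hc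
  have lin : ∀ d : ℝ, ∀ᶠ η in 𝓝[>] (0:ℝ), η * d ≤ δ := by
    intro d
    have : Tendsto (fun η : ℝ => η * d) (𝓝[>] 0) (𝓝 0) := by
      have hcd : Continuous fun η : ℝ => η * d := by fun_prop
      have := hcd.tendsto 0
      rw [zero_mul] at this
      exact this.mono_left nhdsWithin_le_nhds
    exact (this.eventually (gt_mem_nhds hδ)).mono fun η h => h.le
  have e3 : ∀ᶠ η in 𝓝[>] (0:ℝ), ∀ k, η * ∫ z, |g k z| ≤ δ := by
    rw [eventually_all]; exact fun k => lin _
  have m1 : ∀ᶠ η in 𝓝[>] (0:ℝ), η ∈ Ioo 0 1 := Ioo_mem_nhdsGT one_pos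
  have m2 : ∀ᶠ η in 𝓝[>] (0:ℝ), η ∈ Ioo 0 (s₀ / 2) := Ioo_mem_nhdsGT (half_pos hs₀)
  obtain ⟨η, ⟨⟨⟨hη0, hη1⟩, hη2⟩, hη3⟩, hη4⟩ :=
    (((m1.and m2).and (lin (c * volume.real K))).and e3).exists
  -- the family consists of `f`, `σ` and the test functions
  set F' : Option (Option ι) → ℝ → ℝ := fun o => o.elim f fun o' => o'.elim σ F with hF'
  have hF'c : ∀ o, Continuous (F' o) := by
    rintro (_ | _ | k)
    · exact hf
    · exact hσ
    · exact hF k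
  obtain ⟨m, κ', lam, hκ', hlc, hmem, hbar, hcl, hdeg⟩ :=
    h.mom.discretize h.κ0 hq hp hF'c hη0
  have c1 : ∀ z, |av (2 ^ m) f lam z - M f z| ≤ η := hcl none
  have c2 : ∀ z, |av (2 ^ m) σ lam z - M σ z| ≤ η := hcl (some none)
  have c3 : ∀ k z, |av (2 ^ m) (F k) lam z - M (F k) z| ≤ η := fun k => hcl (some (some k))
  have hMS : IsMS f T (2 ^ m) b lam κ' p L :=
    { pos := by positivity
      κ0 := hκ'
      smooth := h.smooth
      cont := hlc
      mem := fun z hz i hi => hmem z (h.mem z hz) i hi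
      slope := fun z hz => by rw [h.slope z hz, hbar z]
      out_lam := fun z hz hL i hi => hdeg z (h.out_mom z hz hL) i hi
      out_t := h.out_t }
  refine ⟨m, κ', lam, hMS, ?_, ?_⟩
  · have hpp : ∀ z : ℝ², z.1 ∈ Icc 0 T → 0 < av (2 ^ m) σ lam z := fun z hz =>
      av_pos hMS.pos fun i hi => hpos _ (by
        have := hMS.mem z hz i hi
        exact ⟨by linarith [this.1], by linarith [this.2]⟩)
    have b1 : mcost f σ T (2 ^ m) b lam =
        ∫ z in K, (ptF b z + av (2 ^ m) f lam z) ^ 2 / (2 * av (2 ^ m) σ lam z) := by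
      unfold mcost
      apply strip_eq_box'
      intro z hz hL
      rw [h.out_t z hz hL.le, av_const hMS.pos (hMS.out_lam z hz hL.le)]
      simp
    have b2 : ccost f σ T b M = ∫ z in K, (ptF b z + M f z) ^ 2 / (2 * M σ z) := by
      unfold ccost
      apply strip_eq_box'
      intro z hz hL
      rw [h.out_t z hz hL.le, h.out_mom z hz hL.le f hf]
      simp
    have hfin : volume K ≠ ⊤ := hKc.measure_lt_top.ne
    have i1 : IntegrableOn (fun z => (ptF b z + M f z) ^ 2 / (2 * M σ z)) K := by
      apply ContinuousOn.integrableOn_compact hKc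
      apply ContinuousOn.div (by fun_prop) (by fun_prop)
      intro z hz
      have := h.sig z hz.1
      positivity
    have hac : ∀ {G : ℝ → ℝ}, Continuous G → Continuous (av (2 ^ m) G lam) := fun hG =>
      av_cont hG hlc
    have i2 : IntegrableOn
        (fun z => (ptF b z + av (2 ^ m) f lam z) ^ 2 / (2 * av (2 ^ m) σ lam z)) K := by
      have := hac hf
      have := hac hσ
      apply ContinuousOn.integrableOn_compact hKc
      apply ContinuousOn.div (by fun_prop) (by fun_prop)
      intro z hz
      have := hpp z hz.1
      positivity
    have i3 : IntegrableOn (fun _ : ℝ² => c * η) K := integrableOn_const hfin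
    rw [b1, b2]
    calc _ ≤ ∫ z in K, ((ptF b z + M f z) ^ 2 / (2 * M σ z) + c * η) := by
          apply setIntegral_mono_on i2 (i1.add i3) hKc.measurableSet
          intro z hz
          apply quot_close hs₀ hη1.le hη2.2.le (ha z hz) (hs z hz) _ (c2 z)
          rw [add_sub_add_left_eq_sub]; exact c1 z
      _ = (∫ z in K, (ptF b z + M f z) ^ 2 / (2 * M σ z)) + c * η * volume.real K := by
          rw [integral_add i1 i3, setIntegral_const, smul_eq_mul]; ring
      _ ≤ _ := by nlinarith
  · intro k
    have l1 := L1loc.of_cont (T := T) (av_cont (N := 2 ^ m) (hF k) hlc)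
    have l2 := L1loc.of_cont (T := T) (h.mom.cont _ (hF k))
    rw [← pair_sub_left l1 l2 (hg k) (hgc k)]
    exact (pair_abs_le hη0.le (c3 k) (hg k) (hgc k)).trans (hη4 k)

/-! ### Cutting off at infinity -/

/-- A regular potential with a continuous, nondegenerate moment functional whose barycenter is
the slope, and whose cost on every bounded box is at most `J`. -/
structure IsReg (f σ : ℝ → ℝ) (T : ℝ) (b : ℝ² → ℝ) (M : (ℝ → ℝ) → ℝ² → ℝ)
    (κ J : ℝ) : Prop where
  κ0 : 0 < κ
  smooth : ContDiff ℝ 2 b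
  mom : IsMomF M
  mem : ∀ z : ℝ², z.1 ∈ Icc 0 T → M id z ∈ Icc κ (1 - κ)
  slope : ∀ z : ℝ², z.1 ∈ Icc 0 T → pxF b z = M id z
  sig : ∀ z : ℝ², z.1 ∈ Icc 0 T → 0 < M σ z
  cost : ∀ R > 0, ∫ z in box T R, (ptF b z + M f z) ^ 2 / (2 * M σ z) ≤ J

lemma exists_trunc (C : ℝ) (hC : 0 ≤ C) : ∃ (χ m : ℝ → ℝ) (C' : ℝ), 0 < C' ∧ Continuous χ ∧
    (∀ s, χ s ∈ Icc (0:ℝ) 1) ∧ (∀ s, |s| ≤ C → χ s = 1) ∧ (∀ s, C' ≤ |s| → χ s = 0) ∧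
    ContDiff ℝ 2 m ∧ (∀ s, HasDerivAt m (χ s) s) ∧ ∀ s, |s| ≤ C → m s = s := by
  let χ : ContDiffBump (0:ℝ) := ⟨C + 1, C + 2, by linarith, by linarith⟩
  have hχs : ContDiff ℝ 1 χ := χ.contDiff
  have h1 : ∀ s, |s| ≤ C → χ s = 1 := fun s hs => by
    apply χ.one_of_mem_closedBall
    rw [Metric.mem_closedBall, dist_eq, sub_zero]
    change |s| ≤ C + 1
    linarith
  have hd : ∀ s, HasDerivAt (fun s => ∫ r in 0..s, χ r) (χ s) s := fun s =>
    intervalIntegral.integral_hasDerivAt_right (χ.continuous.intervalIntegrable _ _)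
      (χ.continuous.stronglyMeasurableAtFilter _ _) χ.continuous.continuousAt
  refine ⟨χ, fun s => ∫ r in 0..s, χ r, C + 2, by linarith, χ.continuous,
    fun s => ⟨χ.nonneg, χ.le_one⟩, h1, ?_, ?_, hd, ?_⟩
  · intro s hs
    apply χ.zero_of_le_dist
    rw [dist_eq, sub_zero]; exact hs
  · rw [show (2 : WithTop ℕ∞) = 1 + 1 by norm_num, contDiff_succ_iff_deriv]
    refine ⟨fun s => (hd s).differentiableAt, by simp, ?_⟩
    rw [show deriv (fun s => ∫ r in 0..s, χ r) = χ from funext fun s => (hd s).deriv]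
    exact hχs
  · intro s hs
    have : ∫ r in 0..s, χ r = ∫ r in 0..s, (1:ℝ) := by
      apply intervalIntegral.integral_congr
      intro r hr
      apply h1
      rw [mem_uIcc] at hr
      rw [abs_le] at hs ⊢
      rcases hr with hr | hr <;> constructor <;> linarith [hr.1, hr.2, hs.1, hs.2]
    change ∫ r in 0..s, χ r = s
    rw [this]; simp

/-- The potential is replaced by an exact affine solution of small slope `p` far away. The
cutoff acts on values: it is a nonlinear truncation of the difference to the affine solution,
which is strictly increasing in space, and this does not increase the cost. -/
lemma IsReg.to_cut {κ J : ℝ} {b : ℝ² → ℝ} {M : (ℝ → ℝ) → ℝ² → ℝ}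
    (hT : 0 < T) (hf : Continuous f) (hσ : Continuous σ) (hpos : ∀ v ∈ Ioo (0:ℝ) 1, 0 < σ v)
    (h : IsReg f σ T b M κ J) (R : ℝ) :
    ∃ (b' : ℝ² → ℝ) (M' : (ℝ → ℝ) → ℝ² → ℝ) (κ' p L : ℝ) (q : ℕ), 0 < q ∧ p = 1 / (q:ℝ) ∧
      IsCut f σ T b' M' κ' p L ∧ ccost f σ T b' M' ≤ J ∧
      ∀ z : ℝ², z.1 ∈ Icc 0 T → |z.2| ≤ R → b' z = b z ∧ ∀ G, M' G z = M G z := by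
  have hκ := h.κ0
  have hκ2 : κ ≤ 1 / 2 := by
    have := h.mem (0, 0) ⟨le_rfl, hT.le⟩
    linarith [this.1, this.2]
  obtain ⟨q, hq⟩ := exists_nat_gt (2 / κ)
  have hq0 : (0:ℝ) < q := lt_trans (by positivity) hq
  set p : ℝ := 1 / (q:ℝ) with hp
  have hp0 : 0 < p := by positivity
  have hpκ : p < κ / 2 := by
    rw [hp, div_lt_iff₀ hq0]
    rw [div_lt_iff₀ hκ] at hq
    linarith
  have hp1 : p ∈ Icc (0:ℝ) 1 := ⟨hp0.le, by linarith⟩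
  have hb1 : ContDiff ℝ 1 b := h.smooth.of_le (by norm_num)
  -- the affine solution
  set A : ℝ² →L[ℝ] ℝ := p • ContinuousLinearMap.snd ℝ ℝ ℝ - f p • ContinuousLinearMap.fst ℝ ℝ ℝ
    with hA
  have hA1 : A (1, 0) = - f p := by simp [hA]
  have hA2 : A (0, 1) = p := by simp [hA]
  set v : ℝ² → ℝ := fun z => b z - A z with hv
  have hvs : ContDiff ℝ 2 v := h.smooth.sub A.contDiff
  have hvc : Continuous v := hvs.continuous
  have hvd : ∀ z, HasFDerivAt v (fderiv ℝ b z - A) z := fun z =>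
    (hb1.differentiable one_ne_zero z).hasFDerivAt.sub A.hasFDerivAt
  obtain ⟨C, hC⟩ := (isCompact_box (T := T) (R := R)).exists_bound_of_continuousOn
    hvc.continuousOn
  obtain ⟨χ, m, C', hC', hχc, hχ, hχ1, hχ0, hms, hmd, hm⟩ := exists_trunc (max C 0) (le_max_right _ _)
  obtain ⟨V, hV⟩ := (isCompact_Icc (a := (0:ℝ)) (b := T)).exists_bound_of_continuousOn
    (f := fun t => v (t, 0)) (by fun_prop)
  have hV0 : 0 ≤ V := (norm_nonneg _).trans (hV 0 ⟨le_rfl, hT.le⟩)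
  set L := (V + C') * (2 / κ) with hL
  have hL0 : 0 < L := by positivity
  have hslope : ∀ t ∈ Icc 0 T, ∀ x, HasDerivAt (fun x => v (t, x)) (M id (t, x) - p) x := by
    intro t ht x
    have := hasDerivAt_slice (hvs.of_le (by norm_num)) t x
    convert this using 1
    unfold pxF
    rw [(hvd (t, x)).fderiv]
    simp only [ContinuousLinearMap.sub_apply, hA2]
    rw [← h.slope (t, x) ht]; rfl
  have hfar : ∀ z : ℝ², z.1 ∈ Icc 0 T → L ≤ |z.2| → C' ≤ |v z| := by
    rintro ⟨t, x⟩ ht hx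
    have hmono : Monotone fun x => v (t, x) - κ / 2 * x := by
      apply monotone_of_hasDerivAt_nonneg (f' := fun x => M id (t, x) - p - κ / 2 * 1)
      · intro x
        exact (hslope t ht x).sub ((hasDerivAt_id x).const_mul _)
      · intro x
        have := (h.mem (t, x) ht).1
        simp only [Pi.zero_apply]
        linarith
    have hV' := abs_le.1 (hV t ht)
    have hLk : κ / 2 * L = V + C' := by rw [hL]; field_simp
    simp only at hx ⊢
    rcases le_total 0 x with h0 | h0
    · rw [abs_of_nonneg h0] at hx
      have h1 := hmono h0
      simp only [mul_zero, sub_zero] at h1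
      have h2 : κ / 2 * L ≤ κ / 2 * x := by gcongr
      refine le_trans ?_ (le_abs_self _)
      linarith [hV'.1]
    · rw [abs_of_nonpos h0] at hx
      have h1 := hmono h0
      simp only [mul_zero, sub_zero] at h1
      have h2 : κ / 2 * L ≤ κ / 2 * (-x) := by gcongr
      refine le_trans ?_ (neg_le_abs _)
      linarith [hV'.2]
  set b' : ℝ² → ℝ := fun z => A z + m (v z) with hb'
  have hb'd : ∀ z, HasFDerivAt b' (A + χ (v z) • (fderiv ℝ b z - A)) z := fun z =>
    A.hasFDerivAt.add ((hmd (v z)).comp_hasFDerivAt z (hvd z))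
  have hpt : ∀ z, ptF b' z = - f p + χ (v z) * (ptF b z + f p) := by
    intro z
    unfold ptF
    rw [(hb'd z).fderiv]
    simp [hA1]
  have hpx : ∀ z, pxF b' z = p + χ (v z) * (pxF b z - p) := by
    intro z
    unfold pxF
    rw [(hb'd z).fderiv]
    simp [hA2]
  set M' : (ℝ → ℝ) → ℝ² → ℝ := fun G z => χ (v z) * M G z + (1 - χ (v z)) * G p with hM'
  have hcut : IsCut f σ T b' M' p p L :=
    { κ0 := hp0
      smooth := A.contDiff.add (hms.comp hvs)
      mom :=
        { cont := fun G hG => by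
            have := h.mom.cont G hG
            simp only [hM']; fun_prop
          add := fun F G hF hG z => by
            simp only [hM']; rw [h.mom.add F G hF hG]; ring
          smul := fun a F hF z => by
            simp only [hM']; rw [h.mom.smul a F hF]; ring
          mono := fun F G hF hG hFG z => by
            have h1 := h.mom.mono F G hF hG hFG z
            have h2 := hχ (v z)
            exact add_le_add (mul_le_mul_of_nonneg_left h1 h2.1)
              (mul_le_mul_of_nonneg_left (hFG p hp1) (by linarith [h2.2]))
          one := fun z => by simp only [hM']; rw [h.mom.one]; ring }
      mem := fun z hz => by
        have h1 := h.mem z hz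
        have h2 := hχ (v z)
        simp only [hM', id]
        constructor
        · nlinarith [h1.1, h2.1]
        · nlinarith [h1.2, h2.1, h2.2]
      slope := fun z hz => by
        rw [hpx, h.slope z hz]
        simp only [hM', id]; ring
      sig := fun z hz => by
        have h1 := h.sig z hz
        have h2 := hχ (v z)
        have h3 : 0 < σ p := hpos p ⟨hp0, by linarith⟩
        simp only [hM']
        rcases h2.1.eq_or_lt with h4 | h4
        · nlinarith
        · have := mul_pos h4 h1
          have := mul_nonneg (sub_nonneg.2 h2.2) h3.le
          linarith
      out_mom := fun z hz hzL G _ => by grind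
      out_t := fun z hz hzL => by grind }
  refine ⟨b', M', p, p, L, q, by exact_mod_cast hq0, rfl, hcut, ?_, ?_⟩
  · have hMf := h.mom.cont f hf
    have hMσ := h.mom.cont σ hσ
    have hM'f := hcut.mom.cont f hf
    have hM'σ := hcut.mom.cont σ hσ
    have hbt : Continuous (ptF b) := ptF_cont hb1
    have hbt' : Continuous (ptF b') := ptF_cont (hcut.smooth.of_le (by norm_num))
    have b2 : ccost f σ T b' M' =
        ∫ z in box T L, (ptF b' z + M' f z) ^ 2 / (2 * M' σ z) := by
      unfold ccost
      apply strip_eq_box'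
      intro z hz hL
      rw [hcut.out_t z hz hL.le, hcut.out_mom z hz hL.le f hf]
      simp
    rw [b2]
    refine le_trans ?_ (h.cost L hL0)
    apply setIntegral_mono_on _ _ (measurableSet_Icc.prod measurableSet_Icc)
    · intro z hz
      have h1 := h.sig z hz.1
      have h2 := hχ (v z)
      have h3 : 0 < σ p := hpos p ⟨hp0, by linarith⟩
      have h5 := hcut.sig z hz.1
      have e : ptF b' z + M' f z = χ (v z) * (ptF b z + M f z) := by grind
      rw [e, div_le_div_iff₀ (by positivity) (by positivity)]
      simp only [hM'] at h5 ⊢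
      have h6 : χ (v z) ^ 2 * M σ z ≤ χ (v z) * M σ z + (1 - χ (v z)) * σ p := by
        have h7 : 0 ≤ (1 - χ (v z)) * σ p := mul_nonneg (by linarith [h2.2]) h3.le
        have h8 : χ (v z) ^ 2 ≤ χ (v z) := by nlinarith [h2.1, h2.2]
        nlinarith
      nlinarith [mul_le_mul_of_nonneg_left h6 (sq_nonneg (ptF b z + M f z))]
    · apply ContinuousOn.integrableOn_compact isCompact_box
      apply ContinuousOn.div (by fun_prop) (by fun_prop)
      intro z hz
      have := hcut.sig z hz.1
      positivity
    · apply ContinuousOn.integrableOn_compact isCompact_box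
      apply ContinuousOn.div (by fun_prop) (by fun_prop)
      intro z hz
      have := h.sig z hz.1
      positivity
  · intro z hz hR
    have hb : |v z| ≤ max C 0 := (hC z ⟨hz, abs_le.1 hR⟩).trans (le_max_left _ _)
    constructor
    · grind
    · grind

/-! ### Mollification -/

section
open scoped Convolution

/-- The convolution of two functions on the plane. -/
def cv (g k : ℝ² → ℝ) (x : ℝ²) : ℝ := ∫ y, g y * k (x - y)

lemma cv_eq (g k : ℝ² → ℝ) : cv g k = g ⋆[ContinuousLinearMap.mul ℝ ℝ, volume] k := by bound

/-- An even smooth mollifier with support in the closed ball of radius `r`. -/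
structure IsKer (k : ℝ² → ℝ) (r : ℝ) : Prop where
  smooth : Smooth k
  cpt : HasCompactSupport k
  nonneg : ∀ x, 0 ≤ k x
  even : ∀ x, k (-x) = k x
  one : ∫ x, k x = 1
  zero : ∀ x, r ≤ ‖x‖ → k x = 0

lemma exists_ker {r : ℝ} (hr : 0 < r) : ∃ k, IsKer k r := by
  let c : ContDiffBump (0 : ℝ²) := ⟨r / 2, r, by positivity, by linarith⟩
  refine ⟨c.normed volume, c.contDiff_normed, c.hasCompactSupport_normed, c.nonneg_normed,
    c.normed_neg, c.integral_normed, fun x hx => ?_⟩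
  have : x ∉ Function.support (c.normed volume) := by
    rw [c.support_normed_eq]
    simpa [c] using hx
  simpa using this

lemma cv_int {g k : ℝ² → ℝ} (hg : LocallyIntegrable g) (hk : Continuous k)
    (hc : HasCompactSupport k) (x : ℝ²) : Integrable fun y => g y * k (x - y) := by
  have h : ConvolutionExistsAt g k x (ContinuousLinearMap.mul ℝ ℝ) volume :=
    hc.convolutionExists_right _ hg hk x
  simpa [ConvolutionExistsAt] using h

lemma cv_cont {g k : ℝ² → ℝ} (hg : LocallyIntegrable g) (hk : Continuous k)
    (hc : HasCompactSupport k) : Continuous (cv g k) := by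
  rw [cv_eq]
  exact hc.continuous_convolution_right _ hg hk

lemma cv_smooth {g k : ℝ² → ℝ} (hg : LocallyIntegrable g) (hk : Smooth k)
    (hc : HasCompactSupport k) : Smooth (cv g k) := by
  rw [cv_eq]
  exact hc.contDiff_convolution_right _ hg hk

lemma cv_fderiv {g k : ℝ² → ℝ} (hg : LocallyIntegrable g) (hk : ContDiff ℝ 1 k)
    (hc : HasCompactSupport k) (x v : ℝ²) :
    fderiv ℝ (cv g k) x v = cv g (fun z => fderiv ℝ k z v) x := by
  rw [cv_eq, cv_eq, (hc.hasFDerivAt_convolution_right _ hg hk x).fderiv]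
  exact convolution_precompR_apply _ hg (hc.fderiv ℝ) (hk.continuous_fderiv one_ne_zero) x v

/-- Fubini for convolutions against an even (`s = 1`) or odd (`s = -1`) kernel. -/
lemma cv_swap {g ψ k : ℝ² → ℝ} {s : ℝ} (hg : LocallyIntegrable g) (hψ : Integrable ψ)
    (hψc : HasCompactSupport ψ) (hk : Continuous k) (hc : HasCompactSupport k)
    (hs : ∀ x, k (-x) = s * k x) :
    ∫ x, ψ x * cv g k x = s * ∫ y, g y * cv ψ k y := by
  have hKc : IsCompact ((fun p : ℝ² × ℝ² => p.1 - p.2) '' (tsupport ψ ×ˢ tsupport k)) :=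
    (hψc.isCompact.prod hc.isCompact).image (by fun_prop)
  set K := (fun p : ℝ² × ℝ² => p.1 - p.2) '' (tsupport ψ ×ˢ tsupport k) with hK
  have hgK : Integrable (K.indicator g) :=
    (hg.integrableOn_isCompact hKc).integrable_indicator hKc.measurableSet
  have key : ∀ x y, ψ x * (g y * k (x - y)) = ψ x * K.indicator g y * k (x - y) := by
    intro x y
    by_cases hy : y ∈ K
    · rw [indicator_of_mem hy]; ring
    · rw [indicator_of_notMem hy]
      by_cases hx : x ∈ tsupport ψ
      · have : x - y ∉ tsupport k := fun h => hy ⟨(x, x - y), ⟨hx, h⟩, by simp⟩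
        rw [image_eq_zero_of_notMem_tsupport this]; ring
      · rw [image_eq_zero_of_notMem_tsupport hx]; ring
  obtain ⟨C, hC⟩ := hk.bounded_above_of_compact_support hc
  have hInt : Integrable (Function.uncurry fun x y => ψ x * (g y * k (x - y)))
      (volume.prod volume) := by
    have h1 := (hψ.mul_prod hgK).mul_bdd (c := C) (g := fun p : ℝ² × ℝ² => k (p.1 - p.2))
      (by fun_prop)
      (.of_forall fun p => hC _)
    refine h1.congr (.of_forall fun p => ?_)
    simp only [Function.uncurry]
    rw [key]
  calc ∫ x, ψ x * cv g k x = ∫ x, ∫ y, ψ x * (g y * k (x - y)) := by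
        simp only [cv, integral_const_mul]
    _ = ∫ y, ∫ x, ψ x * (g y * k (x - y)) := integral_integral_swap hInt
    _ = ∫ y, s * (g y * cv ψ k y) := by
        congr 1; ext y
        simp only [cv]
        rw [← integral_const_mul, ← integral_const_mul]
        congr 1; ext x
        rw [← neg_sub y x, hs]; ring
    _ = _ := integral_const_mul _ _

/-- Jensen's inequality for averaging against the probability density `k`. -/
lemma IsKer.jensen {k ψ : ℝ² → ℝ} {r : ℝ} (hk : IsKer k r) (hψ : LocallyIntegrable ψ)
    (hψ2 : LocallyIntegrable fun x => ψ x ^ 2) (y : ℝ²) :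
    cv ψ k y ^ 2 ≤ cv (fun x => ψ x ^ 2) k y := by
  have i1 := cv_int hψ hk.smooth.continuous hk.cpt y
  have i2 := cv_int hψ2 hk.smooth.continuous hk.cpt y
  have i3 := cv_int (g := fun _ => (1:ℝ)) (locallyIntegrable_const 1) hk.smooth.continuous hk.cpt y
  have h1 : ∫ x, (1:ℝ) * k (y - x) = 1 := by
    simp only [one_mul]
    rw [integral_sub_left_eq_self (fun x => k x), hk.one]
  set m := cv ψ k y with hm
  have h0 : 0 ≤ ∫ x, (ψ x - m) ^ 2 * k (y - x) :=
    integral_nonneg fun x => mul_nonneg (sq_nonneg _) (hk.nonneg _)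
  have e : (fun x => (ψ x - m) ^ 2 * k (y - x)) = fun x =>
      (ψ x ^ 2 * k (y - x) - 2 * m * (ψ x * k (y - x))) + m ^ 2 * (1 * k (y - x)) := by
    ext x; ring
  have i4 : Integrable fun x => ψ x ^ 2 * k (y - x) - 2 * m * (ψ x * k (y - x)) :=
    i2.sub (i1.const_mul _)
  rw [e, integral_add i4 (i3.const_mul _), integral_sub i2 (i1.const_mul _), integral_const_mul,
    integral_const_mul, h1] at h0
  have e1 : ∫ x, ψ x * k (y - x) = m := rfl
  have e2 : ∫ x, ψ x ^ 2 * k (y - x) = cv (fun x => ψ x ^ 2) k y := rfl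
  rw [e1, e2] at h0
  nlinarith

end

lemma locInt_of_bdd {g : ℝ² → ℝ} {C : ℝ} (hg : Measurable g) (hC : ∀ p, |g p| ≤ C) :
    LocallyIntegrable g := by
  refine LocallyIntegrable.mono (locallyIntegrable_const C) hg.aestronglyMeasurable
    (.of_forall fun p => ?_)
  rw [norm_eq_abs, norm_eq_abs]
  exact (hC p).trans (le_abs_self C)

lemma Rep.pair_b {B : HJ T} {β : ℝ² → ℝ} (hβ : Rep B β) (h : ℝ² → ℝ) :
    pair T B.b h = pair T β h := by
  refine integral_congr_ae ?_
  filter_upwards [ae_strip_of_slice B.meas hβ.cont.measurable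
    ((ae_restrict_iff' measurableSet_Icc).2 (.of_forall fun t ht => hβ.ae t ht))] with p hp
  rw [hp]

lemma IsKer.near {k : ℝ² → ℝ} {r : ℝ} (hk : IsKer k r) {x y : ℝ²} (h : k (x - y) ≠ 0) :
    ‖x - y‖ < r := by
  by_contra h'
  exact h (hk.zero _ (not_lt.1 h'))

lemma IsKer.mem_Ioo {k : ℝ² → ℝ} {r T : ℝ} (hk : IsKer k r) {x y : ℝ²}
    (hx : x.1 ∈ Icc r (T - r)) (h : k (x - y) ≠ 0) : y.1 ∈ Ioo 0 T := by
  have h1 : |x.1 - y.1| < r := (norm_fst_le (x - y)).trans_lt (hk.near h)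
  rw [abs_lt] at h1
  exact ⟨by linarith [hx.1, h1.2], by linarith [hx.2, h1.1]⟩

/-- In the interior of the strip, the mollification of `b` has slope the mollified barycenter. -/
lemma IsKer.slope {r : ℝ} {k β : ℝ² → ℝ} (hk : IsKer k r) {y : AA T} (hβ : Rep y.1.1 β)
    {x : ℝ²} (hx : x.1 ∈ Icc r (T - r)) :
    pxF (cv β k) x = cv (y.1.2.mom fun l => l) k x := by
  have hk1 : ContDiff ℝ 1 k := hk.smooth.of_le (by exact_mod_cast le_top)
  let φ : TTest T := ⟨fun w => k (x - w), hk.smooth.comp (contDiff_const.sub contDiff_id),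
    hk.cpt.comp_homeomorph (Homeomorph.subLeft x), fun w hw => ⟨hk.mem_Ioo hx hw, mem_univ _⟩⟩
  have hφ : ∀ w, pxF φ.toFun w = - pxF k (x - w) := by
    intro w
    have h := ((hk1.differentiable one_ne_zero) (x - w)).hasFDerivAt.comp w
      ((hasFDerivAt_const x w).sub (hasFDerivAt_id w))
    unfold pxF
    rw [show φ.toFun = k ∘ (fun w => x - w) from rfl]
    erw [h.fderiv]
    simp
  have h1 := y.1.1.hux φ
  rw [hβ.pair_b, pair_eq_full fun p hp => φ.px_zero hp, pair_eq_full fun p hp => φ.zero hp] at h1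
  have h2 : ∫ p, β p * pxF φ.toFun p = - pxF (cv β k) x := by
    unfold pxF
    rw [cv_fderiv hβ.cont.locallyIntegrable hk1 hk.cpt, cv, ← integral_neg]
    congr 1; ext w
    have := hφ w
    unfold pxF at this
    rw [this]; ring
  have h3 : pair T (y.1.1.ux.toFun) φ.toFun = pair T (y.1.2.mom fun l => l) φ.toFun := by
    refine integral_congr_ae ?_
    filter_upwards [y.2] with p hp
    rw [hp]
  rw [pair_eq_full fun p hp => φ.zero hp, pair_eq_full fun p hp => φ.zero hp] at h3
  rw [h2, h3] at h1
  exact neg_injective h1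

/-- The dual bound `calJ ≤ J` survives mollification. -/
lemma IsKer.dual {r J C : ℝ} {k β ψ : ℝ² → ℝ} (hf : Continuous f)
    (hσ : Continuous σ) (hσ0 : ∀ v ∈ Icc (0:ℝ) 1, 0 ≤ σ v)
    (hk : IsKer k r) {y : AA T} (hβ : Rep y.1.1 β)
    (hJ : ∀ φ : TTest T, act f σ T y φ ≤ J)
    {K : Set (ℝ²)} (hK : IsCompact K) (hKr : ∀ x ∈ K, x.1 ∈ Icc r (T - r))
    (hψm : Measurable ψ) (hψC : ∀ x, |ψ x| ≤ C) (hψ0 : ∀ x ∉ K, ψ x = 0) :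
    (∫ x, ψ x * ptF (cv β k) x) + (∫ x, ψ x * cv (y.1.2.mom f) k x)
      - 1 / 2 * (∫ x, ψ x ^ 2 * cv (y.1.2.mom σ) k x) ≤ J := by
  have hk1 : ContDiff ℝ 1 k := hk.smooth.of_le (by exact_mod_cast le_top)
  have hkc := hk.smooth.continuous
  have hψc : HasCompactSupport ψ := HasCompactSupport.intro hK hψ0
  have hψl : LocallyIntegrable ψ := locInt_of_bdd hψm hψC
  have hψ2l : LocallyIntegrable fun x => ψ x ^ 2 := by
    refine locInt_of_bdd (C := C ^ 2) (hψm.pow_const 2) fun p => ?_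
    rw [abs_pow]
    exact pow_le_pow_left₀ (abs_nonneg _) (hψC p) 2
  have hψ2c : HasCompactSupport fun x => ψ x ^ 2 := HasCompactSupport.intro hK fun x hx => by
    simp [hψ0 x hx]
  have hInt : ∀ {u : ℝ² → ℝ}, LocallyIntegrable u → HasCompactSupport u → Integrable u := by
    intro u hu hc
    exact (integrableOn_iff_integrable_of_support_subset (subset_tsupport u)).1
      (hu.integrableOn_isCompact hc.isCompact)
  obtain ⟨Cf, -, hCf⟩ := exists_bd01 hf.continuousOn
  obtain ⟨Cs, -, hCs⟩ := exists_bd01 hσ.continuousOn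
  have hfl : LocallyIntegrable (y.1.2.mom f) :=
    locInt_of_bdd (y.1.2.mom_meas hf.continuousOn) (y.1.2.mom_abs_le hCf)
  have hsl : LocallyIntegrable (y.1.2.mom σ) :=
    locInt_of_bdd (y.1.2.mom_meas hσ.continuousOn) (y.1.2.mom_abs_le hCs)
  have hcc : ∀ {u : ℝ² → ℝ}, HasCompactSupport u → HasCompactSupport (cv u k) := by
    intro u hu
    rw [cv_eq]
    exact HasCompactSupport.convolution _ hu hk.cpt
  let φ : TTest T := ⟨cv ψ k, cv_smooth hψl hk.smooth hk.cpt, hcc hψc, fun w hw => by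
    refine ⟨?_, mem_univ _⟩
    by_contra hn
    refine hw (integral_eq_zero_of_ae (.of_forall fun x => ?_))
    by_cases hx : x ∈ K
    · have : k (w - x) = 0 := by
        by_contra h0
        rw [← neg_sub, hk.even] at h0
        exact hn (hk.mem_Ioo (hKr x hx) h0)
      simp [this]
    · simp [hψ0 x hx]⟩
  have h := hJ φ
  rw [hβ.pair_b, pair_eq_full fun p hp => φ.pt_zero hp, pair_eq_full fun p hp => φ.zero hp,
    pair_eq_full fun p hp => φ.zero hp] at h
  have e1 : ∫ p, β p * ptF φ.toFun p = - ∫ x, ψ x * ptF (cv β k) x := by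
    have h1 := cv_swap (s := -1) hβ.cont.locallyIntegrable (hInt hψl hψc) hψc
      (ptF_cont hk1) (ptF_cpt hk.cpt) (fun x => by
        have h2 : k ∘ (fun z => -z) = k := by ext z; exact hk.even z
        have h3 := ((hk1.differentiable one_ne_zero) (-x)).hasFDerivAt.comp x (hasFDerivAt_id x).neg
        unfold ptF
        have h4 : fderiv ℝ k x = (fderiv ℝ k (-x)).comp (-ContinuousLinearMap.id ℝ (ℝ²)) :=
          (congrArg (fun u => fderiv ℝ u x) h2).symm.trans h3.fderiv
        rw [h4]
        simp)
    have e2 : ∀ x, ptF φ.toFun x = cv ψ (ptF k) x := fun x => cv_fderiv hψl hk1 hk.cpt x _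
    have e3 : ∀ x, ptF (cv β k) x = cv β (ptF k) x := fun x =>
      cv_fderiv hβ.cont.locallyIntegrable hk1 hk.cpt x _
    simp only [e2, e3]
    rw [h1]; ring
  have e2 : ∫ p, y.1.2.mom f p * φ.toFun p = ∫ x, ψ x * cv (y.1.2.mom f) k x := by
    rw [cv_swap (s := 1) hfl (hInt hψl hψc) hψc hkc hk.cpt (fun x => by rw [hk.even, one_mul]),
      one_mul]
  have e3 : ∫ p, y.1.2.mom σ p * φ.toFun p * φ.toFun p
      ≤ ∫ x, ψ x ^ 2 * cv (y.1.2.mom σ) k x := by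
    rw [cv_swap (s := 1) hsl (hInt hψ2l hψ2c) hψ2c hkc hk.cpt
      (fun x => by rw [hk.even, one_mul]), one_mul]
    have im : ∀ {h : ℝ² → ℝ}, Continuous h → HasCompactSupport h →
        Integrable fun p => y.1.2.mom σ p * h p := fun hh hhc =>
      (hh.integrable_of_hasCompactSupport hhc).bdd_mul (c := Cs)
        (y.1.2.mom_meas hσ.continuousOn).aestronglyMeasurable
        (.of_forall (y.1.2.mom_abs_le hCs))
    refine integral_mono ?_ (im (cv_cont hψ2l hkc hk.cpt) (hcc hψ2c)) fun p => ?_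
    · have := im (φ.cont.mul φ.cont) (φ.cpt.mul_left (f := φ.toFun))
      refine this.congr (.of_forall fun p => ?_)
      simp only [Pi.mul_apply]; ring
    · have h0 : 0 ≤ y.1.2.mom σ p := by
        have := y.1.2.prob p
        refine integral_nonneg_of_ae ?_
        filter_upwards [y.1.2.ae01 p] with l hl
        exact hσ0 l hl
      have := mul_le_mul_of_nonneg_left (hk.jensen hψl hψ2l p) h0
      calc y.1.2.mom σ p * φ.toFun p * φ.toFun p = y.1.2.mom σ p * cv ψ k p ^ 2 := by linarith
        _ ≤ _ := this
  rw [e1, e2] at h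
  linarith

/-- The contraction of the strip onto `[sT/2, T - sT/2] × ℝ` by the factor `1 - s`. -/
def Lam (T s : ℝ) (z : ℝ²) : ℝ² := (1 - s) • z + (s * T / 2, 0)

lemma integral_Lam {s : ℝ} (hs : s < 1) (h : ℝ² → ℝ) :
    ∫ z, h (Lam T s z) = ((1 - s) ^ 2)⁻¹ * ∫ x, h x := by
  have h1 := Measure.integral_comp_smul (volume : Measure (ℝ²))
    (fun x => h (x + (s * T / 2, 0))) (1 - s)
  rw [integral_add_right_eq_self h] at h1
  have h2 : Module.finrank ℝ (ℝ²) = 2 := by simp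
  rw [h2, abs_of_nonneg (by positivity), smul_eq_mul] at h1
  exact h1

lemma Lam_mem {s : ℝ} {z : ℝ²} (hs : s < 1) :
    (Lam T s z).1 ∈ Icc (s * T / 2) (T - s * T / 2) ↔ z.1 ∈ Icc 0 T := by
  have h : 0 < 1 - s := by linarith
  simp only [Lam, Prod.fst_add, Prod.smul_fst, smul_eq_mul, mem_Icc]
  constructor
  · rintro ⟨h1, h2⟩
    exact ⟨nonneg_of_mul_nonneg_right (by linarith : 0 ≤ (1 - s) * z.1) h,
      le_of_mul_le_mul_left (by linarith : (1 - s) * z.1 ≤ (1 - s) * T) h⟩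
  · rintro ⟨h1, h2⟩
    have := mul_le_mul_of_nonneg_left h2 h.le
    exact ⟨by nlinarith, by linarith⟩

lemma Lam_hasFDerivAt (T s : ℝ) (z : ℝ²) :
    HasFDerivAt (Lam T s) ((1 - s) • ContinuousLinearMap.id ℝ (ℝ²)) z :=
  ((hasFDerivAt_id z).const_smul (1 - s)).add_const _

lemma Lam_contDiff (T s : ℝ) {n : WithTop ℕ∞} : ContDiff ℝ n (Lam T s) :=
  (contDiff_id.const_smul (1 - s)).add contDiff_const

lemma YM.mom_int (μ : YM T) {F : ℝ → ℝ} (hF : Continuous F) (p : ℝ²) :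
    Integrable F (μ.m p) := by
  have := μ.prob p
  obtain ⟨C, -, hC⟩ := exists_bd01 hF.continuousOn
  refine Integrable.of_bound hF.aestronglyMeasurable C ?_
  filter_upwards [μ.ae01 p] with l hl using hC l hl

lemma YM.mom_locInt (μ : YM T) {F : ℝ → ℝ} (hF : Continuous F) :
    LocallyIntegrable (μ.mom F) := by
  obtain ⟨C, -, hC⟩ := exists_bd01 hF.continuousOn
  exact locInt_of_bdd (μ.mom_meas hF.continuousOn) (μ.mom_abs_le hC)

/-- The mollified moments, mixed with the point mass at `1/2`. -/
def molM (μ : YM T) (k : ℝ² → ℝ) (s : ℝ) (F : ℝ → ℝ) (z : ℝ²) : ℝ :=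
  (1 - s) * cv (μ.mom F) k (Lam T s z) + s * F (1 / 2)

lemma molM_isMomF {s r : ℝ} (μ : YM T) {k : ℝ² → ℝ} (hk : IsKer k r) (hs0 : 0 < s)
    (hs1 : s < 1) : IsMomF (molM μ k s) := by
  have hkc := hk.smooth.continuous
  have hi : ∀ F, Continuous F → ∀ x, Integrable fun y => μ.mom F y * k (x - y) :=
    fun F hF x => cv_int (μ.mom_locInt hF) hkc hk.cpt x
  have h1s : 0 ≤ 1 - s := by linarith
  constructor
  · intro F hF
    exact (((cv_cont (μ.mom_locInt hF) hkc hk.cpt).comp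
      (Lam_contDiff T s (n := 0)).continuous).const_mul _).add_const _
  · intro F G hF hG z
    have : cv (μ.mom fun l => F l + G l) k (Lam T s z)
        = cv (μ.mom F) k (Lam T s z) + cv (μ.mom G) k (Lam T s z) := by
      unfold cv
      rw [← integral_add (hi F hF _) (hi G hG _)]
      congr 1; ext y
      simp only [YM.mom]
      rw [integral_add (μ.mom_int hF y) (μ.mom_int hG y)]; ring
    simp only [molM, this]; ring
  · intro a F hF z
    have : cv (μ.mom fun l => a * F l) k (Lam T s z) = a * cv (μ.mom F) k (Lam T s z) := by
      unfold cv
      rw [← integral_const_mul]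
      congr 1; ext y
      simp only [YM.mom, integral_const_mul]; ring
    simp only [molM, this]; ring
  · intro F G hF hG hFG z
    have : cv (μ.mom F) k (Lam T s z) ≤ cv (μ.mom G) k (Lam T s z) := by
      refine integral_mono (hi F hF _) (hi G hG _) fun y => ?_
      refine mul_le_mul_of_nonneg_right ?_ (hk.nonneg _)
      refine integral_mono_ae (μ.mom_int hF y) (μ.mom_int hG y) ?_
      filter_upwards [μ.ae01 y] with l hl using hFG l hl
    have h2 := hFG (1 / 2) ⟨by norm_num, by norm_num⟩
    unfold molM
    gcongr
  · intro z
    have : cv (μ.mom fun _ => 1) k (Lam T s z) = 1 := by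
      have h2 : ∀ y, μ.mom (fun _ => 1) y = 1 := fun y => by
        have := μ.prob y
        simp [YM.mom]
      simp only [cv, h2, one_mul]
      rw [integral_sub_left_eq_self (fun x => k x), hk.one]
    simp only [molM, this]; ring

/-- The mollified profile, corrected by the solution `x/2 - f(1/2) t`. -/
def molb (f : ℝ → ℝ) (T : ℝ) (β k : ℝ² → ℝ) (s : ℝ) (z : ℝ²) : ℝ :=
  cv β k (Lam T s z) + s * (z.2 / 2 - f (1 / 2) * z.1)

/-- Mollification, contraction of time, and mixing with the constant state `1 / 2` (which has zero
cost) turn a pair of cost at most `J` into a regular one, up to the Jacobian of the contraction. -/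
lemma mol_isReg {J s : ℝ} {k β : ℝ² → ℝ} (hf : Continuous f)
    (hσ : Continuous σ) (hσ0 : ∀ v ∈ Icc (0:ℝ) 1, 0 ≤ σ v) (hσh : 0 < σ (1 / 2))
    (hs0 : 0 < s) (hs1 : s < 1) (hk : IsKer k (s * T / 2)) {y : AA T} (hβ : Rep y.1.1 β)
    (hJ : ∀ φ : TTest T, act f σ T y φ ≤ J) :
    IsReg f σ T (molb f T β k s) (molM y.1.2 k s) (s / 2) (((1 - s) ^ 2)⁻¹ * J) := by
  have hkc := hk.smooth.continuous
  have hβl : LocallyIntegrable β := hβ.cont.locallyIntegrable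
  have hcs := cv_smooth hβl hk.smooth hk.cpt
  have hM := molM_isMomF y.1.2 hk hs0 hs1
  have h1s : 0 < 1 - s := by linarith
  have hid : ∀ x, cv (y.1.2.mom fun l => l) k x ∈ Icc (0:ℝ) 1 := by
    intro x
    have i1 := cv_int (y.1.2.mom_locInt continuous_id) hkc hk.cpt x
    have i2 : Integrable fun w => k (x - w) := by
      simpa using cv_int (g := fun _ => (1:ℝ)) (locallyIntegrable_const 1) hkc hk.cpt x
    refine ⟨integral_nonneg fun w => mul_nonneg (y.1.2.bar_mem w).1 (hk.nonneg _), ?_⟩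
    calc _ ≤ ∫ w, k (x - w) := integral_mono i1 i2 fun w =>
          mul_le_of_le_one_left (hk.nonneg _) (y.1.2.bar_mem w).2
      _ = 1 := by rw [integral_sub_left_eq_self (fun x => k x), hk.one]
  have hσc : ∀ x, 0 ≤ cv (y.1.2.mom σ) k x := fun x => integral_nonneg fun w =>
    mul_nonneg (by
      refine integral_nonneg_of_ae ?_
      filter_upwards [y.1.2.ae01 w] with l hl
      exact hσ0 l hl) (hk.nonneg _)
  have hd : ∀ z v : ℝ², fderiv ℝ (molb f T β k s) z v
      = (1 - s) * fderiv ℝ (cv β k) (Lam T s z) v + s * (v.2 / 2 - f (1 / 2) * v.1) := by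
    intro z v
    have h1 := ((hcs.differentiable (by simp)) (Lam T s z)).hasFDerivAt.comp z
      (Lam_hasFDerivAt T s z)
    have h2 : HasFDerivAt (fun z : ℝ² => s * (z.2 / 2 - f (1 / 2) * z.1))
        (s • ((1 / 2 : ℝ) • ContinuousLinearMap.snd ℝ ℝ ℝ
          - f (1 / 2) • ContinuousLinearMap.fst ℝ ℝ ℝ)) z := by
      refine HasFDerivAt.const_mul (HasFDerivAt.sub ?_ (hasFDerivAt_fst.const_mul _)) s
      refine (hasFDerivAt_snd.const_mul (1 / 2 : ℝ)).congr_of_eventuallyEq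
        (.of_forall fun z => ?_)
      simp only []; ring
    have h3 : HasFDerivAt (molb f T β k s) _ z := h1.add h2
    rw [h3.fderiv]
    simp; ring_nf; simp
  have hpt : ∀ z, ptF (molb f T β k s) z
      = (1 - s) * ptF (cv β k) (Lam T s z) - s * f (1 / 2) := by
    intro z; unfold ptF; rw [hd]; ring
  refine ⟨by positivity, ?_, hM, ?_, ?_, ?_, ?_⟩
  · refine ((hcs.of_le (WithTop.coe_le_coe.2 (le_top : (2:ℕ∞) ≤ ⊤))).comp (Lam_contDiff T s)).add ?_
    exact contDiff_const.mul ((contDiff_snd.div_const 2).sub (contDiff_const.mul contDiff_fst))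
  · intro z _
    have := hid (Lam T s z)
    have e : molM y.1.2 k s id z
        = (1 - s) * cv (y.1.2.mom fun l => l) k (Lam T s z) + s * (1 / 2) := rfl
    rw [e]
    constructor <;> nlinarith [this.1, this.2]
  · intro z hz
    have h := hk.slope hβ ((Lam_mem (T := T) hs1).2 hz)
    unfold pxF at h ⊢
    rw [hd, h]
    have e : molM y.1.2 k s id z
        = (1 - s) * cv (y.1.2.mom fun l => l) k (Lam T s z) + s * (1 / 2) := rfl
    rw [e]; ring
  · intro z _
    have := mul_nonneg h1s.le (hσc (Lam T s z))
    have := mul_pos hs0 hσh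
    unfold molM; linarith
  · intro R hR
    set Q : Set (ℝ²) := Icc (s * T / 2) (T - s * T / 2) ×ˢ Icc (-((1 - s) * R)) ((1 - s) * R)
      with hQ
    have hQc : IsCompact Q := isCompact_Icc.prod isCompact_Icc
    set g : ℝ² → ℝ := fun x => ptF (cv β k) x + cv (y.1.2.mom f) k x with hg
    set S : ℝ² → ℝ := fun x => (1 - s) * cv (y.1.2.mom σ) k x + s * σ (1 / 2) with hS
    have hS0 : ∀ x, 0 < S x := fun x => by
      have := mul_nonneg h1s.le (hσc x)
      have := mul_pos hs0 hσh
      simp only [hS]; linarith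
    have hptc : Continuous (ptF (cv β k)) := ptF_cont (hcs.of_le (by exact_mod_cast le_top))
    have hfc : Continuous (cv (y.1.2.mom f) k) := cv_cont (y.1.2.mom_locInt hf) hkc hk.cpt
    have hsc : Continuous (cv (y.1.2.mom σ) k) := cv_cont (y.1.2.mom_locInt hσ) hkc hk.cpt
    have hgc : Continuous g := hptc.add hfc
    have hSc : Continuous S := (hsc.const_mul _).add_const _
    set ψ₀ : ℝ² → ℝ := fun x => (1 - s) * g x / S x with hψ₀
    have hψ₀c : Continuous ψ₀ := (hgc.const_mul _).div hSc fun x => (hS0 x).ne'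
    obtain ⟨C, hC⟩ := hQc.exists_bound_of_continuousOn hψ₀c.continuousOn
    have hdual := hk.dual (C := max C 0) (ψ := Q.indicator ψ₀) hf hσ hσ0 hβ hJ hQc
      (fun x hx => hx.1) (hψ₀c.measurable.indicator hQc.measurableSet) (fun x => by
        by_cases hx : x ∈ Q
        · rw [indicator_of_mem hx]; exact (hC x hx).trans (le_max_left _ _)
        · rw [indicator_of_notMem hx, abs_zero]; exact le_max_right _ _)
      (fun x hx => indicator_of_notMem hx _)
    have hmv : ∀ h : ℝ² → ℝ, ∫ x, Q.indicator ψ₀ x * h x = ∫ x in Q, ψ₀ x * h x := by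
      intro h
      rw [← integral_indicator hQc.measurableSet]
      congr 1; ext x
      by_cases hx : x ∈ Q <;> simp [hx]
    have hmv2 : ∫ x, Q.indicator ψ₀ x ^ 2 * cv (y.1.2.mom σ) k x
        = ∫ x in Q, ψ₀ x ^ 2 * cv (y.1.2.mom σ) k x := by
      rw [← integral_indicator hQc.measurableSet]
      congr 1; ext x
      by_cases hx : x ∈ Q <;> simp [hx]
    have io : ∀ {h : ℝ² → ℝ}, Continuous h → IntegrableOn h Q := fun hh =>
      hh.continuousOn.integrableOn_compact hQc
    have hQJ : ∫ x in Q, ((1 - s) * g x) ^ 2 / (2 * S x) ≤ J := by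
      have j1 : IntegrableOn (fun x => ψ₀ x * ptF (cv β k) x) Q := io (hψ₀c.mul hptc)
      have j2 : IntegrableOn (fun x => ψ₀ x * cv (y.1.2.mom f) k x) Q := io (hψ₀c.mul hfc)
      have j3 : IntegrableOn (fun x => 1 / 2 * (ψ₀ x ^ 2 * cv (y.1.2.mom σ) k x)) Q :=
        io (((hψ₀c.pow 2).mul hsc).const_mul _)
      have j4 : IntegrableOn (fun x => ψ₀ x * ptF (cv β k) x + ψ₀ x * cv (y.1.2.mom f) k x) Q :=
        j1.add j2
      rw [hmv, hmv, hmv2, ← integral_add j1 j2, ← integral_const_mul, ← integral_sub j4 j3]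
        at hdual
      refine le_trans (setIntegral_mono_on (io (((hgc.const_mul _).pow 2).div (hSc.const_mul 2)
        fun x => (mul_pos two_pos (hS0 x)).ne')) (j4.sub j3) hQc.measurableSet
          fun x _ => ?_) hdual
      have hSx := hS0 x
      have hle : (1 - s) * cv (y.1.2.mom σ) k x ≤ S x := by nlinarith
      have e : ψ₀ x * ptF (cv β k) x + ψ₀ x * cv (y.1.2.mom f) k x
          - 1 / 2 * (ψ₀ x ^ 2 * cv (y.1.2.mom σ) k x)
          = (1 - s) * g x ^ 2 / (2 * S x) * (2 - (1 - s) * cv (y.1.2.mom σ) k x / S x) := by grind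
      have e2 : (1 - s) * cv (y.1.2.mom σ) k x / S x ≤ 1 := (div_le_one hSx).2 hle
      have e3 : 0 ≤ (1 - s) * g x ^ 2 / (2 * S x) := by positivity
      have e4 : ((1 - s) * g x) ^ 2 / (2 * S x) ≤ (1 - s) * g x ^ 2 / (2 * S x) := by
        gcongr
        nlinarith [mul_nonneg h1s.le (sq_nonneg (g x))]
      refine e4.trans ?_
      refine le_trans ?_ e.ge
      exact le_mul_of_one_le_right e3 (by linarith)
    have hcv := integral_Lam (T := T) hs1 (Q.indicator fun x => ((1 - s) * g x) ^ 2 / (2 * S x))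
    rw [integral_indicator hQc.measurableSet] at hcv
    have e5 : ∫ z in box T R, (ptF (molb f T β k s) z + molM y.1.2 k s f z) ^ 2
        / (2 * molM y.1.2 k s σ z)
        = ∫ z, Q.indicator (fun x => ((1 - s) * g x) ^ 2 / (2 * S x)) (Lam T s z) := by
      rw [← integral_indicator measurableSet_box]
      congr 1; ext z
      have hiff : Lam T s z ∈ Q ↔ z ∈ box T R := by
        rw [hQ, mem_prod, mem_prod, Lam_mem hs1]
        refine and_congr_right fun _ => ?_
        simp only [Lam, Prod.snd_add, Prod.smul_snd, smul_eq_mul, add_zero, mem_Icc,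
          ← mul_neg, mul_le_mul_iff_right₀ h1s]
      by_cases hz : z ∈ box T R
      · rw [indicator_of_mem hz, indicator_of_mem (hiff.2 hz), hpt]
        simp only [molM, hg, hS]
        ring_nf
      · rw [indicator_of_notMem hz, indicator_of_notMem fun h => hz (hiff.1 h)]
    rw [e5, hcv]
    exact mul_le_mul_of_nonneg_left hQJ (by positivity)

lemma IsKer.cv_close {k g : ℝ² → ℝ} {r c δ : ℝ} (hk : IsKer k r) (hg : LocallyIntegrable g)
    {x : ℝ²} (h : ∀ y, ‖x - y‖ < r → |g y - c| ≤ δ) : |cv g k x - c| ≤ δ := by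
  have hkc := hk.smooth.continuous
  have i2 : Integrable fun w => k (x - w) := by
    simpa using cv_int (g := fun _ => (1:ℝ)) (locallyIntegrable_const 1) hkc hk.cpt x
  have h1 : ∫ w, k (x - w) = 1 := by rw [integral_sub_left_eq_self (fun x => k x), hk.one]
  have e : cv g k x - c = ∫ y, (g y * k (x - y) - c * k (x - y)) := by
    rw [integral_sub (cv_int hg hkc hk.cpt x) (i2.const_mul c), integral_const_mul, h1, mul_one]
    rfl
  rw [e, ← norm_eq_abs]
  refine (norm_integral_le_of_norm_le (i2.const_mul δ) (.of_forall fun y => ?_)).trans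
    (by rw [integral_const_mul, h1, mul_one])
  rw [← sub_mul, norm_mul, norm_eq_abs, Real.norm_of_nonneg (hk.nonneg _)]
  by_cases h0 : k (x - y) = 0
  · simp [h0]
  · exact mul_le_mul_of_nonneg_right (h y (hk.near h0)) (hk.nonneg _)

lemma Lam_near {s R : ℝ} {z y : ℝ²} (hs0 : 0 < s) (hz : z.1 ∈ Icc 0 T) (hzR : |z.2| ≤ R)
    (hy : ‖Lam T s z - y‖ < s * T / 2) : ‖y - z‖ ≤ s * (2 * T + R) := by
  have hT : 0 ≤ T := hz.1.trans hz.2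
  have h1 : ‖z‖ ≤ T + R := by
    rw [Prod.norm_def, norm_eq_abs, norm_eq_abs, abs_of_nonneg hz.1]
    exact max_le (by linarith [hz.2, abs_nonneg z.2]) (by linarith)
  have h2 : ‖((s * T / 2, 0) : ℝ²)‖ = s * T / 2 := by
    rw [Prod.norm_def, norm_zero, Real.norm_of_nonneg (by positivity), max_eq_left (by positivity)]
  have e : y - z = -(Lam T s z - y) + (-(s • z) + (s * T / 2, 0)) := by
    unfold Lam
    rw [sub_smul, one_smul]; abel
  rw [e]
  refine (norm_add_le _ _).trans ?_
  have h3 := norm_add_le (-(s • z)) ((s * T / 2, 0) : ℝ²)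
  rw [norm_neg, norm_smul, Real.norm_of_nonneg hs0.le, h2] at h3
  rw [norm_neg]
  nlinarith

lemma mol_unif {k : ℝ → ℝ² → ℝ} (hT : 0 < T) (hk : ∀ s > 0, IsKer (k s) (s * T / 2))
    {g : ℝ² → ℝ} (hg : Continuous g) (R : ℝ) {δ : ℝ} (hδ : 0 < δ) :
    ∀ᶠ s in 𝓝[>] (0:ℝ), ∀ z : ℝ², z.1 ∈ Icc 0 T → |z.2| ≤ R →
      |cv g (k s) (Lam T s z) - g z| ≤ δ := by
  obtain ⟨η, hη, hu⟩ := Metric.uniformContinuousOn_iff.1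
    ((isCompact_closedBall (0 : ℝ²) (3 * T + 2 * |R|)).uniformContinuousOn_of_continuous
      hg.continuousOn) δ hδ
  have hP : 0 < 2 * T + |R| := by positivity
  have hsm : ∀ᶠ s in 𝓝[>] (0:ℝ), s ∈ Ioo 0 (min 1 (η / (2 * T + |R|))) :=
    Ioo_mem_nhdsGT (by positivity)
  filter_upwards [hsm] with s hs z hz hzR
  have hs1 : s < 1 := hs.2.trans_le (min_le_left _ _)
  have hs2 : s * (2 * T + |R|) < η := (lt_div_iff₀ hP).1 (hs.2.trans_le (min_le_right _ _))
  refine (hk s hs.1).cv_close hg.locallyIntegrable fun y hy => ?_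
  have h1 := Lam_near hs.1 hz (hzR.trans (le_abs_self R)) hy
  have hz1 : ‖z‖ ≤ T + |R| := by
    rw [Prod.norm_def, norm_eq_abs, norm_eq_abs, abs_of_nonneg hz.1]
    exact max_le (by linarith [hz.2, abs_nonneg R]) (by linarith [le_abs_self R])
  have hy1 : ‖y‖ ≤ 3 * T + 2 * |R| := by
    have : ‖y‖ ≤ ‖y - z‖ + ‖z‖ := by simpa using norm_add_le (y - z) z
    nlinarith
  have := hu y (by simpa using hy1) z (by simp; linarith [abs_nonneg R])
    (by rw [dist_eq_norm]; linarith)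
  exact this.le

lemma IsKer.cv_L1 {k g : ℝ² → ℝ} {r : ℝ} (hk : IsKer k r) (hg : Integrable g) :
    Integrable (cv g k) ∧ ∫ x, |cv g k x| ≤ ∫ x, |g x| := by
  have hki := hk.smooth.continuous.integrable_of_hasCompactSupport (μ := volume) hk.cpt
  have h1 : Integrable (cv g k) := by
    rw [cv_eq]; exact hg.integrable_convolution _ hki
  have h2 : Integrable (cv (fun x => |g x|) k) := by
    rw [cv_eq]; exact hg.abs.integrable_convolution _ hki
  refine ⟨h1, ?_⟩
  have h3 : ∫ x, cv (fun x => |g x|) k x = ∫ x, |g x| := by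
    rw [cv_eq, integral_convolution _ hg.abs hki, hk.one]
    simp
  rw [← h3]
  refine integral_mono h1.abs h2 fun x => ?_
  refine (abs_integral_le_integral_abs).trans (le_of_eq ?_)
  unfold cv
  congr 1; ext y
  rw [abs_mul, abs_of_nonneg (hk.nonneg _)]

lemma mol_L1 {C : ℝ} {k : ℝ → ℝ² → ℝ} (hT : 0 < T)
    (hk : ∀ s > 0, IsKer (k s) (s * T / 2)) {g : ℝ² → ℝ} (hg : Measurable g)
    (hC : ∀ p, |g p| ≤ C) {R : ℝ} (hR : 0 < R) {δ : ℝ} (hδ : 0 < δ) :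
    ∀ᶠ s in 𝓝[>] (0:ℝ), ∫ z in box T R,
      |cv g (k s) (Lam T s z) - g z| ≤ δ := by
  set P := box T R with hP
  set P' := box T (R + T) with hP'
  have hPc : IsCompact P := isCompact_box
  have hgl := locInt_of_bdd hg hC
  have hgi : Integrable (P'.indicator g) :=
    (hgl.integrableOn_isCompact isCompact_box).integrable_indicator measurableSet_box
  obtain ⟨u, huc, hu, hucont, hui⟩ := hgi.exists_hasCompactSupport_integral_sub_le
    (ε := δ / 10) (by positivity)
  set e : ℝ² → ℝ := fun x => P'.indicator g x - u x with he
  have hei : Integrable e := hgi.sub hui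
  have hV : 0 ≤ volume.real P := measureReal_nonneg
  have hsm : ∀ᶠ s in 𝓝[>] (0:ℝ), s ∈ Ioo (0:ℝ) (1 / 2) := Ioo_mem_nhdsGT (by norm_num)
  filter_upwards [hsm, mol_unif hT hk hucont R (δ := δ / (2 * (volume.real P + 1)))
    (by positivity)] with s hs hun
  have hk' := hk s hs.1
  have hkc := hk'.smooth.continuous
  obtain ⟨hce, hce1⟩ := hk'.cv_L1 hei
  have hLc : Continuous (Lam T s) := (Lam_contDiff T s (n := 0)).continuous
  have hL := integral_Lam (T := T) (s := s) (by linarith [hs.2]) (fun x => |cv e (k s) x|)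
  have hLi : Integrable fun z => |cv e (k s) (Lam T s z)| := by
    have h1 : Integrable fun z => cv e (k s) (z + (s * T / 2, 0)) := hce.comp_add_right _
    exact (h1.comp_smul (R := 1 - s) (by linarith [hs.2])).abs
  have hpt : ∀ z ∈ P, |cv g (k s) (Lam T s z) - g z|
      ≤ |cv e (k s) (Lam T s z)| + |e z| + δ / (2 * (volume.real P + 1)) := by
    intro z hz
    have hzR : |z.2| ≤ R := abs_le.2 hz.2
    have h1 : P'.indicator g z = g z := indicator_of_mem (show z ∈ P' from
      ⟨hz.1, by constructor <;> linarith [hz.2.1, hz.2.2]⟩) _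
    have h2 : cv g (k s) (Lam T s z) = cv e (k s) (Lam T s z) + cv u (k s) (Lam T s z) := by
      unfold cv
      rw [← integral_add (cv_int hei.locallyIntegrable hkc hk'.cpt _)
        (cv_int hucont.locallyIntegrable hkc hk'.cpt _)]
      congr 1; ext y
      by_cases h0 : k s (Lam T s z - y) = 0
      · simp [h0]
      · have hy1 := hk'.mem_Ioo ((Lam_mem (T := T) (by linarith [hs.2])).2 hz.1) h0
        have hy2 : |(Lam T s z).2 - y.2| < s * T / 2 :=
          (norm_snd_le (Lam T s z - y)).trans_lt (hk'.near h0)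
        have hy3 : (Lam T s z).2 = (1 - s) * z.2 := by simp [Lam]
        have hy4 : |(1 - s) * z.2| ≤ R := by
          rw [abs_mul, abs_of_nonneg (by linarith [hs.2])]
          nlinarith [hs.1, hs.2, abs_nonneg z.2]
        rw [hy3, abs_lt] at hy2
        rw [abs_le] at hy4
        have hsT : s * T / 2 ≤ T := by nlinarith [hs.1, hs.2]
        have : P'.indicator g y = g y := indicator_of_mem (show y ∈ P' from
          ⟨⟨hy1.1.le, hy1.2.le⟩, ⟨by linarith, by linarith⟩⟩) _
        simp only [he, this]; ring
    have h3 := hun z hz.1 hzR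
    have h4 : cv g (k s) (Lam T s z) - g z
        = cv e (k s) (Lam T s z) + (cv u (k s) (Lam T s z) - u z) - e z := by linarith
    rw [h4]
    refine (abs_sub _ _).trans ?_
    have := abs_add_le (cv e (k s) (Lam T s z)) (cv u (k s) (Lam T s z) - u z)
    linarith
  have hb1 : ∫ z in P, |cv e (k s) (Lam T s z)| ≤ 4 * (δ / 10) := by
    refine (setIntegral_le_integral hLi (.of_forall fun z => abs_nonneg _)).trans ?_
    rw [hL]
    have h5 : ((1 - s) ^ 2)⁻¹ ≤ 4 := inv_le_of_inv_le₀ (by norm_num) (by nlinarith [hs.1, hs.2])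
    exact mul_le_mul h5 (hce1.trans hu) (integral_nonneg fun _ => abs_nonneg _) (by norm_num)
  have hb2 : ∫ z in P, |e z| ≤ δ / 10 :=
    (setIntegral_le_integral hei.abs (.of_forall fun z => abs_nonneg _)).trans hu
  have hb3 : ∫ z in P, δ / (2 * (volume.real P + 1)) ≤ δ / 2 := by
    rw [setIntegral_const, smul_eq_mul, mul_div_assoc', div_le_div_iff₀ (by positivity) two_pos]
    nlinarith
  have i0 : IntegrableOn (fun z => |cv g (k s) (Lam T s z) - g z|) P :=
    (((cv_cont hgl hkc hk'.cpt).comp hLc).continuousOn.integrableOn_compact hPc |>.sub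
      (hgl.integrableOn_isCompact hPc)).abs
  have i1 : IntegrableOn (fun z => |cv e (k s) (Lam T s z)| + |e z|) P :=
    hLi.integrableOn.add hei.abs.integrableOn
  have i2 : IntegrableOn (fun _ : ℝ² => δ / (2 * (volume.real P + 1))) P :=
    integrableOn_const hPc.measure_lt_top.ne
  refine (setIntegral_mono_on i0 (i1.add i2) measurableSet_box hpt).trans ?_
  simp only [Pi.add_apply]
  rw [integral_add i1 i2, integral_add hLi.integrableOn hei.abs.integrableOn]
  linarith

lemma pair_le_box {R H : ℝ} {u u' h : ℝ² → ℝ} (hu : L1loc T u) (hu' : L1loc T u')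
    (hR0 : 0 < R) (hR : ∀ p : ℝ², R ≤ |p.2| → h p = 0) (hh : Continuous h)
    (hc : HasCompactSupport h) (hH : ∀ p, |h p| ≤ H) :
    |pair T u h - pair T u' h| ≤ H * ∫ z in box T R, |u z - u' z| := by
  rw [← pair_sub_left hu hu' hh hc]
  unfold pair
  rw [strip_eq_box (R := R) fun p hp => by simp [hR p hp], ← integral_const_mul,
    ← norm_eq_abs]
  refine norm_integral_le_of_norm_le (((hu.2 R hR0).sub (hu'.2 R hR0)).abs.const_mul H)
    (.of_forall fun z => ?_)
  rw [norm_mul, mul_comm, norm_eq_abs, norm_eq_abs]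
  exact mul_le_mul_of_nonneg_right (hH z) (abs_nonneg _)

/-- Regular pairs approximate `(b, μ)` with almost the same cost. -/
lemma exists_reg_near {ι : Type*} [Finite ι] {J R δ : ℝ} {β : ℝ² → ℝ}
    (hT : 0 < T) (hf : Continuous f) (hσ : Continuous σ) (hσ0 : ∀ v ∈ Icc (0:ℝ) 1, 0 ≤ σ v)
    (hσh : 0 < σ (1 / 2)) {y : AA T} (hβ : Rep y.1.1 β)
    (hJ : ∀ φ : TTest T, act f σ T y φ ≤ J)
    {F : ι → ℝ → ℝ} {h : ι → ℝ² → ℝ} (hF : ∀ i, Continuous (F i))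
    (hh : ∀ i, Continuous (h i)) (hc : ∀ i, HasCompactSupport (h i)) (hδ : 0 < δ) :
    ∃ b M κ J', IsReg f σ T b M κ J' ∧ J' ≤ J + δ ∧
      (∀ z : ℝ², z.1 ∈ Icc 0 T → |z.2| ≤ R → |b z - β z| ≤ δ) ∧
      ∀ i, |pair T (M (F i)) (h i) - pair T (y.1.2.mom (F i)) (h i)| ≤ δ := by
  have hker : ∀ s, ∃ k, 0 < s → IsKer k (s * T / 2) := fun s => by
    by_cases hs : 0 < s
    · obtain ⟨k, hk⟩ := exists_ker (show 0 < s * T / 2 by positivity)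
      exact ⟨k, fun _ => hk⟩
    · bound
  choose k hk using hker
  have hsm : ∀ᶠ s in 𝓝[>] (0:ℝ), s ∈ Ioo (0:ℝ) 1 := Ioo_mem_nhdsGT one_pos
  have hlim : ∀ G : ℝ → ℝ, Continuous G → ∀ a, G 0 < a → ∀ᶠ s in 𝓝[>] (0:ℝ), G s < a :=
    fun G hG a ha => (hG.tendsto 0).mono_left nhdsWithin_le_nhds |>.eventually_lt_const ha
  have hJs : ∀ᶠ s in 𝓝[>] (0:ℝ), ((1 - s) ^ 2)⁻¹ * J < J + δ := by
    have : ContinuousAt (fun s : ℝ => ((1 - s) ^ 2)⁻¹ * J) 0 :=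
      ContinuousAt.mul (ContinuousAt.inv₀ (by fun_prop) (by norm_num)) continuousAt_const
    refine (this.tendsto.mono_left nhdsWithin_le_nhds).eventually_lt_const ?_
    simp [hδ]
  have hbs : ∀ᶠ s in 𝓝[>] (0:ℝ), s * (|R| + |f (1 / 2)| * T) < δ / 2 :=
    hlim (fun s => s * (|R| + |f (1 / 2)| * T)) (by fun_prop) _ (by simp [hδ])
  have htest : ∀ i, ∀ᶠ s in 𝓝[>] (0:ℝ),
      |pair T (molM y.1.2 (k s) s (F i)) (h i) - pair T (y.1.2.mom (F i)) (h i)| ≤ δ := by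
    intro i
    obtain ⟨Q, hQ, hQh⟩ := exists_strip_bound (hc i)
    obtain ⟨H, hH⟩ := (hh i).bounded_above_of_compact_support (hc i)
    obtain ⟨C, hC0, hC⟩ := exists_bd01 (hF i).continuousOn
    have hH0 : 0 ≤ H := (norm_nonneg _).trans (hH 0)
    have hmb := y.1.2.mom_abs_le hC
    have hml := y.1.2.mom_locInt (hF i)
    set P := box T Q with hP
    filter_upwards [hsm, mol_L1 hT hk (y.1.2.mom_meas (hF i).continuousOn) hmb hQ
      (δ := δ / (2 * (H + 1))) (by positivity),
      hlim (fun s => H * (volume.real P * (s * (2 * C)))) (by fun_prop) (δ / 2)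
        (by simp [hδ])] with s hs h1 h2
    have hk' := hk s hs.1
    have hM := molM_isMomF y.1.2 hk' hs.1 hs.2
    have hcvb : ∀ x, |cv (y.1.2.mom (F i)) (k s) x| ≤ C := fun x => by
      simpa using hk'.cv_close hml (c := 0) (δ := C) (x := x) fun w _ => by simpa using hmb w
    have hcc : Continuous fun z => cv (y.1.2.mom (F i)) (k s) (Lam T s z) :=
      (cv_cont hml hk'.smooth.continuous hk'.cpt).comp (Lam_contDiff T s (n := 0)).continuous
    refine (pair_le_box (L1loc.of_cont (hM.cont _ (hF i)))
      (y.1.2.mom_l1 (hF i).continuousOn) hQ hQh (hh i) (hc i) hH).trans ?_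
    have i1 : IntegrableOn (fun z => |cv (y.1.2.mom (F i)) (k s) (Lam T s z)
        - y.1.2.mom (F i) z|) P :=
      (hcc.continuousOn.integrableOn_compact isCompact_box |>.sub
        (hml.integrableOn_isCompact isCompact_box)).abs
    have i2 : IntegrableOn (fun _ : ℝ² => s * (2 * C)) P :=
      integrableOn_const isCompact_box.measure_lt_top.ne
    have i0 : IntegrableOn (fun z => |molM y.1.2 (k s) s (F i) z - y.1.2.mom (F i) z|) P :=
      ((hM.cont _ (hF i)).continuousOn.integrableOn_compact isCompact_box |>.sub
        (hml.integrableOn_isCompact isCompact_box)).abs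
    have h3 : ∫ z in P, |molM y.1.2 (k s) s (F i) z - y.1.2.mom (F i) z|
        ≤ δ / (2 * (H + 1)) + volume.real P * (s * (2 * C)) := by
      have h4 := setIntegral_mono_on i0 (i1.add i2) measurableSet_box fun z _ => by
        have e : molM y.1.2 (k s) s (F i) z - y.1.2.mom (F i) z
            = (cv (y.1.2.mom (F i)) (k s) (Lam T s z) - y.1.2.mom (F i) z)
              + s * (F i (1 / 2) - cv (y.1.2.mom (F i)) (k s) (Lam T s z)) := by
          simp only [molM]; ring
        have h5 := abs_sub (F i (1 / 2)) (cv (y.1.2.mom (F i)) (k s) (Lam T s z))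
        have h6 := hC (1 / 2) ⟨by norm_num, by norm_num⟩
        have h7 := hcvb (Lam T s z)
        simp only [Pi.add_apply]
        rw [e]
        refine (abs_add_le _ _).trans ?_
        rw [abs_mul, abs_of_pos hs.1]
        have := mul_le_mul_of_nonneg_left (show |F i (1 / 2)
          - cv (y.1.2.mom (F i)) (k s) (Lam T s z)| ≤ 2 * C by linarith) hs.1.le
        linarith
      refine h4.trans ?_
      simp only [Pi.add_apply]
      rw [integral_add i1 i2, setIntegral_const, smul_eq_mul]
      linarith
    refine (mul_le_mul_of_nonneg_left h3 hH0).trans ?_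
    have h8 : H * (δ / (2 * (H + 1))) ≤ δ / 2 := by
      rw [mul_div_assoc', div_le_div_iff₀ (by positivity) two_pos]
      nlinarith
    rw [mul_add]
    linarith
  obtain ⟨s, hs, h1, h2, h3, h4⟩ := (hsm.and (hJs.and (hbs.and
    ((mol_unif hT hk hβ.cont R (half_pos hδ)).and (eventually_all.2 htest))))).exists
  refine ⟨_, _, _, _, mol_isReg hf hσ hσ0 hσh hs.1 hs.2 (hk s hs.1) hβ hJ, h1.le, ?_, h4⟩
  intro z hz hzR
  have e : molb f T β (k s) s z - β z = (cv β (k s) (Lam T s z) - β z)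
      + s * (z.2 / 2 - f (1 / 2) * z.1) := by simp only [molb]; ring
  rw [e]
  refine (abs_add_le _ _).trans ?_
  have h5 : |s * (z.2 / 2 - f (1 / 2) * z.1)| ≤ s * (|R| + |f (1 / 2)| * T) := by
    rw [abs_mul, abs_of_pos hs.1]
    refine mul_le_mul_of_nonneg_left ((abs_sub _ _).trans ?_) hs.1.le
    rw [abs_mul, abs_of_nonneg hz.1, abs_div, abs_two]
    have := mul_le_mul_of_nonneg_left hz.2 (abs_nonneg (f (1 / 2)))
    have := le_abs_self R
    linarith [abs_nonneg z.2]
  linarith [h3 z hz hzR]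

/-! ### A countable family of test functions -/

/-- A countable family of compactly supported functions, uniformly dense with control of the
supports: cut-offs of a dense sequence in `C(ℝ², ℝ)`. -/
lemma exists_tests : ∃ h : ℕ × ℕ → ℝ² → ℝ, (∀ i, Continuous (h i)) ∧
    (∀ i, HasCompactSupport (h i)) ∧ ∀ (g : ℝ² → ℝ) (R η : ℝ), Continuous g → 0 < η →
      (∀ z, R ≤ ‖z‖ → g z = 0) → ∃ i, (∀ z, |g z - h i z| ≤ η) ∧ ∀ z, |R| + 2 ≤ ‖z‖ → h i z = 0 := by
  have hd : DenseRange (TopologicalSpace.denseSeq C(ℝ², ℝ)) :=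
    TopologicalSpace.denseRange_denseSeq _
  have h0 : ∀ (m : ℕ) (z : ℝ²), (m:ℝ) + 1 ≤ ‖z‖ → max 0 (min 1 ((m:ℝ) + 1 - ‖z‖)) = 0 :=
    fun m z hz => max_eq_left ((min_le_right _ _).trans (by linarith))
  refine ⟨fun i z => max 0 (min 1 ((i.1:ℝ) + 1 - ‖z‖)) * TopologicalSpace.denseSeq C(ℝ², ℝ) i.2 z,
    fun i => by fun_prop, fun i => ?_, fun g R η hg hη hR => ?_⟩ <;> beta_reduce
  · refine HasCompactSupport.intro (isCompact_closedBall 0 ((i.1:ℝ) + 1)) fun z hz => ?_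
    rw [mem_closedBall_zero_iff, not_le] at hz
    beta_reduce
    rw [h0 _ _ hz.le, zero_mul]
  · set m := ⌈|R|⌉₊
    have hm := Nat.le_ceil |R|
    have hm' := Nat.ceil_lt_add_one (abs_nonneg R)
    obtain ⟨k, hk⟩ := hd.exists_mem_open
      ((ContinuousMap.isOpen_setOf_mapsTo (isCompact_closedBall (0 : ℝ²) (m + 1))
        (Metric.isOpen_ball (x := (0:ℝ)) (ε := η))).preimage
        (continuous_const.sub continuous_id : Continuous fun φ : C(ℝ², ℝ) => ⟨g, hg⟩ - φ))
      ⟨⟨g, hg⟩, fun z _ => by simp [hη]⟩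
    refine ⟨(m, k), fun z => ?_, fun z hz => ?_⟩ <;> beta_reduce
    · rcases le_or_gt ((m:ℝ) + 1) ‖z‖ with hz | hz
      · grind
      · have h1 : |g z - TopologicalSpace.denseSeq C(ℝ², ℝ) k z| < η := by
          simpa using hk (mem_closedBall_zero_iff.2 hz.le)
        rcases le_or_gt (m:ℝ) ‖z‖ with hz' | hz'
        · have h2 := hR z (by linarith [le_abs_self R])
          rw [h2] at h1 ⊢
          rw [zero_sub, abs_neg] at h1 ⊢
          rw [abs_mul, abs_of_nonneg (le_max_left _ _)]
          calc _ ≤ 1 * |TopologicalSpace.denseSeq C(ℝ², ℝ) k z| := by bound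
            _ ≤ η := by linarith
        · grind
    · grind

/-- Every test function for the weak* topology is approximated, uniformly over all Young measures,
by finite sums from a countable family of products. -/
lemma exists_prod_tests : ∃ (F : ℕ → ℝ → ℝ) (h : ℕ → ℝ² → ℝ), (∀ i, Continuous (F i)) ∧
    (∀ i, Continuous (h i)) ∧ (∀ i, HasCompactSupport (h i)) ∧
    ∀ (T : ℝ) (g : ℝ × ℝ² → ℝ), Continuous g → HasCompactSupport g → ∀ η > 0,
      ∃ (n : ℕ) (a : ℕ → ℕ), ∀ μ : YM T,
        |μ.wpair g - ∑ j ∈ Finset.range n, pair T (μ.mom (F (a j))) (h (a j))| ≤ η := by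
  obtain ⟨h, hh, hc, hap⟩ := exists_tests
  let e := Denumerable.eqv ((ℕ × ℕ) × (ℕ × ℕ))
  refine ⟨fun i => hat (e.symm i).1.1 (e.symm i).1.2, fun i => h (e.symm i).2,
    fun i => hat_cont _ _, fun i => hh _, fun i => hc _, fun T g hg hgc η hη => ?_⟩
  obtain ⟨R, hR⟩ := hgc.isCompact.isBounded.exists_norm_le
  have hgR : ∀ l z, |R| + 1 ≤ ‖z‖ → g (l, z) = 0 := fun l z hz => by
    by_contra hne
    have h1 := hR _ (subset_tsupport _ hne)
    have h2 : ‖z‖ ≤ ‖(l, z)‖ := le_max_right _ _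
    linarith [le_abs_self R]
  set Q := |R| + 1 with hQ
  have hQ0 : 0 < Q := by positivity
  set V : ℝ := volume.real (box T (Q + 2)) with hV
  have hV0 : 0 ≤ V := measureReal_nonneg
  set δ := η / (2 * (V + 1)) with hδd
  have hδ : 0 < δ := by positivity
  obtain ⟨r, hr, hur⟩ := Metric.uniformContinuous_iff.1
    (hg.uniformContinuous_of_tendsto_cocompact hgc.is_zero_at_infty) δ hδ
  obtain ⟨n, hn⟩ := exists_nat_one_div_lt (half_pos hr)
  have hch : ∀ j : ℕ, ∃ i, (∀ z, |g ((j:ℝ) / (n + 1 : ℕ), z) - h i z| ≤ δ) ∧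
      ∀ z, Q + 2 ≤ ‖z‖ → h i z = 0 := fun j => by
    simpa only [abs_of_pos hQ0] using
      hap (fun z => g ((j:ℝ) / (n + 1 : ℕ), z)) Q δ (by fun_prop) hδ fun z hz => hgR _ z hz
  choose i hi1 hi2 using hch
  refine ⟨n + 1 + 1, fun j => e ((n + 1, j), i j), fun μ => ?_⟩
  simp only [Equiv.symm_apply_apply]
  have hnorm : ∀ p : ℝ², |p.2| ≤ ‖p‖ := fun p => le_max_right _ _
  have hI : ∀ j, IntegrableOn (fun p => μ.mom (hat (n + 1) j) p * h (i j) p)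
      (strip T) := fun j =>
    (μ.mom_l1 (hat_cont _ _).continuousOn).mul_strip (hh _) (hc _)
  have hpt : ∀ p : ℝ², |(∫ l, g (l, p) ∂μ.m p) -
      ∑ j ∈ Finset.range (n + 1 + 1), μ.mom (hat (n + 1) j) p * h (i j) p| ≤ 2 * δ := fun p => by
    have := μ.prob p
    have hInt : ∀ G : ℝ → ℝ, Continuous G → Integrable G (μ.m p) := fun G hG => by
      obtain ⟨C, _, hC⟩ := exists_bd01 hG.continuousOn
      exact Integrable.of_bound hG.aestronglyMeasurable C ((μ.ae01 p).mono fun l hl => hC l hl)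
    have e1 : ∑ j ∈ Finset.range (n + 1 + 1), μ.mom (hat (n + 1) j) p * h (i j) p =
        ∫ l, ∑ j ∈ Finset.range (n + 1 + 1), hat (n + 1) j l * h (i j) p ∂μ.m p := by
      rw [integral_finsetSum _ fun j _ => (hInt _ (hat_cont _ _)).mul_const _]
      exact Finset.sum_congr rfl fun j _ => (integral_mul_const _ _).symm
    rw [e1, ← integral_sub (hInt (fun l => g (l, p)) (by fun_prop))
      (integrable_finsetSum _ fun j _ => (hInt _ (hat_cont _ _)).mul_const _)]
    have := norm_integral_le_of_norm_le_const (C := 2 * δ) ((μ.ae01 p).mono fun l hl =>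
      (?_ : ‖g (l, p) - ∑ j ∈ Finset.range (n + 1 + 1), hat (n + 1) j l * h (i j) p‖ ≤ 2 * δ))
    · simpa using this
    have h1 := hat_interp (F := fun l => g (l, p)) (n := n + 1) (r := r / 2) (η := δ) n.succ_pos
      (fun x _ y _ hxy => ?_) (by push_cast; exact hn.le) hl
    · have h2 : |∑ j ∈ Finset.range (n + 1 + 1), hat (n + 1) j l * g ((j:ℝ) / (n + 1 : ℕ), p) -
          ∑ j ∈ Finset.range (n + 1 + 1), hat (n + 1) j l * h (i j) p| ≤ δ := by
        rw [← Finset.sum_sub_distrib]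
        calc _ ≤ ∑ j ∈ Finset.range (n + 1 + 1), hat (n + 1) j l * δ := by
              refine (Finset.abs_sum_le_sum_abs _ _).trans (Finset.sum_le_sum fun j _ => ?_)
              rw [← mul_sub, abs_mul, abs_of_nonneg (hat_nonneg _ _ _)]
              exact mul_le_mul_of_nonneg_left (hi1 j p) (hat_nonneg _ _ _)
          _ = δ := by rw [← Finset.sum_mul, sum_hat hl, one_mul]
      rw [norm_eq_abs]
      rw [abs_le] at h1 h2 ⊢
      constructor <;> linarith [h1.1, h1.2, h2.1, h2.2]
    · have h3 : dist ((x, p) : ℝ × ℝ²) (y, p) < r := by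
        rw [Prod.dist_eq, dist_self, dist_eq]; exact max_lt (by linarith) hr
      exact (hur h3).le
  have hz : ∀ p : ℝ², Q + 2 ≤ |p.2| → (∫ l, g (l, p) ∂μ.m p) = 0 ∧ ∀ j, h (i j) p = 0 :=
    fun p hp => ⟨by simp [hgR _ p (by linarith [hnorm p] : Q ≤ ‖p‖)],
      fun j => hi2 j p (hp.trans (hnorm p))⟩
  unfold YM.wpair pair
  rw [← integral_finsetSum _ fun j _ => hI j]
  rw [strip_eq_box (R := Q + 2) fun p hp => (hz p hp).1,
    strip_eq_box (R := Q + 2) fun p hp => by simp [(hz p hp).2]]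
  have hm : Measurable fun p => ∫ l, g (l, p) ∂μ.m p := by
    have : StronglyMeasurable fun q : ℝ² × ℝ => g (q.2, q.1) :=
      (by fun_prop : Continuous _).stronglyMeasurable
    exact (this.integral_kernel_prod_right' (κ := μ.ker)).measurable
  have hfin : volume (box T (Q + 2)) < ⊤ := isCompact_box.measure_lt_top
  obtain ⟨C, hC⟩ := hgc.exists_bound_of_continuous hg
  have hA : IntegrableOn (fun p => ∫ l, g (l, p) ∂μ.m p) (box T (Q + 2)) :=
    Measure.integrableOn_of_bounded hfin.ne hm.aestronglyMeasurable (M := C)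
      (ae_of_all _ fun p => by
        have := μ.prob p
        simpa using norm_integral_le_of_norm_le_const (μ := μ.m p) (f := fun l => g (l, p))
          (ae_of_all _ fun l => hC (l, p)))
  rw [← integral_sub hA (integrable_finsetSum _ fun j _ =>
    (hI j).mono_set (prod_mono le_rfl (subset_univ _))), ← norm_eq_abs]
  calc _ ≤ 2 * δ * V := norm_setIntegral_le_of_norm_le_const hfin fun p _ => hpt p
    _ ≤ η := by
        rw [hδd, show 2 * (η / (2 * (V + 1))) * V = η * (V / (V + 1)) by field_simp]
        exact mul_le_of_le_one_right hη.le ((div_le_one (by positivity)).2 (by linarith))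

/-- One-step recovery: near any state with limit cost at most `J`, as measured on a bounded box and by
finitely many tests, there is a state whose energy at level `ε` is at most `J + δ + O(ε)`. -/
lemma near {ι : Type*} [Finite ι] {J R δ : ℝ} {β : ℝ² → ℝ}
    (hT : 0 < T) (hf : Continuous f) (hD : Continuous D) (hσ : Continuous σ)
    (hpos : ∀ v ∈ Ioo (0:ℝ) 1, 0 < σ v) {x : AA T} (hβ : Rep x.1.1 β)
    (hJ : ∀ φ : TTest T, act f σ T x φ ≤ J)
    {F : ι → ℝ → ℝ} {h : ι → ℝ² → ℝ} (hF : ∀ i, Continuous (F i))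
    (hh : ∀ i, Continuous (h i)) (hc : ∀ i, HasCompactSupport (h i)) (hδ : 0 < δ) :
    ∃ (y : AA T) (β' : ℝ² → ℝ), Rep y.1.1 β' ∧
      (∀ t ∈ Icc 0 T, ∀ s, |s| ≤ R → |β' (t, s) - β (t, s)| ≤ δ) ∧
      (∀ i, |pair T (y.1.2.mom (F i)) (h i) - pair T (x.1.2.mom (F i)) (h i)| ≤ δ) ∧
      ∃ A B : ℝ, ∀ ε, 0 < ε → calJeps f D σ T ε y ≤ ENNReal.ofReal (J + δ - ε * A + ε ^ 2 * B) := by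
  have hδ3 : 0 < δ / 3 := by positivity
  have hσ0 : ∀ v ∈ Icc (0:ℝ) 1, 0 ≤ σ v := fun v hv => by
    have : v ∈ closure (Ioo (0:ℝ) 1) := by rwa [closure_Ioo zero_ne_one]
    exact closure_minimal (fun w hw => (hpos w hw).le) (isClosed_Ici.preimage hσ) this
  choose Q hQ0 hQ using fun i => exists_strip_bound (hc i)
  obtain ⟨S, hS⟩ : ∃ S, ∀ i, Q i ≤ S := by
    obtain ⟨S, hS⟩ := (finite_range Q).bddAbove
    exact ⟨S, fun i => hS (mem_range_self i)⟩
  obtain ⟨b, M, κ, J', hr, hJ', hb, hm⟩ := exists_reg_near (R := R) hT hf hσ hσ0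
    (hpos _ (by norm_num)) hβ hJ hF hh hc hδ3
  obtain ⟨b1, M1, κ1, p, L, q, hq, hp, hcut, hcost, heq⟩ := hr.to_cut hT hf hσ hpos (max R S)
  obtain ⟨m, κ2, lam, hms, hcost2, hm2⟩ := hcut.to_MS hf hσ hpos hq hp hF hh hc hδ3
  obtain ⟨b3, lam3, κ3, L3, hms3, hcost3, hb3, hm3⟩ :=
    IsMS.to_one hf hσ hpos hT hF hh hc m hδ3 hms
  obtain ⟨y, β', hy, hyb, hym, A, B, hAB⟩ := hms3.realize hT hf hD hσ hpos
  refine ⟨y, β', hy, fun t ht s hs => ?_, fun i => ?_, A, B, fun ε hε => (hAB ε hε).trans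
    (ENNReal.ofReal_le_ofReal (by linarith))⟩
  · grind
  · have h1 := hm i
    have h2 := hm2 i
    have h3 := hm3 i
    have e : pair T (M1 (F i)) (h i) = pair T (M (F i)) (h i) := by
      refine setIntegral_congr_fun measurableSet_strip fun z hz => ?_
      rcases le_or_gt (Q i) |z.2| with h' | h'
      · simp [hQ i z h']
      · grind
    rw [hym]
    rw [e] at h2
    rw [abs_le] at *
    constructor <;> linarith [h1.1, h1.2, h2.1, h2.2, h3.1, h3.2]

/-! ### The `Γ`-limsup inequality -/

/-- Diagonal extraction. -/
lemma exists_diag {P : ℕ → ℕ → Prop} (h : ∀ k, ∀ᶠ n in atTop, P k n) :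
    ∃ k : ℕ → ℕ, Tendsto k atTop atTop ∧ ∀ᶠ n in atTop, P (k n) n := by
  choose N hN using fun k => eventually_atTop.1 (h k)
  refine ⟨fun n => Nat.findGreatest (fun k => N k ≤ n) n, tendsto_atTop.2 fun K => ?_, ?_⟩
  · filter_upwards [eventually_ge_atTop K, eventually_ge_atTop (N K)] with n h1 h2
    exact Nat.le_findGreatest h1 h2
  · filter_upwards [eventually_ge_atTop (N 0)] with n hn
    exact hN _ n (Nat.findGreatest_spec (P := fun k => N k ≤ n) (Nat.zero_le n) hn)

/-- The recovery sequence is a diagonal sequence of the states given by `near`. -/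
theorem gamma_limsup (hT : 0 < T) (hf : ContinuousOn f (Icc 0 1))
    (hD : ContinuousOn D (Icc 0 1)) (hσ : ContinuousOn σ (Icc 0 1))
    (hpos : ∀ v ∈ Ioo (0:ℝ) 1, 0 < σ v) {dw : YM T → YM T → ℝ}
    (hdw : GeneratesWeakStar T dw) :
    GammaLimsupLE (dA T dw) (fun ε => calJeps f D σ T ε) (calJ f σ T) := by
  obtain ⟨f', hf', hff⟩ := exists_ext hf
  obtain ⟨D', hD', hDD⟩ := exists_ext hD
  obtain ⟨σ', hσ', hσσ⟩ := exists_ext hσ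
  intro x e he he0
  obtain ⟨β, hβ⟩ := HJ.exists_rep hT x.1.1
  by_cases hx : calJ f σ T x = ⊤
  · refine ⟨fun _ => x, AA.tendsto hT hdw (c := 0) (fun _ => hβ) hβ ?_ fun g _ _ => tendsto_const_nhds,
      by rw [hx]; exact le_top⟩
    intro R δ hδ
    simp [hδ.le]
  set J := (calJ f σ T x).toReal
  have hJ : ∀ φ : TTest T, act f' σ' T x φ ≤ J := fun φ => by
    rw [← x.1.2.mom_congr hff, ← x.1.2.mom_congr hσσ]
    exact (ENNReal.ofReal_le_iff_le_toReal hx).1 (le_iSup (fun φ : TTest T => ENNReal.ofReal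
      (act f σ T x φ)) φ)
  have hcongr : ∀ ε (y : AA T), calJeps f D σ T ε y = calJeps f' D' σ' T ε y := fun ε y => by
    unfold calJeps Jeps JexprW
    have hu := y.1.1.ux.mem01
    simp only [fun p => hff _ (hu p), fun p => hDD _ (hu p), fun p => hσσ _ (hu p)]
  obtain ⟨F, h, hF, hh, hc, hap⟩ := exists_prod_tests
  have hδ : ∀ k : ℕ, (0:ℝ) < 1 / ((k:ℝ) + 1) := fun k => by positivity
  choose y β' hy hyb hym A B hAB using fun k : ℕ => near (ι := Fin k) (R := k) hT hf' hD' hσ'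
    (fun v hv => by rw [← hσσ v (Ioo_subset_Icc_self hv)]; exact hpos v hv) hβ hJ
    (fun i => hF i) (fun i => hh i) (fun i => hc i) (hδ k)
  obtain ⟨k, hk, hkn⟩ := exists_diag (P := fun k n => calJeps f D σ T (e n) (y k) ≤
      ENNReal.ofReal (J + 2 * (1 / ((k:ℝ) + 1)))) fun k => by
    have h1 : Tendsto (fun n => J + 1 / ((k:ℝ) + 1) - e n * A k + e n ^ 2 * B k) atTop
        (𝓝 (J + 1 / ((k:ℝ) + 1) - 0 * A k + 0 ^ 2 * B k)) :=
      (tendsto_const_nhds.sub (he0.mul_const _)).add ((he0.pow 2).mul_const _)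
    filter_upwards [h1.eventually (eventually_le_nhds
      (show _ < J + 2 * (1 / ((k:ℝ) + 1)) by have := hδ k; linarith))] with n hn
    rw [hcongr]
    exact (hAB k (e n) (he n)).trans (ENNReal.ofReal_le_ofReal hn)
  have hk0 : Tendsto (fun n => 1 / ((k n : ℝ) + 1)) atTop (𝓝 0) :=
    tendsto_one_div_add_atTop_nhds_zero_nat.comp hk
  refine ⟨fun n => y (k n), AA.tendsto hT hdw (c := 0) (fun n => hy (k n)) hβ ?_ ?_, ?_⟩
  · intro R δ hδ'
    filter_upwards [hk.eventually_ge_atTop ⌈R⌉₊, hk0.eventually (eventually_le_nhds hδ')]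
      with n h1 h2 t ht s hs
    rw [Pi.zero_apply, add_zero]
    exact (hyb (k n) t ht s (hs.trans (Nat.ceil_le.1 h1))).trans h2
  · intro g hg hgc
    have hlim : ∀ i, Tendsto (fun n => pair T ((y (k n)).1.2.mom (F i)) (h i)) atTop
        (𝓝 (pair T (x.1.2.mom (F i)) (h i))) := fun i => by
      rw [tendsto_iff_dist_tendsto_zero]
      refine squeeze_zero' (.of_forall fun n => dist_nonneg) ?_ hk0
      filter_upwards [hk.eventually_gt_atTop i] with n hn
      exact hym (k n) ⟨i, hn⟩
    rw [Metric.tendsto_atTop']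
    intro η hη
    obtain ⟨m, a, ha⟩ := hap T g hg hgc (η / 4) (by positivity)
    have hs := tendsto_finsetSum (Finset.range m) fun j _ => hlim (a j)
    obtain ⟨N, hN⟩ := Metric.tendsto_atTop'.1 hs (η / 4) (by positivity)
    refine ⟨N, fun n hn => ?_⟩
    have h1 := ha (y (k n)).1.2
    have h2 := ha x.1.2
    have h3 := hN n hn
    rw [dist_eq] at h3 ⊢
    rw [abs_lt] at *
    rw [abs_le] at h1 h2
    constructor <;> linarith [h1.1, h1.2, h2.1, h2.2, h3.1, h3.2]
  · have h1 : Tendsto (fun n => ENNReal.ofReal (J + 2 * (1 / ((k n : ℝ) + 1)))) atTop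
        (𝓝 (calJ f σ T x)) := by
      rw [← ENNReal.ofReal_toReal hx]
      apply ENNReal.tendsto_ofReal
      simpa using (hk0.const_mul 2).const_add J
    rw [← h1.limsup_eq]
    exact limsup_le_limsup hkn

end

/-- The sequence `{𝓙_ε}` is equicoercive on `(𝓐, d_𝓐)` and Γ-converges,
as `ε → 0`, to the functional `𝓙`. -/
theorem gamma_convergence_calJeps (T : ℝ) (hT : 0 < T) (f D σ : ℝ → ℝ)
    (hf : ∃ C : NNReal, LipschitzOnWith C f (Icc 0 1))
    (hD : ContinuousOn D (Icc 0 1)) (hσ : ContinuousOn σ (Icc 0 1))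
    (hDpos : ∃ c > 0, ∀ v ∈ Icc (0:ℝ) 1, c ≤ D v)
    (hσpos : ∀ v ∈ Ioo (0:ℝ) 1, 0 < σ v)
    (dw : YM T → YM T → ℝ) (hdw : GeneratesWeakStar T dw) :
    Equicoercive (dA T dw) (fun ε => calJeps f D σ T ε) ∧
    GammaConvergesTo (dA T dw) (fun ε => calJeps f D σ T ε) (calJ f σ T) := by
  obtain ⟨C, hC⟩ := hf
  exact ⟨equicoercive_main hT hC.continuousOn hD hσ hdw,
    gamma_liminf hT hC.continuousOn hD hσ hdw, gamma_limsup hT hC.continuousOn hD hσ hσpos hdw⟩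

end GammaSCL
end
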